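/- Let F be a finite field, N ≥ 2, and p = (p_1, …, p_N) weights with each p_i ≥ 2. Let λ = (λ_3, …, λ_N) and λ′ = (λ′_3, …, λ′_N) be two tuples of pairwise distinct elements of F \ {0}. Then for every dimension vector d for the canonical quiver of type p, the number of isomorphism classes of absolutely indecomposable representations of dimension vector d over F of the canonical algebra C(p,λ) equals the corresponding number for C(p,λ′); that is, the count of absolutely indecomposable representations depends only on the combinatorial type (p, d) and not on the choice of parameters λ. -/

import Mathlib

/-!
Kac's theorem for canonical algebras (Schiffmann–Plamondon).

We encode a representation of the canonical algebra `C(p, λ)` of dimension vector `d`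
as a tuple of matrices `X i` (one for each arm `i`) acting on the total space
`⊕_v F^{d v}`, where `X i` is required to be supported on the blocks corresponding
to the arrows of the `i`-th arm.  The composite `c_i : V_0 → V_1` of the maps along
the `i`-th arm is then the `(sink, source)` block of `(X i) ^ (p i)`, and the defining
relations of the canonical algebra read `c_i = c_1 - λ_i c_2` for `i = 3, …, N`.
-/

/-- Vertices of the canonical (star-shaped) quiver of type `p = (p 0, …, p (N-1))`:
`Sum.inl false` is the source `0`, `Sum.inl true` is the sink `1`, and
`Sum.inr ⟨i, j⟩` is the `(j+1)`-st vertex on the `i`-th arm (there are `p i - 1`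
vertices on the `i`-th arm). -/
abbrev CanVertex (N : ℕ) (p : Fin N → ℕ) := Bool ⊕ (Σ i : Fin N, Fin (p i - 1))

/-- The index set of the total space `⊕_v F^{d v}` of a representation with
dimension vector `d`. -/
abbrev CanIdx (N : ℕ) (p : Fin N → ℕ) (d : CanVertex N p → ℕ) :=
  Σ v : CanVertex N p, Fin (d v)

/-- `CanArrow N p i v w` holds iff `(v, w)` is (source, target) of one of the `p i`
arrows along the `i`-th arm: `0 → (i,1) → (i,2) → ⋯ → (i, p i - 1) → 1`. -/
def CanArrow (N : ℕ) (p : Fin N → ℕ) (i : Fin N) (v w : CanVertex N p) : Prop :=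
  (∃ h : 0 < p i - 1, v = Sum.inl false ∧ w = Sum.inr ⟨i, ⟨0, h⟩⟩) ∨
  (∃ (j : ℕ) (hj : j + 1 < p i - 1),
      v = Sum.inr ⟨i, ⟨j, Nat.lt_of_succ_lt hj⟩⟩ ∧ w = Sum.inr ⟨i, ⟨j + 1, hj⟩⟩) ∨
  (∃ h : 0 < p i - 1, v = Sum.inr ⟨i, ⟨p i - 2, by omega⟩⟩ ∧ w = Sum.inl true)

/-- A matrix on the total space is supported on the arrows of the `i`-th arm:
the block sending the summand at vertex `a.1` to the summand at vertex `b.1`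
vanishes unless `(a.1, b.1)` is an arrow of the `i`-th arm. -/
def ArmSupported (N : ℕ) (p : Fin N → ℕ) (F : Type) [Field F] (d : CanVertex N p → ℕ)
    (i : Fin N) (M : Matrix (CanIdx N p d) (CanIdx N p d) F) : Prop :=
  ∀ a b : CanIdx N p d, ¬ CanArrow N p i a.1 b.1 → M b a = 0

/-- The defining relations of the canonical algebra: for `i = 3, …, N` (in 1-based
numbering; `2 ≤ i` in 0-based numbering) the composite `c_i` along the `i`-th arm,
i.e. the `(sink, source)` block of `(X i) ^ (p i)`, equals `c_1 - λ_i · c_2`. -/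
def CanRelations (N : ℕ) (p : Fin N → ℕ) (F : Type) [Field F] (d : CanVertex N p → ℕ)
    (hN : 2 ≤ N) (lam : Fin (N - 2) → F)
    (X : Fin N → Matrix (CanIdx N p d) (CanIdx N p d) F) : Prop :=
  ∀ i : Fin N, ∀ _hi : 2 ≤ (i : ℕ),
    ∀ (a : Fin (d (Sum.inl false))) (b : Fin (d (Sum.inl true))),
      (X i ^ p i) ⟨Sum.inl true, b⟩ ⟨Sum.inl false, a⟩ =
        (X ⟨0, by omega⟩ ^ p ⟨0, by omega⟩) ⟨Sum.inl true, b⟩ ⟨Sum.inl false, a⟩ -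
          lam ⟨(i : ℕ) - 2, by have := i.isLt; omega⟩ *
            (X ⟨1, by omega⟩ ^ p ⟨1, by omega⟩) ⟨Sum.inl true, b⟩ ⟨Sum.inl false, a⟩

/-- `X` is a representation of the canonical algebra `C(p, lam)` over `F` of
dimension vector `d`. -/
def IsCanRep (N : ℕ) (p : Fin N → ℕ) (F : Type) [Field F] (d : CanVertex N p → ℕ)
    (hN : 2 ≤ N) (lam : Fin (N - 2) → F)
    (X : Fin N → Matrix (CanIdx N p d) (CanIdx N p d) F) : Prop :=
  (∀ i, ArmSupported N p F d i (X i)) ∧ CanRelations N p F d hN lam X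

/-- `X` (of dimension vector `d`) and `Y` (of dimension vector `e`) are isomorphic
representations: there is an invertible family of linear maps indexed by the
vertices (i.e. a block-diagonal invertible matrix) intertwining the structure maps. -/
def IsCanIso (N : ℕ) (p : Fin N → ℕ) (F : Type) [Field F] (d e : CanVertex N p → ℕ)
    (X : Fin N → Matrix (CanIdx N p d) (CanIdx N p d) F)
    (Y : Fin N → Matrix (CanIdx N p e) (CanIdx N p e) F) : Prop :=
  ∃ (f : Matrix (CanIdx N p e) (CanIdx N p d) F) (g : Matrix (CanIdx N p d) (CanIdx N p e) F),
    (∀ (b : CanIdx N p e) (a : CanIdx N p d), b.1 ≠ a.1 → f b a = 0) ∧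
    f * g = 1 ∧ g * f = 1 ∧ ∀ i, f * X i = Y i * f

/-- The direct sum of two representations, of dimension vectors `d` and `e`,
as a representation of dimension vector `d + e` (blockwise direct sum of matrices
at each pair of vertices). -/
def canDSum (N : ℕ) (p : Fin N → ℕ) (F : Type) [Field F] (d e : CanVertex N p → ℕ)
    (M : Matrix (CanIdx N p d) (CanIdx N p d) F)
    (M' : Matrix (CanIdx N p e) (CanIdx N p e) F) :
    Matrix (CanIdx N p (fun v => d v + e v)) (CanIdx N p (fun v => d v + e v)) F :=
  fun b a =>
    if hb : (b.2 : ℕ) < d b.1 then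
      (if ha : (a.2 : ℕ) < d a.1 then M ⟨b.1, ⟨b.2, hb⟩⟩ ⟨a.1, ⟨a.2, ha⟩⟩ else 0)
    else
      (if ha : (a.2 : ℕ) < d a.1 then 0
       else
         M' ⟨b.1, ⟨(b.2 : ℕ) - d b.1, by have : (b.2 : ℕ) < d b.1 + e b.1 := b.2.isLt; omega⟩⟩
            ⟨a.1, ⟨(a.2 : ℕ) - d a.1, by have : (a.2 : ℕ) < d a.1 + e a.1 := a.2.isLt; omega⟩⟩)

/-- The representation is nonzero, i.e. its dimension vector is nonzero. -/
def CanNonzero (N : ℕ) (p : Fin N → ℕ) (d : CanVertex N p → ℕ) : Prop :=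
  ∃ v, d v ≠ 0

/-- `X` is an indecomposable representation of `C(p, lam)`: it is nonzero and is not
isomorphic to the direct sum of two nonzero representations. -/
def CanIndec (N : ℕ) (p : Fin N → ℕ) (F : Type) [Field F] (d : CanVertex N p → ℕ)
    (hN : 2 ≤ N) (lam : Fin (N - 2) → F)
    (X : Fin N → Matrix (CanIdx N p d) (CanIdx N p d) F) : Prop :=
  CanNonzero N p d ∧
  ∀ (d' d'' : CanVertex N p → ℕ)
    (X' : Fin N → Matrix (CanIdx N p d') (CanIdx N p d') F)
    (X'' : Fin N → Matrix (CanIdx N p d'') (CanIdx N p d'') F),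
      IsCanRep N p F d' hN lam X' → IsCanRep N p F d'' hN lam X'' →
      CanNonzero N p d' → CanNonzero N p d'' →
      ¬ IsCanIso N p F d (fun v => d' v + d'' v) X
          (fun i => canDSum N p F d' d'' (X' i) (X'' i))

/-- `X` is absolutely (geometrically) indecomposable: its base change to an algebraic
closure of `F` is indecomposable. -/
def CanAbsIndec (N : ℕ) (p : Fin N → ℕ) (F : Type) [Field F] (d : CanVertex N p → ℕ)
    (hN : 2 ≤ N) (lam : Fin (N - 2) → F)
    (X : Fin N → Matrix (CanIdx N p d) (CanIdx N p d) F) : Prop :=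
  CanIndec N p (AlgebraicClosure F) d hN
    (fun j => algebraMap F (AlgebraicClosure F) (lam j))
    (fun i => (X i).map (algebraMap F (AlgebraicClosure F)))

/-- The number of isomorphism classes of absolutely indecomposable representations
of the canonical algebra `C(p, lam)` over `F` of dimension vector `d`. -/
noncomputable def canCount (N : ℕ) (p : Fin N → ℕ) (F : Type) [Field F] [Fintype F]
    (d : CanVertex N p → ℕ) (hN : 2 ≤ N) (lam : Fin (N - 2) → F) : ℕ :=
  Nat.card (Quot (fun X Y : {Z : Fin N → Matrix (CanIdx N p d) (CanIdx N p d) F //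
      IsCanRep N p F d hN lam Z ∧ CanAbsIndec N p F d hN lam Z} =>
    IsCanIso N p F d d X.1 Y.1))

set_option linter.unusedSectionVars false
set_option linter.unusedVariables false

namespace CanAlg

open Module Polynomial
open LinearMap (range ker comp_apply proj toMatrix' toMatrix'_comp toMatrix'_id codRestrict mulLeft mem_ker
  single ker_eq_bot range_eq_top exists_extend)
open LinearMap renaming ext → lext, congr_fun → lcongr_fun
open Subtype renaming ext → sext
open Finset (sum_congr sum_eq_zero smul_sum mul_sum sum_mul sum_comm sum_eq_single sum_const mem_univ
  sum_sub_distrib le_sup)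
open Function (Surjective Bijective)
open Submodule (span mkQ_surjective subtype_injective ker_mkQ mem_top)
open Matrix (toLin' toLin'_mul toLin'_toMatrix')
open Nat (card card_congr card_sigma card_eq_fintype_card card_eq_zero cast_eq_zero cast_sum cast_add)
open Equiv (ofBijective)
open Algebra (smul_def adjoin)
open MulOpposite (op op_mul op_inj)
open Subtype (val)
open Sum (inl inr)

set_option hygiene false in
/-- Dimension vectors. -/
scoped notation "Dv" => CanVertex N p → ℕ

/-- The source. -/
scoped notation "src" => Sum.inl false

/-- The sink. -/
scoped notation "snk" => Sum.inl true

/-! ### Vertices along an arm -/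

section Vertices

variable {N : ℕ} {p : Fin N → ℕ}

/-- The `k`-th vertex on the path from the source to the sink along the arm `i`. -/
def vx (p : Fin N → ℕ) (i : Fin N) (k : ℕ) : CanVertex N p :=
  if k = 0 then src
  else if h : k - 1 < p i - 1 then inr ⟨i, ⟨k - 1, h⟩⟩
  else snk

theorem vx_zero (i : Fin N) : vx p i 0 = src := by simp [vx]

theorem vx_succ (i : Fin N) {k : ℕ} (h : k < p i - 1) :
    vx p i (k + 1) = inr ⟨i, ⟨k, h⟩⟩ := by simp [vx, h]

theorem vx_last (hp : ∀ i, 2 ≤ p i) (i : Fin N) : vx p i (p i) = snk := by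
  have := hp i
  have h0 : p i ≠ 0 := by omega
  simp [vx, h0]

theorem vx_inj (hp : ∀ i, 2 ≤ p i) (i : Fin N) {k l : ℕ} (hk : k ≤ p i) (hl : l ≤ p i)
    (h : vx p i k = vx p i l) : k = l := by
  have hpi := hp i
  unfold vx at h
  split_ifs at h <;> simp_all <;> omega

theorem canArrow_iff (hp : ∀ i, 2 ≤ p i) (i : Fin N) (v w : CanVertex N p) :
    CanArrow N p i v w ↔ ∃ k < p i, v = vx p i k ∧ w = vx p i (k + 1) := by
  have hpi := hp i
  constructor
  · rintro (⟨h, rfl, rfl⟩ | ⟨j, hj, rfl, rfl⟩ | ⟨h, rfl, rfl⟩)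
    · exact ⟨0, by omega, (vx_zero i).symm, (vx_succ i h).symm⟩
    · exact ⟨j + 1, by omega, (vx_succ i _).symm, (vx_succ i hj).symm⟩
    · refine ⟨p i - 1, by omega, ?_, ?_⟩
      · have := vx_succ (p := p) i (k := p i - 2) (by omega)
        rw [← this]; congr 1; omega
      · rw [show p i - 1 + 1 = p i by omega, vx_last hp]
  · rintro ⟨k, hk, rfl, rfl⟩
    rcases Nat.eq_zero_or_pos k with rfl | hk0
    · exact Or.inl ⟨by omega, vx_zero i, vx_succ i (by omega)⟩
    · obtain ⟨j, rfl⟩ : ∃ j, k = j + 1 := ⟨k - 1, by omega⟩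
      by_cases h : j + 1 < p i - 1
      · exact Or.inr (Or.inl ⟨j, h, vx_succ i _, vx_succ i _⟩)
      · refine Or.inr (Or.inr ⟨by omega, ?_, ?_⟩)
        · have : j = p i - 2 := by omega
          subst this
          rw [vx_succ i (by omega)]
        · rw [show j + 1 + 1 = p i by omega, vx_last hp]

/-- The total space of the standard graded vector space of dimension vector `d`. -/
abbrev V (K : Type) (d : Dv) : Type := CanIdx N p d → K

end Vertices

/-! ### Modules over the free algebra on the vertices and arms -/

/-- The free algebra with one generator for each vertex (to act as the projection onto the
component at that vertex) and one for each arm (to act as the sum of the maps along the arm).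
It does not depend on the parameters `λ`; the relations are imposed on modules. -/
abbrev Al (N : ℕ) (p : Fin N → ℕ) (K : Type) [Field K] : Type :=
  FreeAlgebra K (CanVertex N p ⊕ Fin N)

section Alg

variable {N : ℕ} {p : Fin N → ℕ} {K : Type} [Field K]

set_option hygiene false in
/-- The algebra acting on graded modules, for the ambient `N`, `p` and `K`. -/
scoped notation "Λ" => Al N p K

/-- The generator projecting to the vertex `v`. -/
def ge (v : CanVertex N p) : Λ := FreeAlgebra.ι K (inl v)

/-- The generator of the arm `i`. -/
def gx (i : Fin N) : Λ := FreeAlgebra.ι K (inr i)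

/-- The composite along the arm `i`. -/
def cc (i : Fin N) : Λ := ge snk * gx i ^ p i * ge src

/-- `M` is a representation of the canonical quiver. -/
structure IsGr (N : ℕ) (p : Fin N → ℕ) (K : Type) [Field K] (M : Type) [AddCommGroup M]
    [Module Λ M] : Prop where
  orth : ∀ (v w : CanVertex N p) (m : M),
    (ge v : Λ) • (ge w : Λ) • m = if v = w then (ge v : Λ) • m else 0
  sum : ∀ m : M, ∑ v, (ge v : Λ) • m = m
  supp : ∀ i v w, ¬ CanArrow N p i v w → ∀ m : M,
    (ge w : Λ) • (gx i : Λ) • (ge v : Λ) • m = 0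

variable (N) in
/-- The first arm. -/
def i0 [h : Fact (2 ≤ N)] : Fin N := ⟨0, by have := h.out; omega⟩
variable (N) in
/-- The second arm. -/
def i1 [h : Fact (2 ≤ N)] : Fin N := ⟨1, by have := h.out; omega⟩
/-- The remaining arms. -/
def ij (j : Fin (N - 2)) : Fin N := ⟨j + 2, by omega⟩

/-- The relations of the canonical algebra on a module. -/
def IsRel [Fact (2 ≤ N)] (p : Fin N → ℕ) {K : Type} [Field K] (lam : Fin (N - 2) → K) (M : Type)
    [AddCommGroup M] [Module K M] [Module Λ M] : Prop :=
  ∀ (j : Fin (N - 2)) (m : M), (cc (ij j) : Λ) • m =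
    (cc (i0 N) : Λ) • m - lam j • (cc (i1 N) : Λ) • m

/-- The parameters are pairwise distinct and nonzero. -/
def Good (lam : Fin (N - 2) → K) : Prop := Function.Injective lam ∧ ∀ j, lam j ≠ 0

theorem arm_cases [Fact (2 ≤ N)] (i : Fin N) : i = i0 N ∨ i = i1 N ∨ ∃ j, i = ij j := by
  rcases i with ⟨i, hi⟩
  rcases i with _ | _ | i
  · exact Or.inl rfl
  · exact Or.inr (Or.inl rfl)
  · exact Or.inr (Or.inr ⟨⟨i, by omega⟩, rfl⟩)

section Mods

variable {M : Type} [AddCommGroup M] [Module K M] [Module Λ M]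
  [IsScalarTower K Λ M]
variable {M' : Type} [AddCommGroup M'] [Module K M'] [Module Λ M']
  [IsScalarTower K Λ M']

/-- A `K`-linear map commuting with the generators is a module homomorphism. -/
def mkHom (f : M →ₗ[K] M') (hg : ∀ v m, f ((ge v : Λ) • m) = (ge v : Λ) • f m)
    (hx : ∀ i m, f ((gx i : Λ) • m) = (gx i : Λ) • f m) :
    M →ₗ[Λ] M' where
  toFun := f
  map_add' := f.map_add
  map_smul' := by
    intro a
    induction a using FreeAlgebra.induction with
    | grade0 r => intro m; simp [algebraMap_smul]
    | grade1 x =>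
      intro m
      rcases x with v | i
      · exact hg v m
      · exact hx i m
    | mul a b ha hb => intro m; rw [mul_smul, ha, hb]; simp [mul_smul]
    | add a b ha hb => intro m; rw [add_smul, f.map_add, ha, hb]; simp [add_smul]

@[simp] theorem mkHom_apply (f : M →ₗ[K] M') (hg hx) (m : M) :
    mkHom (N := N) (p := p) f hg hx m = f m := rfl

theorem smul_smul_comm' (c : K) (a : Λ) (m : M) : a • c • m = c • a • m :=
  (smul_comm c a m).symm

namespace IsGr

variable (h : IsGr N p K M)
include h

theorem ge_self (v : CanVertex N p) (m : M) :
    (ge v : Λ) • (ge v : Λ) • m = (ge v : Λ) • m := by simp [h.orth]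

theorem ge_ne {v w : CanVertex N p} (hvw : v ≠ w) (m : M) :
    (ge v : Λ) • (ge w : Λ) • m = 0 := by simp [h.orth, hvw]

theorem of_surj {f : M →ₗ[Λ] M'} (hf : Surjective f) : IsGr N p K M' where
  orth v w m := by
    obtain ⟨m, rfl⟩ := hf m
    have := congrArg f (h.orth v w m)
    split_ifs at this ⊢ <;> simpa using this
  sum m := by
    obtain ⟨m, rfl⟩ := hf m
    simpa using congrArg f (h.sum m)
  supp i v w hi m := by
    obtain ⟨m, rfl⟩ := hf m
    simpa using congrArg f (h.supp i v w hi m)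

omit h in
theorem of_inj (h : IsGr N p K M') {f : M →ₗ[Λ] M'} (hf : Function.Injective f) :
    IsGr N p K M where
  orth v w m := hf (by have := h.orth v w (f m); split_ifs at this ⊢ <;> simpa using this)
  sum m := hf (by simpa using h.sum (f m))
  supp i v w hi m := hf (by simpa using h.supp i v w hi (f m))

theorem ext_ge {m m' : M} (H : ∀ v, (ge v : Λ) • m = (ge v : Λ) • m') :
    m = m' := by
  rw [← h.sum m, ← h.sum m']; simp [H]

section
variable (hp : ∀ i, 2 ≤ p i)
include hp

theorem x_ge_vx (i : Fin N) {k : ℕ} (hk : k < p i) (m : M) :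
    (gx i : Λ) • (ge (vx p i k) : Λ) • m =
      (ge (vx p i (k + 1)) : Λ) • (gx i : Λ) • (ge (vx p i k) : Λ) • m := by
  refine h.ext_ge fun w => ?_
  by_cases hw : w = vx p i (k + 1)
  · subst hw; rw [h.ge_self]
  · rw [h.ge_ne hw, h.supp]
    rw [canArrow_iff hp]
    rintro ⟨l, hl, hv, hw'⟩
    have := vx_inj hp i hk.le hl.le hv
    exact hw (this ▸ hw')

theorem x_ge_other (i : Fin N) {v : CanVertex N p} (hv : ∀ k < p i, v ≠ vx p i k) (m : M) :
    (gx i : Λ) • (ge v : Λ) • m = 0 := by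
  refine h.ext_ge fun w => ?_
  rw [h.supp, smul_zero]
  rw [canArrow_iff hp]
  rintro ⟨l, hl, hv', _⟩
  exact hv l hl hv'

theorem x_pow_vx (i : Fin N) {k l : ℕ} (hk : k + l ≤ p i) (m : M) :
    (gx i : Λ) ^ l • (ge (vx p i k) : Λ) • m =
      (ge (vx p i (k + l)) : Λ) • (gx i : Λ) ^ l •
        (ge (vx p i k) : Λ) • m := by
  induction l with
  | zero => simp [h.ge_self]
  | succ l ih =>
    have := ih (by omega)
    rw [pow_succ', mul_smul, this, h.x_ge_vx hp i (by omega), add_assoc, h.ge_self]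

theorem cc_smul (i : Fin N) (m : M) :
    (cc i : Λ) • m = (gx i : Λ) ^ p i • (ge src : Λ) • m := by
  have := h.x_pow_vx hp i (k := 0) (l := p i) (by omega) m
  rw [zero_add, vx_last hp, vx_zero] at this
  rw [cc, mul_smul, mul_smul, ← this]

end

theorem ge_cc (i : Fin N) (m : M) :
    (ge snk : Λ) • (cc i : Λ) • m = (cc i : Λ) • m := by
  simp only [cc, mul_smul, h.ge_self]

theorem cc_ge (i : Fin N) (m : M) :
    (cc i : Λ) • (ge src : Λ) • m = (cc i : Λ) • m := by
  simp only [cc, mul_smul, h.ge_self]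

theorem cc_ge_ne (i : Fin N) {v} (hv : v ≠ src) (m : M) :
    (cc i : Λ) • (ge v : Λ) • m = 0 := by
  simp only [cc, mul_smul, h.ge_ne hv.symm, smul_zero]

end IsGr

namespace IsRel
variable [Fact (2 ≤ N)] {lam : Fin (N - 2) → K}

theorem of_surj (h : IsRel p lam M) {f : M →ₗ[Λ] M'} (hf : Surjective f) :
    IsRel p lam M' := by
  intro j m
  obtain ⟨m, rfl⟩ := hf m
  have := congrArg f (h j m)
  rw [map_sub, ← algebraMap_smul Λ (lam j) (_ : M), map_smul, map_smul, map_smul,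
    map_smul, algebraMap_smul] at this
  exact this

theorem of_inj (h : IsRel p lam M') {f : M →ₗ[Λ] M'} (hf : Function.Injective f) :
    IsRel p lam M := by
  intro j m
  apply hf
  rw [map_sub, ← algebraMap_smul Λ (lam j) (_ : M), map_smul, map_smul, map_smul,
    map_smul, algebraMap_smul]
  exact h j (f m)

end IsRel
end Mods
end Alg

section

variable {N : ℕ} [Fact (2 ≤ N)] {p : Fin N → ℕ} {K : Type} [Field K]
variable {M : Type} [AddCommGroup M] [Module K M] [Module Λ M]
  [IsScalarTower K Λ M]
variable {M' : Type} [AddCommGroup M'] [Module K M'] [Module Λ M']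
  [IsScalarTower K Λ M']
variable {M'' : Type} [AddCommGroup M''] [Module K M''] [Module Λ M'']
  [IsScalarTower K Λ M'']

/-- The pencil `a - s b` attached to the first two arms of `M` is injective on polynomials in `s`
with coefficients in the component of `M` at the source.  Equivalently, there is no nonzero map
to `M` from the generic module. -/
def TF (N : ℕ) [Fact (2 ≤ N)] (p : Fin N → ℕ) (K : Type) [Field K] (M : Type) [AddCommGroup M]
    [Module Λ M] : Prop :=
  ∀ v : ℕ → M, (∀ m, (ge src : Λ) • v m = v m) → (∃ n, ∀ m, n ≤ m → v m = 0) →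
    (cc (i0 N) : Λ) • v 0 = 0 →
    (∀ m, (cc (i0 N) : Λ) • v (m + 1) = (cc (i1 N) : Λ) • v m) → ∀ m, v m = 0

theorem TF.of_sep (h : ∀ m : M, m ≠ 0 → ∃ U : Submodule Λ M, m ∉ U ∧ TF N p K (M ⧸ U)) :
    TF N p K M := by
  intro v h1 ⟨n, h2⟩ h3 h4 m
  by_contra hm
  obtain ⟨U, hU, hT⟩ := h _ hm
  apply hU
  have := hT (fun m => U.mkQ (v m)) (fun m => by rw [← map_smul, h1])
    ⟨n, fun m hm => by rw [h2 m hm, map_zero]⟩ (by rw [← map_smul, h3, map_zero])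
    (fun m => by rw [← map_smul, ← map_smul, h4]) m
  simpa using this

theorem TF.of_inj (h : TF N p K M') (f : M →ₗ[Λ] M') (hf : Function.Injective f) :
    TF N p K M := by
  intro v h1 ⟨n, h2⟩ h3 h4 m
  apply hf
  rw [map_zero]
  exact h (fun m => f (v m)) (fun m => by rw [← map_smul, h1])
    ⟨n, fun m hm => by rw [h2 m hm, map_zero]⟩ (by rw [← map_smul, h3, map_zero])
    (fun m => by rw [← map_smul, ← map_smul, h4]) m

theorem TF.equiv (h : TF N p K M) (e : M ≃ₗ[Λ] M') : TF N p K M' :=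
  h.of_inj e.symm.toLinearMap e.symm.injective

theorem TF.of_subsingleton [Subsingleton M] : TF N p K M := fun _ _ _ _ _ _ => Subsingleton.elim _ _

theorem TF.sub (h : TF N p K M) (U : Submodule Λ M) : TF N p K U :=
  h.of_inj U.subtype U.injective_subtype

theorem TF.ext {U : Submodule Λ M} (hU : TF N p K U) (hQ : TF N p K (M ⧸ U)) :
    TF N p K M := by
  intro v h1 h2 h3 h4
  have hmem : ∀ m, v m ∈ U := by
    intro m
    obtain ⟨n, h2⟩ := h2
    have := hQ (fun m => U.mkQ (v m)) (fun m => by rw [← map_smul, h1])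
      ⟨n, fun m hm => by rw [h2 m hm, map_zero]⟩ (by rw [← map_smul, h3, map_zero])
      (fun m => by rw [← map_smul, ← map_smul, h4]) m
    simpa using this
  intro m
  have := hU (fun m => ⟨v m, hmem m⟩) (fun m => sext (h1 m))
    (by obtain ⟨n, h2⟩ := h2; exact ⟨n, fun m hm => sext (h2 m hm)⟩)
    (sext h3) (fun m => sext (h4 m)) m
  exact congrArg val this

theorem TF.ext' (f : M →ₗ[Λ] M') (hU : TF N p K (ker f)) (hQ : TF N p K M') :
    TF N p K M := by
  refine TF.ext hU (hQ.of_inj ((ker f).liftQ f le_rfl) ?_)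
  rw [← ker_eq_bot, Submodule.ker_liftQ_eq_bot _ _ _ le_rfl]

theorem TF.comap (f : M →ₗ[Λ] M') {U : Submodule Λ M'} (h : TF N p K (M' ⧸ U)) :
    TF N p K (M ⧸ U.comap f) := by
  refine h.of_inj ((U.comap f).mapQ U f le_rfl) ?_
  rw [← ker_eq_bot, Submodule.mapQ, Submodule.ker_liftQ_eq_bot _ _ _ ?_]
  rw [LinearMap.ker_comp, ker_mkQ]

/-- If `f` is surjective, `TF` of the target quotient follows from that of the source quotient. -/
theorem TF.of_comap (f : M →ₗ[Λ] M') (hf : Surjective f)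
    {U : Submodule Λ M'} (h : TF N p K (M ⧸ U.comap f)) : TF N p K (M' ⧸ U) := by
  have hb : Bijective ((U.comap f).mapQ U f le_rfl) := by
    constructor
    · rw [← ker_eq_bot, Submodule.mapQ, Submodule.ker_liftQ_eq_bot _ _ _ ?_]
      rw [LinearMap.ker_comp, ker_mkQ]
    · intro y
      obtain ⟨y, rfl⟩ := U.mkQ_surjective y
      obtain ⟨x, rfl⟩ := hf y
      exact ⟨(U.comap f).mkQ x, by simp⟩
  exact h.equiv (LinearEquiv.ofBijective _ hb)

/-- The smallest submodule containing `S` for which the quotient satisfies `TF`. -/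
def cl (S : Submodule Λ M) : Submodule Λ M :=
  sInf {U | S ≤ U ∧ TF N p K (M ⧸ U)}

theorem le_cl (S : Submodule Λ M) : S ≤ cl S := le_sInf fun _ h => h.1

theorem cl_le {S U : Submodule Λ M} (h : S ≤ U) (hU : TF N p K (M ⧸ U)) : cl S ≤ U :=
  sInf_le ⟨h, hU⟩

theorem TF_cl (S : Submodule Λ M) : TF N p K (M ⧸ cl S) := by
  apply TF.of_sep
  intro m hm
  obtain ⟨m, rfl⟩ := (cl S).mkQ_surjective m
  have : m ∉ cl S := by simpa using hm
  simp only [cl, Submodule.mem_sInf, not_forall] at this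
  obtain ⟨U, ⟨hU, hT⟩, hmU⟩ := this
  refine ⟨U.map (cl S).mkQ, ?_, ?_⟩
  · rintro ⟨x, hx, hxm⟩
    have h2 : x - m ∈ cl S := by
      rw [← ker_mkQ (cl S), mem_ker, map_sub, hxm, sub_self]
    have := cl_le hU hT h2
    exact hmU (by simpa using U.sub_mem hx this)
  · refine TF.of_comap (cl S).mkQ (cl S).mkQ_surjective ?_
    rw [Submodule.comap_map_mkQ, sup_eq_right.2 (cl_le hU hT)]
    exact hT

theorem cl_mono {S U : Submodule Λ M} (h : S ≤ U) : cl S ≤ cl U :=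
  cl_le (h.trans (le_cl U)) (TF_cl U)

theorem cl_eq {S : Submodule Λ M} (h : TF N p K (M ⧸ S)) : cl S = S :=
  le_antisymm (cl_le le_rfl h) (le_cl S)

theorem TF_quot_bot (h : TF N p K M) : TF N p K (M ⧸ (⊥ : Submodule Λ M)) :=
  h.equiv (Submodule.quotEquivOfEqBot _ rfl).symm

theorem cl_bot (h : TF N p K M) : cl (⊥ : Submodule Λ M) = ⊥ := cl_eq (TF_quot_bot h)

/-- `M` has no nonzero quotient satisfying `TF`. -/
def XX (N : ℕ) [Fact (2 ≤ N)] (p : Fin N → ℕ) (K : Type) [Field K] (M : Type) [AddCommGroup M]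
    [Module Λ M] : Prop :=
  ∀ U : Submodule Λ M, TF N p K (M ⧸ U) → U = ⊤

theorem XX.of_surj (h : XX N p K M) (f : M →ₗ[Λ] M') (hf : Surjective f) :
    XX N p K M' := by
  intro U hU
  have := h _ (TF.comap f hU)
  rw [eq_top_iff]
  rintro y -
  obtain ⟨x, rfl⟩ := hf y
  have : x ∈ U.comap f := this ▸ mem_top
  exact this

/-- `f` has no nonzero cokernel among the modules satisfying `TF`. -/
def CE (f : M →ₗ[Λ] M') : Prop := cl (range f) = ⊤

theorem CE_iff (f : M →ₗ[Λ] M') :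
    CE f ↔ ∀ U, range f ≤ U → TF N p K (M' ⧸ U) → U = ⊤ := by
  constructor
  · intro h U h1 h2
    exact top_le_iff.1 (h ▸ cl_le h1 h2)
  · intro h
    exact h _ (le_cl _) (TF_cl _)

theorem CE.quot (f : M →ₗ[Λ] M') (h : CE f) : XX N p K (M' ⧸ range f) := by
  intro U hU
  have h1 := (CE_iff f).1 h (U.comap (range f).mkQ) ?_ (TF.comap _ hU)
  · rw [eq_top_iff]
    rintro y -
    obtain ⟨x, rfl⟩ := (range f).mkQ_surjective y
    have : x ∈ U.comap (range f).mkQ := h1 ▸ mem_top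
    exact this
  · intro x hx
    simp only [Submodule.mem_comap]
    have : (range f).mkQ x = 0 := by simpa using hx
    rw [this]; exact U.zero_mem

/-- `cl` computed in a quotient of `M`. -/
theorem cl_map_of_surj (f : M →ₗ[Λ] M') (hf : Surjective f)
    (S : Submodule Λ M) (hk : ker f ≤ S) : (cl S).map f = cl (S.map f) := by
  have hk' : ker f ≤ cl S := hk.trans (le_cl S)
  apply le_antisymm
  · rw [Submodule.map_le_iff_le_comap]
    exact cl_le (Submodule.map_le_iff_le_comap.1 (le_cl _)) (TF.comap f (TF_cl _))
  · refine cl_le (Submodule.map_mono (le_cl _)) (TF.of_comap f hf ?_)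
    rw [Submodule.comap_map_eq, sup_eq_left.2 hk']
    exact TF_cl S

/-- `cl` can be computed inside a submodule with `TF` quotient. -/
theorem cl_map_subtype (W : Submodule Λ M) (hW : TF N p K (M ⧸ W))
    (S : Submodule Λ W) : (cl S).map W.subtype = cl (S.map W.subtype) := by
  apply le_antisymm
  · rw [Submodule.map_le_iff_le_comap]
    exact cl_le (Submodule.map_le_iff_le_comap.1 (le_cl _)) (TF.comap _ (TF_cl _))
  · refine cl_le (Submodule.map_mono (le_cl _)) ?_
    set U := (cl S).map W.subtype
    have hUW : U ≤ W := Submodule.map_subtype_le _ _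
    -- `M ⧸ U` is an extension of `M ⧸ W` by `W ⧸ cl S`
    refine TF.ext' (U.mapQ W LinearMap.id hUW) ?_ hW
    let g : W →ₗ[Λ] ker (U.mapQ W LinearMap.id hUW) :=
      codRestrict _ (U.mkQ ∘ₗ W.subtype) (fun w => by simp)
    have hg : Surjective g := by
      rintro ⟨y, hy⟩
      obtain ⟨x, rfl⟩ := U.mkQ_surjective y
      have hx : x ∈ W := by simpa using hy
      exact ⟨⟨x, hx⟩, rfl⟩
    have hker : ker g = cl S := by
      ext w
      have : g w = 0 ↔ (w : M) ∈ U := by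
        rw [Subtype.ext_iff]
        exact Submodule.Quotient.mk_eq_zero U
      rw [mem_ker, this]
      constructor
      · rintro ⟨w', h1, h2⟩
        rwa [← sext h2]
      · intro h; exact ⟨w, h, rfl⟩
    exact TF.equiv (hker ▸ TF_cl S) (g.quotKerEquivOfSurjective hg)

theorem CE.comp {f : M →ₗ[Λ] M'} {g : M' →ₗ[Λ] M''} (hf : CE f) (hg : CE g) :
    CE (g ∘ₗ f) := by
  rw [CE_iff] at *
  intro U h1 h2
  refine hg U ?_ h2
  have := hf (U.comap g) ?_ (TF.comap g h2)
  · rintro _ ⟨y, rfl⟩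
    have : y ∈ U.comap g := this ▸ mem_top
    exact this
  · rintro _ ⟨x, rfl⟩
    exact h1 ⟨x, rfl⟩

theorem CE.of_surj {f : M →ₗ[Λ] M'} (hf : Surjective f) : CE f := by
  rw [CE, range_eq_top.2 hf]
  exact top_le_iff.1 (le_cl _)

theorem CE.of_comp {f : M →ₗ[Λ] M'} {g : M' →ₗ[Λ] M''} (h : CE (g ∘ₗ f)) :
    CE g := by
  rw [CE_iff] at *
  intro U h1 h2
  exact h U ((LinearMap.range_comp_le_range f g).trans h1) h2

end

section

variable {N : ℕ} {p : Fin N → ℕ} {K : Type} [Field K]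
variable {M : Type} [AddCommGroup M] [Module K M] [Module Λ M]
  [IsScalarTower K Λ M]

/-- The action of an element of the free algebra, as a `K`-linear map. -/
def act (a : Λ) : M →ₗ[K] M where
  toFun m := a • m
  map_add' := smul_add a
  map_smul' c m := smul_smul_comm' c a m

@[simp] theorem act_apply (a : Λ) (m : M) : act a m = a • m := rfl

/-- The component of `M` at the vertex `v`. -/
def comp (K : Type) [Field K] (M : Type) [AddCommGroup M] [Module K M] [Module Λ M]
    [IsScalarTower K Λ M] (v : CanVertex N p) : Submodule K M :=
  range (act (ge v : Λ) : M →ₗ[K] M)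

/-- The dimension of `M` at the vertex `v`. -/
noncomputable def nd (K : Type) [Field K] (M : Type) [AddCommGroup M] [Module K M]
    [Module Λ M] [IsScalarTower K Λ M] (v : CanVertex N p) : ℕ :=
  finrank K (comp K M v)

theorem IsGr.mem_comp (h : IsGr N p K M) {v : CanVertex N p} {m : M} :
    m ∈ comp K M v ↔ (ge v : Λ) • m = m := by
  constructor
  · rintro ⟨x, rfl⟩
    exact h.ge_self v x
  · intro h; exact ⟨m, h⟩

variable [Fact (2 ≤ N)]

theorem cc_smul_K (i : Fin N) (c : K) (m : M) :
    (cc i : Λ) • c • m = c • (cc i : Λ) • m := smul_smul_comm' _ _ _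

/-- The field of rational functions in one variable `s`. -/
abbrev Ks (K : Type) [Field K] : Type := FractionRing K[X]

/-- The variable `s` of the field of rational functions. -/
noncomputable def sv (K : Type) [Field K] : Ks K := algebraMap K[X] (Ks K) X

/-- For a module satisfying `TF`, the pencil `s b - a` stays injective over `K(s)`. -/
theorem TF.linearIndependent (h : IsGr N p K M) (hT : TF N p K M) {ι κ : Type} [Finite ι]
    (y : ι → M) (hy : LinearIndependent K y) (hy0 : ∀ k, (ge src : Λ) • y k = y k)
    (c : κ → M →ₗ[K] K)
    (hc : ∀ m, (ge snk : Λ) • m = m → (∀ l, c l m = 0) → m = 0) :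
    LinearIndependent (Ks K) (fun (k : ι) (l : κ) =>
      sv K * algebraMap K (Ks K) (c l ((cc (i1 N) : Λ) • y k))
        - algebraMap K (Ks K) (c l ((cc (i0 N) : Λ) • y k))) := by
  have := Fintype.ofFinite ι
  rw [← LinearIndependent.iff_fractionRing K[X] (Ks K), Fintype.linearIndependent_iff]
  intro P hP
  have hpoly : ∀ l, ∑ k, P k * (X * C (c l ((cc (i1 N) : Λ) • y k))
      - C (c l ((cc (i0 N) : Λ) • y k))) = 0 := by
    intro l
    apply IsFractionRing.injective K[X] (Ks K)
    have := congrFun hP l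
    simp only [Finset.sum_apply, smul_def, Pi.zero_apply] at this
    rw [map_sum, map_zero, ← this]
    refine sum_congr rfl fun k _ => ?_
    simp only [map_mul, map_sub, sv]
    rfl
  set v : ℕ → M := fun m => ∑ k, (P k).coeff m • y k with hv
  have hv0 : ∀ m, v m = 0 := by
    refine hT v ?_ ?_ ?_ ?_
    · intro m
      simp only [hv, smul_sum]
      refine sum_congr rfl fun k _ => ?_
      rw [smul_smul_comm', hy0]
    · refine ⟨Finset.univ.sup (fun k => (P k).natDegree) + 1, fun m hm => ?_⟩
      refine sum_eq_zero fun k _ => ?_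
      rw [coeff_eq_zero_of_natDegree_lt, zero_smul]
      have := le_sup (f := fun k => (P k).natDegree) (mem_univ k)
      omega
    · apply hc
      · rw [h.ge_cc]
      · intro l
        have := congrArg (fun Q => coeff Q 0) (hpoly l)
        simp only [finsetSum_coeff, mul_sub, coeff_sub, coeff_mul_C, ← mul_assoc,
          coeff_zero, coeff_mul_X_zero] at this
        simpa [hv, smul_sum, cc_smul_K] using this
    · intro m
      rw [← sub_eq_zero]
      apply hc
      · rw [smul_sub, h.ge_cc, h.ge_cc]
      · intro l
        have := congrArg (fun Q => coeff Q (m + 1)) (hpoly l)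
        simp only [finsetSum_coeff, mul_sub, coeff_sub, coeff_mul_C, ← mul_assoc,
          coeff_zero, coeff_mul_X, sum_sub_distrib] at this
        simp only [hv, smul_sum, cc_smul_K, map_sub, map_sum, map_smul, smul_eq_mul]
        linear_combination -this
  rw [Fintype.linearIndependent_iff] at hy
  intro k
  ext m
  exact hy (fun k => (P k).coeff m) (hv0 m) k

theorem exists_coord (h : IsGr N p K M) [FiniteDimensional K M] (v : CanVertex N p) :
    ∃ c : Fin (nd (N := N) (p := p) K M v) → M →ₗ[K] K,
      ∀ m, (ge v : Λ) • m = m → (∀ l, c l m = 0) → m = 0 := by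
  let b := finBasis K (comp K M v)
  obtain ⟨f, hf⟩ := exists_extend (LinearMap.id : comp K M v →ₗ[K] comp K M v)
  refine ⟨fun l => b.coord l ∘ₗ f, fun m hm h0 => ?_⟩
  have hm' : m ∈ comp K M v := h.mem_comp.2 hm
  have h1 : f m = ⟨m, hm'⟩ := lcongr_fun hf ⟨m, hm'⟩
  have h2 : f m = 0 := b.ext_elem (fun l => by simpa using h0 l)
  rw [h1] at h2
  exact congrArg val h2

theorem exists_basis (h : IsGr N p K M) [FiniteDimensional K M] (v : CanVertex N p) :
    ∃ y : Fin (nd (N := N) (p := p) K M v) → M, LinearIndependent K y ∧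
      (∀ k, (ge v : Λ) • y k = y k) ∧
      ∀ m, (ge v : Λ) • m = m → m ∈ span K (Set.range y) := by
  let b := finBasis K (comp K M v)
  refine ⟨fun k => b k, b.linearIndependent.map' (comp K M v).subtype (Submodule.ker_subtype _),
    fun k => h.mem_comp.1 (b k).2, fun m hm => ?_⟩
  have hm' : m ∈ comp K M v := h.mem_comp.2 hm
  have : (⟨m, hm'⟩ : comp K M v) ∈ span K (Set.range b) := by simp [b.span_eq]
  have := Submodule.mem_map_of_mem (f := (comp K M v).subtype) this
  rw [Submodule.map_span, ← Set.range_comp] at this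
  exact this

/-- A module satisfying `TF` has at the sink at least the dimension it has at the source. -/
theorem TF.nd_le (h : IsGr N p K M) (hT : TF N p K M) [FiniteDimensional K M] :
    nd (N := N) (p := p) K M src ≤ nd (N := N) (p := p) K M snk := by
  obtain ⟨y, h1, h2, -⟩ := exists_basis h src
  obtain ⟨c, hc⟩ := exists_coord h snk
  simpa using (hT.linearIndependent h y h1 h2 c hc).fintype_card_le_finrank

/-- The transpose of the injective pencil `s b - a` is surjective. -/
theorem TF.exists_functional (h : IsGr N p K M) (hT : TF N p K M) [FiniteDimensional K M]
    (r : M →ₗ[K] Ks K) : ∃ f : M →ₗ[K] Ks K, ∀ m, (ge src : Λ) • m = m →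
      sv K * f ((cc (i1 N) : Λ) • m) - f ((cc (i0 N) : Λ) • m) = r m := by
  obtain ⟨y, h1, h2, h3⟩ := exists_basis h src
  obtain ⟨c, hc⟩ := exists_coord h snk
  have hli := hT.linearIndependent h y h1 h2 c hc
  obtain ⟨F, hF⟩ := exists_extend ((Basis.span hli).constr (Ks K) fun k => r (y k))
  let f : M →ₗ[K] Ks K := (F.restrictScalars K) ∘ₗ
    LinearMap.pi fun l => (Algebra.linearMap K (Ks K)) ∘ₗ c l
  refine ⟨f, fun m hm => ?_⟩
  have hm := h3 m hm
  let g : M →ₗ[K] Ks K := mulLeft K (sv K) ∘ₗ f ∘ₗ act (cc (i1 N) : Λ) -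
    f ∘ₗ act (cc (i0 N) : Λ)
  have hgr : Set.EqOn g r (Set.range y) := by
    rintro _ ⟨k, rfl⟩
    have := lcongr_fun hF (Basis.span hli k)
    rw [Basis.constr_basis, comp_apply, Submodule.subtype_apply, Basis.span_apply] at this
    rw [← this]
    simp only [g, f, LinearMap.sub_apply, comp_apply, act_apply, LinearMap.mulLeft_apply,
      LinearMap.restrictScalars_apply]
    rw [← smul_eq_mul, ← map_smul, ← map_sub]
    rfl
  exact LinearMap.eqOn_span' hgr hm

end

section

variable {N : ℕ} {p : Fin N → ℕ} {K : Type} [Field K]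
variable {M : Type} [AddCommGroup M] [Module K M] [Module Λ M]
  [IsScalarTower K Λ M]
variable {L : Type} [AddCommGroup L] [Module K L] [Module Λ L]
  [IsScalarTower K Λ L]
variable [Fact (2 ≤ N)]

/-- The parameter of the arm `i`, where the second arm has parameter `∞`: the relations say
that `cc i` acts as `cc (i0 N) - mu lam i • cc (i1 N)` for `i ≠ i1 N`. -/
def mu (lam : Fin (N - 2) → K) (i : Fin N) : K :=
  if h : 2 ≤ i.1 then lam ⟨i.1 - 2, by omega⟩ else 0

theorem mu_ij (lam : Fin (N - 2) → K) (j : Fin (N - 2)) : mu lam (ij j) = lam j := by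
  simp [mu, ij]

theorem mu_i0 (lam : Fin (N - 2) → K) : mu lam (i0 N) = 0 := by
  simp [mu, i0]

theorem i0_ne_i1 : i0 N ≠ i1 N := by simp [i0, i1]

theorem ij_ne_i0 (j : Fin (N - 2)) : ij j ≠ i0 N := by simp [i0, ij]

theorem ij_ne_i1 (j : Fin (N - 2)) : ij j ≠ i1 N := by simp [i1, ij]

theorem ij_inj : Function.Injective (ij : Fin (N - 2) → Fin N) := by
  intro i j h; simpa [ij, Fin.ext_iff] using h

theorem IsRel.cc_eq {lam : Fin (N - 2) → K} (h : IsRel p lam M) {i : Fin N} (hi : i ≠ i1 N)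
    (m : M) : (cc i : Λ) • m =
      (cc (i0 N) : Λ) • m - mu lam i • (cc (i1 N) : Λ) • m := by
  rcases arm_cases i with rfl | rfl | ⟨j, rfl⟩
  · simp [mu_i0]
  · exact absurd rfl hi
  · rw [mu_ij]; exact h j m

theorem Good.mu_inj {lam : Fin (N - 2) → K} (h : Good lam) {i j : Fin N} (hi : i ≠ i1 N)
    (hj : j ≠ i1 N) (hij : mu lam i = mu lam j) : i = j := by
  rcases arm_cases i with rfl | rfl | ⟨i, rfl⟩ <;> rcases arm_cases j with rfl | rfl | ⟨j, rfl⟩ <;>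
    simp_all [mu_i0, mu_ij]
  · exact absurd hij.symm (h.2 j)
  · exact absurd hij (h.2 i)
  · rw [h.1 hij]

/-- The kernels of the `cc i` at the source, other than for `i = i1 N`, are independent, for
modules satisfying `TF`. -/
theorem TF.ker_indep {lam : Fin (N - 2) → K} (hl : Good lam) (hR : IsRel p lam M)
    (hT : TF N p K M) (y : Fin N → M) (hy0 : ∀ i, (ge src : Λ) • y i = y i)
    (hyc : ∀ i, i ≠ i1 N → (cc i : Λ) • y i = 0) (hy1 : y (i1 N) = 0)
    (hs : ∑ i, y i = 0) : ∀ i, y i = 0 := by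
  classical
  let P : Fin N → K[X] := fun i =>
    ∏ k ∈ (Finset.univ.erase (i1 N)).erase i, (X - C (mu lam k))
  let Q : K[X] := ∏ k ∈ Finset.univ.erase (i1 N), (X - C (mu lam k))
  have hPQ : ∀ i, i ≠ i1 N → P i * (X - C (mu lam i)) = Q := by
    intro i hi
    exact Finset.prod_erase_mul _ _ (by simp [hi])
  have hab : ∀ i, (cc (i0 N) : Λ) • y i = mu lam i • (cc (i1 N) : Λ) • y i := by
    intro i
    by_cases hi : i = i1 N
    · subst hi; simp [hy1]
    · have := hyc i hi
      rw [hR.cc_eq hi, sub_eq_zero] at this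
      exact this
  -- `(cc i0 - s cc i1) (∑ i, P i * y i) = - Q * cc i1 (∑ i, y i) = 0`
  have hv : ∀ m, ∑ i, (P i).coeff m • y i = 0 := by
    refine hT (fun m => ∑ i, (P i).coeff m • y i) ?_ ?_ ?_ ?_
    · intro m
      simp only [smul_sum]
      refine sum_congr rfl fun k _ => ?_
      rw [smul_smul_comm', hy0]
    · refine ⟨Finset.univ.sup (fun k => (P k).natDegree) + 1, fun m hm => ?_⟩
      refine sum_eq_zero fun k _ => ?_
      rw [coeff_eq_zero_of_natDegree_lt, zero_smul]
      have := le_sup (f := fun k => (P k).natDegree) (mem_univ k)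
      omega
    · have : ∀ i, (P i).coeff 0 • (cc (i0 N) : Λ) • y i =
          -Q.coeff 0 • (cc (i1 N) : Λ) • y i := by
        intro i
        by_cases hi : i = i1 N
        · subst hi; simp [hy1]
        · rw [hab, smul_smul, ← hPQ i hi]
          simp [mul_sub]
      simp only [smul_sum, cc_smul_K, this]
      rw [← smul_sum, ← smul_sum, hs, smul_zero, smul_zero]
    · intro m
      rw [← sub_eq_zero]
      have : ∀ i, (P i).coeff (m + 1) • (cc (i0 N) : Λ) • y i -
          (P i).coeff m • (cc (i1 N) : Λ) • y i =
          -Q.coeff (m + 1) • (cc (i1 N) : Λ) • y i := by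
        intro i
        by_cases hi : i = i1 N
        · subst hi; simp [hy1]
        · rw [hab, smul_smul, ← hPQ i hi, ← sub_smul]
          simp [mul_sub]
      simp only [smul_sum, cc_smul_K]
      rw [← sum_sub_distrib]
      simp only [this]
      rw [← smul_sum, ← smul_sum, hs, smul_zero, smul_zero]
  intro i
  by_cases hi : i = i1 N
  · subst hi; exact hy1
  -- evaluate at `s = mu lam i`
  let D : ℕ := Finset.univ.sup (fun k => (P k).natDegree) + 1
  have hD : ∀ k, (P k).natDegree < D := by
    intro k
    have := le_sup (f := fun k => (P k).natDegree) (mem_univ k)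
    simp only [D]
    omega
  have h1 : ∑ k, (P k).eval (mu lam i) • y k = 0 := by
    have : ∀ k, (P k).eval (mu lam i) • y k =
        ∑ m ∈ Finset.range D, (mu lam i) ^ m • (P k).coeff m • y k := by
      intro k
      rw [eval_eq_sum_range' (hD k), Finset.sum_smul]
      refine sum_congr rfl fun m _ => ?_
      rw [smul_smul, mul_comm]
    simp only [this]
    rw [sum_comm]
    refine sum_eq_zero fun m _ => ?_
    rw [← smul_sum, hv, smul_zero]
  rw [sum_eq_single i] at h1
  · refine (smul_eq_zero.1 h1).resolve_left ?_
    simp only [P, eval_prod, Finset.prod_ne_zero_iff]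
    intro k hk
    simp only [Finset.mem_erase, mem_univ, and_true] at hk
    simp only [eval_sub, eval_X, eval_C, sub_ne_zero]
    exact fun h => hk.1 (hl.mu_inj hi hk.2 h).symm
  · intro k _ hk
    by_cases hk1 : k = i1 N
    · rw [hk1, hy1, smul_zero]
    · simp only [P, eval_prod]
      rw [Finset.prod_eq_zero (i := i) (by simp [hi, hk.symm]) (by simp), zero_smul]
  · simp

/-! ### The complex computing extensions -/

variable (N p) in
/-- `φ` preserves the decomposition over the vertices. -/
def IsC0 (φ : M →ₗ[K] L) : Prop :=
  ∀ (v : CanVertex N p) m, φ ((ge v : Λ) • m) = (ge v : Λ) • φ m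

variable (N p) in
/-- `ζ` is a family of perturbations of the maps along the arms. -/
def IsC1 (ζ : Fin N → M →ₗ[K] L) : Prop :=
  ∀ i v w, ¬ CanArrow N p i v w → ∀ m,
    (ge w : Λ) • ζ i ((ge v : Λ) • m) = 0

variable (p) in
/-- The first order change of the composite along the arm `i` under the perturbation `ζ`. -/
def dcc (i : Fin N) (ζ : M →ₗ[K] L) : M →ₗ[K] L :=
  ∑ k ∈ Finset.range (p i), act (ge snk * gx i ^ k : Λ) ∘ₗ ζ ∘ₗ
    act (gx i ^ (p i - 1 - k) * ge src : Λ)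

variable (p) in
/-- The first order change of the relations under the perturbation `ζ`. -/
def LL (lam : Fin (N - 2) → K) (ζ : Fin N → M →ₗ[K] L) (j : Fin (N - 2)) :
    M →ₗ[K] L :=
  dcc p (ij j) (ζ (ij j)) - dcc p (i0 N) (ζ (i0 N)) + lam j • dcc p (i1 N) (ζ (i1 N))

variable (p) in
/-- The coboundary of a graded map. -/
def dl (φ : M →ₗ[K] L) (i : Fin N) : M →ₗ[K] L :=
  act (gx i : Λ) ∘ₗ φ - φ ∘ₗ act (gx i : Λ)

variable (p) in
/-- `ζ` is a cocycle. -/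
def IsZ (lam : Fin (N - 2) → K) (ζ : Fin N → M →ₗ[K] L) : Prop :=
  IsC1 N p ζ ∧ ∀ j, LL p lam ζ j = 0

end

section

variable {N : ℕ} {p : Fin N → ℕ} {K : Type} [Field K]

theorem exists_factor {A B C : Type} [AddCommGroup A] [Module K A] [AddCommGroup B] [Module K B]
    [AddCommGroup C] [Module K C] (q : A →ₗ[K] B) (t : A →ₗ[K] C)
    (h : ∀ a, q a = 0 → t a = 0) : ∃ s : B →ₗ[K] C, ∀ a, s (q a) = t a := by
  obtain ⟨g, hg⟩ := q.rangeRestrict.exists_rightInverse_of_surjective q.range_rangeRestrict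
  obtain ⟨s, hs⟩ := exists_extend (t ∘ₗ g)
  refine ⟨s, fun a => ?_⟩
  have h1 := lcongr_fun hs (q.rangeRestrict a)
  have h2 := congrArg val (lcongr_fun hg (q.rangeRestrict a))
  have h3 : t (g (q.rangeRestrict a) - a) = 0 := by
    apply h
    rw [map_sub, sub_eq_zero]
    exact h2
  rw [map_sub, sub_eq_zero] at h3
  rw [← h3]; exact h1

variable {M : Type} [AddCommGroup M] [Module K M] [Module Λ M]
  [IsScalarTower K Λ M]
variable {L : Type} [AddCommGroup L] [Module K L] [Module Λ L]
  [IsScalarTower K Λ L]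
variable {L' : Type} [AddCommGroup L'] [Module K L'] [Module Λ L']
  [IsScalarTower K Λ L']
variable [Fact (2 ≤ N)]

theorem dcc_apply (i : Fin N) (ζ : M →ₗ[K] L) (m : M) :
    dcc p i ζ m = ∑ k ∈ Finset.range (p i), (ge snk : Λ) • (gx i : Λ) ^ k •
      ζ ((gx i : Λ) ^ (p i - 1 - k) • (ge src : Λ) • m) := by
  simp [dcc, LinearMap.sum_apply, mul_smul]

theorem LL_apply (lam : Fin (N - 2) → K) (ζ : Fin N → M →ₗ[K] L) (j : Fin (N - 2)) (m : M) :
    LL p lam ζ j m = dcc p (ij j) (ζ (ij j)) m - dcc p (i0 N) (ζ (i0 N)) m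
      + lam j • dcc p (i1 N) (ζ (i1 N)) m := rfl

theorem dl_apply (φ : M →ₗ[K] L) (i : Fin N) (m : M) :
    dl p φ i m = (gx i : Λ) • φ m - φ ((gx i : Λ) • m) := rfl

/-- Perturbing the last map of an arm. -/
theorem exists_dcc (hp : ∀ i, 2 ≤ p i) (h : IsGr N p K M) (h' : IsGr N p K L) (i : Fin N)
    (t : M →ₗ[K] L)
    (ht : ∀ m, (ge snk : Λ) • t ((ge src : Λ) • m) = t m)
    (hk : ∀ m, (ge src : Λ) • m = m → (cc i : Λ) • m = 0 → t m = 0) :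
    ∃ ζ : M →ₗ[K] L, (∀ v w, ¬ CanArrow N p i v w → ∀ m,
      (ge w : Λ) • ζ ((ge v : Λ) • m) = 0) ∧ dcc p i ζ = t := by
  have hpi := hp i
  have ht0 : ∀ m, t ((ge src : Λ) • m) = t m := by
    intro m; rw [← ht, h.ge_self, ht]
  obtain ⟨s, hs⟩ := exists_factor
    (act (gx i ^ (p i - 1) * ge src : Λ) : M →ₗ[K] M) t (by
      intro m hm
      rw [act_apply, mul_smul] at hm
      rw [← ht0]
      apply hk _ (h.ge_self _ _)
      rw [h.cc_smul hp, h.ge_self, show p i = (p i - 1) + 1 by omega, pow_succ', mul_smul, hm,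
        smul_zero])
  refine ⟨act (ge snk : Λ) ∘ₗ s ∘ₗ act (ge (vx p i (p i - 1)) : Λ),
    ?_, ?_⟩
  · intro v w hvw m
    simp only [comp_apply, act_apply]
    by_cases hv : v = vx p i (p i - 1)
    · subst hv
      rw [h'.ge_ne, ]
      rintro rfl
      apply hvw
      rw [canArrow_iff hp]
      refine ⟨p i - 1, by omega, rfl, ?_⟩
      rw [show p i - 1 + 1 = p i by omega, vx_last hp]
    · rw [h.ge_ne (Ne.symm hv)]; simp
  · ext m
    rw [dcc_apply, sum_eq_single 0]
    · simp only [comp_apply, act_apply, pow_zero, one_smul, Nat.sub_zero]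
      have := h.x_pow_vx hp i (k := 0) (l := p i - 1) (by omega) m
      rw [zero_add, vx_zero] at this
      rw [← this, h'.ge_self]
      have hsm := hs m
      rw [act_apply, mul_smul] at hsm
      rw [hsm, ← ht m, h'.ge_self]
    · intro k hk hk0
      rw [Finset.mem_range] at hk
      have := h.x_pow_vx hp i (k := 0) (l := p i - 1 - k) (by omega) m
      rw [zero_add, vx_zero] at this
      simp only [comp_apply, act_apply]
      rw [this, h.ge_ne]
      · simp
      · intro he
        have := vx_inj hp i (by omega) (by omega) he
        omega
    · intro hn; exfalso; apply hn; rw [Finset.mem_range]; omega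

/-- If `M` satisfies `TF` the linearised relations are surjective. -/
theorem LL_surj (hp : ∀ i, 2 ≤ p i) {lam : Fin (N - 2) → K} (hl : Good lam)
    (h : IsGr N p K M) (hR : IsRel p lam M) (hT : TF N p K M) (h' : IsGr N p K L)
    (ξ : Fin (N - 2) → M →ₗ[K] L) (hξ : ∀ j m,
      (ge snk : Λ) • ξ j ((ge src : Λ) • m) = ξ j m) :
    ∃ ζ : Fin N → M →ₗ[K] L, IsC1 N p ζ ∧ ∀ j, LL p lam ζ j = ξ j := by
  classical
  let k : Fin N → Submodule K M := fun i => comp (N := N) (p := p) K M src ⊓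
    (if i = i1 N then ⊥ else ker (act (cc i : Λ) : M →ₗ[K] M))
  have hk0 : ∀ i, ∀ m ∈ k i, (ge src : Λ) • m = m := fun i m hm =>
    h.mem_comp.1 hm.1
  have hk1 : ∀ i, i ≠ i1 N → ∀ m ∈ k i, (cc i : Λ) • m = 0 := fun i hi m hm => by
    have := hm.2; rw [if_neg hi] at this; exact this
  have hk2 : ∀ m ∈ k (i1 N), m = 0 := fun m hm => by
    have := hm.2; rw [if_pos rfl] at this; exact this
  have hk3 : ∀ i, i ≠ i1 N → ∀ m, (ge src : Λ) • m = m →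
      (cc i : Λ) • m = 0 → m ∈ k i := by
    intro i hi m h1 h2
    refine ⟨h.mem_comp.2 h1, ?_⟩
    rw [if_neg hi]; exact h2
  let Φ : (∀ i, k i) →ₗ[K] M := ∑ i, (k i).subtype ∘ₗ proj i
  have hΦ : ∀ y, Φ y = ∑ i, (y i : M) := fun y => by simp [Φ]
  have hinj : ker Φ = ⊥ := by
    rw [LinearMap.ker_eq_bot']
    intro y hy
    rw [hΦ] at hy
    have := hT.ker_indep hl hR (fun i => (y i : M)) (fun i => hk0 i _ (y i).2)
      (fun i hi => hk1 i hi _ (y i).2) (hk2 _ (y _).2) hy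
    ext i; exact this i
  obtain ⟨g, hg⟩ := Φ.exists_leftInverse_of_injective hinj
  have hg' : ∀ i, ∀ m (hm : m ∈ k i), g m = Pi.single i ⟨m, hm⟩ := by
    intro i m hm
    have := lcongr_fun hg (Pi.single i ⟨m, hm⟩)
    rw [comp_apply, hΦ, sum_eq_single i] at this
    · simpa using this
    · intro j _ hj; simp [Pi.single_eq_of_ne hj]
    · simp
  let h0' : M →ₗ[K] L := - ∑ j, ξ j ∘ₗ (k (ij j)).subtype ∘ₗ proj (ij j) ∘ₗ g
  let h0 : M →ₗ[K] L := h0' ∘ₗ act (ge src : Λ)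
  have hξ1 : ∀ j m, (ge snk : Λ) • ξ j m = ξ j m := by
    intro j m; rw [← hξ, h'.ge_self]
  have h00 : ∀ m, (ge snk : Λ) • h0 ((ge src : Λ) • m)
      = h0 m := by
    intro m
    simp only [h0, h0', comp_apply, act_apply, LinearMap.neg_apply, LinearMap.sum_apply,
      h.ge_self, smul_neg, smul_sum, hξ1]
  have h0k : ∀ m ∈ k (i0 N), h0 m = 0 := by
    intro m hm
    simp only [h0, h0', comp_apply, act_apply, LinearMap.neg_apply, LinearMap.sum_apply,
      hk0 _ _ hm, hg' _ _ hm, neg_eq_zero]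
    refine sum_eq_zero fun j _ => ?_
    simp [Pi.single_eq_of_ne (ij_ne_i0 j)]
  have h0j : ∀ j, ∀ m ∈ k (ij j), h0 m = - ξ j m := by
    intro j m hm
    simp only [h0, h0', comp_apply, act_apply, LinearMap.neg_apply, LinearMap.sum_apply,
      hk0 _ _ hm, hg' _ _ hm, neg_inj]
    rw [sum_eq_single j]
    · simp
    · intro l _ hl
      simp [Pi.single_eq_of_ne (fun e => hl (ij_inj e) : ij l ≠ ij j)]
    · simp
  -- the arms `i0` and `ij j` are perturbed by `h0` and `ξ j + h0`
  have key : ∀ i, ∃ ζ : M →ₗ[K] L, (∀ v w, ¬ CanArrow N p i v w → ∀ m,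
      (ge w : Λ) • ζ ((ge v : Λ) • m) = 0) ∧ (i = i0 N → dcc p i ζ = h0) ∧
      (i = i1 N → dcc p i ζ = 0) ∧ ∀ j, i = ij j → dcc p i ζ = ξ j + h0 := by
    intro i
    rcases arm_cases i with rfl | rfl | ⟨j, rfl⟩
    · obtain ⟨ζ, h1, h2⟩ := exists_dcc hp h h' (i0 N) h0 h00
        (fun m hm1 hm2 => h0k m (hk3 _ i0_ne_i1 m hm1 hm2))
      exact ⟨ζ, h1, fun _ => h2, fun e => absurd e i0_ne_i1,
        fun j e => absurd e.symm (ij_ne_i0 j)⟩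
    · refine ⟨0, by simp, fun e => absurd e.symm i0_ne_i1, fun _ => ?_,
        fun j e => absurd e.symm (ij_ne_i1 j)⟩
      ext m; simp [dcc_apply]
    · obtain ⟨ζ, h1, h2⟩ := exists_dcc hp h h' (ij j) (ξ j + h0)
        (fun m => by rw [LinearMap.add_apply, LinearMap.add_apply, smul_add, h00, hξ])
        (fun m hm1 hm2 => by
          rw [LinearMap.add_apply, h0j j m (hk3 _ (ij_ne_i1 j) m hm1 hm2), add_neg_cancel])
      refine ⟨ζ, h1, fun e => absurd e (ij_ne_i0 j), fun e => absurd e (ij_ne_i1 j), ?_⟩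
      intro l hl
      rw [← ij_inj hl, h2]
  choose ζ hζ1 hζ2 hζ3 hζ4 using key
  refine ⟨ζ, hζ1, fun j => ?_⟩
  ext m
  rw [LL_apply, hζ2 _ rfl, hζ3 _ rfl, hζ4 _ j rfl]
  simp

theorem dcc_snk_src (h : IsGr N p K M) (h' : IsGr N p K L) (i : Fin N) (ζ : M →ₗ[K] L) (m : M) :
    (ge snk : Λ) • dcc p i ζ ((ge src : Λ) • m)
      = dcc p i ζ m := by
  simp only [dcc_apply, h.ge_self, smul_sum, h'.ge_self]

theorem LL_snk_src (h : IsGr N p K M) (h' : IsGr N p K L) (lam : Fin (N - 2) → K)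
    (ζ : Fin N → M →ₗ[K] L) (j : Fin (N - 2)) (m : M) :
    (ge snk : Λ) • LL p lam ζ j ((ge src : Λ) • m)
      = LL p lam ζ j m := by
  simp only [LL_apply, smul_add, smul_sub, smul_smul_comm', dcc_snk_src h h']

theorem dcc_comp (g : L →ₗ[Λ] L') (i : Fin N) (ζ : M →ₗ[K] L) (g' : L →ₗ[K] L')
    (hg : ∀ x, g' x = g x) (m : M) : dcc p i (g' ∘ₗ ζ) m = g (dcc p i ζ m) := by
  simp only [dcc_apply, map_sum, map_smul, comp_apply, hg]

end

section

variable {N : ℕ} {p : Fin N → ℕ} {K : Type} [Field K]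
variable {M : Type} [AddCommGroup M] [Module K M] [Module Λ M]
  [IsScalarTower K Λ M]
variable {L : Type} [AddCommGroup L] [Module K L] [Module Λ L]
  [IsScalarTower K Λ L]
variable {L' : Type} [AddCommGroup L'] [Module K L'] [Module Λ L']
  [IsScalarTower K Λ L']
variable [Fact (2 ≤ N)]

theorem IsC0.add {φ ψ : M →ₗ[K] L} (h : IsC0 N p φ) (h' : IsC0 N p ψ) : IsC0 N p (φ + ψ) :=
  fun v m => by simp [h v, h' v]

theorem IsC0.sub {φ ψ : M →ₗ[K] L} (h : IsC0 N p φ) (h' : IsC0 N p ψ) : IsC0 N p (φ - ψ) :=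
  fun v m => by simp [h v, h' v, smul_sub]

theorem IsC1.add {φ ψ : Fin N → M →ₗ[K] L} (h : IsC1 N p φ) (h' : IsC1 N p ψ) :
    IsC1 N p (φ + ψ) := fun i v w hvw m => by simp [h i v w hvw, h' i v w hvw]

theorem IsC1.sub {φ ψ : Fin N → M →ₗ[K] L} (h : IsC1 N p φ) (h' : IsC1 N p ψ) :
    IsC1 N p (φ - ψ) := fun i v w hvw m => by simp [h i v w hvw, h' i v w hvw, smul_sub]

theorem LL_add (lam : Fin (N - 2) → K) (ζ ζ' : Fin N → M →ₗ[K] L) (j : Fin (N - 2)) :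
    LL p lam (ζ + ζ') j = LL p lam ζ j + LL p lam ζ' j := by
  ext m
  simp only [LL_apply, LinearMap.add_apply, dcc_apply, Pi.add_apply, smul_add,
    Finset.sum_add_distrib]
  abel

theorem LL_sub (lam : Fin (N - 2) → K) (ζ ζ' : Fin N → M →ₗ[K] L) (j : Fin (N - 2)) :
    LL p lam (ζ - ζ') j = LL p lam ζ j - LL p lam ζ' j := by
  ext m
  simp only [LL_apply, LinearMap.sub_apply, dcc_apply, Pi.sub_apply, smul_sub,
    sum_sub_distrib]
  abel

theorem IsZ.sub {lam : Fin (N - 2) → K} {φ ψ : Fin N → M →ₗ[K] L} (h : IsZ p lam φ)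
    (h' : IsZ p lam ψ) : IsZ p lam (φ - ψ) :=
  ⟨h.1.sub h'.1, fun j => by rw [LL_sub, h.2, h'.2, sub_zero]⟩

theorem IsZ.add {lam : Fin (N - 2) → K} {φ ψ : Fin N → M →ₗ[K] L} (h : IsZ p lam φ)
    (h' : IsZ p lam ψ) : IsZ p lam (φ + ψ) :=
  ⟨h.1.add h'.1, fun j => by rw [LL_add, h.2, h'.2, add_zero]⟩

theorem dcc_dl (i : Fin N) (φ : M →ₗ[K] L) (hφ : IsC0 N p φ) (m : M) :
    dcc p i (dl p φ i) m = (cc i : Λ) • φ m - φ ((cc i : Λ) • m) := by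
  rw [dcc_apply]
  let A : ℕ → L := fun k => (ge snk : Λ) • (gx i : Λ) ^ k •
    φ ((gx i : Λ) ^ (p i - k) • (ge src : Λ) • m)
  have : ∀ k ∈ Finset.range (p i), (ge snk : Λ) • (gx i : Λ) ^ k •
      dl p φ i ((gx i : Λ) ^ (p i - 1 - k) • (ge src : Λ) • m)
      = A (k + 1) - A k := by
    intro k hk
    rw [Finset.mem_range] at hk
    simp only [A, dl_apply, smul_sub]
    congr 1
    · rw [pow_succ, mul_smul, show p i - (k + 1) = p i - 1 - k by omega]
    · rw [show p i - k = (p i - 1 - k) + 1 by omega, pow_succ', mul_smul]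
  rw [sum_congr rfl this, Finset.sum_range_sub]
  simp only [A, Nat.sub_self, pow_zero, one_smul, Nat.sub_zero]
  rw [hφ, ← hφ snk]
  simp only [cc, mul_smul]

theorem dl_isC1 (h : IsGr N p K M) (h' : IsGr N p K L) {φ : M →ₗ[K] L}
    (hφ : IsC0 N p φ) : IsC1 N p (dl p φ) := by
  intro i v w hvw m
  rw [dl_apply, smul_sub, hφ v, h'.supp i v w hvw, ← hφ w, h.supp i v w hvw, map_zero, sub_zero]

theorem dl_isZ {lam : Fin (N - 2) → K} (h : IsGr N p K M) (h' : IsGr N p K L)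
    (hR : IsRel p lam M) (hR' : IsRel p lam L) {φ : M →ₗ[K] L} (hφ : IsC0 N p φ) :
    IsZ p lam (dl p φ) := by
  refine ⟨dl_isC1 h h' hφ, fun j => ?_⟩
  ext m
  rw [LL_apply, dcc_dl _ _ hφ, dcc_dl _ _ hφ, dcc_dl _ _ hφ, hR j, hR' j, map_sub, φ.map_smul, smul_sub,
    LinearMap.zero_apply]
  abel

theorem exists_section (g : L' →ₗ[Λ] L) :
    ∃ s : L →ₗ[K] L', ∀ l ∈ range g, g (s l) = l := by
  obtain ⟨s, hs⟩ := (g.restrictScalars K).rangeRestrict.exists_rightInverse_of_surjective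
    (LinearMap.range_rangeRestrict _)
  obtain ⟨t, ht⟩ := exists_extend s
  refine ⟨t, fun l hl => ?_⟩
  have h1 := lcongr_fun ht ⟨l, hl⟩
  have h2 := congrArg val (lcongr_fun hs ⟨l, hl⟩)
  rw [comp_apply, ← h1] at h2
  exact h2

theorem lift_C0 (h : IsGr N p K M) (h' : IsGr N p K L') (hL : IsGr N p K L)
    (g : L' →ₗ[Λ] L) {φ : M →ₗ[K] L}
    (hφ : IsC0 N p φ) (hr : ∀ m, φ m ∈ range g) :
    ∃ ψ : M →ₗ[K] L', IsC0 N p ψ ∧ ∀ m, g (ψ m) = φ m := by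
  obtain ⟨s, hs⟩ := exists_section g
  refine ⟨∑ v, act (ge v : Λ) ∘ₗ s ∘ₗ φ ∘ₗ act (ge v : Λ), ?_, ?_⟩
  · intro v m
    simp only [LinearMap.sum_apply, comp_apply, act_apply, h.orth, h'.orth,
      smul_sum]
    refine sum_congr rfl fun w _ => ?_
    by_cases hv : v = w
    · subst hv; simp
    · simp [hv, Ne.symm hv]
  · intro m
    simp only [LinearMap.sum_apply, comp_apply, act_apply, map_sum, map_smul]
    simp only [hs _ (hr _)]
    simp only [hφ _, hL.ge_self, hL.sum]

theorem IsC1.expand (h : IsGr N p K M) (h' : IsGr N p K L) {ζ : Fin N → M →ₗ[K] L}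
    [∀ i v w, Decidable (CanArrow N p i v w)]
    (hζ : IsC1 N p ζ) (i : Fin N) (m : M) : ζ i m = ∑ v, ∑ w, if CanArrow N p i v w then
      (ge w : Λ) • ζ i ((ge v : Λ) • m) else 0 := by
  conv_lhs => rw [← h.sum m, map_sum]
  refine sum_congr rfl fun v _ => ?_
  conv_lhs => rw [← h'.sum (ζ i _)]
  refine sum_congr rfl fun w _ => ?_
  split_ifs with hvw
  · rfl
  · exact hζ i v w hvw m

theorem lift_C1 (h : IsGr N p K M) (h' : IsGr N p K L') (hL : IsGr N p K L)
    (g : L' →ₗ[Λ] L) {ζ : Fin N → M →ₗ[K] L}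
    (hζ : IsC1 N p ζ) (hr : ∀ i m, ζ i m ∈ range g) :
    ∃ ψ : Fin N → M →ₗ[K] L', IsC1 N p ψ ∧ ∀ i m, g (ψ i m) = ζ i m := by
  classical
  obtain ⟨s, hs⟩ := exists_section g
  refine ⟨fun i => ∑ v, ∑ w, if CanArrow N p i v w then
    act (ge w : Λ) ∘ₗ s ∘ₗ ζ i ∘ₗ act (ge v : Λ) else 0, ?_, ?_⟩
  · intro i v w hvw m
    simp only [LinearMap.sum_apply, smul_sum]
    refine sum_eq_zero fun a _ => sum_eq_zero fun b _ => ?_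
    split_ifs with hab
    · simp only [comp_apply, act_apply, h.orth, h'.orth]
      by_cases hav : a = v
      · subst hav
        rw [if_neg]
        rintro rfl; exact hvw hab
      · simp [hav]
    · simp
  · intro i m
    rw [hζ.expand h hL]
    simp only [LinearMap.sum_apply, map_sum]
    refine sum_congr rfl fun v _ => sum_congr rfl fun w _ => ?_
    split_ifs
    · simp only [comp_apply, act_apply, map_smul, hs _ (hr _ _)]
    · simp

/-- Cocycles with values in the image of `g` lift along `g`. -/
theorem lift_Z (hp : ∀ i, 2 ≤ p i) {lam : Fin (N - 2) → K} (hl : Good lam)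
    (h : IsGr N p K M) (hR : IsRel p lam M) (hT : TF N p K M) (h' : IsGr N p K L')
    (hL : IsGr N p K L) (g : L' →ₗ[Λ] L) {ζ : Fin N → M →ₗ[K] L}
    (hζ : IsZ p lam ζ) (hr : ∀ i m, ζ i m ∈ range g) :
    ∃ ψ : Fin N → M →ₗ[K] L', IsZ p lam ψ ∧ ∀ i m, g (ψ i m) = ζ i m := by
  obtain ⟨ψ, h1, h2⟩ := lift_C1 h h' hL g hζ.1 hr
  have hk : IsGr N p K (ker g) := h'.of_inj (f := (ker g).subtype)
    (Submodule.injective_subtype _)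
  have hgL : ∀ j m, g (LL p lam ψ j m) = 0 := by
    intro j m
    have := lcongr_fun (hζ.2 j) m
    rw [LinearMap.zero_apply] at this
    rw [← this, LL_apply, LL_apply, map_add, map_sub, LinearMap.map_smul_of_tower]
    have h3 : ∀ i, ζ i = (g.restrictScalars K) ∘ₗ ψ i := fun i => by ext m; exact (h2 i m).symm
    simp only [h3]
    rw [dcc_comp g _ _ _ (fun _ => rfl), dcc_comp g _ _ _ (fun _ => rfl),
      dcc_comp g _ _ _ (fun _ => rfl)]
  let ξ : Fin (N - 2) → M →ₗ[K] ker g := fun j =>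
    { toFun := fun m => ⟨LL p lam ψ j m, hgL j m⟩
      map_add' := fun a b => sext (map_add _ a b)
      map_smul' := fun c a => sext (map_smul (LL p lam ψ j) c a) }
  obtain ⟨η, h3, h4⟩ := LL_surj hp hl h hR hT hk ξ (fun j m => sext
    (LL_snk_src h h' lam ψ j m))
  let η' : Fin N → M →ₗ[K] L' := fun i => ((ker g).subtype.restrictScalars K) ∘ₗ η i
  have h5 : ∀ j, LL p lam η' j = LL p lam ψ j := by
    intro j
    ext m
    have := congrArg val (lcongr_fun (h4 j) m)
    change _ = LL p lam ψ j m at this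
    rw [← this, LL_apply, LL_apply]
    simp only [η']
    rw [dcc_comp (ker g).subtype _ _ _ (fun _ => rfl),
      dcc_comp (ker g).subtype _ _ _ (fun _ => rfl),
      dcc_comp (ker g).subtype _ _ _ (fun _ => rfl)]
    rfl
  refine ⟨ψ - η', ⟨h1.sub ?_, fun j => by rw [LL_sub, h5, sub_self]⟩, ?_⟩
  · intro i v w hvw m
    exact congrArg val (h3 i v w hvw m)
  · intro i m
    have : g (η' i m) = 0 := (η i m).2
    rw [Pi.sub_apply, LinearMap.sub_apply, map_sub, h2, this, sub_zero]

/-- Every cocycle is a coboundary. -/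
def HV (p : Fin N → ℕ) {K : Type} [Field K] (lam : Fin (N - 2) → K) (M L : Type) [AddCommGroup M]
    [Module K M] [Module Λ M] [IsScalarTower K Λ M]
    [AddCommGroup L] [Module K L] [Module Λ L] [IsScalarTower K Λ L] : Prop :=
  ∀ ζ : Fin N → M →ₗ[K] L, IsZ p lam ζ → ∃ φ, IsC0 N p φ ∧ dl p φ = ζ

/-- Pushing cocycles forward. -/
theorem IsZ.map {lam : Fin (N - 2) → K} (g : L' →ₗ[Λ] L) {ζ : Fin N → M →ₗ[K] L'}
    (hζ : IsZ p lam ζ) : IsZ p lam (fun i => (g.restrictScalars K) ∘ₗ ζ i) := by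
  constructor
  · intro i v w hvw m
    simp only [comp_apply, LinearMap.restrictScalars_apply]
    rw [← map_smul, hζ.1 i v w hvw, map_zero]
  · intro j
    ext m
    rw [LL_apply, dcc_comp g _ _ _ (fun _ => rfl), dcc_comp g _ _ _ (fun _ => rfl),
      dcc_comp g _ _ _ (fun _ => rfl)]
    have := congrArg g (lcongr_fun (hζ.2 j) m)
    rw [LL_apply, map_add, map_sub, LinearMap.map_smul_of_tower, LinearMap.zero_apply, map_zero] at this
    rw [this]; rfl

/-- If the cokernel of `g` has no nontrivial cocycles, then every cocycle lifts along `g` up to a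
coboundary. -/
theorem lift_Z_of_HV (hp : ∀ i, 2 ≤ p i) {lam : Fin (N - 2) → K} (hl : Good lam)
    (h : IsGr N p K M) (hR : IsRel p lam M) (hT : TF N p K M) (h' : IsGr N p K L')
    (hL : IsGr N p K L) (hRL : IsRel p lam L) (g : L' →ₗ[Λ] L)
    (hg : HV p lam M (L ⧸ range g)) {z : Fin N → M →ₗ[K] L}
    (hz : IsZ p lam z) : ∃ (ψ : Fin N → M →ₗ[K] L') (φ : M →ₗ[K] L), IsZ p lam ψ ∧ IsC0 N p φ ∧
      ∀ i m, g (ψ i m) - dl p φ i m = z i m := by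
  have hQ : IsGr N p K (L ⧸ range g) := hL.of_surj (mkQ_surjective _)
  obtain ⟨φ', h1, h2⟩ := hg _ (hz.map (range g).mkQ)
  obtain ⟨φ, h3, h4⟩ := lift_C0 h hL hQ (range g).mkQ h1
    (fun m => by rw [Submodule.range_mkQ]; trivial)
  obtain ⟨ψ, h5, h6⟩ := lift_Z hp hl h hR hT h' hL g (hz.sub (dl_isZ h hL hR hRL h3)) (by
    intro i m
    rw [← (range g).ker_mkQ, mem_ker, Pi.sub_apply, LinearMap.sub_apply,
      map_sub, sub_eq_zero]
    have := lcongr_fun (congrFun h2 i) m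
    rw [dl_apply, ← h4, ← h4] at this
    rw [dl_apply, map_sub, map_smul, this]; rfl)
  refine ⟨ψ, -φ, h5, fun v m => by simp [h3 v], fun i m => ?_⟩
  rw [h6]
  simp only [dl_apply, Pi.sub_apply, LinearMap.sub_apply, LinearMap.neg_apply, smul_neg]
  abel

theorem HV.of_surj (hp : ∀ i, 2 ≤ p i) {lam : Fin (N - 2) → K} (hl : Good lam)
    (h : IsGr N p K M) (hR : IsRel p lam M) (hT : TF N p K M) (h' : IsGr N p K L')
    (hL : IsGr N p K L) (g : L' →ₗ[Λ] L) (hg : Surjective g)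
    (hH : HV p lam M L') : HV p lam M L := by
  intro z hz
  obtain ⟨ψ, h1, h2⟩ := lift_Z hp hl h hR hT h' hL g hz (fun i m => hg _)
  obtain ⟨φ, h3, h4⟩ := hH ψ h1
  refine ⟨(g.restrictScalars K) ∘ₗ φ, fun v m => by simp [h3 v], ?_⟩
  funext i
  ext m
  rw [← h2, ← h4]
  simp [dl_apply]

theorem HV.of_ext (hp : ∀ i, 2 ≤ p i) {lam : Fin (N - 2) → K} (hl : Good lam)
    (h : IsGr N p K M) (hR : IsRel p lam M) (hT : TF N p K M)
    (hL : IsGr N p K L) (hRL : IsRel p lam L) (U : Submodule Λ L)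
    (hU : HV p lam M U) (hQ : HV p lam M (L ⧸ U)) : HV p lam M L := by
  intro z hz
  have hUg : IsGr N p K U := hL.of_inj (f := U.subtype) U.injective_subtype
  obtain ⟨ψ, φ, h1, h2, h3⟩ := lift_Z_of_HV hp hl h hR hT hUg hL hRL U.subtype
    (by rw [Submodule.range_subtype]; exact hQ) hz
  obtain ⟨φ', h4, h5⟩ := hU ψ h1
  refine ⟨(U.subtype.restrictScalars K) ∘ₗ φ' - φ, IsC0.sub (fun v m => ?_) h2, ?_⟩
  · simp [h4 v]
  · funext i
    ext m
    rw [← h3, ← h5]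
    simp only [dl_apply, LinearMap.sub_apply, comp_apply,
      LinearMap.restrictScalars_apply, smul_sub, Submodule.subtype_apply, Submodule.coe_sub,
      Submodule.coe_smul]
    abel

end

section

variable {N : ℕ} {p : Fin N → ℕ} {K : Type} [Field K]

/-- The module over the free algebra with underlying space `W` on which the generators act by
the given endomorphisms. -/
@[nolint unusedArguments]
def Md {W : Type} [AddCommGroup W] [Module K W]
    (_a : CanVertex N p ⊕ Fin N → End K W) : Type := W

section Md
variable {W : Type} [AddCommGroup W] [Module K W] (a : CanVertex N p ⊕ Fin N → End K W)

instance : AddCommGroup (Md a) := inferInstanceAs (AddCommGroup W)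
instance : Module K (Md a) := inferInstanceAs (Module K W)
noncomputable instance : Module Λ (Md a) :=
  Module.compHom W (FreeAlgebra.lift K a).toRingHom

theorem Md.smul_def (x : Λ) (m : Md a) : x • m = (FreeAlgebra.lift K a x : End K W) m := rfl

instance : IsScalarTower K Λ (Md a) := ⟨fun c x m => by
  rw [Md.smul_def, Md.smul_def, map_smul]; rfl⟩

theorem Md.ge_smul (v : CanVertex N p) (m : Md a) :
    (ge v : Λ) • m = (a (inl v) m : W) := by
  rw [Md.smul_def, ge, FreeAlgebra.lift_ι_apply]

theorem Md.gx_smul (i : Fin N) (m : Md a) :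
    (gx i : Λ) • m = (a (inr i) m : W) := by
  rw [Md.smul_def, gx, FreeAlgebra.lift_ι_apply]

end Md

variable [Fact (2 ≤ N)]

/-- The scalar by which the last arrow of the arm `i` acts on the generic module. -/
noncomputable def uu (lam : Fin (N - 2) → K) (i : Fin N) : Ks K :=
  if i = i1 N then 1 else sv K - algebraMap K (Ks K) (mu lam i)

theorem sv_ne (c : K) : sv K - algebraMap K (Ks K) c ≠ 0 := by
  rw [sv, IsScalarTower.algebraMap_apply K K[X] (Ks K), ← map_sub]
  intro h
  have := IsFractionRing.injective K[X] (Ks K) (h.trans (map_zero _).symm)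
  exact X_sub_C_ne_zero c this

theorem uu_ne (lam : Fin (N - 2) → K) (i : Fin N) : uu lam i ≠ 0 := by
  unfold uu
  split_ifs
  · exact one_ne_zero
  · exact sv_ne _

/-- The generators acting on the generic module. -/
noncomputable def Ggen (lam : Fin (N - 2) → K) :
    CanVertex N p ⊕ Fin N → End K (CanVertex N p → Ks K)
  | inl v => single K (fun _ => Ks K) v ∘ₗ proj v
  | inr i => LinearMap.pi fun w => match w with
    | src => 0
    | snk => mulLeft K (uu lam i) ∘ₗ proj (vx p i (p i - 1))
    | inr ⟨i', j⟩ => if i' = i then proj (vx p i j) else 0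

/-- The generic module: `K(s)` at every vertex. -/
abbrev GM (N : ℕ) (p : Fin N → ℕ) {K : Type} [Field K] [Fact (2 ≤ N)] (lam : Fin (N - 2) → K) : Type :=
  Md (Ggen (p := p) lam)

/-- The coordinate at a vertex. -/
noncomputable def GM.cd (lam : Fin (N - 2) → K) (w : CanVertex N p) : GM N p lam →ₗ[K] Ks K :=
  (proj w : (CanVertex N p → Ks K) →ₗ[K] Ks K)

theorem GM.ext {lam : Fin (N - 2) → K} {g g' : GM N p lam}
    (H : ∀ w, GM.cd lam w g = GM.cd lam w g') : g = g' := funext H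

theorem GM.ge_apply (lam : Fin (N - 2) → K) (v w : CanVertex N p) (g : GM N p lam) :
    GM.cd lam w ((ge v : Λ) • g) = if w = v then GM.cd lam v g else 0 := by
  rw [Md.ge_smul]
  rcases eq_or_ne w v with rfl | hw
  · rw [if_pos rfl]; exact Pi.single_eq_same (M := fun _ => Ks K) w _
  · rw [if_neg hw]; exact Pi.single_eq_of_ne (M := fun _ => Ks K) hw _

theorem GM.gx_apply (lam : Fin (N - 2) → K) (hp : ∀ i, 2 ≤ p i) (i : Fin N) {k : ℕ} (hk : k < p i)
    (g : GM N p lam) : GM.cd lam (vx p i (k + 1)) ((gx i : Λ) • g) =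
      (if k + 1 = p i then uu lam i else 1) * GM.cd lam (vx p i k) g := by
  rw [Md.gx_smul]
  by_cases hk' : k + 1 = p i
  · rw [if_pos hk', hk', vx_last hp, show k = p i - 1 by omega]
    rfl
  · rw [if_neg hk', vx_succ i (by omega), one_mul]
    change (if i = i then proj (vx p i k) else 0 : (CanVertex N p → Ks K) →ₗ[K] Ks K) _ = _
    rw [if_pos rfl]; rfl

theorem GM.gx_other (lam : Fin (N - 2) → K) (hp : ∀ i, 2 ≤ p i) (i : Fin N) (w : CanVertex N p)
    (hw : ∀ k < p i, w ≠ vx p i (k + 1))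
    (g : GM N p lam) : GM.cd lam w ((gx i : Λ) • g) = 0 := by
  rw [Md.gx_smul]
  have hpi := hp i
  rcases w with (_ | _) | ⟨i', j⟩
  · rfl
  · exact absurd (by rw [show p i - 1 + 1 = p i by omega, vx_last hp]) (hw (p i - 1) (by omega))
  · have : i' ≠ i := by
      rintro rfl
      exact hw j (by omega) (vx_succ _ j.2).symm
    change (if i' = i then proj (vx p i j) else 0 : (CanVertex N p → Ks K) →ₗ[K] Ks K) _ = _
    rw [if_neg this]; rfl

theorem GM.isGr (lam : Fin (N - 2) → K) (hp : ∀ i, 2 ≤ p i) : IsGr N p K (GM N p lam) where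
  orth v w g := by
    refine GM.ext fun u => ?_
    by_cases hvw : v = w
    · subst hvw; simp only [GM.ge_apply, if_true]
    · rw [if_neg hvw, GM.ge_apply, GM.ge_apply, if_neg hvw, ite_self, map_zero]
  sum g := by
    refine GM.ext fun u => ?_
    rw [map_sum]
    simp only [GM.ge_apply, Finset.sum_ite_eq, mem_univ, if_true]
  supp i v w hvw g := by
    refine GM.ext fun u => ?_
    rw [GM.ge_apply, map_zero]
    split_ifs with hu
    · by_cases hw : ∃ k < p i, w = vx p i (k + 1)
      · obtain ⟨k, hk, rfl⟩ := hw
        rw [GM.gx_apply _ hp _ hk, GM.ge_apply, if_neg (c := vx p i k = v), mul_zero]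
        rintro rfl
        exact hvw ((canArrow_iff hp _ _ _).2 ⟨k, hk, rfl, rfl⟩)
      · push Not at hw
        exact GM.gx_other _ hp _ _ hw _
    · rfl

theorem GM.pow_apply (lam : Fin (N - 2) → K) (hp : ∀ i, 2 ≤ p i) (i : Fin N) {k l : ℕ}
    (hk : k + l ≤ p i)
    (g : GM N p lam) : GM.cd lam (vx p i (k + l)) ((gx i : Λ) ^ l • g) =
      (if 0 < l ∧ k + l = p i then uu lam i else 1) * GM.cd lam (vx p i k) g := by
  induction l with
  | zero => simp
  | succ l ih =>
    rw [pow_succ', mul_smul, ← add_assoc, GM.gx_apply lam hp i (by omega), ih (by omega), ← mul_assoc]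
    congr 1
    have h1 : ¬ (0 < l ∧ k + l = p i) := by omega
    rw [if_neg h1, mul_one]
    simp

theorem GM.cc_apply (lam : Fin (N - 2) → K) (hp : ∀ i, 2 ≤ p i) (i : Fin N) (g : GM N p lam)
    (w : CanVertex N p) :
    GM.cd lam w ((cc i : Λ) • g) =
      if w = snk then uu lam i * GM.cd lam src g else 0 := by
  have hpi := hp i
  rw [← (GM.isGr lam hp).ge_cc, GM.ge_apply, (GM.isGr lam hp).cc_smul hp]
  split_ifs
  · have := GM.pow_apply lam hp i (k := 0) (l := p i) (by omega) ((ge src : Λ) • g)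
    rw [zero_add, vx_last hp, vx_zero] at this
    rw [this, if_pos ⟨by omega, rfl⟩, GM.ge_apply, if_pos rfl]
  · rfl

theorem GM.isRel (lam : Fin (N - 2) → K) (hp : ∀ i, 2 ≤ p i) : IsRel p lam (GM N p lam) := by
  intro j g
  refine GM.ext fun w => ?_
  rw [map_sub, LinearMap.map_smul (GM.cd lam w), GM.cc_apply _ hp, GM.cc_apply _ hp, GM.cc_apply _ hp]
  split_ifs
  · simp only [uu, if_neg (ij_ne_i1 j), if_neg i0_ne_i1, if_true, mu_ij, mu_i0, smul_def,
      map_zero]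
    ring
  · simp

end

section

variable {N : ℕ} {p : Fin N → ℕ} {K : Type} [Field K]
variable {M : Type} [AddCommGroup M] [Module K M] [Module Λ M]
  [IsScalarTower K Λ M]
variable {L : Type} [AddCommGroup L] [Module K L] [Module Λ L]
  [IsScalarTower K Λ L]
variable [Fact (2 ≤ N)]

theorem IsGr.ge_x_vx (h : IsGr N p K M) (hp : ∀ i, 2 ≤ p i) (i : Fin N) {k : ℕ} (hk : k < p i) (m : M) :
    (ge (vx p i (k + 1)) : Λ) • (gx i : Λ) • m =
      (gx i : Λ) • (ge (vx p i k) : Λ) • m := by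
  rw [h.x_ge_vx hp i hk]
  conv_lhs => rw [← h.sum m, smul_sum, smul_sum]
  refine sum_eq_single _ (fun v _ hv => h.supp _ _ _ ?_ _) (by simp)
  rw [canArrow_iff hp]
  rintro ⟨l, hl, hv', h2⟩
  rw [← Nat.succ_inj.1 (vx_inj hp i (by omega) (by omega) h2)] at hv'
  exact hv hv'

theorem IsGr.ge_x_other (h : IsGr N p K M) (hp : ∀ i, 2 ≤ p i) (i : Fin N) {w : CanVertex N p}
    (hw : ∀ k < p i, w ≠ vx p i (k + 1)) (m : M) :
    (ge w : Λ) • (gx i : Λ) • m = 0 := by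
  rw [← h.sum m, smul_sum, smul_sum]
  refine sum_eq_zero (fun v _ => h.supp _ _ _ ?_ _)
  rw [canArrow_iff hp]
  rintro ⟨l, hl, _, h2⟩
  exact hw l hl h2

/-! ### Cocycles with values in the generic module -/

/-- The graded maps solving the coboundary equation along the arm `i`, starting from `f` at the
sink and going backwards. -/
noncomputable def HH (lam : Fin (N - 2) → K) (ζ : Fin N → M →ₗ[K] GM N p lam) (f : M →ₗ[K] Ks K) (i : Fin N) :
    ℕ → (M →ₗ[K] Ks K)
  | 0 => f ∘ₗ act (ge snk : Λ)
  | n + 1 => mulLeft K (if n = 0 then uu lam i else 1)⁻¹ ∘ₗ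
      (HH lam ζ f i n ∘ₗ act (gx i : Λ) + GM.cd lam (vx p i (p i - n)) ∘ₗ ζ i) ∘ₗ
      act (ge (vx p i (p i - (n + 1))) : Λ)

/-- The family of the maps `HH`, with `g` at the source. -/
noncomputable def PhF (lam : Fin (N - 2) → K) (ζ : Fin N → M →ₗ[K] GM N p lam) (f g : M →ₗ[K] Ks K) :
    CanVertex N p → (M →ₗ[K] Ks K)
  | src => g ∘ₗ act (ge src : Λ)
  | snk => f ∘ₗ act (ge snk : Λ)
  | inr ⟨i, j⟩ => HH lam ζ f i (p i - (j + 1))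

noncomputable def Phi (lam : Fin (N - 2) → K) (ζ : Fin N → M →ₗ[K] GM N p lam) (f g : M →ₗ[K] Ks K) :
    M →ₗ[K] GM N p lam := LinearMap.pi (PhF lam ζ f g)

theorem cd_Phi (lam : Fin (N - 2) → K) (ζ : Fin N → M →ₗ[K] GM N p lam) (f g : M →ₗ[K] Ks K)
    (w : CanVertex N p) (m : M) : GM.cd lam w (Phi lam ζ f g m) = PhF lam ζ f g w m := rfl

variable {lam : Fin (N - 2) → K} {ζ : Fin N → M →ₗ[K] GM N p lam} {f g : M →ₗ[K] Ks K}

theorem HH_ge (hp : ∀ i, 2 ≤ p i) (h : IsGr N p K M) (i : Fin N) (n : ℕ) (m : M) :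
    HH lam ζ f i n ((ge (vx p i (p i - n)) : Λ) • m) = HH lam ζ f i n m := by
  cases n with
  | zero => simp [HH, vx_last hp, h.ge_self]
  | succ n => simp only [HH, comp_apply, act_apply, h.ge_self]

theorem PhF_vx (hp : ∀ i, 2 ≤ p i) (i : Fin N) {k : ℕ} (hk : k ≤ p i)
    (hg : HH lam ζ f i (p i) = g ∘ₗ act (ge src : Λ)) :
    PhF lam ζ f g (vx p i k) = HH lam ζ f i (p i - k) := by
  have hpi := hp i
  rcases Nat.eq_zero_or_pos k with rfl | h0
  · rw [vx_zero, Nat.sub_zero, hg]; rfl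
  · obtain ⟨k, rfl⟩ : ∃ k', k = k' + 1 := ⟨k - 1, by omega⟩
    rcases Nat.lt_or_eq_of_le hk with h1 | h1
    · rw [vx_succ i (by omega)]; rfl
    · rw [h1, vx_last hp, Nat.sub_self]; rfl

theorem PhF_ge (hp : ∀ i, 2 ≤ p i) (h : IsGr N p K M) (v w : CanVertex N p) (m : M) :
    PhF lam ζ f g w ((ge v : Λ) • m) = if w = v then PhF lam ζ f g w m else 0 := by
  have key : ∀ w m, PhF lam ζ f g w ((ge w : Λ) • m) = PhF lam ζ f g w m := by
    rintro ((_ | _) | ⟨i, j⟩) m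
    · simp [PhF, h.ge_self]
    · simp [PhF, h.ge_self]
    · have := HH_ge (lam := lam) (ζ := ζ) (f := f) hp h i (p i - (j + 1)) m
      rw [show p i - (p i - ((j : ℕ) + 1)) = j + 1 by omega, vx_succ _ j.2] at this
      exact this
  split_ifs with hw
  · rw [hw, key]
  · rw [← key, h.ge_ne hw, map_zero]

theorem Phi_isC0 (hp : ∀ i, 2 ≤ p i) (h : IsGr N p K M) : IsC0 N p (Phi lam ζ f g) := by
  intro v m
  refine GM.ext fun w => ?_
  rw [GM.ge_apply, cd_Phi, PhF_ge hp h, cd_Phi]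
  split_ifs with hw
  · rw [hw]
  · rfl

theorem cd_ge (hp : ∀ i, 2 ≤ p i) (w : CanVertex N p) (y : GM N p lam) :
    GM.cd lam w ((ge w : Λ) • y) = GM.cd lam w y := by
  rw [GM.ge_apply, if_pos rfl]

theorem dl_Phi (hp : ∀ i, 2 ≤ p i) (h : IsGr N p K M) (hζ : IsC1 N p ζ) (i : Fin N)
    (hg : HH lam ζ f i (p i) = g ∘ₗ act (ge src : Λ)) :
    dl p (Phi lam ζ f g) i = ζ i := by
  have hpi := hp i
  ext1 m
  refine GM.ext fun w => ?_
  rw [dl_apply, map_sub, cd_Phi]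
  by_cases hw : ∃ k < p i, w = vx p i (k + 1)
  · obtain ⟨k, hk, rfl⟩ := hw
    have hz : GM.cd lam (vx p i (k + 1)) (ζ i m) =
        GM.cd lam (vx p i (k + 1)) (ζ i ((ge (vx p i k) : Λ) • m)) := by
      conv_lhs => rw [← cd_ge hp, ← h.sum m, map_sum, smul_sum]
      rw [map_sum, sum_eq_single (vx p i k), cd_ge hp]
      · intro v _ hv
        rw [hζ, map_zero]
        rw [canArrow_iff hp]
        rintro ⟨l, hl, hv', h2⟩
        rw [← Nat.succ_inj.1 (vx_inj hp i (by omega) (by omega) h2)] at hv'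
        exact hv hv'
      · simp
    rw [GM.gx_apply lam hp i hk, cd_Phi, PhF_vx hp i (by omega) hg, PhF_vx hp i hk hg,
      show p i - k = (p i - (k + 1)) + 1 by omega, HH]
    simp only [comp_apply, LinearMap.mulLeft_apply, LinearMap.add_apply, act_apply]
    rw [show p i - (p i - (k + 1)) = k + 1 by omega,
      show p i - (p i - (k + 1) + 1) = k by omega, ← hz, ← h.ge_x_vx hp i hk]
    have e1 : (p i - (k + 1) = 0) = (k + 1 = p i) := by simp; omega
    have e2 : HH lam ζ f i (p i - (k + 1)) ((ge (vx p i (k + 1)) : Λ) • (gx i : Λ) • m)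
        = HH lam ζ f i (p i - (k + 1)) ((gx i : Λ) • m) := by
      have := HH_ge (lam := lam) (ζ := ζ) (f := f) hp h i (p i - (k + 1)) ((gx i : Λ) • m)
      rwa [show p i - (p i - (k + 1)) = k + 1 by omega] at this
    have hu : (if k + 1 = p i then uu lam i else 1) ≠ 0 := by
      split_ifs
      · exact uu_ne _ _
      · exact one_ne_zero
    simp only [e1, e2]
    rw [mul_inv_cancel_left₀ hu]
    ring
  · push Not at hw
    rw [GM.gx_other lam hp i w hw, ← cd_ge hp w (ζ i m)]
    have e1 := PhF_ge (lam := lam) (ζ := ζ) (f := f) (g := g) hp h w w ((gx i : Λ) • m)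
    rw [if_pos rfl, h.ge_x_other hp i hw, map_zero] at e1
    rw [← e1, ← h.sum m, map_sum, smul_sum, sum_eq_zero, map_zero, sub_zero]
    intro v _
    rw [hζ]
    rw [canArrow_iff hp]
    rintro ⟨l, hl, _, h2⟩
    exact hw l hl h2

theorem HH_last (hp : ∀ i, 2 ≤ p i) (h : IsGr N p K M) (hζ : IsC1 N p ζ) (i : Fin N) (m : M) :
    uu lam i * HH lam ζ f i (p i) m =
      f ((cc i : Λ) • m) + GM.cd lam snk (dcc p i (ζ i) m) := by
  have hgg : HH lam ζ f i (p i) = (HH lam ζ f i (p i)) ∘ₗ act (ge src : Λ) := by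
    ext1 m
    have := HH_ge (lam := lam) (ζ := ζ) (f := f) hp h i (p i) m
    rw [Nat.sub_self, vx_zero] at this
    exact this.symm
  have h1 := dcc_dl i (Phi lam ζ f (HH lam ζ f i (p i))) (Phi_isC0 hp h) m
  rw [dl_Phi hp h hζ i hgg] at h1
  rw [h1, map_sub, GM.cc_apply lam hp, if_pos rfl, cd_Phi, cd_Phi]
  simp only [PhF, comp_apply, act_apply, h.ge_cc]
  have := congrArg (fun t => t m) hgg
  simp only [comp_apply, act_apply] at this
  rw [← this]; ring

theorem HV_GM (hp : ∀ i, 2 ≤ p i) (lam : Fin (N - 2) → K) (h : IsGr N p K M)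
    (hR : IsRel p lam M) (hT : TF N p K M) [FiniteDimensional K M] : HV p lam M (GM N p lam) := by
  intro ζ hζ
  set D : Fin N → M →ₗ[K] Ks K := fun i => GM.cd lam snk ∘ₗ dcc p i (ζ i) with hD
  have hDj : ∀ j, D (ij j) = D (i0 N) - lam j • D (i1 N) := by
    intro j
    ext1 m
    have := congrArg (fun t => GM.cd lam snk (t m)) (hζ.2 j)
    simp only [LL_apply, map_add, map_sub, LinearMap.zero_apply, map_zero] at this
    rw [LinearMap.map_smul (GM.cd lam _)] at this
    simp only [hD, comp_apply, LinearMap.sub_apply, LinearMap.smul_apply]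
    rw [← sub_eq_zero, ← this]; ring
  obtain ⟨f, hf⟩ := TF.exists_functional h hT (D (i0 N) - mulLeft K (sv K) ∘ₗ D (i1 N))
  refine ⟨Phi lam ζ f (HH lam ζ f (i1 N) (p (i1 N))), Phi_isC0 hp h, ?_⟩
  funext i
  refine dl_Phi hp h hζ.1 i ?_
  ext1 m
  set y := (ge src : Λ) • m with hy
  have hm : HH lam ζ f i (p i) m = HH lam ζ f i (p i) y := by
    have := HH_ge (lam := lam) (ζ := ζ) (f := f) hp h i (p i) m
    rw [Nat.sub_self, vx_zero] at this
    exact this.symm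
  rw [hm]
  change _ = HH lam ζ f (i1 N) (p (i1 N)) y
  have hy0 : (ge src : Λ) • y = y := h.ge_self _ _
  have hfy := hf y hy0
  have hl := fun i => HH_last (f := f) hp h hζ.1 i y
  have h1 := hl (i1 N)
  rw [uu, if_pos rfl, one_mul] at h1
  change _ = _ + D _ y at h1
  rw [h1]
  apply mul_left_cancel₀ (uu_ne lam i)
  rw [hl]
  change _ + D i y = _
  simp only [LinearMap.sub_apply, comp_apply, LinearMap.mulLeft_apply] at hfy
  rcases arm_cases i with rfl | rfl | ⟨j, rfl⟩
  · rw [uu, if_neg i0_ne_i1, mu_i0, map_zero, sub_zero]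
    linear_combination -hfy
  · rw [uu, if_pos rfl, one_mul]
  · rw [uu, if_neg (ij_ne_i1 j), mu_ij, hR.cc_eq (ij_ne_i1 j), mu_ij, hDj]
    simp only [LinearMap.sub_apply, LinearMap.smul_apply, map_sub, map_smul, smul_def]
    linear_combination -hfy

end

section

variable {N : ℕ} {p : Fin N → ℕ} {K : Type} [Field K]
variable {M : Type} [AddCommGroup M] [Module K M] [Module Λ M]
  [IsScalarTower K Λ M]
variable {L : Type} [AddCommGroup L] [Module K L] [Module Λ L]
  [IsScalarTower K Λ L]
variable [Fact (2 ≤ N)]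

/-! ### Maps out of the generic module -/

/-- The components of the map out of the generic module with component `φ` at the source. -/
noncomputable def psi (φ : Ks K →ₗ[K] M) : CanVertex N p → (Ks K →ₗ[K] M)
  | src => φ
  | snk => act (cc (i1 N) : Λ) ∘ₗ φ
  | inr ⟨i, j⟩ => act (gx i ^ ((j : ℕ) + 1) : Λ) ∘ₗ φ

theorem psi_vx (hp : ∀ i, 2 ≤ p i) (φ : Ks K →ₗ[K] M) (i : Fin N) {k : ℕ} (hk : k < p i) (f : Ks K) :
    psi (N := N) (p := p) φ (vx p i k) f = (gx i : Λ) ^ k • φ f := by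
  cases k with
  | zero => simp [vx_zero, psi]
  | succ k => rw [vx_succ i (by omega)]; rfl

theorem psi_ge (hp : ∀ i, 2 ≤ p i) (h : IsGr N p K M) (φ : Ks K →ₗ[K] M)
    (hφ : ∀ f, (ge src : Λ) • φ f = φ f) (w : CanVertex N p) (f : Ks K) :
    (ge w : Λ) • psi φ w f = psi φ w f := by
  rcases w with (_ | _) | ⟨i, j⟩
  · exact hφ f
  · exact h.ge_cc _ _
  · have := h.x_pow_vx hp i (k := 0) (l := j + 1) (by omega) (φ f)
    rw [vx_zero, hφ, zero_add, vx_succ i j.2] at this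
    exact this.symm

/-- A map `φ` from `K(s)` with `a φ(f) = b φ(s f)` extends to the generic module. -/
theorem exists_GM_hom (hp : ∀ i, 2 ≤ p i) {lam : Fin (N - 2) → K} (h : IsGr N p K M)
    (hR : IsRel p lam M) (φ : Ks K →ₗ[K] M)
    (hφ : ∀ f, (ge src : Λ) • φ f = φ f)
    (hab : ∀ f, (cc (i0 N) : Λ) • φ f = (cc (i1 N) : Λ) • φ (sv K * f)) :
    ∃ g : GM N p lam →ₗ[Λ] M, ∀ y, (ge src : Λ) • g y =
      φ (GM.cd lam src y) := by
  have hccu : ∀ i f, (cc i : Λ) • φ f = (cc (i1 N) : Λ) • φ (uu lam i * f) := by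
    intro i f
    by_cases hi : i = i1 N
    · subst hi; rw [uu, if_pos rfl, one_mul]
    · rw [uu, if_neg hi, hR.cc_eq hi, hab, sub_mul, map_sub, smul_sub, ← smul_def, map_smul,
        smul_smul_comm']
  set G : GM N p lam →ₗ[K] M := ∑ w, psi (N := N) (p := p) φ w ∘ₗ GM.cd lam w with hG
  have hGa : ∀ y, G y = ∑ w, psi (N := N) (p := p) φ w (GM.cd lam w y) := fun y => by
    rw [hG, LinearMap.sum_apply]; rfl
  have hge : ∀ v y, (ge v : Λ) • G y = psi φ v (GM.cd lam v y) := by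
    intro v y
    rw [hGa, smul_sum, sum_eq_single v, psi_ge hp h φ hφ]
    · intro w _ hw
      rw [← psi_ge hp h φ hφ w, h.ge_ne hw.symm]
    · simp
  refine ⟨mkHom G ?_ ?_, fun y => hge _ y⟩
  · intro v y
    refine h.ext_ge fun w => ?_
    rw [hge, h.orth, GM.ge_apply]
    split_ifs with hw
    · rw [hw, hge]
    · rw [map_zero]
  · intro i y
    refine h.ext_ge fun w => ?_
    rw [hge]
    by_cases hw : ∃ k < p i, w = vx p i (k + 1)
    · obtain ⟨k, hk, rfl⟩ := hw
      rw [h.ge_x_vx hp i hk, GM.gx_apply lam hp i hk, hge, psi_vx hp φ i hk]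
      rw [← mul_smul, ← pow_succ']
      by_cases hk' : k + 1 = p i
      · rw [if_pos hk', hk', vx_last hp]
        change (cc (i1 N) : Λ) • φ _ = _
        rw [← hccu, h.cc_smul hp, hφ]
      · rw [if_neg hk', one_mul, psi_vx hp φ i (by omega)]
    · push Not at hw
      rw [GM.gx_other lam hp i w hw, h.ge_x_other hp i hw, map_zero]

theorem exists_GM_hom_of_not_TF (hp : ∀ i, 2 ≤ p i) (lam : Fin (N - 2) → K) (h : IsGr N p K M)
    (hR : IsRel p lam M) (hT : ¬ TF N p K M) :
    ∃ (g : GM N p lam →ₗ[Λ] M) (y : GM N p lam),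
      (ge src : Λ) • g y ≠ 0 := by
  unfold TF at hT
  push Not at hT
  obtain ⟨v, h1, ⟨n, h2⟩, h3, h4, m0, hm0⟩ := hT
  obtain ⟨ρ, hρ⟩ := (IsScalarTower.toAlgHom K K[X] (Ks K)).toLinearMap.exists_leftInverse_of_injective
    (ker_eq_bot.2 (IsFractionRing.injective K[X] (Ks K)))
  set l : Ks K →ₗ[K] K := lcoeff K m0 ∘ₗ ρ
  have hl : ∀ m, l (sv K ^ m) = if m = m0 then 1 else 0 := by
    intro m
    have : ρ (sv K ^ m) = X ^ m := by
      rw [sv, ← map_pow]; exact lcongr_fun hρ (X ^ m)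
    simp only [l, comp_apply, this, lcoeff_apply, coeff_X_pow, eq_comm]
  set φ : Ks K →ₗ[K] M := ∑ m ∈ Finset.range n,
    (LinearMap.toSpanSingleton K M (v m)) ∘ₗ l ∘ₗ mulLeft K (sv K ^ m) with hφ
  have hφa : ∀ f, φ f = ∑ m ∈ Finset.range n, l (sv K ^ m * f) • v m := fun f => by
    rw [hφ, LinearMap.sum_apply]; rfl
  have hb : ∀ f, (cc (i1 N) : Λ) • φ f =
      ∑ m ∈ Finset.range n, l (sv K ^ m * f) • (cc (i1 N) : Λ) • v m := fun f => by
    rw [hφa, smul_sum]; exact sum_congr rfl fun _ _ => smul_smul_comm' _ _ _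
  have ha : ∀ f, (cc (i0 N) : Λ) • φ f = (cc (i1 N) : Λ) • φ (sv K * f) := by
    intro f
    rw [hb, hφa, smul_sum]
    rcases n with _ | n
    · simp
    rw [Finset.sum_range_succ', Finset.sum_range_succ, ← h4 n, h2 (n + 1) le_rfl]
    rw [smul_smul_comm', h3, smul_zero, smul_zero, smul_zero]
    congr 1
    refine sum_congr rfl fun m _ => ?_
    rw [smul_smul_comm', h4, pow_succ, mul_assoc]
  obtain ⟨g, hg⟩ := exists_GM_hom hp (lam := lam) h hR φ (fun f => by
    rw [hφa, smul_sum]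
    exact sum_congr rfl fun m _ => by rw [smul_smul_comm', h1]) ha
  let y1 : GM N p lam := (fun _ => 1 : CanVertex N p → Ks K)
  refine ⟨g, y1, ?_⟩
  rw [hg, show GM.cd lam src y1 = 1 from rfl]
  rw [hφa]
  have hm0n : m0 ∈ Finset.range n := by
    rw [Finset.mem_range]; by_contra hh; exact hm0 (h2 _ (not_lt.1 hh))
  simpa only [mul_one, hl, ite_smul, one_smul, zero_smul, Finset.sum_ite_eq', hm0n, if_true]

theorem XX.subsingleton_of_TF (hX : XX N p K M) (hT : TF N p K M) : Subsingleton M := by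
  have := hX ⊥ (TF_quot_bot hT)
  exact (Submodule.subsingleton_iff Λ).1 ⟨fun a b =>
    (top_le_iff.1 (this ▸ bot_le : ⊤ ≤ a)).trans (top_le_iff.1 (this ▸ bot_le : ⊤ ≤ b)).symm⟩

/-- `TF` modules have no nontrivial extensions by finite dimensional modules in `XX`. -/
theorem HV_of_XX (hp : ∀ i, 2 ≤ p i) {lam : Fin (N - 2) → K} (hl : Good lam) (h : IsGr N p K M)
    (hR : IsRel p lam M) (hT : TF N p K M) [FiniteDimensional K M] (n : ℕ) :
    ∀ (L : Type) [AddCommGroup L] [Module K L] [Module Λ L]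
    [IsScalarTower K Λ L] [FiniteDimensional K L], finrank K L = n →
    IsGr N p K L → IsRel p lam L → XX N p K L → HV p lam M L := by
  induction n using Nat.strong_induction_on with
  | _ n ih =>
  intro L _ _ _ _ _ hn hL hRL hX
  by_cases hTL : TF N p K L
  · have := XX.subsingleton_of_TF hX hTL
    intro ζ hζ
    exact ⟨0, fun v m => Subsingleton.elim _ _, by ext; exact Subsingleton.elim _ _⟩
  · obtain ⟨g, y, hy⟩ := exists_GM_hom_of_not_TF hp lam hL hRL hTL
    have hGr := GM.isGr lam hp (N := N)
    refine HV.of_ext hp hl h hR hT hL hRL (range g) ?_ ?_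
    · exact HV.of_surj hp hl h hR hT hGr
        (IsGr.of_inj hL (f := (range g).subtype) (subtype_injective _))
        g.rangeRestrict g.surjective_rangeRestrict (HV_GM hp lam h hR hT)
    · have hs : Surjective (range g).mkQ := mkQ_surjective _
      haveI : FiniteDimensional K (L ⧸ range g) :=
        Module.Finite.of_surjective ((range g).mkQ.restrictScalars K) hs
      refine ih (finrank K (L ⧸ range g)) ?_ _ rfl (hL.of_surj hs) (hRL.of_surj hs)
        (hX.of_surj _ hs)
      rw [← hn]
      have e := Submodule.finrank_quotient_add_finrank ((range g).restrictScalars K)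
      change finrank K (L ⧸ range g) + _ = _ at e
      have : 0 < finrank K ((range g).restrictScalars K) := by
        rw [Module.finrank_pos_iff_exists_ne_zero]
        refine ⟨⟨g y, ⟨y, rfl⟩⟩, fun h0 => hy ?_⟩
        rw [show g y = 0 from congrArg val h0, smul_zero]
      omega

theorem nd_add (h : IsGr N p K M) [FiniteDimensional K M] (U : Submodule Λ M) (v : CanVertex N p) :
    nd (N := N) (p := p) K M v = nd (N := N) (p := p) K U v + nd (N := N) (p := p) K (M ⧸ U) v := by
  have hs : Surjective U.mkQ := mkQ_surjective _
  have hU : IsGr N p K U := IsGr.of_inj h (f := U.subtype) (subtype_injective _)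
  have hQ : IsGr N p K (M ⧸ U) := h.of_surj hs
  set f : comp (N := N) (p := p) K M v →ₗ[K] M ⧸ U :=
    (U.mkQ.restrictScalars K) ∘ₗ (comp (N := N) (p := p) K M v).subtype with hf
  rw [nd, ← LinearMap.finrank_range_add_finrank_ker f, add_comm]
  congr 1
  · refine LinearEquiv.finrank_eq ?_
    refine LinearEquiv.ofBijective
      ((codRestrict (comp (N := N) (p := p) K U v)
        (codRestrict (U.restrictScalars K) ((comp (N := N) (p := p) K M v).subtype ∘ₗ
          (ker f).subtype) ?_) ?_)) ⟨?_, ?_⟩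
    · rintro ⟨⟨x, hx⟩, hx'⟩
      exact (Submodule.Quotient.mk_eq_zero U).1 hx'
    · rintro ⟨⟨x, hx⟩, hx'⟩
      exact hU.mem_comp.2 (sext (h.mem_comp.1 hx))
    · rintro ⟨⟨x, hx⟩, hx'⟩ ⟨⟨y, hy⟩, hy'⟩ hxy
      exact sext (sext (congrArg (fun t => ((t : U) : M)) (congrArg val hxy)))
    · rintro ⟨⟨x, hx⟩, hx'⟩
      have e := congrArg val (hU.mem_comp.1 hx')
      exact ⟨⟨⟨x, h.mem_comp.2 e⟩, (Submodule.Quotient.mk_eq_zero U).2 hx⟩, rfl⟩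
  · have : range f = comp (N := N) (p := p) K (M ⧸ U) v := by
      apply le_antisymm
      · rintro _ ⟨⟨x, hx⟩, rfl⟩
        rw [hQ.mem_comp]
        change _ • U.mkQ x = U.mkQ x
        rw [← map_smul, h.mem_comp.1 hx]
      · intro y hy
        obtain ⟨x, rfl⟩ := hs y
        refine ⟨⟨(ge v : Λ) • x, h.mem_comp.2 (h.ge_self v x)⟩, ?_⟩
        change U.mkQ ((ge v : Λ) • x) = _
        rw [map_smul, hQ.mem_comp.1 hy]
    rw [this, nd]

/-- A map `φ` from `K(s)` to a finite dimensional space with `s`-stable kernel vanishes. -/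
theorem eq_zero_of_stable [FiniteDimensional K M] (φ : Ks K →ₗ[K] M)
    (hs : ∀ f, φ f = 0 → φ (sv K * f) = 0) : φ = 0 := by
  set k := ker φ
  haveI : FiniteDimensional K (Ks K ⧸ k) :=
    Module.Finite.equiv φ.quotKerEquivRange.symm
  set T : End K (Ks K ⧸ k) := k.mapQ k (mulLeft K (sv K)) (fun f hf => hs f hf) with hT
  have hpow : ∀ n f, (T ^ n) (k.mkQ f) = k.mkQ (sv K ^ n * f) := by
    intro n f
    induction n with
    | zero => simp
    | succ n ih => rw [pow_succ', End.mul_apply, ih, pow_succ', mul_assoc]; rfl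
  have hev : ∀ (q : K[X]) f, (aeval T q) (k.mkQ f) = k.mkQ (algebraMap K[X] (Ks K) q * f) := by
    intro q f
    induction q using Polynomial.induction_on' with
    | add q r hq hr => rw [map_add, LinearMap.add_apply, hq, hr, map_add, add_mul, map_add]
    | monomial n c =>
      rw [aeval_monomial, ← C_mul_X_pow_eq_monomial, map_mul (algebraMap K[X] (Ks K)), map_pow, End.mul_apply, hpow,
        Module.algebraMap_end_apply, ← map_smul, smul_def,
        IsScalarTower.algebraMap_apply K K[X] (Ks K), mul_assoc]
      rfl
  have hm : minpoly K T ≠ 0 := minpoly.ne_zero (Algebra.IsIntegral.isIntegral T)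
  have hm' : algebraMap K[X] (Ks K) (minpoly K T) ≠ 0 := by
    rwa [Ne, map_eq_zero_iff _ (IsFractionRing.injective K[X] (Ks K))]
  ext1 f
  have := hev (minpoly K T) ((algebraMap K[X] (Ks K) (minpoly K T))⁻¹ * f)
  rw [minpoly.aeval, mul_inv_cancel_left₀ hm', LinearMap.zero_apply] at this
  exact (Submodule.Quotient.mk_eq_zero k).1 this.symm

/-- The image of a nonzero map from the generic module has larger dimension at the source. -/
theorem GM_range_lt (hp : ∀ i, 2 ≤ p i) {lam : Fin (N - 2) → K} (h : IsGr N p K M)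
    [FiniteDimensional K M] (g : GM N p lam →ₗ[Λ] M) (hs : Surjective g)
    (y : GM N p lam) (hy : (ge src : Λ) • g y ≠ 0) :
    nd (N := N) (p := p) K M snk < nd (N := N) (p := p) K M src := by
  have hG := GM.isGr lam hp (N := N)
  set b : comp (N := N) (p := p) K M src →ₗ[K] comp (N := N) (p := p) K M snk :=
    codRestrict _ (act (cc (i1 N) : Λ) ∘ₗ Submodule.subtype _)
      (fun m => h.mem_comp.2 (h.ge_cc _ _)) with hb
  have hbs : Surjective b := by
    rintro ⟨m, hm⟩
    obtain ⟨z, rfl⟩ := hs m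
    let z' : GM N p lam := (fun _ => GM.cd lam snk z : CanVertex N p → Ks K)
    refine ⟨⟨(ge src : Λ) • g z', h.mem_comp.2 (h.ge_self _ _)⟩, sext ?_⟩
    change (cc (i1 N) : Λ) • (ge src : Λ) • g z' = g z
    rw [h.cc_ge, ← h.mem_comp.1 hm, ← map_smul g, ← map_smul g]
    congr 1
    refine GM.ext fun w => ?_
    rw [GM.cc_apply lam hp, GM.ge_apply, uu, if_pos rfl, one_mul]
    rfl
  refine lt_of_le_of_ne (LinearMap.finrank_le_finrank_of_surjective hbs) fun heq => ?_
  have hbi : Function.Injective b := (LinearMap.injective_iff_surjective_of_finrank_eq_finrank heq.symm).2 hbs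
  let ι : Ks K →ₗ[K] GM N p lam :=
    (single K (fun _ : CanVertex N p => Ks K) src : Ks K →ₗ[K] _)
  have hι : ∀ f w, GM.cd lam w (ι f) = if w = src then f else 0 := by
    intro f w
    change (single K (fun _ : CanVertex N p => Ks K) src f) w = _
    rw [LinearMap.single_apply, Pi.single_apply]
  set φ : Ks K →ₗ[K] M := g.restrictScalars K ∘ₗ ι with hφ
  have hφ0 : ∀ f, (ge src : Λ) • φ f = φ f := by
    intro f
    change (ge src : Λ) • g (ι f) = g (ι f)
    rw [← map_smul g]
    congr 1
    refine GM.ext fun w => ?_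
    rw [GM.ge_apply, hι, hι]
    simp
  have h0 : φ = 0 := by
    refine eq_zero_of_stable φ fun f hf => ?_
    have : (cc (i1 N) : Λ) • φ (sv K * f) = (cc (i0 N) : Λ) • φ f := by
      change (cc (i1 N) : Λ) • g (ι _) = (cc (i0 N) : Λ) • g (ι f)
      rw [← map_smul g, ← map_smul g]
      congr 1
      refine GM.ext fun w => ?_
      rw [GM.cc_apply lam hp, GM.cc_apply lam hp, hι, hι, uu, uu, if_pos rfl, if_neg i0_ne_i1, mu_i0]
      simp
    rw [hf, smul_zero] at this
    have h1 := @hbi ⟨φ (sv K * f), h.mem_comp.2 (hφ0 _)⟩ 0 (sext (this.trans (smul_zero _).symm))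
    exact congrArg val h1
  apply hy
  have : (ge src : Λ) • g y = φ (GM.cd lam src y) := by
    change _ = g (ι _)
    rw [← map_smul]
    congr 1
    refine GM.ext fun w => ?_
    rw [GM.ge_apply, hι]
  rw [this, h0, LinearMap.zero_apply]

/-- A finite dimensional module in `XX` is zero or has larger dimension at the source than at the
sink. -/
theorem XX.nd_lt (hp : ∀ i, 2 ≤ p i) {lam : Fin (N - 2) → K} (n : ℕ) :
    ∀ (L : Type) [AddCommGroup L] [Module K L] [Module Λ L]
    [IsScalarTower K Λ L] [FiniteDimensional K L], finrank K L = n →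
    IsGr N p K L → IsRel p lam L → XX N p K L → Subsingleton L ∨
      nd (N := N) (p := p) K L snk < nd (N := N) (p := p) K L src := by
  induction n using Nat.strong_induction_on with
  | _ n ih =>
  intro L _ _ _ _ _ hn hL hRL hX
  by_cases hTL : TF N p K L
  · exact Or.inl (XX.subsingleton_of_TF hX hTL)
  · right
    obtain ⟨g, y, hy⟩ := exists_GM_hom_of_not_TF hp lam hL hRL hTL
    have hs : Surjective (range g).mkQ := mkQ_surjective _
    have hU : IsGr N p K (range g) :=
      IsGr.of_inj hL (f := (range g).subtype) (subtype_injective _)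
    haveI : FiniteDimensional K (range g) :=
      FiniteDimensional.of_injective ((range g).subtype.restrictScalars K)
        (subtype_injective _)
    have h1 := GM_range_lt hp hU g.rangeRestrict g.surjective_rangeRestrict y
      (fun h0 => hy (congrArg val h0))
    haveI : FiniteDimensional K (L ⧸ range g) :=
      Module.Finite.of_surjective ((range g).mkQ.restrictScalars K) hs
    have h2 := ih (finrank K (L ⧸ range g)) (by
      rw [← hn]
      have e := Submodule.finrank_quotient_add_finrank ((range g).restrictScalars K)
      change finrank K (L ⧸ range g) + _ = _ at e
      have : 0 < finrank K ((range g).restrictScalars K) := by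
        rw [Module.finrank_pos_iff_exists_ne_zero]
        refine ⟨⟨g y, ⟨y, rfl⟩⟩, fun h0 => hy ?_⟩
        rw [show g y = 0 from congrArg val h0, smul_zero]
      omega) _ rfl (hL.of_surj hs) (hRL.of_surj hs) (hX.of_surj _ hs)
    have e1 := nd_add hL (range g) snk
    have e2 := nd_add hL (range g) src
    rcases h2 with h2 | h2
    · have z : ∀ v, nd (N := N) (p := p) K (L ⧸ range g) v = 0 := fun v =>
        Module.finrank_zero_of_subsingleton
      rw [z] at e1 e2
      omega
    · omega

end

section

variable {N : ℕ} {p : Fin N → ℕ} {K : Type} [Field K]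

/-! ### Structures on standard graded spaces -/

/-- The projection of the standard graded space onto the block of a vertex. -/
def pr (K : Type) [Field K] (d : Dv) (v : CanVertex N p) : End K (V K d) where
  toFun x a := if a.1 = v then x a else 0
  map_add' x y := by ext a; simp only [Pi.add_apply]; split_ifs <;> simp
  map_smul' c x := by ext a; simp only [Pi.smul_apply, RingHom.id_apply]; split_ifs <;> simp

theorem pr_apply (d : Dv) (v : CanVertex N p) (x : V K d) (a) :
    pr K d v x a = if a.1 = v then x a else 0 := rfl

theorem pr_orth (d : Dv) (v w : CanVertex N p) (x : V K d) :
    pr K d v (pr K d w x) = if v = w then pr K d v x else 0 := by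
  ext a
  split_ifs with h
  · subst h; simp only [pr_apply]; split_ifs <;> rfl
  · simp only [pr_apply]; split_ifs <;> simp_all

theorem pr_sum (d : Dv) (x : V K d) : ∑ v, pr K d v x = x := by
  ext a
  rw [Finset.sum_apply]
  simp only [pr_apply, Finset.sum_ite_eq, mem_univ, if_true]

/-- The module over the free algebra given by the endomorphisms `X`. -/
abbrev Mo {d : Dv} (X : Fin N → End K (V K d)) : Type :=
  Md (Sum.elim (pr K d) X)

theorem Mo.ge_smul {d : Dv} (X : Fin N → End K (V K d)) (v : CanVertex N p)
    (m : Mo X) : (ge v : Λ) • m = (pr K d v m : V K d) := Md.ge_smul _ v m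

theorem Mo.gx_smul {d : Dv} (X : Fin N → End K (V K d)) (i : Fin N)
    (m : Mo X) : (gx i : Λ) • m = (X i m : V K d) := Md.gx_smul _ i m

theorem isGr_Mo {d : Dv} {X : Fin N → End K (V K d)} :
    IsGr N p K (Mo X) ↔ ∀ i v w, ¬ CanArrow N p i v w → ∀ x, pr K d w (X i (pr K d v x)) = 0 := by
  constructor
  · intro h i v w hvw x
    have := h.supp i v w hvw (x : Mo X)
    exact (Mo.ge_smul X w _).symm.trans ((congrArg (fun y : Mo X => (ge w : Λ) • y)
      ((Mo.gx_smul X i _).symm.trans (congrArg (fun y : Mo X => (gx i : Λ) • y)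
        (Mo.ge_smul X v x).symm))).trans this)
  · intro h
    refine ⟨fun v w m => ?_, fun m => ?_, fun i v w hvw m => ?_⟩
    · have := pr_orth (K := K) d v w m
      rw [Mo.ge_smul, Mo.ge_smul]
      by_cases hvw : v = w
      · rw [if_pos hvw] at this ⊢
        exact this.trans (Mo.ge_smul X v m).symm
      · rw [if_neg hvw] at this ⊢
        exact this
    · simp only [Mo.ge_smul]; exact pr_sum d m
    · rw [Mo.ge_smul, Mo.gx_smul, Mo.ge_smul]; exact h i v w hvw m

instance (d : Dv) (X : Fin N → End K (V K d)) :
    IsScalarTower K Λ (Mo X) :=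
  inferInstanceAs (IsScalarTower K Λ (Md (Sum.elim (pr K d) X)))

instance (d : Dv) (X : Fin N → End K (V K d)) : FiniteDimensional K (Mo X) :=
  inferInstanceAs (FiniteDimensional K (V K d))

instance [Finite K] (d : Dv) (X : Fin N → End K (V K d)) : Finite (Mo X) :=
  inferInstanceAs (Finite (V K d))

variable (K) in
/-- Maps of standard graded spaces that preserve the grading. -/
def IsGd {e d : Dv} (f : V K e →ₗ[K] V K d) : Prop :=
  ∀ v x, f (pr K e v x) = pr K d v (f x)

/-- A linear map of the underlying spaces. -/
def Mo.lin {e d : Dv} (X : Fin N → End K (V K e))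
    (Y : Fin N → End K (V K d)) (f : V K e →ₗ[K] V K d) : Mo X →ₗ[K] Mo Y := f

/-- A graded map commuting with the structures is a homomorphism. -/
noncomputable def Mo.hom {e d : Dv} {X : Fin N → End K (V K e)}
    {Y : Fin N → End K (V K d)} (f : V K e →ₗ[K] V K d) (hg : IsGd K f)
    (hx : ∀ i x, f (X i x) = Y i (f x)) : Mo X →ₗ[Λ] Mo Y :=
  mkHom (Mo.lin X Y f)
    (fun v m => by rw [Mo.ge_smul, Mo.ge_smul]; exact hg v m)
    (fun i m => by rw [Mo.gx_smul, Mo.gx_smul]; exact hx i m)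

/-- The underlying graded map of a homomorphism. -/
noncomputable def Mo.un {e d : Dv} {X : Fin N → End K (V K e)}
    {Y : Fin N → End K (V K d)} (f : Mo X →ₗ[Λ] Mo Y) : V K e →ₗ[K] V K d :=
  (f.restrictScalars K : Mo X →ₗ[K] Mo Y)

section hom
variable {e d : Dv} {X : Fin N → End K (V K e)}
    {Y : Fin N → End K (V K d)}

theorem Mo.un_gd (f : Mo X →ₗ[Λ] Mo Y) : IsGd K (Mo.un f) := fun v x => by
  have := f.map_smul (ge v : Λ) (x : Mo X)
  exact (congrArg f (Mo.ge_smul X v x).symm).trans (this.trans (Mo.ge_smul Y v _))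

theorem Mo.un_x (f : Mo X →ₗ[Λ] Mo Y) (i : Fin N) (x) : Mo.un f (X i x) = Y i (Mo.un f x) := by
  have := f.map_smul (gx i : Λ) (x : Mo X)
  exact (congrArg f (Mo.gx_smul X i x).symm).trans (this.trans (Mo.gx_smul Y i _))

theorem Mo.un_inj {f g : Mo X →ₗ[Λ] Mo Y} (h : Mo.un f = Mo.un g) : f = g :=
  lext fun x => lcongr_fun h x

theorem Mo.un_hom (f : V K e →ₗ[K] V K d) (hg hx) : Mo.un (Mo.hom (X := X) (Y := Y) f hg hx) = f := rfl

end hom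

variable [Fact (2 ≤ N)]

/-- The structures of torsion free representations on the standard graded space. -/
structure IsTS (lam : Fin (N - 2) → K) {d : Dv} (X : Fin N → End K (V K d)) :
    Prop where
  gr : IsGr N p K (Mo X)
  rel : IsRel p lam (Mo X)
  tf : TF N p K (Mo X)

/-- The set of structures of torsion free representations on the standard graded space. -/
def TS (lam : Fin (N - 2) → K) (d : Dv) : Type :=
  {X : Fin N → End K (V K d) // IsTS lam X}

instance [Finite K] (d e : Dv) : Finite (V K d →ₗ[K] V K e) :=
  Finite.of_injective (fun f => (f : V K d → V K e)) DFunLike.coe_injective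

instance [Finite K] (lam : Fin (N - 2) → K) (d : Dv) : Finite (TS lam d) := by
  haveI : Finite (End K (V K d)) := inferInstanceAs (Finite (V K d →ₗ[K] V K d))
  exact inferInstanceAs (Finite {X : Fin N → End K (V K d) // IsTS lam X})

/-! ### Standardization and splittings -/

/-- Every finite dimensional graded space is isomorphic to a standard one. -/
theorem exists_std {W : Type} [AddCommGroup W] [Module K W] [FiniteDimensional K W]
    (P : CanVertex N p → End K W) (horth : ∀ v w x, P v (P w x) = if v = w then P v x else 0)
    (hsum : ∀ x, ∑ v, P v x = x) :
    ∃ (φ : V K (fun v => finrank K (range (P v))) ≃ₗ[K] W),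
      ∀ v x, φ (pr K _ v x) = P v (φ x) := by
  set d : Dv := fun v => finrank K (range (P v)) with hd
  let b : ∀ v, Basis (Fin (d v)) K (range (P v)) := fun v => finBasis K _
  let F : V K d →ₗ[K] W := ∑ v, ∑ k : Fin (d v),
    (LinearMap.toSpanSingleton K W (b v k : W)) ∘ₗ (proj (⟨v, k⟩ : CanIdx N p d) : V K d →ₗ[K] K)
  have hF : ∀ x, F x = ∑ v, ∑ k : Fin (d v), x ⟨v, k⟩ • (b v k : W) := by
    intro x; simp only [F, LinearMap.sum_apply]; rfl
  have hPb : ∀ v w k, P v (b w k : W) = if v = w then (b w k : W) else 0 := by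
    intro v w k
    obtain ⟨y, hy⟩ := (b w k).2
    rw [← hy, horth]
    split_ifs with h
    · rw [h]
    · rfl
  have hPF : ∀ v x, P v (F x) = ∑ k : Fin (d v), x ⟨v, k⟩ • (b v k : W) := by
    intro v x
    rw [hF, map_sum, sum_eq_single v]
    · rw [map_sum]; simp only [map_smul, hPb, if_true]
    · intro w _ hw
      rw [map_sum]; simp only [map_smul, hPb, if_neg hw.symm, smul_zero, Finset.sum_const_zero]
    · simp
  have hb : ∀ v (y : range (P v)), ∑ k, (b v).repr y k • (b v k : W) = y := by
    intro v y
    have := congrArg val ((b v).sum_repr y)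
    rw [Submodule.coe_sum] at this
    exact this
  have hbij : Bijective F := by
    constructor
    · rw [injective_iff_map_eq_zero]
      intro x hx
      ext ⟨v, k⟩
      have h0 : ∑ k : Fin (d v), x ⟨v, k⟩ • (b v k) = 0 := by
        apply sext
        have := hPF v x
        rw [hx, map_zero] at this
        rw [Submodule.coe_sum]
        simpa using this.symm
      exact Fintype.linearIndependent_iff.1 (b v).linearIndependent _ h0 k
    · intro y
      refine ⟨fun a => (b a.1).repr ⟨P a.1 y, ⟨y, rfl⟩⟩ a.2, ?_⟩
      rw [hF]
      conv_rhs => rw [← hsum y]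
      exact sum_congr rfl fun v _ => hb v ⟨P v y, ⟨y, rfl⟩⟩
  refine ⟨LinearEquiv.ofBijective F hbij, fun v x => ?_⟩
  change F _ = P v (F x)
  rw [hPF, hF, sum_eq_single v]
  · simp [pr_apply]
  · intro w _ hw; simp [pr_apply, hw]
  · simp

/-- A splitting of a short exact sequence of standard graded spaces. -/
structure Split (K : Type) [Field K] (e d f : Dv) where
  j : V K e →ₗ[K] V K d
  r : V K d →ₗ[K] V K e
  q : V K d →ₗ[K] V K f
  s : V K f →ₗ[K] V K d
  gj : IsGd K j
  gr : IsGd K r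
  gq : IsGd K q
  gs : IsGd K s
  rj : ∀ x, r (j x) = x
  qs : ∀ x, q (s x) = x
  jr : ∀ x, j (r x) + s (q x) = x

namespace Split

variable {e d f : Dv} (S : Split K e d f)

theorem qj (x : V K e) : S.q (S.j x) = 0 := by
  have h1 := congrArg S.q (S.jr (S.j x))
  rw [S.rj, map_add, S.qs] at h1
  exact left_eq_add.1 h1.symm

theorem rs (x : V K f) : S.r (S.s x) = 0 := by
  have h1 := congrArg S.r (S.jr (S.s x))
  rw [S.qs, map_add, S.rj] at h1
  exact left_eq_add.1 h1.symm

theorem mem_range (x : V K d) : x ∈ range S.j ↔ S.q x = 0 := by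
  constructor
  · rintro ⟨y, rfl⟩; exact S.qj y
  · intro h
    have := S.jr x
    rw [h, map_zero, add_zero] at this
    exact ⟨_, this⟩

end Split

/-- Graded subspaces of the standard graded space. -/
def GS (K : Type) [Field K] (d : Dv) : Type :=
  {U : Submodule K (V K d) // ∀ v, ∀ x ∈ U, pr K d v x ∈ U}

instance [Finite K] (d : Dv) : Finite (GS K d) :=
  inferInstanceAs (Finite {U : Submodule K (V K d) // ∀ v, ∀ x ∈ U, pr K d v x ∈ U})

theorem exists_split_surj {d f : Dv} (q : V K d →ₗ[K] V K f) (hq : IsGd K q)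
    (hs : Surjective q) : ∃ (e : Dv) (S : Split K e d f), S.q = q := by
  obtain ⟨t, ht⟩ := q.exists_rightInverse_of_surjective (range_eq_top.2 hs)
  set s : V K f →ₗ[K] V K d := ∑ v, pr K d v ∘ₗ t ∘ₗ pr K f v with hsdef
  have hsa : ∀ x, s x = ∑ v, pr K d v (t (pr K f v x)) := fun x => by
    rw [hsdef, LinearMap.sum_apply]; rfl
  have hqs : ∀ x, q (s x) = x := by
    intro x
    rw [hsa, map_sum]
    conv_rhs => rw [← pr_sum f x]
    refine sum_congr rfl fun v _ => ?_
    rw [hq, show q (t (pr K f v x)) = _ from lcongr_fun ht _, LinearMap.id_apply, pr_orth,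
      if_pos rfl]
  have hsg : IsGd K s := by
    intro v x
    rw [hsa, hsa, map_sum]
    refine sum_congr rfl fun w _ => ?_
    rw [pr_orth, pr_orth]
    by_cases h : w = v
    · subst h; simp
    · rw [if_neg h, if_neg (Ne.symm h), map_zero, map_zero]
  let P : CanVertex N p → End K (ker q) := fun v =>
    (pr K d v).restrict (fun x (hx : q x = 0) => by
      change q _ = 0
      rw [hq, hx, map_zero])
  obtain ⟨φ, hφ⟩ := exists_std P
    (fun v w x => sext (by
      change pr K d v (pr K d w x) = _
      rw [pr_orth]; split_ifs <;> rfl))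
    (fun x => sext (by rw [Submodule.coe_sum]; exact pr_sum d x.1))
  let ρ : V K d →ₗ[K] ker q := codRestrict _ (LinearMap.id - s ∘ₗ q)
    (fun x => by simp [hqs])
  have hρ : ∀ x, (ρ x : V K d) = x - s (q x) := fun x => rfl
  refine ⟨_, ⟨(ker q).subtype ∘ₗ φ.toLinearMap, φ.symm.toLinearMap ∘ₗ ρ, q, s, ?_, ?_, hq,
    hsg, ?_, hqs, ?_⟩, rfl⟩
  · intro v x
    exact congrArg val (hφ v x)
  · intro v x
    change φ.symm _ = _
    rw [LinearEquiv.symm_apply_eq, hφ]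
    apply sext
    change _ = pr K d v (φ (φ.symm (ρ x)) : V K d)
    rw [LinearEquiv.apply_symm_apply, hρ, hρ, map_sub, hq, hsg]
  · intro x
    change φ.symm _ = _
    rw [LinearEquiv.symm_apply_eq]
    apply sext
    rw [hρ]
    change (φ x : V K d) - s (q (φ x)) = _
    rw [show q (φ x) = 0 from (φ x).2, map_zero, sub_zero]
  · intro x
    change (φ (φ.symm (ρ x)) : V K d) + _ = _
    rw [LinearEquiv.apply_symm_apply, hρ]; simp

theorem exists_split {d : Dv} (U : GS K d) :
    ∃ (e f : Dv) (S : Split K e d f), range S.j = U.1 := by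
  let P : CanVertex N p → End K (V K d ⧸ U.1) := fun v =>
    U.1.mapQ U.1 (pr K d v) (fun x hx => U.2 v x hx)
  obtain ⟨φ, hφ⟩ := exists_std P
    (fun v w x => by
      obtain ⟨x, rfl⟩ := U.1.mkQ_surjective x
      change U.1.mkQ (pr K d v (pr K d w x)) = _
      rw [pr_orth]; split_ifs <;> rfl)
    (fun x => by
      obtain ⟨x, rfl⟩ := U.1.mkQ_surjective x
      change ∑ v, U.1.mkQ (pr K d v x) = _
      rw [← map_sum, pr_sum])
  obtain ⟨e, S, hS⟩ := exists_split_surj (φ.symm.toLinearMap ∘ₗ U.1.mkQ) (by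
    intro v x
    change φ.symm _ = _
    rw [LinearEquiv.symm_apply_eq, hφ]
    change _ = P v (φ (φ.symm _))
    rw [LinearEquiv.apply_symm_apply]
    rfl) (φ.symm.surjective.comp U.1.mkQ_surjective)
  refine ⟨e, _, S, ?_⟩
  ext x
  rw [S.mem_range, hS]
  change φ.symm _ = 0 ↔ _
  simp

end

section

variable {N : ℕ} {p : Fin N → ℕ} {K : Type} [Field K]
variable {d e f : Dv}

theorem map_smul_K {M L : Type} [AddCommGroup M] [Module K M] [Module Λ M]
    [IsScalarTower K Λ M] [AddCommGroup L] [Module K L] [Module Λ L]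
    [IsScalarTower K Λ L] (g : M →ₗ[Λ] L) (c : K) (m : M) :
    g (c • m) = c • g m := by
  rw [← algebraMap_smul Λ c m, map_smul, algebraMap_smul]

/-! ### Extensions of standard representations -/

section
variable {A : Fin N → End K (V K e)} {B : Fin N → End K (V K f)}

/-- An element of the underlying space, as an element of the module. -/
def Mo.of (A : Fin N → End K (V K e)) (m : V K e) : Mo A := m

theorem Mo.ge_eq (A : Fin N → End K (V K e)) (v : CanVertex N p) (m : V K e) :
    (ge v : Λ) • Mo.of A m = pr K e v m := Mo.ge_smul A v m

theorem Mo.gx_eq (A : Fin N → End K (V K e)) (i : Fin N) (m : V K e) :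
    (gx i : Λ) • Mo.of A m = A i m := Mo.gx_smul A i m

theorem isC0_Mo (φ : V K f →ₗ[K] V K e) : IsC0 N p (Mo.lin B A φ) ↔ IsGd K φ := by
  constructor
  · intro h v x
    exact (congrArg φ (Mo.ge_eq B v x).symm).trans ((h v x).trans (Mo.ge_eq A v _))
  · intro h v x
    exact (congrArg φ (Mo.ge_eq B v x)).trans ((h v x).trans (Mo.ge_eq A v _).symm)

variable (K) in
/-- Families of maps of standard graded spaces supported along the arrows of the arms. -/
def IsA1 (ζ : Fin N → V K f →ₗ[K] V K e) : Prop :=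
  ∀ i v w, ¬ CanArrow N p i v w → ∀ x, pr K e w (ζ i (pr K f v x)) = 0

theorem isC1_Mo (ζ : Fin N → V K f →ₗ[K] V K e) :
    IsC1 N p (fun i => Mo.lin B A (ζ i)) ↔ IsA1 K ζ := by
  constructor
  · intro h i v w hvw x
    refine ((Mo.ge_eq A w _).symm.trans ?_).trans (h i v w hvw x)
    exact congrArg (fun y : Mo A => (ge w : Λ) • y) (congrArg (ζ i) (Mo.ge_eq B v x).symm)
  · intro h i v w hvw x
    refine Eq.trans ?_ (h i v w hvw x)
    refine ((Mo.ge_eq A w _).symm.trans ?_).symm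
    exact congrArg (fun y : Mo A => (ge w : Λ) • y) (congrArg (ζ i) (Mo.ge_eq B v x).symm)

theorem dl_Mo (φ : V K f →ₗ[K] V K e) (i : Fin N) (x : V K f) :
    (dl p (Mo.lin B A φ) i x : V K e) = A i (φ x) - φ (B i x) := by
  change ((gx i : Λ) • Mo.of A (φ x) - Mo.lin B A φ ((gx i : Λ) • Mo.of B x) : Mo A) = _
  exact congrArg₂ _ (Mo.gx_eq A i _) (congrArg φ (Mo.gx_eq B i x))

theorem isGr_Mo' {X : Fin N → End K (V K d)} :
    IsGr N p K (Mo X) ↔ IsA1 K X := isGr_Mo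
end

variable [Fact (2 ≤ N)]

/-- Cocycles between standard representations. -/
def Zt (lam : Fin (N - 2) → K) (B : Fin N → End K (V K f))
    (A : Fin N → End K (V K e)) : Type :=
  {ζ : Fin N → V K f →ₗ[K] V K e // IsZ p lam (fun i => Mo.lin B A (ζ i))}

instance [Finite K] (lam : Fin (N - 2) → K) (B : Fin N → End K (V K f))
    (A : Fin N → End K (V K e)) : Finite (Zt lam B A) :=
  inferInstanceAs (Finite {ζ : Fin N → V K f →ₗ[K] V K e // _})

namespace Split
variable (S : Split K e d f)

/-- The extension of `B` by `A` given by the cocycle `ζ`. -/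
def glue (A : Fin N → End K (V K e)) (B : Fin N → End K (V K f))
    (ζ : Fin N → V K f →ₗ[K] V K e) (i : Fin N) : End K (V K d) :=
  S.j ∘ₗ A i ∘ₗ S.r + S.j ∘ₗ ζ i ∘ₗ S.q + S.s ∘ₗ B i ∘ₗ S.q

section glue
variable {A : Fin N → End K (V K e)} {B : Fin N → End K (V K f)}
    {ζ : Fin N → V K f →ₗ[K] V K e}

theorem glue_apply (i : Fin N) (x) : S.glue A B ζ i x =
    S.j (A i (S.r x)) + S.j (ζ i (S.q x)) + S.s (B i (S.q x)) := rfl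

theorem glue_j (i : Fin N) (x) : S.glue A B ζ i (S.j x) = S.j (A i x) := by
  rw [glue_apply, S.rj, S.qj, map_zero, map_zero, map_zero, map_zero, add_zero, add_zero]

theorem glue_s (i : Fin N) (x) : S.glue A B ζ i (S.s x) = S.j (ζ i x) + S.s (B i x) := by
  rw [glue_apply, S.rs, S.qs, map_zero, map_zero, zero_add]

theorem q_glue (i : Fin N) (x) : S.q (S.glue A B ζ i x) = B i (S.q x) := by
  rw [glue_apply, map_add, map_add, S.qj, S.qj, S.qs, zero_add, zero_add]

theorem r_glue (i : Fin N) (x) : S.r (S.glue A B ζ i x) = A i (S.r x) + ζ i (S.q x) := by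
  rw [glue_apply, map_add, map_add, S.rj, S.rj, S.rs, add_zero]

theorem ext_js {W : Type} [AddCommGroup W] [Module K W] {g h : V K d →ₗ[K] W}
    (h1 : ∀ x, g (S.j x) = h (S.j x)) (h2 : ∀ x, g (S.s x) = h (S.s x)) : g = h :=
  lext fun x => by rw [← S.jr x, map_add, map_add, h1, h2]

theorem isA1_glue : IsA1 K (S.glue A B ζ) ↔ IsA1 K A ∧ IsA1 K B ∧ IsA1 K ζ := by
  constructor
  · intro h
    refine ⟨fun i v w hvw x => ?_, fun i v w hvw x => ?_, fun i v w hvw x => ?_⟩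
    · have := congrArg S.r (h i v w hvw (S.j x))
      rwa [← S.gj, S.glue_j, S.gr, S.rj, map_zero] at this
    · have := congrArg S.q (h i v w hvw (S.s x))
      rwa [← S.gs, S.gq, S.q_glue, S.qs, map_zero] at this
    · have := congrArg S.r (h i v w hvw (S.s x))
      rwa [← S.gs, S.gr, S.r_glue, S.qs, S.rs, map_zero, zero_add, map_zero] at this
  · rintro ⟨hA, hB, hζ⟩ i v w hvw x
    rw [glue_apply, map_add, map_add, ← S.gj, ← S.gj, ← S.gs, S.gr, S.gq, hA i v w hvw,
      hB i v w hvw, hζ i v w hvw, map_zero, map_zero, add_zero, add_zero]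

/-- The inclusion of the subrepresentation. -/
noncomputable def jh : Mo A →ₗ[Λ] Mo (S.glue A B ζ) :=
  Mo.hom S.j S.gj (fun i x => (S.glue_j i x).symm)

/-- The projection to the quotient representation. -/
noncomputable def qh : Mo (S.glue A B ζ) →ₗ[Λ] Mo B :=
  Mo.hom S.q S.gq (fun i x => S.q_glue i x)

theorem jh_inj : Function.Injective (S.jh (A := A) (B := B) (ζ := ζ)) :=
  Function.LeftInverse.injective (g := S.r) S.rj

theorem qh_surj : Surjective (S.qh (A := A) (B := B) (ζ := ζ)) :=
  Function.RightInverse.surjective (g := S.s) S.qs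

theorem cc_s (hC : IsC0 N p (Mo.lin B (S.glue A B ζ) S.s)) (i : Fin N) (w : Mo B) :
    (cc i : Λ) • Mo.lin B (S.glue A B ζ) S.s w =
      Mo.lin B (S.glue A B ζ) S.s ((cc i : Λ) • w) +
        S.jh (A := A) (B := B) (ζ := ζ) (dcc p i (Mo.lin B A (ζ i)) w) := by
  have h1 := dcc_dl i _ hC w
  have h2 : dl p (Mo.lin B (S.glue A B ζ) S.s) i =
      Mo.lin A (S.glue A B ζ) S.j ∘ₗ Mo.lin B A (ζ i) := by
    refine lext fun x => (dl_Mo S.s i x).trans ?_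
    exact (congrArg (· - S.s (B i x)) (S.glue_s i x)).trans (add_sub_cancel_right _ _)
  rw [h2, dcc_comp (S.jh (A := A) (B := B) (ζ := ζ)) i _ _ (fun _ => rfl)] at h1
  rw [h1]; abel

theorem isRel_glue (lam : Fin (N - 2) → K) : IsRel p lam (Mo (S.glue A B ζ)) ↔
    IsRel p lam (Mo A) ∧ IsRel p lam (Mo B) ∧ ∀ j, LL p lam (fun i => Mo.lin B A (ζ i)) j = 0 := by
  have hC : IsC0 N p (Mo.lin B (S.glue A B ζ) S.s) := (isC0_Mo _).2 S.gs
  have key : IsRel p lam (Mo A) → IsRel p lam (Mo B) → ∀ j (w : Mo B),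
      (cc (ij j) : Λ) • Mo.lin B (S.glue A B ζ) S.s w -
      (cc (i0 N) : Λ) • Mo.lin B (S.glue A B ζ) S.s w +
      lam j • (cc (i1 N) : Λ) • Mo.lin B (S.glue A B ζ) S.s w =
      S.jh (A := A) (B := B) (ζ := ζ) (LL p lam (fun i => Mo.lin B A (ζ i)) j w) := by
    intro hA hB j w
    rw [S.cc_s hC, S.cc_s hC, S.cc_s hC, hB j w, LL_apply, map_add, map_sub, map_sub, map_smul_K,
      (Mo.lin B (S.glue A B ζ) S.s).map_smul, smul_add]
    abel
  constructor
  · intro h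
    have hA : IsRel p lam (Mo A) := h.of_inj S.jh_inj
    have hB : IsRel p lam (Mo B) := h.of_surj S.qh_surj
    refine ⟨hA, hB, fun j => lext fun w => S.jh_inj (A := A) (B := B) (ζ := ζ) ?_⟩
    rw [← key hA hB, h, LinearMap.zero_apply, map_zero]
    abel
  · rintro ⟨hA, hB, hL⟩ j m
    have hm : m = S.jh (A := A) (B := B) (ζ := ζ) (Mo.of A (S.r m)) +
        Mo.lin B (S.glue A B ζ) S.s (Mo.of B (S.q m)) :=
      (S.jr m).symm
    generalize Mo.of A (S.r m) = y at hm
    generalize Mo.of B (S.q m) = w at hm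
    have h1 := key hA hB j w
    rw [hL, LinearMap.zero_apply, map_zero] at h1
    have h1' : (cc (ij j) : Λ) • Mo.lin B (S.glue A B ζ) S.s w =
      (cc (i0 N) : Λ) • Mo.lin B (S.glue A B ζ) S.s w -
      lam j • (cc (i1 N) : Λ) • Mo.lin B (S.glue A B ζ) S.s w := by
      rw [← sub_eq_zero, ← h1]; abel
    rw [hm, smul_add, smul_add, smul_add, smul_add, h1', ← (S.jh (A := A) (B := B) (ζ := ζ)).map_smul,
      ← (S.jh (A := A) (B := B) (ζ := ζ)).map_smul, ← (S.jh (A := A) (B := B) (ζ := ζ)).map_smul,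
      hA j, map_sub, map_smul_K]
    abel

theorem tf_glue (hA : TF N p K (Mo A)) (hB : TF N p K (Mo B)) : TF N p K (Mo (S.glue A B ζ)) := by
  refine TF.ext' S.qh ?_ hB
  refine TF.equiv hA (LinearEquiv.ofBijective (codRestrict _ S.jh fun x => S.qj x) ⟨?_, ?_⟩)
  · intro x y hxy
    exact S.jh_inj (congrArg val hxy)
  · rintro ⟨x, hx⟩
    obtain ⟨y, hy⟩ := (S.mem_range x).2 hx
    exact ⟨y, sext hy⟩

theorem isTS_glue {lam : Fin (N - 2) → K} (hA : IsTS lam A) (hB : IsTS lam B)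
    (hζ : IsZ p lam (fun i => Mo.lin B A (ζ i))) : IsTS lam (S.glue A B ζ) :=
  ⟨isGr_Mo'.2 (S.isA1_glue.2 ⟨isGr_Mo'.1 hA.gr, isGr_Mo'.1 hB.gr, (isC1_Mo _).1 hζ.1⟩),
    (S.isRel_glue lam).2 ⟨hA.rel, hB.rel, hζ.2⟩, S.tf_glue hA.tf hB.tf⟩

theorem of_isTS_glue {lam : Fin (N - 2) → K} (h : IsTS lam (S.glue A B ζ)) :
    IsTS lam A ∧ (TF N p K (Mo B) → IsTS lam B) ∧ IsZ p lam (fun i => Mo.lin B A (ζ i)) := by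
  have h1 := S.isA1_glue.1 (isGr_Mo'.1 h.gr)
  have h2 := (S.isRel_glue lam).1 h.rel
  exact ⟨⟨isGr_Mo'.2 h1.1, h2.1, h.tf.of_inj S.jh S.jh_inj⟩,
    fun hB => ⟨isGr_Mo'.2 h1.2.1, h2.2.1, hB⟩, (isC1_Mo _).2 h1.2.2, h2.2.2⟩

end glue

/-- The structure induced on the subspace. -/
def sA (X : Fin N → End K (V K d)) (i : Fin N) : End K (V K e) := S.r ∘ₗ X i ∘ₗ S.j
/-- The structure induced on the quotient. -/
def sB (X : Fin N → End K (V K d)) (i : Fin N) : End K (V K f) := S.q ∘ₗ X i ∘ₗ S.s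
/-- The cocycle of the extension. -/
def sZ (X : Fin N → End K (V K d)) (i : Fin N) : V K f →ₗ[K] V K e := S.r ∘ₗ X i ∘ₗ S.s

/-- The subspace is stable. -/
def Stab (X : Fin N → End K (V K d)) : Prop := ∀ i x, S.q (X i (S.j x)) = 0

theorem sA_glue (A B ζ) : S.sA (S.glue A B ζ) = A := by
  funext i; refine lext fun x => ?_
  change S.r (S.glue A B ζ i (S.j _)) = _
  rw [S.glue_j, S.rj]

theorem sB_glue (A B ζ) : S.sB (S.glue A B ζ) = B := by
  funext i; refine lext fun x => ?_
  change S.q (S.glue A B ζ i (S.s _)) = _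
  rw [S.q_glue, S.qs]

theorem sZ_glue (A B ζ) : S.sZ (S.glue A B ζ) = ζ := by
  funext i; refine lext fun x => ?_
  change S.r (S.glue A B ζ i (S.s _)) = _
  rw [S.r_glue, S.rs, S.qs, map_zero, zero_add]

theorem stab_glue (A B ζ) : S.Stab (S.glue A B ζ) := fun i x => by rw [S.q_glue, S.qj, map_zero]

theorem glue_eq {X : Fin N → End K (V K d)} (h : S.Stab X) :
    S.glue (S.sA X) (S.sB X) (S.sZ X) = X := by
  funext i
  refine S.ext_js (fun x => ?_) (fun x => ?_)
  · rw [S.glue_j]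
    have := S.jr (X i (S.j x))
    rw [h, map_zero, add_zero] at this
    exact this
  · rw [S.glue_s]
    exact S.jr (X i (S.s x))

/-- The subspace is stable with torsion free quotient. -/
def Closed (X : Fin N → End K (V K d)) : Prop := S.Stab X ∧ TF N p K (Mo (S.sB X))

/-- The extension given by a cocycle. -/
def gl {lam : Fin (N - 2) → K} (A : TS lam e) (B : TS lam f) (ζ : Zt lam B.1 A.1) : TS lam d :=
  ⟨S.glue A.1 B.1 ζ.1, S.isTS_glue A.2 B.2 ζ.2⟩

theorem gl_closed {lam : Fin (N - 2) → K} (A : TS lam e) (B : TS lam f) (ζ : Zt lam B.1 A.1) :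
    S.Closed (S.gl A B ζ).1 := ⟨S.stab_glue _ _ _, by
    change TF N p K (Mo (S.sB (S.glue A.1 B.1 ζ.1)))
    rw [S.sB_glue]; exact B.2.tf⟩

/-- Structures for which the subspace is stable with torsion free quotient are extensions. -/
theorem gl_bij (lam : Fin (N - 2) → K) : Bijective
    (fun t : (Σ A : TS lam e, Σ B : TS lam f, Zt lam B.1 A.1) =>
      (⟨S.gl t.1 t.2.1 t.2.2, S.gl_closed _ _ _⟩ : {X : TS lam d // S.Closed X.1})) := by
  constructor
  · rintro ⟨⟨A, hA⟩, ⟨B, hB⟩, ⟨ζ, hζ⟩⟩ ⟨⟨A', hA'⟩, ⟨B', hB'⟩, ⟨ζ', hζ'⟩⟩ h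
    have h1 : S.glue A B ζ = S.glue A' B' ζ' := congrArg (fun X => X.1.1) h
    have hA : A = A' := by rw [← S.sA_glue A B ζ, h1, S.sA_glue]
    have hB : B = B' := by rw [← S.sB_glue A B ζ, h1, S.sB_glue]
    have hZ : ζ = ζ' := by rw [← S.sZ_glue A B ζ, h1, S.sZ_glue]
    subst hA hB hZ
    rfl
  · rintro ⟨⟨X, hX⟩, hc⟩
    have h : IsTS lam (S.glue (S.sA X) (S.sB X) (S.sZ X)) := by
      rw [S.glue_eq hc.1]; exact hX
    have h' := S.of_isTS_glue h
    exact ⟨⟨⟨_, h'.1⟩, ⟨_, h'.2.1 hc.2⟩, ⟨_, h'.2.2⟩⟩, sext (sext (S.glue_eq hc.1))⟩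

end Split

end

/-! ### Counting cocycles -/

theorem card_fiber {G H : Type} [AddCommGroup G] [AddCommGroup H] [Finite G] (φ : G →+ H)
    (hφ : Surjective φ) (z : H) :
    card {x // φ x = z} * card H = card G := by
  obtain ⟨x0, rfl⟩ := hφ z
  have h1 : card {x // φ x = φ x0} = card φ.ker :=
    card_congr ⟨fun x => ⟨x.1 - x0, by rw [AddMonoidHom.mem_ker, map_sub, x.2, sub_self]⟩,
      fun y => ⟨y.1 + x0, by rw [map_add, (AddMonoidHom.mem_ker).1 y.2, zero_add]⟩,
      fun x => sext (sub_add_cancel _ _), fun y => sext (add_sub_cancel_right _ _)⟩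
  have h2 : card (G ⧸ φ.ker) = card H :=
    card_congr (QuotientAddGroup.quotientKerEquivOfSurjective φ hφ).toEquiv
  rw [h1, ← h2, mul_comm]
  exact (AddSubgroup.card_eq_card_quotient_mul_card_addSubgroup φ.ker).symm

section

variable {N : ℕ} {p : Fin N → ℕ} {K : Type} [Field K]
variable {d e f : Dv}

instance [Finite K] (X : Fin N → End K (V K d)) (Y : Fin N → End K (V K e)) :
    Finite (Mo X →ₗ[Λ] Mo Y) :=
  Finite.of_injective (fun f => Mo.un f) (fun _ _ => Mo.un_inj)

variable (K) in
/-- The group of graded maps. -/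
def C0g (f e : Dv) : AddSubgroup (V K f →ₗ[K] V K e) where
  carrier := {φ | IsGd K φ}
  zero_mem' v x := by simp
  add_mem' {φ ψ} h h' v x := by simp only [LinearMap.add_apply, map_add, h v x, h' v x]
  neg_mem' {φ} h v x := by simp only [LinearMap.neg_apply, map_neg, h v x]

variable (K) in
/-- The group of maps supported along the arrows. -/
def C1g (f e : Dv) : AddSubgroup (Fin N → V K f →ₗ[K] V K e) where
  carrier := {φ | IsA1 K φ}
  zero_mem' i v w _ x := by simp
  add_mem' {φ ψ} h h' i v w hvw x := by
    simp only [Pi.add_apply, LinearMap.add_apply, map_add, h i v w hvw x, h' i v w hvw x, add_zero]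
  neg_mem' {φ} h i v w hvw x := by
    simp only [Pi.neg_apply, LinearMap.neg_apply, map_neg, h i v w hvw x, neg_zero]

variable (K) in
/-- The group of values of relations. -/
def C2g (f e : Dv) : AddSubgroup (Fin (N - 2) → V K f →ₗ[K] V K e) where
  carrier := {φ | ∀ j x, pr K e snk (φ j (pr K f src x)) = φ j x}
  zero_mem' j x := by simp
  add_mem' {φ ψ} h h' j x := by
    simp only [Pi.add_apply, LinearMap.add_apply, map_add, h j x, h' j x]
  neg_mem' {φ} h j x := by
    simp only [Pi.neg_apply, LinearMap.neg_apply, map_neg, h j x]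

variable (K) in
/-- The number of graded maps. -/
noncomputable def c0 (f e : Dv) : ℚ := card (C0g K f e)

variable (K) in
/-- The number of cocycles of a pair of torsion free representations. -/
noncomputable def zc (f e : Dv) : ℚ := card (C1g K f e) / card (C2g K f e)

variable [Fact (2 ≤ N)]

theorem c0_ne [Finite K] (f e : Dv) : c0 K f e ≠ 0 := by
  rw [c0, Nat.cast_ne_zero]; exact Nat.card_pos.ne'

theorem zc_ne [Finite K] (f e : Dv) : zc K f e ≠ 0 := by
  rw [zc]
  exact div_ne_zero (Nat.cast_ne_zero.2 Nat.card_pos.ne') (Nat.cast_ne_zero.2 Nat.card_pos.ne')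

/-- The group of cocycles. -/
def Zg (lam : Fin (N - 2) → K) (B : Fin N → End K (V K f))
    (A : Fin N → End K (V K e)) : AddSubgroup (Fin N → V K f →ₗ[K] V K e) where
  carrier := {ζ | IsZ p lam (fun i => Mo.lin B A (ζ i))}
  zero_mem' := ⟨(isC1_Mo _).2 (C1g K f e).zero_mem, fun j => by
    have := LL_sub (p := p) lam (fun i => Mo.lin B A 0) (fun i => Mo.lin B A 0) j
    rw [sub_self, sub_self] at this
    exact this⟩
  add_mem' h h' := IsZ.add h h'
  neg_mem' {ζ} h := by
    have h0 : IsZ p lam ((fun i => Mo.lin B A (ζ i)) - (fun i => Mo.lin B A (ζ i)) -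
      (fun i => Mo.lin B A (ζ i))) := (h.sub h).sub h
    rw [sub_self, zero_sub] at h0
    exact h0

theorem isC2_Mo {A : Fin N → End K (V K e)} {B : Fin N → End K (V K f)}
    (ξ : V K f →ₗ[K] V K e) (m : V K f) :
    (ge snk : Λ) • Mo.lin B A ξ ((ge src : Λ) • Mo.of B m) =
      pr K e snk (ξ (pr K f src m)) :=
  (congrArg (fun y : Mo A => (ge snk : Λ) • y) (congrArg ξ (Mo.ge_eq B _ m))).trans
    (Mo.ge_eq A _ _)

theorem card_Zt [Finite K] (hp : ∀ i, 2 ≤ p i) {lam : Fin (N - 2) → K} (hl : Good lam)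
    (A : TS lam e) (B : TS lam f) : (card (Zt lam B.1 A.1) : ℚ) = zc K f e := by
  let L0 (ζ : Fin N → V K f →ₗ[K] V K e) (j : Fin (N - 2)) : V K f →ₗ[K] V K e :=
    (LL p lam (fun i => Mo.lin B.1 A.1 (ζ i)) j : Mo B.1 →ₗ[K] Mo A.1)
  have hL0 : ∀ ζ ∈ C1g K f e, L0 ζ ∈ C2g K f e := by
    intro ζ hζ j x
    rw [← isC2_Mo (A := A.1) (B := B.1)]
    exact LL_snk_src B.2.gr A.2.gr lam (fun i => Mo.lin B.1 A.1 (ζ i)) j x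
  let Φ : C1g K f e →+ C2g K f e :=
    { toFun := fun ζ => ⟨L0 ζ.1, hL0 _ ζ.2⟩
      map_zero' := sext (funext fun j => (Zg lam B.1 A.1).zero_mem.2 j)
      map_add' := fun ζ ζ' => sext (funext fun j => LL_add lam _ _ j) }
  have hs : Surjective Φ := by
    rintro ⟨ξ, hξ⟩
    obtain ⟨ζ, h1, h2⟩ := LL_surj hp hl B.2.gr B.2.rel B.2.tf A.2.gr
      (fun j => Mo.lin B.1 A.1 (ξ j)) (fun j m => (isC2_Mo _ _).trans (hξ j m))
    exact ⟨⟨ζ, (isC1_Mo (A := A.1) (B := B.1) _).1 h1⟩, sext (funext h2)⟩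
  have h := card_fiber Φ hs 0
  have h3 : card {x // Φ x = 0} = card (Zt lam B.1 A.1) :=
    card_congr ⟨fun x => ⟨x.1.1, (isC1_Mo _).2 x.1.2, fun j => congrFun (congrArg val x.2) j⟩,
      fun y => ⟨⟨y.1, (isC1_Mo _).1 y.2.1⟩, sext (funext y.2.2)⟩, fun _ => rfl, fun _ => rfl⟩
  rw [h3] at h
  rw [zc, ← h, Nat.cast_mul, mul_div_cancel_right₀]
  exact Nat.cast_ne_zero.2 Nat.card_pos.ne'

/-- The number of solutions `(ψ, φ)` of `g ψ - d φ = z` for a homomorphism `g` with vanishing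
torsion free cokernel. -/
theorem card_sol [Finite K] (hp : ∀ i, 2 ≤ p i) {lam : Fin (N - 2) → K} (hl : Good lam)
    {e' : Dv} (A' : TS lam e') (A : TS lam e) (B : TS lam f)
    (g : Mo A'.1 →ₗ[Λ] Mo A.1) (hg : CE g) (z : Fin N → V K f →ₗ[K] V K e)
    (hz : IsZ p lam (fun i => Mo.lin B.1 A.1 (z i))) :
    (card {t : Zt lam B.1 A'.1 × {φ : V K f →ₗ[K] V K e // IsGd K φ} //
      ∀ i x, Mo.un g (t.1.1 i x) - (A.1 i (t.2.1 x) - t.2.1 (B.1 i x)) = z i x} : ℚ) =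
      zc K f e' * c0 K f e / zc K f e := by
  have hmem : ∀ t : Zg lam B.1 A'.1 × C0g K f e, (fun i => Mo.un g ∘ₗ t.1.1 i -
      (A.1 i ∘ₗ t.2.1 - t.2.1 ∘ₗ B.1 i) : Fin N → V K f →ₗ[K] V K e) ∈ Zg lam B.1 A.1 := by
    intro t
    have h1 : IsZ p lam (fun i => Mo.lin B.1 A.1 (Mo.un g ∘ₗ t.1.1 i)) := IsZ.map g t.1.2
    have h2 : IsZ p lam (fun i => Mo.lin B.1 A.1 (A.1 i ∘ₗ t.2.1 - t.2.1 ∘ₗ B.1 i)) := by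
      have := dl_isZ B.2.gr A.2.gr B.2.rel A.2.rel ((isC0_Mo (A := A.1) (B := B.1) _).2 t.2.2)
      refine (congrArg (IsZ p lam) (funext fun i => lext fun x => ?_)).mp this
      exact dl_Mo _ _ _
    exact h1.sub h2
  let Φ : Zg lam B.1 A'.1 × C0g K f e →+ Zg lam B.1 A.1 :=
    { toFun := fun t => ⟨_, hmem t⟩
      map_zero' := sext (funext fun i => lext fun x => by
        change Mo.un g 0 - (A.1 i 0 - 0) = 0
        rw [map_zero, map_zero, sub_zero, sub_zero])
      map_add' := fun t t' => sext (funext fun i => lext fun x => by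
        change Mo.un g (t.1.1 i x + t'.1.1 i x) - (A.1 i (t.2.1 x + t'.2.1 x) - (t.2.1 (B.1 i x) +
          t'.2.1 (B.1 i x))) = (Mo.un g (t.1.1 i x) - (A.1 i (t.2.1 x) - t.2.1 (B.1 i x))) +
          (Mo.un g (t'.1.1 i x) - (A.1 i (t'.2.1 x) - t'.2.1 (B.1 i x)))
        rw [map_add, map_add]; abel) }
  have hs : Surjective Φ := by
    rintro ⟨z, hz⟩
    haveI : FiniteDimensional K (Mo A.1 ⧸ range g) :=
      Module.Finite.of_surjective ((range g).mkQ.restrictScalars K) (range g).mkQ_surjective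
    obtain ⟨ψ, φ, h1, h2, h3⟩ := lift_Z_of_HV hp hl B.2.gr B.2.rel B.2.tf A'.2.gr A.2.gr A.2.rel g
      (HV_of_XX hp hl B.2.gr B.2.rel B.2.tf _ (Mo A.1 ⧸ range g) rfl
        (A.2.gr.of_surj (mkQ_surjective _)) (A.2.rel.of_surj (mkQ_surjective _)) hg.quot)
      hz
    refine ⟨⟨⟨ψ, h1⟩, ⟨φ, (isC0_Mo (A := A.1) (B := B.1) _).1 h2⟩⟩, sext (funext fun i => lext fun x => ?_)⟩
    refine Eq.trans ?_ (h3 i x)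
    exact congrArg (Mo.un g (ψ i x) - ·) (dl_Mo (A := A.1) (B := B.1) φ i x).symm
  have h := card_fiber Φ hs ⟨z, hz⟩
  rw [Nat.card_prod] at h
  have e1 : (card (Zg lam B.1 A'.1) : ℚ) = zc K f e' := card_Zt hp hl A' B
  have e2 : (card (Zg lam B.1 A.1) : ℚ) = zc K f e := card_Zt hp hl A B
  rw [eq_div_iff (zc_ne _ _), c0, ← e1, ← e2, ← Nat.cast_mul, ← Nat.cast_mul, ← h]
  congr 2
  refine card_congr (Equiv.subtypeEquivRight fun t => ?_)
  constructor
  · intro ht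
    exact sext (funext fun i => lext fun x => ht i x)
  · intro ht i x
    exact lcongr_fun (congrFun (congrArg val ht) i) x

end

section

variable {N : ℕ} {p : Fin N → ℕ} {K : Type} [Field K]
variable {d e f : Dv}

/-! ### Closures in extensions -/

/-- The graded subspace underlying a submodule. -/
noncomputable def toGS {X : Fin N → End K (V K d)} (T : Submodule Λ (Mo X)) : GS K d :=
  ⟨(T.restrictScalars K : Submodule K (Mo X)), fun v x hx => by
    have h : (ge v : Λ) • Mo.of X x ∈ T := T.smul_mem _ hx
    rwa [Mo.ge_eq] at h⟩

theorem mem_toGS {X : Fin N → End K (V K d)} {T : Submodule Λ (Mo X)} {x : V K d} :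
    x ∈ (toGS T).1 ↔ Mo.of X x ∈ T := Iff.rfl

variable [Fact (2 ≤ N)]

/-- The dimension vector of a graded subspace. -/
noncomputable def GS.de (U : GS K d) : Dv := (exists_split U).choose
/-- The codimension vector of a graded subspace. -/
noncomputable def GS.df (U : GS K d) : Dv := (exists_split U).choose_spec.choose
/-- A splitting of a graded subspace. -/
noncomputable def GS.S (U : GS K d) : Split K U.de d U.df :=
  (exists_split U).choose_spec.choose_spec.choose
theorem GS.hS (U : GS K d) : range U.S.j = U.1 :=
  (exists_split U).choose_spec.choose_spec.choose_spec

theorem GS.mem (U : GS K d) (x : V K d) : x ∈ U.1 ↔ U.S.q x = 0 := by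
  rw [← U.hS]; exact U.S.mem_range x

theorem GS.mem' (U : GS K d) (x : V K d) : x ∈ U.1 ↔ ∃ y, U.S.j y = x := by
  rw [← U.hS]; rfl

namespace Split
variable {S : Split K e d f}
variable {A : Fin N → End K (V K e)} {B : Fin N → End K (V K f)}
    {ζ : Fin N → V K f →ₗ[K] V K e}

theorem mem_range_jh (x : Mo (S.glue A B ζ)) :
    x ∈ range (S.jh (A := A) (B := B) (ζ := ζ)) ↔ S.qh (A := A) (B := B) (ζ := ζ) x = 0 :=
  S.mem_range x

theorem ker_qh : ker (S.qh (A := A) (B := B) (ζ := ζ)) =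
    range (S.jh (A := A) (B := B) (ζ := ζ)) := by
  ext x; exact (S.mem_range_jh x).symm

theorem tf_quot_jh (hB : TF N p K (Mo B)) :
    TF N p K (Mo (S.glue A B ζ) ⧸ range (S.jh (A := A) (B := B) (ζ := ζ))) := by
  rw [← ker_qh]
  exact hB.equiv (LinearMap.quotKerEquivOfSurjective _ S.qh_surj).symm

theorem cl_map_jh (hB : TF N p K (Mo B)) (T : Submodule Λ (Mo A)) :
    cl (T.map (S.jh (A := A) (B := B) (ζ := ζ))) = (cl T).map (S.jh (A := A) (B := B) (ζ := ζ)) := by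
  set j := S.jh (A := A) (B := B) (ζ := ζ)
  let j' : Mo A ≃ₗ[Λ] range j := LinearEquiv.ofInjective j S.jh_inj
  have hj : j = (range j).subtype ∘ₗ j'.toLinearMap := rfl
  conv_lhs => rw [hj, Submodule.map_comp]
  conv_rhs => rw [hj, Submodule.map_comp]
  rw [← cl_map_subtype _ (S.tf_quot_jh hB), cl_map_of_surj j'.toLinearMap j'.surjective T (by
    rw [ker_eq_bot.2 j'.injective]; exact bot_le)]

theorem toGS_cl_iff {U : GS K d} (hU : range S.j = U.1) (hB : TF N p K (Mo B))
    (T : Submodule Λ (Mo (S.glue A B ζ))) :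
    toGS (cl T) = U ↔ T ≤ range (S.jh (A := A) (B := B) (ζ := ζ)) ∧
      cl (T.comap (S.jh (A := A) (B := B) (ζ := ζ))) = ⊤ := by
  set j := S.jh (A := A) (B := B) (ζ := ζ)
  have h1 : toGS (cl T) = U ↔ cl T = range j := by
    constructor
    · intro h
      ext x
      exact (SetLike.ext_iff.1 ((congrArg val h).trans hU.symm)) x
    · intro h
      refine sext (Eq.trans ?_ hU)
      ext x
      exact (SetLike.ext_iff.1 h) x
  have h2 : T ≤ range j → T = (T.comap j).map j := fun h => by
    rw [Submodule.map_comap_eq, inf_eq_right.2 h]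
  rw [h1]
  constructor
  · intro h
    have h3 := (le_cl T).trans h.le
    refine ⟨h3, ?_⟩
    rw [h2 h3, S.cl_map_jh hB, ← Submodule.map_top] at h
    exact Submodule.map_injective_of_injective S.jh_inj h
  · rintro ⟨h3, h4⟩
    rw [h2 h3, S.cl_map_jh hB, h4, Submodule.map_top]

theorem closed_of_TF {X : Fin N → End K (V K d)} {U : GS K d}
    (hU : range S.j = U.1) {T : Submodule Λ (Mo X)} (hT : TF N p K (Mo X ⧸ T))
    (h : toGS T = U) : S.Closed X := by
  have hTU : ∀ x, Mo.of X x ∈ T ↔ S.q x = 0 := by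
    intro x
    rw [← mem_toGS, h, ← hU]; exact S.mem_range x
  have hs : S.Stab X := by
    intro i x
    rw [← hTU]
    have : (gx i : Λ) • Mo.of X (S.j x) ∈ T := T.smul_mem _ ((hTU _).2 (S.qj x))
    rwa [Mo.gx_eq] at this
  refine ⟨hs, ?_⟩
  let q' : Mo X →ₗ[Λ] Mo (S.sB X) := Mo.hom S.q S.gq (fun i x => by
    change _ = S.q (X i (S.s (S.q x)))
    conv_lhs => rw [← S.jr x, map_add, map_add, hs, zero_add])
  have hq' : Surjective q' := Function.RightInverse.surjective (g := S.s) S.qs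
  have hk : ker q' = T := by
    ext x; exact (hTU x).symm
  exact TF.equiv (hk ▸ hT) (LinearMap.quotKerEquivOfSurjective q' hq')

/-! ### Homomorphisms of extensions -/

section blocks
variable {d1 e1 f1 : Dv} {S1 : Split K e1 d1 f1}
variable {A1 : Fin N → End K (V K e1)} {B1 : Fin N → End K (V K f1)}
    {ζ1 : Fin N → V K f1 →ₗ[K] V K e1}

/-- The compatibility of the off diagonal block of a homomorphism of extensions. -/
def BEq (A : Fin N → End K (V K e)) (B1 : Fin N → End K (V K f1))
    (ζ : Fin N → V K f →ₗ[K] V K e) (ζ1 : Fin N → V K f1 →ₗ[K] V K e1)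
    (a : V K e1 →ₗ[K] V K e) (b : V K f1 →ₗ[K] V K f) (φ : V K f1 →ₗ[K] V K e) : Prop :=
  ∀ i x, a (ζ1 i x) - (A i (φ x) - φ (B1 i x)) = ζ i (b x)

/-- The homomorphism of extensions with given blocks. -/
noncomputable def blk (a : Mo A1 →ₗ[Λ] Mo A) (b : Mo B1 →ₗ[Λ] Mo B)
    (φ : V K f1 →ₗ[K] V K e) (hφ : IsGd K φ) (h : BEq A B1 ζ ζ1 (Mo.un a) (Mo.un b) φ) :
    Mo (S1.glue A1 B1 ζ1) →ₗ[Λ] Mo (S.glue A B ζ) :=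
  Mo.hom (S.j ∘ₗ Mo.un a ∘ₗ S1.r + S.j ∘ₗ φ ∘ₗ S1.q + S.s ∘ₗ Mo.un b ∘ₗ S1.q)
    (fun v x => by
      simp only [LinearMap.add_apply, comp_apply, map_add]
      rw [S1.gr, S1.gq, Mo.un_gd, Mo.un_gd, hφ, S.gj, S.gj, S.gs])
    (fun i x => by
      simp only [LinearMap.add_apply, comp_apply, map_add]
      rw [S1.r_glue, S1.q_glue, S.glue_j, S.glue_j, S.glue_s, map_add, Mo.un_x, Mo.un_x, ← h]
      simp only [map_add, map_sub]
      abel)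

theorem blk_apply (a : Mo A1 →ₗ[Λ] Mo A) (b : Mo B1 →ₗ[Λ] Mo B)
    (φ : V K f1 →ₗ[K] V K e) (hφ) (h) (x : V K d1) :
    Mo.un (blk (S := S) (S1 := S1) (ζ := ζ) (ζ1 := ζ1) a b φ hφ h) x =
      S.j (Mo.un a (S1.r x)) + S.j (φ (S1.q x)) + S.s (Mo.un b (S1.q x)) := rfl

theorem exists_blk (g : Mo (S1.glue A1 B1 ζ1) →ₗ[Λ] Mo (S.glue A B ζ))
    (hg : ∀ x, S.q (Mo.un g (S1.j x)) = 0) : ∃ a b φ hφ h,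
      g = blk (S := S) (S1 := S1) (ζ := ζ) (ζ1 := ζ1) a b φ hφ h := by
  set G := Mo.un g
  have hGg : IsGd K G := Mo.un_gd g
  have hGx : ∀ i x, G (S1.glue A1 B1 ζ1 i x) = S.glue A B ζ i (G x) := fun i x => Mo.un_x g i x
  have hgj : ∀ x, G (S1.j x) = S.j (S.r (G (S1.j x))) := fun x => by
    conv_lhs => rw [← S.jr (G (S1.j x)), hg, map_zero, add_zero]
  have hr : ∀ i x, S.r (S.glue A B ζ i x) = A i (S.r x) + ζ i (S.q x) := fun i x => S.r_glue i x
  refine ⟨Mo.hom (S.r ∘ₗ G ∘ₗ S1.j) ?_ ?_, Mo.hom (S.q ∘ₗ G ∘ₗ S1.s) ?_ ?_, S.r ∘ₗ G ∘ₗ S1.s, ?_, ?_, ?_⟩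
  · intro v x
    simp only [comp_apply]
    rw [S1.gj, hGg, S.gr]
  · intro i x
    simp only [comp_apply]
    rw [← S1.glue_j i (B := B1) (ζ := ζ1), hGx, hr, hg, map_zero, add_zero]
  · intro v x
    simp only [comp_apply]
    rw [S1.gs, hGg, S.gq]
  · intro i x
    simp only [comp_apply]
    have := congrArg (fun y => S.q (G y)) (S1.glue_s i (A := A1) (B := B1) (ζ := ζ1) x)
    simp only [map_add, hg, zero_add] at this
    rw [← this, hGx, S.q_glue]
  · intro v x
    simp only [comp_apply]
    rw [S1.gs, hGg, S.gr]
  · intro i x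
    have := congrArg (fun y => S.r (G y)) (S1.glue_s i (A := A1) (B := B1) (ζ := ζ1) x)
    simp only [map_add] at this
    rw [hGx, hr] at this
    change S.r (G (S1.j (ζ1 i x))) - (A i (S.r (G (S1.s x))) - S.r (G (S1.s (B1 i x)))) =
      ζ i (S.q (G (S1.s x)))
    rw [sub_eq_iff_eq_add, ← sub_eq_iff_eq_add'.2 this.symm]
    abel
  · apply Mo.un_inj
    refine lext fun x => ?_
    change G x = S.j (S.r (G (S1.j (S1.r x)))) + S.j (S.r (G (S1.s (S1.q x)))) + S.s (S.q (G (S1.s (S1.q x))))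
    rw [← hgj, add_assoc, S.jr, ← map_add, S1.jr]

theorem blk_inj {a a' : Mo A1 →ₗ[Λ] Mo A} {b b' : Mo B1 →ₗ[Λ] Mo B}
    {φ φ' : V K f1 →ₗ[K] V K e} {hφ hφ' h h'}
    (H : blk (S := S) (S1 := S1) (ζ := ζ) (ζ1 := ζ1) a b φ hφ h =
      blk (S := S) (S1 := S1) (ζ := ζ) (ζ1 := ζ1) a' b' φ' hφ' h') : a = a' ∧ b = b' ∧ φ = φ' := by
  have H' := fun x => lcongr_fun (congrArg Mo.un H) x
  simp only [blk_apply] at H'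
  refine ⟨Mo.un_inj (lext fun x => ?_), Mo.un_inj (lext fun x => ?_),
    lext fun x => ?_⟩
  · have := congrArg S.r (H' (S1.j x))
    simpa only [map_add, S1.rj, S1.qj, S.rj, S.rs, map_zero, add_zero] using this
  · have := congrArg S.q (H' (S1.s x))
    simpa only [map_add, S1.rs, S1.qs, S.qj, S.qs, map_zero, add_zero, zero_add] using this
  · have := congrArg S.r (H' (S1.s x))
    simpa only [map_add, S1.rs, S1.qs, S.rj, S.rs, map_zero, add_zero, zero_add] using this

section
variable {a : Mo A1 →ₗ[Λ] Mo A} {b : Mo B1 →ₗ[Λ] Mo B}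
    {φ : V K f1 →ₗ[K] V K e} {hφ : IsGd K φ} {h : BEq A B1 ζ ζ1 (Mo.un a) (Mo.un b) φ}

theorem blk_jh : blk (S := S) (S1 := S1) a b φ hφ h ∘ₗ S1.jh = S.jh ∘ₗ a := by
  apply Mo.un_inj
  refine lext fun x => ?_
  change Mo.un (blk (S := S) (S1 := S1) a b φ hφ h) (S1.j x) = S.j (Mo.un a x)
  rw [blk_apply, S1.rj, S1.qj, map_zero, map_zero, map_zero, map_zero, add_zero, add_zero]

theorem qh_blk : S.qh ∘ₗ blk (S := S) (S1 := S1) a b φ hφ h = b ∘ₗ S1.qh := by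
  apply Mo.un_inj
  refine lext fun x => ?_
  change S.q (Mo.un (blk (S := S) (S1 := S1) a b φ hφ h) x) = Mo.un b (S1.q x)
  rw [blk_apply, map_add, map_add, S.qj, S.qj, S.qs, zero_add, zero_add]

theorem CE_blk_iff (ha : CE a) : CE (blk (S := S) (S1 := S1) a b φ hφ h) ↔ CE b := by
  constructor
  · intro h1
    have h2 := h1.comp (CE.of_surj (S.qh_surj (A := A) (B := B) (ζ := ζ)))
    rw [qh_blk] at h2
    exact h2.of_comp
  · intro hb
    rw [CE_iff]
    intro U h1 h2
    have h3 : U.comap S.jh = ⊤ := by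
      refine (CE_iff a).1 ha _ ?_ (TF.comap _ h2)
      rintro _ ⟨x, rfl⟩
      rw [Submodule.mem_comap]
      have := lcongr_fun (blk_jh (S := S) (S1 := S1) (a := a) (hφ := hφ) (h := h)) x
      rw [comp_apply, comp_apply] at this
      rw [← this]
      exact h1 ⟨_, rfl⟩
    have h4 : ker (S.qh (A := A) (B := B) (ζ := ζ)) ≤ U := by
      rw [ker_qh]
      rintro _ ⟨x, rfl⟩
      have : x ∈ U.comap S.jh := h3 ▸ mem_top
      exact this
    have h5 : (U.map S.qh).comap S.qh = U := by
      rw [Submodule.comap_map_eq, sup_eq_left.2 h4]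
    have h6 : U.map S.qh = ⊤ := by
      refine (CE_iff b).1 hb _ ?_ (TF.of_comap S.qh S.qh_surj (by rw [h5]; exact h2))
      rintro _ ⟨x, rfl⟩
      obtain ⟨y, rfl⟩ := S1.qh_surj (A := A1) (B := B1) (ζ := ζ1) x
      have := lcongr_fun (qh_blk (S := S) (S1 := S1) (a := a) (hφ := hφ) (h := h)) y
      rw [comp_apply, comp_apply] at this
      rw [← this]
      exact ⟨_, h1 ⟨_, rfl⟩, rfl⟩
    rw [← h5, h6, Submodule.comap_top]

end

/-- A homomorphism of extensions with vanishing torsion free cokernel maps the subobject to a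
submodule with closure the subobject if and only if it is block triangular, with blocks with
vanishing torsion free cokernel. -/
theorem toGS_blk_iff {U : GS K d} (hU : range S.j = U.1) (hB : TF N p K (Mo B))
    (g : Mo (S1.glue A1 B1 ζ1) →ₗ[Λ] Mo (S.glue A B ζ)) :
    (CE g ∧ toGS (cl (range (g ∘ₗ S1.jh))) = U) ↔ ∃ a b φ hφ h, CE a ∧ CE b ∧
      g = blk (S := S) (S1 := S1) (ζ := ζ) (ζ1 := ζ1) a b φ hφ h := by
  have key : ∀ a : Mo A1 →ₗ[Λ] Mo A, (range (S.jh (A := A) (B := B) (ζ := ζ) ∘ₗ a)).comap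
      (S.jh (A := A) (B := B) (ζ := ζ)) = range a := by
    intro a
    rw [LinearMap.range_comp, Submodule.comap_map_eq_of_injective S.jh_inj]
  rw [toGS_cl_iff hU hB]
  constructor
  · rintro ⟨h1, h2, h3⟩
    obtain ⟨a, b, φ, hφ, h, rfl⟩ := exists_blk g (fun x => (S.mem_range_jh _).1 (h2 ⟨x, rfl⟩))
    rw [blk_jh, key] at h3
    exact ⟨a, b, φ, hφ, h, h3, (CE_blk_iff h3).1 h1, rfl⟩
  · rintro ⟨a, b, φ, hφ, h, ha, hb, rfl⟩
    refine ⟨(CE_blk_iff ha).2 hb, ?_, ?_⟩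
    · rw [blk_jh]; exact LinearMap.range_comp_le_range _ _
    · rw [blk_jh, key]; exact ha

end blocks

end Split

end

theorem card_part {α β : Type} [Finite α] [Fintype β] (φ : α → β) (Q : α → Prop) :
    (card {x // Q x} : ℚ) = ∑ b, (card {x // Q x ∧ φ x = b} : ℚ) := by
  rw [← cast_sum, ← card_sigma]
  congr 1
  exact card_congr ⟨fun x => ⟨φ x.1, x.1, x.2, rfl⟩, fun y => ⟨y.2.1, y.2.2.1⟩, fun _ => rfl,
    fun ⟨b, x, h1, h2⟩ => by subst h2; rfl⟩

section

variable {N : ℕ} {p : Fin N → ℕ} {K : Type} [Field K] [Finite K]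
variable {d e f : Dv}

noncomputable instance : Fintype (GS K d) := Fintype.ofFinite _

variable [Fact (2 ≤ N)]

noncomputable instance (lam : Fin (N - 2) → K) (d : Dv) : Fintype (TS lam d) :=
  Fintype.ofFinite _

noncomputable instance (lam : Fin (N - 2) → K) (B : Fin N → End K (V K f))
    (A : Fin N → End K (V K e)) : Fintype (Zt lam B A) := Fintype.ofFinite _

variable {lam : Fin (N - 2) → K}

/-! ### Sums over extensions -/

theorem sum_closed (S : Split K e d f) (F : TS lam d → ℚ) (hF : ∀ X, ¬ S.Closed X.1 → F X = 0) :
    ∑ X, F X = ∑ A : TS lam e, ∑ B : TS lam f, ∑ ζ : Zt lam B.1 A.1, F (S.gl A B ζ) := by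
  classical
  have h1 : ∑ X, F X = ∑ X : {X : TS lam d // S.Closed X.1}, F X.1 := by
    have h2 : ∑ X, F X = ∑ X ∈ Finset.univ.filter (fun X : TS lam d => S.Closed X.1), F X := by
      rw [Finset.sum_filter_of_ne]
      intro X _ h
      by_contra h'
      exact h (hF X h')
    rw [h2]
    exact Finset.sum_subtype _ (by simp) F
  rw [h1, ← (ofBijective _ (S.gl_bij lam)).sum_comp, Fintype.sum_sigma]
  refine sum_congr rfl fun A _ => ?_
  rw [Fintype.sum_sigma]
  rfl

/-- The number of homomorphisms with vanishing torsion free cokernel. -/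
noncomputable def nCE {d1 : Dv} (X1 : TS lam d1) (X : TS lam d) : ℚ :=
  card {f : Mo X1.1 →ₗ[Λ] Mo X.1 // CE f}

variable (K) in
/-- The number of off diagonal blocks of homomorphisms of extensions. -/
noncomputable def Kc (f1 e1 e : Dv) : ℚ := zc K f1 e1 * c0 K f1 e / zc K f1 e

/-- The number of triangular homomorphisms from varying extensions to a fixed one. -/
theorem card_tri (hp : ∀ i, 2 ≤ p i) (hl : Good lam) {d1 e1 f1 : Dv}
    (S1 : Split K e1 d1 f1) (S : Split K e d f) {U : GS K d} (hU : range S.j = U.1)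
    (A1 : TS lam e1) (B1 : TS lam f1) (A : TS lam e) (B : TS lam f) (ζ : Zt lam B.1 A.1)
    (P : (Mo A1.1 →ₗ[Λ] Mo (S.gl A B ζ).1) → Prop) :
    ∑ ζ1 : Zt lam B1.1 A1.1, (card {g : Mo (S1.gl A1 B1 ζ1).1 →ₗ[Λ] Mo (S.gl A B ζ).1 //
      (CE g ∧ P (g ∘ₗ S1.jh)) ∧ toGS (cl (range (g ∘ₗ S1.jh))) = U} : ℚ) =
    (card {a : Mo A1.1 →ₗ[Λ] Mo A.1 // CE a ∧ P (S.jh ∘ₗ a)} : ℚ) * nCE B1 B * Kc K f1 e1 e := by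
  let T := Σ a : {a : Mo A1.1 →ₗ[Λ] Mo A.1 // CE a ∧ P (S.jh ∘ₗ a)},
    Σ b : {b : Mo B1.1 →ₗ[Λ] Mo B.1 // CE b},
    {t : Zt lam B1.1 A1.1 × {φ : V K f1 →ₗ[K] V K e // IsGd K φ} //
      Split.BEq A.1 B1.1 ζ.1 t.1.1 (Mo.un a.1) (Mo.un b.1) t.2.1}
  have hT : (card T : ℚ) =
      (card {a : Mo A1.1 →ₗ[Λ] Mo A.1 // CE a ∧ P (S.jh ∘ₗ a)} : ℚ) * nCE B1 B * Kc K f1 e1 e := by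
    classical
    haveI := Fintype.ofFinite {a : Mo A1.1 →ₗ[Λ] Mo A.1 // CE a ∧ P (S.jh ∘ₗ a)}
    haveI := Fintype.ofFinite {b : Mo B1.1 →ₗ[Λ] Mo B.1 // CE b}
    rw [card_sigma, cast_sum]
    simp_rw [card_sigma, cast_sum]
    have : ∀ (a : {a : Mo A1.1 →ₗ[Λ] Mo A.1 // CE a ∧ P (S.jh ∘ₗ a)})
        (b : {b : Mo B1.1 →ₗ[Λ] Mo B.1 // CE b}),
        (card {t : Zt lam B1.1 A1.1 × {φ : V K f1 →ₗ[K] V K e // IsGd K φ} //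
          Split.BEq A.1 B1.1 ζ.1 t.1.1 (Mo.un a.1) (Mo.un b.1) t.2.1} : ℚ) = Kc K f1 e1 e := by
      intro a b
      refine card_sol hp hl A1 A B1 a.1 a.2.1 (fun i => ζ.1 i ∘ₗ Mo.un b.1) ?_
      constructor
      · rw [isC1_Mo]
        intro i v w hvw x
        rw [comp_apply, Mo.un_gd]
        exact (isC1_Mo _).1 ζ.2.1 i v w hvw _
      · intro j
        refine lext fun x => ?_
        have h0 := lcongr_fun (ζ.2.2 j) (b.1 x)
        have h1 : ∀ i, dcc p i (Mo.lin B1.1 A.1 (ζ.1 i ∘ₗ Mo.un b.1)) x = dcc p i (Mo.lin B.1 A.1 (ζ.1 i)) (b.1 x) := by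
          intro i
          rw [dcc_apply, dcc_apply]
          refine sum_congr rfl fun k _ => ?_
          rw [← b.1.map_smul, ← b.1.map_smul]
          rfl
        rw [LL_apply] at h0 ⊢
        rw [h1, h1, h1]
        exact h0
    simp_rw [this, sum_const, Finset.card_univ, nsmul_eq_mul, nCE, card_eq_fintype_card]
    ring
  rw [← hT, ← cast_sum, ← card_sigma]
  congr 1
  have hm : ∀ t : T, (CE (Split.blk (S := S) (S1 := S1) t.1.1 t.2.1.1 t.2.2.1.2.1 t.2.2.1.2.2 t.2.2.2) ∧
      P (Split.blk (S := S) (S1 := S1) t.1.1 t.2.1.1 t.2.2.1.2.1 t.2.2.1.2.2 t.2.2.2 ∘ₗ S1.jh)) ∧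
      toGS (cl (range
        (Split.blk (S := S) (S1 := S1) t.1.1 t.2.1.1 t.2.2.1.2.1 t.2.2.1.2.2 t.2.2.2 ∘ₗ S1.jh))) = U := by
    intro t
    have := (Split.toGS_blk_iff (S1 := S1) hU B.2.tf
      (Split.blk (S := S) (S1 := S1) t.1.1 t.2.1.1 t.2.2.1.2.1 t.2.2.1.2.2 t.2.2.2)).2
      ⟨_, _, _, _, _, t.1.2.1, t.2.1.2, rfl⟩
    refine ⟨⟨this.1, ?_⟩, this.2⟩
    exact (congrArg P Split.blk_jh).mpr t.1.2.2
  refine (card_congr (ofBijective (fun t : T => ⟨t.2.2.1.1, _, hm t⟩) ⟨?_, ?_⟩)).symm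
  · rintro ⟨⟨a, ha⟩, ⟨b, hb⟩, ⟨⟨ζ1, φ, hφ⟩, h⟩⟩ ⟨⟨a', ha'⟩, ⟨b', hb'⟩, ⟨⟨ζ1', φ', hφ'⟩, h'⟩⟩ H
    obtain ⟨H1, H2⟩ := Sigma.mk.inj_iff.1 H
    change ζ1 = ζ1' at H1
    subst H1
    have H3 := Split.blk_inj (hφ := hφ) (hφ' := hφ') (h := h) (h' := h') (congrArg val (eq_of_heq H2))
    obtain ⟨rfl, rfl, rfl⟩ := H3
    rfl
  · rintro ⟨ζ1, g, ⟨h1, h2⟩, h3⟩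
    obtain ⟨a, b, φ, hφ, h, ha, hb, hg⟩ := (Split.toGS_blk_iff (S1 := S1) hU B.2.tf g).1 ⟨h1, h3⟩
    subst hg
    replace h2 := (congrArg P Split.blk_jh).mp h2
    exact ⟨⟨⟨a, ha, h2⟩, ⟨b, hb⟩, ⟨⟨ζ1, φ, hφ⟩, h⟩⟩, rfl⟩

end

/-- The total dimension. -/
def tot {N : ℕ} {p : Fin N → ℕ} (d : Dv) : ℕ := ∑ v, d v

section

variable {N : ℕ} {p : Fin N → ℕ} {K : Type} [Field K]
variable {d e f : Dv}

/-! ### Dimensions -/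

theorem finrank_pr (d : Dv) (v : CanVertex N p) :
    finrank K (range (pr K d v)) = d v := by
  let E : (Fin (d v) → K) →ₗ[K] V K d :=
    { toFun := fun x a => if h : a.1 = v then x (h ▸ a.2) else 0
      map_add' := fun x y => by ext a; simp only [Pi.add_apply]; split_ifs <;> simp
      map_smul' := fun c x => by ext a; simp only [Pi.smul_apply, RingHom.id_apply]; split_ifs <;> simp }
  have hE : ∀ x k, E x ⟨v, k⟩ = x k := fun x k => dif_pos rfl
  have h1 : range (pr K d v) = range E := by
    apply le_antisymm
    · rintro _ ⟨x, rfl⟩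
      refine ⟨fun k => x ⟨v, k⟩, ?_⟩
      ext ⟨w, k⟩
      rw [pr_apply]
      by_cases h : w = v
      · subst h; rw [hE, if_pos rfl]
      · exact (dif_neg h).trans (if_neg h).symm
    · rintro _ ⟨x, rfl⟩
      refine ⟨E x, ?_⟩
      ext ⟨w, k⟩
      rw [pr_apply]
      by_cases h : w = v
      · rw [if_pos h]
      · rw [if_neg h]; symm; exact dif_neg h
  rw [h1, LinearMap.finrank_range_of_inj, finrank_fin_fun]
  intro x y h
  ext k
  rw [← hE x, ← hE y, h]

theorem pr_mem {v : CanVertex N p} {x : V K d} : x ∈ range (pr K d v) ↔ pr K d v x = x := by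
  constructor
  · rintro ⟨y, rfl⟩; rw [pr_orth, if_pos rfl]
  · intro h; exact ⟨x, h⟩

theorem IsGd.mem {g : V K e →ₗ[K] V K d} (hg : IsGd K g) {v : CanVertex N p} :
    ∀ x ∈ range (pr K e v), g x ∈ range (pr K d v) := by
  intro x hx
  rw [pr_mem] at hx ⊢
  rw [← hg v x, hx]

variable [Fact (2 ≤ N)]

theorem Split.dim (S : Split K e d f) (v : CanVertex N p) : e v + f v = d v := by
  let F : range (pr K d v) →ₗ[K] range (pr K e v) × range (pr K f v) :=
    LinearMap.prod (S.r.restrict S.gr.mem) (S.q.restrict S.gq.mem)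
  have hF : Bijective F := by
    constructor
    · intro x y h
      have h1 : S.r x = S.r y := congrArg (fun z => (z.1 : V K e)) h
      have h2 : S.q x = S.q y := congrArg (fun z => (z.2 : V K f)) h
      apply sext
      rw [← S.jr x, ← S.jr y, h1, h2]
    · rintro ⟨⟨x, hx⟩, ⟨y, hy⟩⟩
      refine ⟨⟨S.j x + S.s y, add_mem (S.gj.mem x hx) (S.gs.mem y hy)⟩, ?_⟩
      refine Prod.ext (sext ?_) (sext ?_)
      · change S.r (S.j x + S.s y) = x
        rw [map_add, S.rj, S.rs, add_zero]
      · change S.q (S.j x + S.s y) = y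
        rw [map_add, S.qj, S.qs, zero_add]
  have := (LinearEquiv.ofBijective F hF).finrank_eq
  rw [finrank_prod, finrank_pr, finrank_pr, finrank_pr] at this
  exact this.symm

theorem Split.tot (S : Split K e d f) : tot e + tot f = tot d := by
  rw [CanAlg.tot, CanAlg.tot, CanAlg.tot, ← Finset.sum_add_distrib]
  exact sum_congr rfl fun v _ => S.dim v

theorem tot_eq_zero {d : Dv} : tot d = 0 ↔ d = 0 := by
  rw [tot, Finset.sum_eq_zero_iff]
  exact ⟨fun h => funext fun v => h v (mem_univ _), fun h v _ => by rw [h]; rfl⟩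

theorem subsingleton_V (h : tot d = 0) : Subsingleton (V K d) := by
  rw [tot_eq_zero] at h
  subst h
  refine ⟨fun x y => ?_⟩
  ext ⟨v, k⟩
  exact k.elim0

theorem tot_of_subsingleton (h : Subsingleton (V K d)) : tot d = 0 := by
  rw [tot_eq_zero]
  ext v
  by_contra h'
  have : (1 : V K d) = 0 := Subsingleton.elim _ _
  exact one_ne_zero (congrFun this ⟨v, ⟨0, Nat.pos_of_ne_zero h'⟩⟩)

theorem tot_of_subsingleton_Mo {A : Fin N → End K (V K d)} (h : Subsingleton (Mo A)) : tot d = 0 :=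
  tot_of_subsingleton (K := K) h

/-! ### Chains -/

variable [Finite K] {lam : Fin (N - 2) → K}

/-- The weighted number of chains of homomorphisms with vanishing torsion free cokernel
`X_k → ⋯ → X_1 → X` with prescribed dimension vectors. -/
noncomputable def chn (b : ∀ d, TS (p := p) lam d → ℚ) : List Dv →
    ∀ {d : Dv}, TS lam d → ℚ
  | [], d, X => b d X
  | d1 :: L, _, X => ∑ X1 : TS lam d1, nCE X1 X * chn b L X1

/-- The number of chains above `X`. -/
noncomputable def cnt (L : List Dv) {d : Dv} (X : TS lam d) : ℚ :=
  chn (fun _ _ => 1) L X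

variable (lam) in
/-- The total number of chains. -/
noncomputable def CH (L : List Dv) (d : Dv) : ℚ :=
  ∑ X : TS lam d, cnt L X

variable (lam) in
/-- The number of nilpotent endomorphisms of torsion free representations. -/
noncomputable def NIL (d : Dv) : ℚ :=
  ∑ X : TS lam d, (card {t : End Λ (Mo X.1) // IsNilpotent t} : ℚ)

variable (lam) in
/-- The contribution of a subspace to the number of nilpotent endomorphisms. -/
noncomputable def nilw (L : List Dv) (U : GS K d) : ℚ :=
  ∑ A : TS lam U.de, ∑ B : TS lam U.df, ∑ ζ : Zt lam B.1 A.1,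
    (card {t : Mo (U.S.gl A B ζ).1 →ₗ[Λ] Mo A.1 // CE t ∧
      IsNilpotent (t ∘ₗ U.S.jh : End Λ (Mo A.1))} : ℚ) * cnt L B

theorem nil_comp {R M M' : Type} [Ring R] [AddCommGroup M] [Module R M] [AddCommGroup M'] [Module R M']
    {f : M →ₗ[R] M'} {g : M' →ₗ[R] M} (h : IsNilpotent (f ∘ₗ g : End R M')) :
    IsNilpotent (g ∘ₗ f : End R M) := by
  obtain ⟨n, hn⟩ := h
  refine ⟨n + 1, ?_⟩
  have : ∀ n, ∀ x, ((g ∘ₗ f : End R M) ^ (n + 1)) x = g (((f ∘ₗ g : End R M') ^ n) (f x)) := by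
    intro n
    induction n with
    | zero => intro x; rfl
    | succ n ih =>
      intro x
      rw [pow_succ', End.mul_apply, ih, pow_succ', End.mul_apply]
      rfl
  refine lext fun x => ?_
  rw [this, hn]
  exact map_zero g

theorem nil_comp_iff {R M M' : Type} [Ring R] [AddCommGroup M] [Module R M] [AddCommGroup M'] [Module R M']
    {f : M →ₗ[R] M'} {g : M' →ₗ[R] M} : IsNilpotent (f ∘ₗ g : End R M') ↔
    IsNilpotent (g ∘ₗ f : End R M) := ⟨nil_comp, nil_comp⟩

theorem NIL_eq (d : Dv) : NIL lam d = ∑ U : GS K d, nilw lam [] U := by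
  rw [NIL]
  have h1 : ∀ X : TS lam d, (card {t : End Λ (Mo X.1) // IsNilpotent t} : ℚ) =
      ∑ U : GS K d, (card {t : End Λ (Mo X.1) // IsNilpotent t ∧
        toGS (cl (range t)) = U} : ℚ) := fun X => by
    haveI : Finite (End Λ (Mo X.1)) := inferInstanceAs (Finite (Mo X.1 →ₗ[Λ] Mo X.1))
    exact card_part _ _
  simp_rw [h1]
  rw [sum_comm]
  refine sum_congr rfl fun U _ => ?_
  rw [sum_closed U.S]
  · refine sum_congr rfl fun A _ => sum_congr rfl fun B _ => sum_congr rfl fun ζ _ => ?_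
    rw [cnt, chn, mul_one]
    congr 1
    have hm : ∀ t : {t : Mo (U.S.gl A B ζ).1 →ₗ[Λ] Mo A.1 // CE t ∧
        IsNilpotent (t ∘ₗ U.S.jh : End Λ (Mo A.1))},
        toGS (cl (range (U.S.jh (A := A.1) (B := B.1) (ζ := ζ.1) ∘ₗ t.1))) = U := by
      intro t
      refine (U.S.toGS_cl_iff U.hS B.2.tf _).2 ?_
      rw [LinearMap.range_comp]
      refine ⟨LinearMap.map_le_range, ?_⟩
      rw [Submodule.comap_map_eq_of_injective U.S.jh_inj]
      exact t.2.1
    refine (card_congr (ofBijective (fun t => ⟨U.S.jh ∘ₗ t.1, nil_comp t.2.2, hm t⟩) ⟨?_, ?_⟩)).symm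
    · intro t t' h
      apply sext
      refine lext fun x => U.S.jh_inj (A := A.1) (B := B.1) (ζ := ζ.1) ?_
      exact lcongr_fun (congrArg val h) x
    · rintro ⟨θ, hθ, h⟩
      obtain ⟨h1, h2⟩ := (U.S.toGS_cl_iff U.hS B.2.tf _).1 h
      let t : Mo (U.S.gl A B ζ).1 →ₗ[Λ] Mo A.1 :=
        (LinearEquiv.ofInjective (U.S.jh (A := A.1) (B := B.1) (ζ := ζ.1)) U.S.jh_inj).symm.toLinearMap ∘ₗ
          codRestrict _ θ (fun x => h1 ⟨x, rfl⟩)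
      have ht : U.S.jh (A := A.1) (B := B.1) (ζ := ζ.1) ∘ₗ t = θ := by
        refine lext fun x => ?_
        exact congrArg val ((LinearEquiv.ofInjective (U.S.jh (A := A.1) (B := B.1) (ζ := ζ.1))
          U.S.jh_inj).apply_symm_apply (codRestrict _ θ (fun x => h1 ⟨x, rfl⟩) x))
      refine ⟨⟨t, ?_, ?_⟩, sext ht⟩
      · have h3 : (range θ).comap (U.S.jh (A := A.1) (B := B.1) (ζ := ζ.1)) = range t := by
          ext y
          constructor
          · rintro ⟨x, hx⟩
            exact ⟨x, U.S.jh_inj (A := A.1) (B := B.1) (ζ := ζ.1) ((lcongr_fun ht x).trans hx)⟩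
          · rintro ⟨x, rfl⟩
            exact ⟨x, (lcongr_fun ht x).symm⟩
        rw [h3] at h2
        exact h2
      · apply nil_comp
        exact (congrArg (fun θ : End Λ (Mo (U.S.gl A B ζ).1) => IsNilpotent θ) ht).mpr hθ
  · intro X hX
    rw [cast_eq_zero, card_eq_zero]
    left
    exact ⟨fun t => hX (Split.closed_of_TF U.hS (TF_cl _) t.2.2)⟩

theorem nilw_rec (hp : ∀ i, 2 ≤ p i) (hl : Good lam) (L : List Dv) (U : GS K d) :
    nilw lam L U = ∑ D : GS K U.de, Kc K U.df U.de D.de * nilw lam (U.df :: L) D := by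
  have h1 : ∀ (A : TS lam U.de) (B : TS lam U.df) (ζ : Zt lam B.1 A.1),
      (card {t : Mo (U.S.gl A B ζ).1 →ₗ[Λ] Mo A.1 // CE t ∧
        IsNilpotent (t ∘ₗ U.S.jh : End Λ (Mo A.1))} : ℚ) * cnt L B =
      ∑ D : GS K U.de, (card {t : Mo (U.S.gl A B ζ).1 →ₗ[Λ] Mo A.1 // (CE t ∧
        IsNilpotent (t ∘ₗ U.S.jh : End Λ (Mo A.1))) ∧
        toGS (cl (range (t ∘ₗ U.S.jh))) = D} : ℚ) * cnt L B := fun A B ζ => by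
    rw [← sum_mul]
    congr 1
    exact card_part _ _
  rw [nilw]
  simp_rw [h1]
  have h2 : ∀ (A : TS lam U.de), ∑ B : TS lam U.df, ∑ ζ : Zt lam B.1 A.1, ∑ D : GS K U.de,
      (card {t : Mo (U.S.gl A B ζ).1 →ₗ[Λ] Mo A.1 // (CE t ∧
        IsNilpotent (t ∘ₗ U.S.jh : End Λ (Mo A.1))) ∧
        toGS (cl (range (t ∘ₗ U.S.jh))) = D} : ℚ) * cnt L B =
      ∑ D : GS K U.de, ∑ B : TS lam U.df, ∑ ζ : Zt lam B.1 A.1,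
      (card {t : Mo (U.S.gl A B ζ).1 →ₗ[Λ] Mo A.1 // (CE t ∧
        IsNilpotent (t ∘ₗ U.S.jh : End Λ (Mo A.1))) ∧
        toGS (cl (range (t ∘ₗ U.S.jh))) = D} : ℚ) * cnt L B := fun A => by
    rw [sum_comm]
    refine sum_congr rfl fun B _ => ?_
    rw [sum_comm]
  simp_rw [h2]
  rw [sum_comm]
  refine sum_congr rfl fun D _ => ?_
  rw [sum_closed D.S, nilw, mul_sum]
  · refine sum_congr rfl fun A _ => ?_
    rw [mul_sum]
    refine sum_congr rfl fun B _ => ?_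
    rw [mul_sum]
    refine sum_congr rfl fun ζ _ => ?_
    rw [cnt, chn, mul_sum, mul_sum]
    refine sum_congr rfl fun B1 _ => ?_
    rw [← sum_mul]
    have := card_tri hp hl U.S D.S D.hS (D.S.gl A B ζ) B1 A B ζ (fun h => IsNilpotent h)
    refine (congrArg (· * cnt L B1) this).trans ?_
    have h4 : card {a : Mo (D.S.gl A B ζ).1 →ₗ[Λ] Mo A.1 // CE a ∧
        IsNilpotent (D.S.jh (A := A.1) (B := B.1) (ζ := ζ.1) ∘ₗ a : End Λ (Mo (D.S.gl A B ζ).1))} =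
        card {t : Mo (D.S.gl A B ζ).1 →ₗ[Λ] Mo A.1 // CE t ∧
        IsNilpotent (t ∘ₗ D.S.jh : End Λ (Mo A.1))} :=
      card_congr (Equiv.subtypeEquivRight fun t => and_congr_right fun _ => nil_comp_iff)
    refine (congrArg (fun z : ℕ => (z : ℚ) * nCE B1 B * Kc K U.df U.de D.de * cnt L B1) h4).trans ?_
    change _ * _ * _ * cnt L B1 = _ * (_ * (_ * cnt L B1))
    ring
  · intro X hX
    refine sum_eq_zero fun B _ => sum_eq_zero fun ζ _ => ?_
    rw [mul_eq_zero]
    left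
    rw [cast_eq_zero, card_eq_zero]
    left
    exact ⟨fun t => hX (Split.closed_of_TF D.hS (TF_cl _) t.2.2)⟩

theorem nilw_zero (L : List Dv) (U : GS K d) (h0 : tot U.de ≠ 0) (h : tot U.de = tot d) :
    nilw lam L U = 0 := by
  refine sum_eq_zero fun A _ => sum_eq_zero fun B _ => sum_eq_zero fun ζ _ => ?_
  rw [mul_eq_zero]
  left
  rw [cast_eq_zero, card_eq_zero]
  left
  refine ⟨fun t => h0 ?_⟩
  have hf : tot U.df = 0 := by have := U.S.tot; omega
  have hs := subsingleton_V (K := K) hf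
  have hj : CE (U.S.jh (A := A.1) (B := B.1) (ζ := ζ.1)) := by
    refine CE.of_surj fun x => ⟨U.S.r x, ?_⟩
    have := U.S.jr x
    rw [Subsingleton.elim (U.S.q x) 0, map_zero, add_zero] at this
    exact this
  have hc : CE (t.1 ∘ₗ U.S.jh) := hj.comp t.2.1
  have hn : ∀ n, CE ((t.1 ∘ₗ U.S.jh : End Λ (Mo A.1)) ^ n) := by
    intro n
    induction n with
    | zero => exact CE.of_surj fun x => ⟨x, rfl⟩
    | succ n ih => rw [pow_succ]; exact hc.comp ih
  obtain ⟨n, h1⟩ := t.2.2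
  have h2 := hn n
  rw [h1, CE, LinearMap.range_zero, cl_bot A.2.tf] at h2
  exact tot_of_subsingleton_Mo (A := A.1) (subsingleton_of_forall_eq 0 fun x => by
    have : x ∈ (⊤ : Submodule Λ (Mo A.1)) := trivial
    rwa [← h2] at this)

theorem nilw_tot_zero (hp : ∀ i, 2 ≤ p i) (hl : Good lam) (L : List Dv) (U : GS K d)
    (h0 : tot U.de = 0) : nilw lam L U = CH lam [] U.de * zc K U.df U.de * CH lam L U.df := by
  have hs := subsingleton_V (K := K) h0
  rw [nilw, CH, CH, sum_mul, sum_mul]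
  refine sum_congr rfl fun A _ => ?_
  rw [mul_sum]
  refine sum_congr rfl fun B _ => ?_
  haveI : Subsingleton (Mo A.1) := hs
  have h1 : ∀ ζ : Zt lam B.1 A.1, (card {t : Mo (U.S.gl A B ζ).1 →ₗ[Λ] Mo A.1 // CE t ∧
      IsNilpotent (t ∘ₗ U.S.jh : End Λ (Mo A.1))} : ℚ) = 1 := by
    intro ζ
    rw [Nat.cast_eq_one, Nat.card_eq_one_iff_unique]
    refine ⟨⟨fun t t' => sext (lext fun x => Subsingleton.elim _ _)⟩,
      ⟨⟨0, CE.of_surj fun x => ⟨0, Subsingleton.elim _ _⟩, 0, lext fun x => Subsingleton.elim _ _⟩⟩⟩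
  simp_rw [h1, sum_const, Finset.card_univ, nsmul_eq_mul, ← card_eq_fintype_card]
  rw [card_Zt hp hl A B, cnt, cnt, chn, one_mul, one_mul]

theorem nilw_match (hp : ∀ i, 2 ≤ p i) {lam' : Fin (N - 2) → K} (hl : Good lam) (hl' : Good lam')
    (H : ∀ (L : List Dv) d, CH lam L d = CH lam' L d) (n : ℕ) :
    ∀ (d : Dv) (_ : tot d ≤ n) (L : List Dv) (U : GS K d),
      nilw lam L U = nilw lam' L U := by
  induction n with
  | zero =>
    intro d hd L U
    have := U.S.tot
    rw [nilw_tot_zero hp hl L U (by omega), nilw_tot_zero hp hl' L U (by omega), H, H]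
  | succ n ih =>
    intro d hd L U
    have := U.S.tot
    by_cases h0 : tot U.de = 0
    · rw [nilw_tot_zero hp hl L U h0, nilw_tot_zero hp hl' L U h0, H, H]
    by_cases h1 : tot U.de = tot d
    · rw [nilw_zero L U h0 h1, nilw_zero L U h0 h1]
    rw [nilw_rec hp hl, nilw_rec hp hl']
    exact sum_congr rfl fun D _ => by rw [ih _ (by omega)]

theorem NIL_match (hp : ∀ i, 2 ≤ p i) {lam' : Fin (N - 2) → K} (hl : Good lam) (hl' : Good lam')
    (H : ∀ (L : List Dv) d, CH lam L d = CH lam' L d) (d : Dv) :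
    NIL lam d = NIL lam' d := by
  rw [NIL_eq, NIL_eq]
  exact sum_congr rfl fun U _ => nilw_match hp hl hl' H _ d le_rfl [] U

end

section

variable {N : ℕ} {p : Fin N → ℕ} {K : Type} [Field K] [Finite K] [Fact (2 ≤ N)]
variable {d e f : Dv} {lam : Fin (N - 2) → K}

/-! ### Cyclic chains -/

/-- The last dimension vector of a chain. -/
def base : List Dv → Dv → Dv
  | [], d => d
  | d1 :: L, _ => base L d1

/-- The number of nonzero vectors at the sink which generate up to torsion free cokernel. -/
noncomputable def cyc0 {d : Dv} (X : TS lam d) : ℚ :=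
  card {s : V K d // (pr K d snk s = s ∧ s ≠ 0) ∧
    cl (span Λ {Mo.of X.1 s}) = ⊤}

/-- The number of chains above `X` together with a generating vector at the sink of the last term. -/
noncomputable def cyc (L : List Dv) {d : Dv} (X : TS lam d) : ℚ :=
  chn (fun _ X => cyc0 X) L X

variable (lam) in
noncomputable def CYC (L : List Dv) (d : Dv) : ℚ :=
  ∑ X : TS lam d, cyc L X

variable (K) in
/-- The number of nonzero vectors at the sink. -/
noncomputable def bet (d : Dv) : ℚ :=
  card {s : V K d // pr K d snk s = s ∧ s ≠ 0}

/-- The representation generated by a subspace. -/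
noncomputable def spn {X : Fin N → End K (V K d)} (U : GS K d) : Submodule Λ (Mo X) :=
  span Λ {x : Mo X | (x : V K d) ∈ U.1}

theorem spn_gl (U : GS K d) (A : TS lam U.de) (B : TS lam U.df) (ζ : Zt lam B.1 A.1) :
    (spn U : Submodule Λ (Mo (U.S.gl A B ζ).1)) =
      range (U.S.jh (A := A.1) (B := B.1) (ζ := ζ.1)) := by
  apply le_antisymm
  · refine Submodule.span_le.2 fun x hx => ?_
    obtain ⟨y, hy⟩ := (U.mem' x).1 hx
    exact ⟨y, hy⟩
  · rintro _ ⟨y, rfl⟩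
    exact Submodule.subset_span ((U.mem' _).2 ⟨y, rfl⟩)

/-- The number of chains above `X` with a vector at the sink of the last term whose successive images
generate the given subspace of `X`. -/
noncomputable def ww : List Dv → ∀ {d : Dv}, TS lam d → GS K d → ℚ
  | [], d, X, U => card {s : V K d // (pr K d snk s = s ∧ s ≠ 0) ∧
      toGS (cl (span Λ {Mo.of X.1 s})) = U}
  | d1 :: L, _, X, U => ∑ X1 : TS lam d1, ∑ U1 : GS K d1,
      (card {g : Mo X1.1 →ₗ[Λ] Mo X.1 // CE g ∧ toGS (cl ((spn U1).map g)) = U} : ℚ) * ww L X1 U1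

theorem sum_ww (L : List Dv) : ∀ {d : Dv} (X : TS lam d),
    ∑ U, ww L X U = bet K (base L d) * cnt L X := by
  induction L with
  | nil =>
    intro d X
    rw [cnt, chn, mul_one, base, bet]
    exact (card_part _ _).symm
  | cons d1 L ih =>
    intro d X
    simp only [ww]
    rw [sum_comm, cnt, chn, mul_sum]
    refine sum_congr rfl fun X1 _ => ?_
    rw [sum_comm]
    have h1 : ∀ U1 : GS K d1, ∑ U : GS K d, (card {g : Mo X1.1 →ₗ[Λ] Mo X.1 // CE g ∧
        toGS (cl ((spn U1).map g)) = U} : ℚ) * ww L X1 U1 = nCE X1 X * ww L X1 U1 := by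
      intro U1
      rw [← sum_mul]
      congr 1
      exact (card_part _ _).symm
    simp_rw [h1]
    rw [← mul_sum, ih, cnt, base]
    ring

theorem ww_zero (L : List Dv) (X : TS lam d) (U : GS K d) (h : ¬ U.S.Closed X.1) :
    ww L X U = 0 := by
  cases L with
  | nil =>
    rw [ww, cast_eq_zero, card_eq_zero]
    left
    exact ⟨fun t => h (Split.closed_of_TF U.hS (TF_cl _) t.2.2)⟩
  | cons d1 L =>
    rw [ww]
    refine sum_eq_zero fun X1 _ => sum_eq_zero fun U1 _ => ?_
    rw [mul_eq_zero]
    left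
    rw [cast_eq_zero, card_eq_zero]
    left
    exact ⟨fun t => h (Split.closed_of_TF U.hS (TF_cl _) t.2.2)⟩

variable (K) in
/-- Chains of graded subspaces. -/
def Subs : List Dv → Type
  | [] => Unit
  | d1 :: L => GS K d1 × Subs L

noncomputable instance instFintypeSubs : ∀ L : List Dv, Fintype (Subs K L)
  | [] => inferInstanceAs (Fintype Unit)
  | d1 :: L => by
    haveI := instFintypeSubs L
    exact inferInstanceAs (Fintype (GS K d1 × Subs K L))

/-- The dimension vectors of a chain of subspaces. -/
noncomputable def subL : ∀ L : List Dv, Subs K L → List Dv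
  | [], _ => []
  | _ :: L, u => GS.de u.1 :: subL L u.2

/-- The dimension vectors of the quotients by a chain of subspaces. -/
noncomputable def quoL : ∀ L : List Dv, Subs K L → List Dv
  | [], _ => []
  | _ :: L, u => GS.df u.1 :: quoL L u.2

/-- The coefficients counting the off diagonal blocks along a chain of subspaces. -/
noncomputable def coef : ∀ L : List Dv, Subs K L → Dv → ℚ
  | [], _, _ => 1
  | _ :: L, u, e => Kc K (GS.df u.1) (GS.de u.1) e * coef L u.2 (GS.de u.1)

theorem sum_subs_cons {d1 : Dv} {L : List Dv} (F : Subs K (d1 :: L) → ℚ) :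
    ∑ u, F u = ∑ U : GS K d1, ∑ u : Subs K L, F (U, u) := by
  rw [← Fintype.sum_prod_type']
  rfl

theorem ww_gl (hp : ∀ i, 2 ≤ p i) (hl : Good lam) (L : List Dv) :
    ∀ {d : Dv} (U : GS K d) (A : TS lam U.de) (B : TS lam U.df) (ζ : Zt lam B.1 A.1),
    ww L (U.S.gl A B ζ) U = ∑ u : Subs K L, coef L u U.de * cyc (subL L u) A * cnt (quoL L u) B := by
  induction L with
  | nil =>
    intro d U A B ζ
    have h1 : ∀ F : Subs K ([] : List Dv) → ℚ, ∑ u, F u = F () := fun F =>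
      Fintype.sum_unique (ι := Unit) F
    rw [h1]
    change _ = 1 * cyc0 A * 1
    rw [mul_one, one_mul, cyc0, ww]
    congr 1
    set j := U.S.jh (A := A.1) (B := B.1) (ζ := ζ.1) with hj
    have hc : ∀ s : V K U.de, (span Λ {Mo.of (U.S.gl A B ζ).1 (U.S.j s)}).comap j =
        span Λ {Mo.of A.1 s} := by
      intro s
      have : span Λ {Mo.of (U.S.gl A B ζ).1 (U.S.j s)} =
          (span Λ {Mo.of A.1 s}).map j := by
        rw [Submodule.map_span, Set.image_singleton]
        rfl
      rw [this, Submodule.comap_map_eq_of_injective U.S.jh_inj]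
    have hm : ∀ t : {s : V K U.de // (pr K U.de snk s = s ∧ s ≠ 0) ∧
        cl (span Λ {Mo.of A.1 s}) = ⊤},
        (pr K d snk (U.S.j t.1) = U.S.j t.1 ∧ U.S.j t.1 ≠ 0) ∧
        toGS (cl (span Λ {Mo.of (U.S.gl A B ζ).1 (U.S.j t.1)})) = U := by
      rintro ⟨s, ⟨h1, h2⟩, h3⟩
      refine ⟨⟨?_, fun h => h2 ?_⟩, (U.S.toGS_cl_iff U.hS B.2.tf _).2 ⟨?_, ?_⟩⟩
      · exact (U.S.gj _ _).symm.trans (congrArg U.S.j h1)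
      · rw [← U.S.rj s, h, map_zero]
      · exact (Submodule.span_singleton_le_iff_mem _ _).2 ⟨s, rfl⟩
      · exact (congrArg cl (hc s)).trans h3
    refine (card_congr (ofBijective (fun t => ⟨U.S.j t.1, hm t⟩) ⟨?_, ?_⟩)).symm
    · intro t t' h
      apply sext
      have h1 : U.S.j t.1 = U.S.j t'.1 := congrArg val h
      rw [← U.S.rj t.1, h1, U.S.rj]
    · rintro ⟨s, ⟨h1, h2⟩, h3⟩
      obtain ⟨h4, h5⟩ := (U.S.toGS_cl_iff U.hS B.2.tf _).1 h3
      obtain ⟨y, hy⟩ := (Submodule.span_singleton_le_iff_mem _ _).1 h4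
      have hy' : U.S.j y = s := hy
      subst hy'
      refine ⟨⟨y, ⟨?_, fun h => h2 ?_⟩, (congrArg cl (hc y)).symm.trans h5⟩, rfl⟩
      · have := congrArg U.S.r h1
        exact ((U.S.rj _).symm.trans (congrArg U.S.r (U.S.gj _ y))).trans (this.trans (U.S.rj y))
      · rw [h, map_zero]
  | cons d1 L ih =>
    intro d U A B ζ
    rw [ww, sum_comm, sum_subs_cons]
    refine sum_congr rfl fun U1 _ => ?_
    rw [sum_closed U1.S]
    · have h1 : ∀ (A1 : TS lam U1.de) (B1 : TS lam U1.df),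
          ∑ ζ1 : Zt lam B1.1 A1.1, (card {g : Mo (U1.S.gl A1 B1 ζ1).1 →ₗ[Λ] Mo (U.S.gl A B ζ).1 // CE g ∧
            toGS (cl ((spn U1).map g)) = U} : ℚ) * ww L (U1.S.gl A1 B1 ζ1) U1 =
          ∑ u : Subs K L, Kc K U1.df U1.de U.de * coef L u U1.de * (nCE A1 A * cyc (subL L u) A1) *
            (nCE B1 B * cnt (quoL L u) B1) := by
        intro A1 B1
        have h2 := card_tri hp hl U1.S U.S U.hS A1 B1 A B ζ (fun _ => True)
        simp_rw [ih U1 A1 B1]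
        rw [← sum_mul]
        have h3 : ∀ ζ1 : Zt lam B1.1 A1.1, card {g : Mo (U1.S.gl A1 B1 ζ1).1 →ₗ[Λ] Mo (U.S.gl A B ζ).1 // CE g ∧
            toGS (cl ((spn U1).map g)) = U} = card {g : Mo (U1.S.gl A1 B1 ζ1).1 →ₗ[Λ] Mo (U.S.gl A B ζ).1 //
            (CE g ∧ True) ∧ toGS (cl (range (g ∘ₗ U1.S.jh))) = U} := by
          intro ζ1
          refine card_congr (Equiv.subtypeEquivRight fun g => ?_)
          have this : Submodule.map g (range U1.S.jh) = range (g ∘ₗ U1.S.jh) :=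
            (LinearMap.range_comp _ _).symm
          rw [and_true, spn_gl]
          exact iff_of_eq (congrArg (fun T => CE g ∧ toGS (cl T) = U) this)
        have h5 : (card {a : Mo A1.1 →ₗ[Λ] Mo A.1 // CE a ∧ True} : ℚ) = nCE A1 A := by
          rw [nCE]; congr 1
          exact card_congr (Equiv.subtypeEquivRight fun g => by rw [and_true])
        simp_rw [h3]
        refine (congrArg (· * _) h2).trans ?_
        refine (congrArg (fun z => z * _ * _ * _) h5).trans ?_
        rw [mul_sum]
        refine sum_congr rfl fun u _ => ?_
        ring
      refine (sum_congr rfl fun A1 _ => sum_congr rfl fun B1 _ => h1 A1 B1).trans ?_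
      have h6 : ∀ A1 : TS lam U1.de, ∑ B1 : TS lam U1.df, ∑ u : Subs K L, Kc K U1.df U1.de U.de * coef L u U1.de *
          (nCE A1 A * cyc (subL L u) A1) * (nCE B1 B * cnt (quoL L u) B1) =
          ∑ u : Subs K L, ∑ B1 : TS lam U1.df, Kc K U1.df U1.de U.de * coef L u U1.de *
          (nCE A1 A * cyc (subL L u) A1) * (nCE B1 B * cnt (quoL L u) B1) := fun A1 => sum_comm
      simp_rw [h6]
      rw [sum_comm]
      refine sum_congr rfl fun u _ => ?_
      simp_rw [← mul_sum, ← sum_mul, ← mul_sum]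
      rfl
    · intro X hX
      rw [ww_zero L X U1 hX, mul_zero]

/-- The decomposition of the number of chains with a vector according to the subspaces it generates. -/
theorem main_id (hp : ∀ i, 2 ≤ p i) (hl : Good lam) (L : List Dv) (d : Dv) :
    bet K (base L d) * CH lam L d = ∑ U : GS K d, ∑ u : Subs K L,
      coef L u U.de * zc K U.df U.de * CYC lam (subL L u) U.de * CH lam (quoL L u) U.df := by
  rw [CH, mul_sum]
  simp_rw [← sum_ww]
  rw [sum_comm]
  refine sum_congr rfl fun U _ => ?_
  rw [sum_closed U.S _ fun X hX => ww_zero L X U hX]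
  simp_rw [ww_gl hp hl L U, sum_const, Finset.card_univ, nsmul_eq_mul, ← card_eq_fintype_card,
    card_Zt hp hl, mul_sum]
  have h6 : ∀ A : TS lam U.de, ∑ B : TS lam U.df, ∑ u : Subs K L, zc K U.df U.de *
      (coef L u U.de * cyc (subL L u) A * cnt (quoL L u) B) = ∑ u : Subs K L, ∑ B : TS lam U.df, zc K U.df U.de *
      (coef L u U.de * cyc (subL L u) A * cnt (quoL L u) B) := fun A => sum_comm
  simp_rw [h6]
  rw [sum_comm]
  refine sum_congr rfl fun u _ => ?_
  simp_rw [← mul_sum, ← sum_mul, ← mul_sum]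
  rw [CYC, CH]
  ring

end

/-! ### Torsion free pencils with different parameters -/

section pencil

variable {K V W : Type} [Field K] [AddCommGroup V] [Module K V] [AddCommGroup W] [Module K W]

/-- The pencil `a - s b` is injective on polynomials in `s` with coefficients in `V`. -/
def TP (a b : V →ₗ[K] W) : Prop :=
  ∀ v : ℕ → V, (∃ n, ∀ m, n ≤ m → v m = 0) → a (v 0) = 0 → (∀ m, a (v (m + 1)) = b (v m)) → ∀ m, v m = 0

open Polynomial in
/-- The eigenspaces of a torsion free pencil are independent. -/
theorem TP.indep {ι : Type} [Fintype ι] {a b : V →ₗ[K] W} (hT : TP a b) {μ : ι → K} (hμ : Function.Injective μ)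
    (y : ι → V) (hab : ∀ i, a (y i) = μ i • b (y i)) (hs : ∑ i, y i = 0) : ∀ i, y i = 0 := by
  classical
  let P : ι → K[X] := fun i => ∏ k ∈ Finset.univ.erase i, (X - C (μ k))
  let Q : K[X] := ∏ k, (X - C (μ k))
  have hPQ : ∀ i, P i * (X - C (μ i)) = Q := fun i => Finset.prod_erase_mul _ _ (by simp)
  have hv : ∀ m, ∑ i, (P i).coeff m • y i = 0 := by
    refine hT (fun m => ∑ i, (P i).coeff m • y i) ?_ ?_ ?_
    · refine ⟨Finset.univ.sup (fun k => (P k).natDegree) + 1, fun m hm => ?_⟩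
      refine sum_eq_zero fun k _ => ?_
      rw [coeff_eq_zero_of_natDegree_lt, zero_smul]
      have := le_sup (f := fun k => (P k).natDegree) (mem_univ k)
      omega
    · have : ∀ i, (P i).coeff 0 • a (y i) = -Q.coeff 0 • b (y i) := by
        intro i
        rw [hab, smul_smul, ← hPQ i]
        simp [mul_sub]
      simp only [map_sum, map_smul, this]
      rw [← smul_sum, ← map_sum, hs, map_zero, smul_zero]
    · intro m
      rw [← sub_eq_zero]
      have : ∀ i, (P i).coeff (m + 1) • a (y i) - (P i).coeff m • b (y i) = -Q.coeff (m + 1) • b (y i) := by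
        intro i
        rw [hab, smul_smul, ← hPQ i, ← sub_smul]
        simp [mul_sub]
      simp only [map_sum, map_smul]
      rw [← sum_sub_distrib]
      simp only [this]
      rw [← smul_sum, ← map_sum, hs, map_zero, smul_zero]
  intro i
  -- evaluate at `s = μ i`
  let D : ℕ := Finset.univ.sup (fun k => (P k).natDegree) + 1
  have hD : ∀ k, (P k).natDegree < D := by
    intro k
    have := le_sup (f := fun k => (P k).natDegree) (mem_univ k)
    simp only [D]
    omega
  have h1 : ∑ k, (P k).eval (μ i) • y k = 0 := by
    have : ∀ k, (P k).eval (μ i) • y k =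
        ∑ m ∈ Finset.range D, (μ i) ^ m • (P k).coeff m • y k := by
      intro k
      rw [eval_eq_sum_range' (hD k), Finset.sum_smul]
      refine sum_congr rfl fun m _ => ?_
      rw [smul_smul, mul_comm]
    simp only [this]
    rw [sum_comm]
    refine sum_eq_zero fun m _ => ?_
    rw [← smul_sum, hv, smul_zero]
  rw [sum_eq_single i] at h1
  · refine (smul_eq_zero.1 h1).resolve_left ?_
    rw [eval_prod]
    refine Finset.prod_ne_zero_iff.2 fun k hk => ?_
    simpa [sub_eq_zero] using fun h => (Finset.ne_of_mem_erase hk) (hμ h).symm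
  · intro k _ hk
    rw [eval_prod, Finset.prod_eq_zero (i := i) (by simp [hk.symm]) (by simp), zero_smul]
  · simp

/-- An eigenspace of a torsion free pencil can be moved to another eigenvalue. -/
theorem TP.move {a b : V →ₗ[K] W} (hT : TP a b) (P : V →ₗ[K] V) (μ ν : K) (hP : ∀ x, P (P x) = P x)
    (h : ∀ x, a (P x) = μ • b (P x)) : TP (a + (ν - μ) • b ∘ₗ P) b := by
  intro v ⟨n, hn⟩ h0 hs
  let w : ℕ → V := fun m => match m with
    | 0 => 0
    | m + 1 => v m
  have key : ∀ m, μ • (v m - P (v m)) + ν • P (v m) - w m = 0 := by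
    refine hT _ ⟨n + 1, ?_⟩ ?_ ?_
    · intro m hm
      obtain ⟨m, rfl⟩ : ∃ k, m = k + 1 := ⟨m - 1, by omega⟩
      simp [w, hn m (by omega), hn (m + 1) (by omega)]
    · have : a (v 0) = (μ - ν) • b (P (v 0)) := by
        simp only [LinearMap.add_apply, LinearMap.smul_apply, comp_apply] at h0
        rw [eq_neg_of_add_eq_zero_left h0, ← neg_smul, neg_sub]
      simp only [w, map_sub, map_add, map_smul, map_zero, this, h]
      module
    · intro m
      have e := hs m
      simp only [LinearMap.add_apply, LinearMap.smul_apply, comp_apply] at e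
      have e1 : a (v (m + 1)) = b (v m) - (ν - μ) • b (P (v (m + 1))) := eq_sub_of_add_eq e
      have e2 : a (w (m + 1)) = b (w m) - (ν - μ) • b (P (v m)) := by
        cases m with
        | zero =>
          simp only [LinearMap.add_apply, LinearMap.smul_apply, comp_apply] at h0
          simp only [w, map_zero, zero_sub]
          exact eq_neg_of_add_eq_zero_left h0
        | succ m =>
          have e := hs m
          simp only [LinearMap.add_apply, LinearMap.smul_apply, comp_apply] at e
          exact eq_sub_of_add_eq e
      simp only [map_sub, map_add, map_smul, e1, e2, h]
      module
  -- descending induction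
  have : ∀ k m, n ≤ m + k → v m = 0 := by
    intro k
    induction k with
    | zero => intro m hm; exact hn m hm
    | succ k ih =>
      intro m hm
      have := key (m + 1)
      rw [ih (m + 1) (by omega)] at this
      simpa [w] using this
  exact fun m => this n m (by omega)

/-- Several eigenspaces of a torsion free pencil can be moved simultaneously. -/
theorem TP.move' {ι : Type} [DecidableEq ι] {a b : V →ₗ[K] W} (hT : TP a b) (P : ι → V →ₗ[K] V) (μ ν : ι → K)
    (hP : ∀ i x, P i (P i x) = P i x) (hP' : ∀ i j x, i ≠ j → P i (P j x) = 0)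
    (h : ∀ i x, a (P i x) = μ i • b (P i x)) (s : Finset ι) : TP (a + b ∘ₗ ∑ i ∈ s, (ν i - μ i) • P i) b := by
  induction s using Finset.induction_on with
  | empty => simpa using hT
  | insert i s hi ih =>
    have := ih.move (P i) (μ i) (ν i) (hP i) (fun x => by
      simp only [LinearMap.add_apply, comp_apply, LinearMap.sum_apply, LinearMap.smul_apply, h]
      rw [sum_eq_zero, map_zero, add_zero]
      intro j hj
      rw [hP' j i x (by rintro rfl; exact hi hj), smul_zero])
    rw [Finset.sum_insert hi]
    convert this using 1
    ext x
    simp only [LinearMap.add_apply, comp_apply, LinearMap.smul_apply, map_add, map_smul]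
    abel

theorem exists_proj {ι : Type} [Fintype ι] [DecidableEq ι] (κ : ι → Submodule K V)
    (hκ : ∀ y : ι → V, (∀ i, y i ∈ κ i) → ∑ i, y i = 0 → ∀ i, y i = 0) :
    ∃ P : ι → V →ₗ[K] V, (∀ i x, P i x ∈ κ i) ∧ (∀ i, ∀ x ∈ κ i, P i x = x) ∧
      ∀ i j, i ≠ j → ∀ x ∈ κ j, P i x = 0 := by
  let S : (∀ i, κ i) →ₗ[K] V := ∑ i, (κ i).subtype ∘ₗ proj i
  have hS : ∀ y, S y = ∑ i, (y i : V) := fun y => by simp [S]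
  have hk : ker S = ⊥ := by
    rw [LinearMap.ker_eq_bot']
    intro y hy
    rw [hS] at hy
    ext i
    exact hκ (fun i => y i) (fun i => (y i).2) hy i
  obtain ⟨g, hg⟩ := S.exists_leftInverse_of_injective hk
  have hgx : ∀ j (x : κ j), g x = Pi.single j x := by
    intro j x
    have := lcongr_fun hg (Pi.single j x)
    rw [comp_apply, hS, sum_eq_single j] at this
    · simpa using this
    · intro i _ hi; rw [Pi.single_eq_of_ne hi]; rfl
    · simp
  refine ⟨fun i => (κ i).subtype ∘ₗ proj i ∘ₗ g, fun i x => ((g x) i).2, fun i x hx => ?_, fun i j hij x hx => ?_⟩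
  · have := hgx i ⟨x, hx⟩
    simp only [comp_apply, LinearMap.proj_apply, Submodule.subtype_apply] at this ⊢
    rw [this]; simp
  · have := hgx j ⟨x, hx⟩
    simp only [comp_apply, LinearMap.proj_apply, Submodule.subtype_apply] at this ⊢
    rw [this, Pi.single_eq_of_ne hij]; rfl

/-- The functions attached to a pencil. -/
def cP {ι : Type} (μ : ι → K) (x : {x : (V →ₗ[K] W) × (V →ₗ[K] W) // TP x.1 x.2}) : Option ι → V →ₗ[K] W
  | none => x.1.2
  | some i => x.1.1 - μ i • x.1.2

theorem exists_moved {ι : Type} [Fintype ι] {μ ν : ι → K} (hμ : Function.Injective μ) (κ : Option ι → Submodule K V)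
    (hne : Nonempty {x : {x : (V →ₗ[K] W) × (V →ₗ[K] W) // TP x.1 x.2} // ∀ i, κ i ≤ ker (cP μ x i)}) :
    ∃ D : V →ₗ[K] V, (∀ x : {x : (V →ₗ[K] W) × (V →ₗ[K] W) // TP x.1 x.2}, (∀ i, κ i ≤ ker (cP μ x i)) →
        ∃ h : TP (x.1.1 + x.1.2 ∘ₗ D) x.1.2, ∀ i, κ i ≤ ker (cP ν ⟨(_, _), h⟩ i)) ∧
      (∀ x : {x : (V →ₗ[K] W) × (V →ₗ[K] W) // TP x.1 x.2}, (∀ i, κ i ≤ ker (cP ν x i)) →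
        ∃ h : TP (x.1.1 - x.1.2 ∘ₗ D) x.1.2, ∀ i, κ i ≤ ker (cP μ ⟨(_, _), h⟩ i)) := by
  classical
  obtain ⟨x, hx⟩ := hne
  have hab : ∀ {μ : ι → K} {x : {x : (V →ₗ[K] W) × (V →ₗ[K] W) // TP x.1 x.2}},
      (∀ i, κ i ≤ ker (cP μ x i)) → ∀ i, ∀ y ∈ κ (some i), x.1.1 y = μ i • x.1.2 y := by
    intro μ x h i y hy
    have := h (some i) hy
    simpa [cP, sub_eq_zero] using this
  obtain ⟨P, h1, h2, h3⟩ := exists_proj (fun i : ι => κ (some i)) (fun y hy hs =>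
    x.2.indep hμ y (fun i => hab hx i _ (hy i)) hs)
  have hD : ∀ i, ∀ y ∈ κ (some i), (∑ i, (ν i - μ i) • P i) y = (ν i - μ i) • y := by
    intro i y hy
    rw [LinearMap.sum_apply, sum_eq_single i, LinearMap.smul_apply, h2 i y hy]
    · intro j _ hj
      rw [LinearMap.smul_apply, h3 j i hj y hy, smul_zero]
    · simp
  refine ⟨∑ i, (ν i - μ i) • P i, fun x hx => ⟨?_, ?_⟩, fun x hx => ⟨?_, ?_⟩⟩
  · exact x.2.move' P μ ν (fun i x => h2 i _ (h1 i x)) (fun i j x hij => h3 i j hij _ (h1 j x))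
      (fun i y => hab hx i _ (h1 i y)) _
  · rintro (_ | i)
    · exact hx none
    · intro y hy
      simp only [cP, mem_ker, LinearMap.sub_apply, LinearMap.add_apply, comp_apply,
        LinearMap.smul_apply, hD i y hy, map_smul, hab hx i y hy]
      module
  · have := x.2.move' P ν μ (fun i x => h2 i _ (h1 i x)) (fun i j x hij => h3 i j hij _ (h1 j x))
      (fun i y => hab hx i _ (h1 i y)) Finset.univ
    have e : ∑ i, (μ i - ν i) • P i = -∑ i, (ν i - μ i) • P i := by
      rw [← Finset.sum_neg_distrib]
      exact sum_congr rfl fun i _ => by rw [← neg_smul, neg_sub]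
    rwa [e, LinearMap.comp_neg, ← sub_eq_add_neg] at this
  · rintro (_ | i)
    · exact hx none
    · intro y hy
      simp only [cP, mem_ker, LinearMap.sub_apply, comp_apply,
        LinearMap.smul_apply, hD i y hy, map_smul, hab hx i y hy]
      module

theorem card_fiber_le {α β P : Type} [Finite α] [Finite β] [Finite P] [PartialOrder P] (f : α → P) (g : β → P)
    (h : ∀ κ, card {a // κ ≤ f a} = card {b // κ ≤ g b}) (κ : P) :
    card {a // f a = κ} = card {b // g b = κ} := by
  classical
  have key : ∀ {α : Type} [Finite α] (f : α → P) (κ : P),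
      card {a // κ ≤ f a} = card {a // f a = κ} + card (Σ L : {L // κ < L}, {a // f a = L.1}) := by
    intro α _ f κ
    rw [← Nat.card_sum]
    refine card_congr ⟨fun a => if h : f a.1 = κ then inl ⟨a.1, h⟩ else
      inr ⟨⟨f a.1, lt_of_le_of_ne a.2 (Ne.symm h)⟩, ⟨a.1, rfl⟩⟩, fun z => match z with
        | inl a => ⟨a.1, a.2.ge⟩
        | inr a => ⟨a.2.1, a.1.2.le.trans a.2.2.ge⟩, fun a => ?_, fun z => ?_⟩
    · by_cases h : f a.1 = κ <;> simp [h]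
    · rcases z with a | ⟨⟨L, hL⟩, ⟨a, ha⟩⟩
      · simp [a.2]
      · obtain rfl : f a = L := ha
        simp [hL.ne']
  induction κ using WellFoundedGT.induction with
  | ind κ ih =>
    have := h κ
    rw [key, key] at this
    have e : card (Σ L : {L // κ < L}, {a // f a = L.1}) = card (Σ L : {L // κ < L}, {a // g a = L.1}) :=
by
      haveI := Fintype.ofFinite P
      rw [card_sigma, card_sigma]
      exact sum_congr rfl fun L _ => ih L.1 L.2
    omega

theorem exists_pencil_equiv [Finite V] [Finite W] {ι : Type} [Fintype ι] {μ ν : ι → K} (hμ : Function.Injective μ)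
    (hν : Function.Injective ν) :
    ∃ e : {x : (V →ₗ[K] W) × (V →ₗ[K] W) // TP x.1 x.2} ≃ {x : (V →ₗ[K] W) × (V →ₗ[K] W) // TP x.1 x.2},
      ∀ x i, ker (cP ν (e x) i) = ker (cP μ x i) := by
  haveI : Finite (V →ₗ[K] W) := Finite.of_injective (fun f => (f : V → W)) DFunLike.coe_injective
  haveI : Finite (Submodule K V) := Finite.of_injective (fun f => (f : Set V)) SetLike.coe_injective
  have h1 : ∀ κ : Option ι → Submodule K V,
      card {x : {x : (V →ₗ[K] W) × (V →ₗ[K] W) // TP x.1 x.2} // κ ≤ fun i => ker (cP μ x i)} =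
      card {x : {x : (V →ₗ[K] W) × (V →ₗ[K] W) // TP x.1 x.2} // κ ≤ fun i => ker (cP ν x i)} := by
    intro κ
    by_cases hne : Nonempty {x : {x : (V →ₗ[K] W) × (V →ₗ[K] W) // TP x.1 x.2} // ∀ i, κ i ≤ ker (cP μ x i)}
    · obtain ⟨D, hD, hD'⟩ := exists_moved (ν := ν) hμ κ hne
      refine card_congr ⟨fun x => ⟨⟨(_, _), (hD x.1 x.2).1⟩, (hD x.1 x.2).2⟩,
        fun x => ⟨⟨(_, _), (hD' x.1 x.2).1⟩, (hD' x.1 x.2).2⟩, fun x => ?_, fun x => ?_⟩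
      · apply sext; apply sext
        exact Prod.ext (add_sub_cancel_right _ _) rfl
      · apply sext; apply sext
        exact Prod.ext (sub_add_cancel _ _) rfl
    · have hne' : ¬ Nonempty {x : {x : (V →ₗ[K] W) × (V →ₗ[K] W) // TP x.1 x.2} // ∀ i, κ i ≤ ker (cP ν x i)} := by
        intro hne'
        obtain ⟨D, hD, hD'⟩ := exists_moved (ν := μ) hν κ hne'
        obtain ⟨x, hx⟩ := hne'
        exact hne ⟨⟨⟨(_, _), (hD x hx).1⟩, (hD x hx).2⟩⟩
      rw [not_nonempty_iff] at hne hne'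
      exact (@Nat.card_of_isEmpty _ hne).trans (@Nat.card_of_isEmpty _ hne').symm
  have h2 := card_fiber_le _ _ h1
  have h3 : ∀ κ, Nonempty ({x : {x : (V →ₗ[K] W) × (V →ₗ[K] W) // TP x.1 x.2} // (fun i => ker (cP μ x i)) = κ} ≃
      {x : {x : (V →ₗ[K] W) × (V →ₗ[K] W) // TP x.1 x.2} // (fun i => ker (cP ν x i)) = κ}) := fun κ =>
    Finite.card_eq.1 (h2 κ)
  refine ⟨Equiv.ofFiberEquiv fun κ => (h3 κ).some, fun x i => ?_⟩
  exact congrFun (Equiv.ofFiberEquiv_map (f := fun x i => ker (cP μ x i))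
    (g := fun x i => ker (cP ν x i)) (fun κ => (h3 κ).some) x) i

end pencil

section

variable {N : ℕ} {p : Fin N → ℕ} {K : Type} [Field K] {d : Dv}

variable (K d) in
/-- The component at a vertex. -/
abbrev Vv (v : CanVertex N p) : Type := range (pr K d v)

/-- The composite along an arm, from the component at the source to the component at the sink. -/
noncomputable def cX (i : Fin N) (x : End K (V K d)) : Vv K d src →ₗ[K] Vv K d snk :=
  (pr K d snk).rangeRestrict ∘ₗ (x ^ p i) ∘ₗ (range (pr K d src)).subtype

/-- The supports of the maps along an arm. -/
def Ar (i : Fin N) (x : End K (V K d)) : Prop :=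
  ∀ v w, ¬ CanArrow N p i v w → ∀ y, pr K d w (x (pr K d v y)) = 0

theorem Ar.sink {i : Fin N} {x : End K (V K d)} (h : Ar i x) (y) : x (pr K d snk y) = 0 := by
  rw [← pr_sum d (x _)]
  refine sum_eq_zero fun w _ => h _ w ?_ y
  simp [CanArrow]

/-- The extension by the identity of an endomorphism of the component at the sink. -/
noncomputable def Gof (g : Vv K d snk →ₗ[K] Vv K d snk) : End K (V K d) :=
  1 - pr K d snk + Submodule.subtype _ ∘ₗ g ∘ₗ (pr K d snk).rangeRestrict

theorem pr_Gof (g : Vv K d snk →ₗ[K] Vv K d snk) (v : CanVertex N p) (y) :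
    pr K d v (Gof g y) = Gof g (pr K d v y) := by
  obtain ⟨z, hz⟩ := (g ((pr K d snk).rangeRestrict y)).2
  have h2 : Gof g y = y - pr K d snk y + pr K d snk z := by
    rw [hz]; rfl
  by_cases hv : v = snk
  · subst hv
    have h3 : (pr K d snk).rangeRestrict (pr K d snk y) = (pr K d snk).rangeRestrict y :=
      sext (by simp [pr_orth])
    have h4 : Gof g (pr K d snk y) = pr K d snk y - pr K d snk (pr K d snk y)
      + g ((pr K d snk).rangeRestrict (pr K d snk y)) := rfl
    rw [h4, h3, h2, ← hz]
    simp [pr_orth]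
  · have h3 : (pr K d snk).rangeRestrict (pr K d v y) = 0 :=
      sext (by simp [pr_orth, Ne.symm hv])
    have h4 : Gof g (pr K d v y) = pr K d v y - pr K d snk (pr K d v y)
      + g ((pr K d snk).rangeRestrict (pr K d v y)) := rfl
    rw [h4, h3, h2]
    simp [pr_orth, hv, Ne.symm hv]

theorem Gof_comp (g h : Vv K d snk →ₗ[K] Vv K d snk) (hg : h ∘ₗ g = LinearMap.id) (y) :
    Gof h (Gof g y) = y := by
  obtain ⟨z, hz⟩ := (g ((pr K d snk).rangeRestrict y)).2
  have h2 : Gof g y = y - pr K d snk y + pr K d snk z := by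
    rw [hz]; rfl
  have h3 : (pr K d snk).rangeRestrict (Gof g y) = g ((pr K d snk).rangeRestrict y) := by
    apply sext
    rw [← hz, h2]
    simp [pr_orth]
  have h4 : Gof h (Gof g y) = Gof g y - pr K d snk (Gof g y) +
    h ((pr K d snk).rangeRestrict (Gof g y)) := rfl
  rw [h4, h3, ← comp_apply h g, hg, h2]
  simp [pr_orth]

theorem Ar.Gof_comp {i : Fin N} {x : End K (V K d)} (h : Ar i x) (g) : Ar i (Gof g ∘ₗ x) := by
  intro v w hvw y
  rw [comp_apply, pr_Gof, h v w hvw, map_zero]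

theorem Ar.x_Gof {i : Fin N} {x : End K (V K d)} (h : Ar i x) (g) (y) : x (Gof g y) = x y := by
  obtain ⟨z, hz⟩ := (g ((pr K d snk).rangeRestrict y)).2
  have h2 : Gof g y = y - pr K d snk y + pr K d snk z := by
    rw [hz]; rfl
  rw [h2, map_add, map_sub, h.sink, h.sink, sub_zero, add_zero]

theorem Ar.pow_Gof {i : Fin N} {x : End K (V K d)} (h : Ar i x) (g) (n : ℕ) (y) :
    ((Gof g ∘ₗ x) ^ (n + 1)) y = Gof g ((x ^ (n + 1)) y) := by
  induction n generalizing y with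
  | zero => simp
  | succ n ih =>
    rw [pow_succ', End.mul_apply, ih, comp_apply, h.x_Gof, pow_succ' x (n + 1), End.mul_apply]

theorem Ar.cX_Gof (hp : ∀ i, 2 ≤ p i) {i : Fin N} {x : End K (V K d)} (h : Ar i x) (g) :
    cX i (Gof g ∘ₗ x) = g ∘ₗ cX i x := by
  ext1 y
  apply sext
  obtain ⟨n, hn⟩ : ∃ n, p i = n + 1 := ⟨p i - 1, by have := hp i; omega⟩
  have h1 : (cX i (Gof g ∘ₗ x) y : V K d) = pr K d snk (((Gof g ∘ₗ x) ^ p i) y) := rfl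
  have h5 : ((g ∘ₗ cX i x) y : V K d) = g ((pr K d snk).rangeRestrict ((x ^ p i) y)) := rfl
  rw [h1, h5, hn, h.pow_Gof]
  obtain ⟨z, hz⟩ := (g ((pr K d snk).rangeRestrict ((x ^ (n + 1)) y))).2
  have h2 : Gof g ((x ^ (n + 1)) y) = (x ^ (n + 1)) y - pr K d snk ((x ^ (n + 1)) y) + pr K d snk z := by
    rw [hz]; rfl
  rw [h2, ← hz]
  simp [pr_orth]

/-- The factorizations of a map along an arm. -/
def Fac (i : Fin N) (c : Vv K d src →ₗ[K] Vv K d snk) : Type :=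
  {x : End K (V K d) // Ar i x ∧ cX i x = c}

/-- The number of factorizations along an arm only depends on the kernel. -/
theorem card_Fac (hp : ∀ i, 2 ≤ p i) (i : Fin N) {c c' : Vv K d src →ₗ[K] Vv K d snk}
    (h : ker c = ker c') : Nonempty (Fac i c ≃ Fac i c') := by
  let f : range c ≃ₗ[K] range c' :=
    c.quotKerEquivRange.symm ≪≫ₗ Submodule.quotEquivOfEq _ _ h ≪≫ₗ c'.quotKerEquivRange
  have hf : ∀ y, (f ⟨c y, y, rfl⟩ : Vv K d snk) = c' y := by
    intro y
    have : c.quotKerEquivRange (Submodule.Quotient.mk y) = ⟨c y, y, rfl⟩ := rfl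
    simp only [f, LinearEquiv.trans_apply]
    rw [← this, LinearEquiv.symm_apply_apply]
    rfl
  obtain ⟨g, hg⟩ := Submodule.exists_linearEquiv_restrict_eq f
  have hg' : g.toLinearMap ∘ₗ c = c' := by
    ext1 y
    exact (hg ⟨c y, y, rfl⟩).symm.trans (hf y)
  have hg'' : g.symm.toLinearMap ∘ₗ c' = c := by
    rw [← hg', ← LinearMap.comp_assoc]
    ext y; simp
  refine ⟨⟨fun x => ⟨Gof g.toLinearMap ∘ₗ x.1, x.2.1.Gof_comp _, by rw [x.2.1.cX_Gof hp, x.2.2, hg']⟩,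
    fun x => ⟨Gof g.symm.toLinearMap ∘ₗ x.1, x.2.1.Gof_comp _, by rw [x.2.1.cX_Gof hp, x.2.2, hg'']⟩,
    fun x => sext ?_, fun x => sext ?_⟩⟩
  · exact lext fun y => Gof_comp g.toLinearMap g.symm.toLinearMap (lext fun z => by simp) (x.1 y)
  · exact lext fun y => Gof_comp g.symm.toLinearMap g.toLinearMap (lext fun z => by simp) (x.1 y)

variable [Fact (2 ≤ N)] {lam : Fin (N - 2) → K}

/-- The arms, with the second arm at infinity. -/
def opt (i : Fin N) : Option {i : Fin N // i ≠ i1 N} := if h : i = i1 N then none else some ⟨i, h⟩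

theorem cc_Mo (X : Fin N → End K (V K d)) (i : Fin N) (m : V K d) :
    (cc i : Λ) • Mo.of X m = pr K d snk ((X i ^ p i) (pr K d src m)) := by
  have h : ∀ n (y : V K d), (gx i ^ n : Λ) • Mo.of X y = (X i ^ n) y := by
    intro n
    induction n with
    | zero => intro y; rw [pow_zero, one_smul]; rfl
    | succ n ih =>
      intro y
      rw [pow_succ, mul_smul, pow_succ]
      exact (congrArg (fun z : Mo X => (gx i ^ n : Λ) • z) (Mo.gx_eq X i y)).trans (ih _)
  rw [cc, mul_smul, mul_smul]
  refine (congrArg (fun z : Mo X => (ge snk : Λ) • (gx i ^ p i : Λ) • z) (Mo.ge_eq X _ m)).trans ?_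
  exact (congrArg (fun z : Mo X => (ge snk : Λ) • z) (h _ _)).trans (Mo.ge_eq X _ _)

theorem cX_val (X : Fin N → End K (V K d)) (i : Fin N) (m : V K d) :
    (cc i : Λ) • Mo.of X m = (cX i (X i) ((pr K d src).rangeRestrict m) : V K d) :=
  cc_Mo X i m

theorem tf_iff (X : Fin N → End K (V K d)) :
    TF N p K (Mo X) ↔ TP (cX (i0 N) (X (i0 N))) (cX (i1 N) (X (i1 N))) := by
  constructor
  · intro h v ⟨n, hn⟩ h0 hs m
    have hv : ∀ m, (pr K d src).rangeRestrict (v m : V K d) = v m := fun m => by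
      obtain ⟨z, hz⟩ := (v m).2
      apply sext
      rw [← hz]
      simp [pr_orth]
    have hc : ∀ i m, (cc i : Λ) • Mo.of X (v m) = (cX i (X i) (v m) : V K d) := fun i m =>
      (cX_val X i _).trans (by rw [hv])
    refine sext (h (fun m => Mo.of X (v m)) (fun m => ?_) ⟨n, fun m hm => ?_⟩ ?_ (fun m => ?_) m)
    · refine (Mo.ge_eq X _ _).trans ?_
      exact congrArg val (hv m)
    · rw [hn m hm]; rfl
    · exact (hc _ _).trans (congrArg val h0)
    · exact (hc _ _).trans ((congrArg val (hs m)).trans (hc _ _).symm)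
  · intro h v hv ⟨n, hn⟩ h0 hs m
    have hv' : ∀ m, pr K d src (v m) = v m := fun m => (Mo.ge_eq X _ _).symm.trans (hv m)
    have := h (fun m => (pr K d src).rangeRestrict (v m)) ⟨n, fun m hm => ?_⟩ ?_ (fun m => ?_) m
    · exact (hv' m).symm.trans (congrArg val this)
    · rw [hn m hm]; exact map_zero _
    · exact sext ((cX_val X _ _).symm.trans h0)
    · exact sext ((cX_val X _ _).symm.trans ((hs m).trans (cX_val X _ _)))

theorem rel_iff (X : Fin N → End K (V K d)) :
    IsRel p lam (Mo X) ↔ ∀ j, cX (ij j) (X (ij j)) = cX (i0 N) (X (i0 N)) - lam j • cX (i1 N) (X (i1 N)) := by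
  constructor
  · intro h j
    ext1 y
    obtain ⟨y, z, rfl⟩ := y
    apply sext
    exact (cX_val X _ _).symm.trans ((h j z).trans (congrArg₂ (fun a b : V K d => a - lam j • b) (cX_val X _ _) (cX_val X _ _)))
  · intro h j z
    refine (cX_val X _ _).trans (Eq.trans ?_ (congrArg₂ (fun a b : V K d => a - lam j • b) (cX_val X _ _) (cX_val X _ _)).symm)
    rw [h j]; rfl

theorem opt_i1 : opt (i1 N) = none := dif_pos rfl

theorem opt_ne {i : Fin N} (h : i ≠ i1 N) : opt i = some ⟨i, h⟩ := dif_neg h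

/-- The pencil of a torsion free representation. -/
noncomputable def pen (X : TS lam d) :
    {x : (Vv K d src →ₗ[K] Vv K d snk) × (Vv K d src →ₗ[K] Vv K d snk) //
      TP x.1 x.2} :=
  ⟨(cX (i0 N) (X.1 (i0 N)), cX (i1 N) (X.1 (i1 N))), (tf_iff X.1).1 X.2.tf⟩

/-- The parameters of the arms other than the second one. -/
def mu' (lam : Fin (N - 2) → K) (i : {i : Fin N // i ≠ i1 N}) : K := mu lam i

theorem pen_eq (X : TS lam d) (i : Fin N) : cX i (X.1 i) = cP (mu' lam) (pen X) (opt i) := by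
  rcases arm_cases i with rfl | rfl | ⟨j, rfl⟩
  · rw [opt_ne i0_ne_i1]; simp only [cP, mu', mu_i0, pen, zero_smul]; exact (sub_zero (G := Vv K d src →ₗ[K] Vv K d snk) _).symm
  · rw [opt_i1]; rfl
  · rw [opt_ne (ij_ne_i1 j)]; simp [cP, mu', mu_ij, pen, (rel_iff X.1).1 X.2.rel j]

theorem isTS_of_fac (x : {x : (Vv K d src →ₗ[K] Vv K d snk) × (Vv K d src →ₗ[K] Vv K d snk) //
      TP x.1 x.2}) (z : ∀ i, Fac i (cP (mu' lam) x (opt i))) :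
    ∃ h : IsTS lam (fun i => (z i).1), pen ⟨_, h⟩ = x := by
  have h0 : cX (i0 N) (z (i0 N)).1 = x.1.1 := by
    rw [(z (i0 N)).2.2, opt_ne i0_ne_i1]; simp only [cP, mu', mu_i0, zero_smul]; exact sub_zero (G := Vv K d src →ₗ[K] Vv K d snk) _
  have h1 : cX (i1 N) (z (i1 N)).1 = x.1.2 := by
    rw [(z (i1 N)).2.2, opt_i1]; rfl
  have h2 : ∀ j, cX (ij j) (z (ij j)).1 = x.1.1 - lam j • x.1.2 := by
    intro j
    rw [(z (ij j)).2.2, opt_ne (ij_ne_i1 j)]; simp [cP, mu', mu_ij]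
  refine ⟨⟨isGr_Mo.2 fun i => (z i).2.1, (rel_iff _).2 fun j => ?_, (tf_iff _).2 ?_⟩, ?_⟩
  · rw [h0, h1, h2]
  · rw [h0, h1]; exact x.2
  · exact sext (Prod.ext h0 h1)

/-- The torsion free representations with a given pencil. -/
noncomputable def penEquiv (x : {x : (Vv K d src →ₗ[K] Vv K d snk) × (Vv K d src →ₗ[K] Vv K d snk) //
      TP x.1 x.2}) : {X : TS lam d // pen X = x} ≃ ∀ i, Fac i (cP (mu' lam) x (opt i)) where
  toFun X i := ⟨X.1.1 i, isGr_Mo.1 X.1.2.gr i, (pen_eq X.1 i).trans (by rw [X.2])⟩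
  invFun z := ⟨⟨fun i => (z i).1, (isTS_of_fac x z).1⟩, (isTS_of_fac x z).2⟩
  left_inv X := rfl
  right_inv z := rfl

theorem Good.mu'_inj (h : Good lam) : Function.Injective (mu' lam) := fun i j hij =>
  sext (h.mu_inj i.2 j.2 hij)

/-- The number of torsion free representations does not depend on the parameters. -/
theorem card_TS [Finite K] (hp : ∀ i, 2 ≤ p i) {lam' : Fin (N - 2) → K} (hl : Good lam) (hl' : Good lam')
    (d : Dv) : card (TS lam d) = card (TS lam' d) := by
  obtain ⟨e, he⟩ := exists_pencil_equiv (V := Vv K d src) (W := Vv K d snk) hl.mu'_inj hl'.mu'_inj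
  refine card_congr ?_
  refine (Equiv.sigmaFiberEquiv (pen (lam := lam) (d := d))).symm.trans ((Equiv.sigmaCongr e fun x => ?_).trans
    (Equiv.sigmaFiberEquiv (pen (lam := lam') (d := d))))
  refine (penEquiv x).trans ((Equiv.piCongrRight fun i => ?_).trans (penEquiv (e x)).symm)
  exact (card_Fac hp i (he x (opt i)).symm).some

end

section

variable {N : ℕ} {p : Fin N → ℕ} {K : Type} [Field K] [Finite K] [Fact (2 ≤ N)]
variable {d e f : Dv} {lam lam' : Fin (N - 2) → K}

/-! ### Independence of the numbers of chains -/

/-- The sum of the total dimensions. -/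
def tl (L : List Dv) : ℕ := (L.map tot).sum

theorem tl_cons (d1 : Dv) (L) : tl (d1 :: L) = tot d1 + tl L := List.sum_cons

theorem tl_append (L) (d1 : Dv) : tl (L ++ [d1]) = tl L + tot d1 := by
  rw [tl, List.map_append, List.sum_append]; rfl

theorem tl_sub : ∀ (L : List Dv) (u : Subs K L), tl (subL L u) + tl (quoL L u) = tl L
  | [], _ => rfl
  | d1 :: L, u => by
    have h1 := tl_sub L u.2
    have h2 := u.1.S.tot
    rw [subL, quoL, tl_cons, tl_cons, tl_cons]
    omega

theorem de_eq {U : GS K d} (h : tot U.df = 0) : U.de = d := by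
  funext v
  have h1 := U.S.dim v
  rw [tot_eq_zero.1 h] at h1
  exact h1

theorem subL_eq : ∀ (L : List Dv) (u : Subs K L), tl (quoL L u) = 0 → subL L u = L
  | [], _, _ => rfl
  | d1 :: L, u, h => by
    rw [quoL, tl_cons] at h
    rw [subL, de_eq (by omega : tot u.1.df = 0), subL_eq L u.2 (by omega)]

variable (d) in
theorem exists_full : ∃ U : GS K d, tot U.df = 0 := by
  let U : GS K d := ⟨⊤, by
    have := (toGS (⊤ : Submodule Λ (Mo (0 : Fin N → End K (V K d))))).2
    exact this⟩
  refine ⟨U, tot_of_subsingleton (K := K) (subsingleton_of_forall_eq 0 fun y => ?_)⟩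
  have h := (U.mem (U.S.s y)).1 trivial
  rwa [U.S.qs] at h

theorem exists_full_subs : ∀ (L : List Dv), ∃ u : Subs K L, tl (quoL L u) = 0
  | [] => ⟨(), rfl⟩
  | d1 :: L => by
    obtain ⟨u, hu⟩ := exists_full_subs L
    obtain ⟨U, hU⟩ := exists_full (K := K) d1
    exact ⟨(U, u), by
      change tl (GS.df U :: quoL L u) = 0
      rw [tl_cons]; exact Nat.add_eq_zero_iff.2 ⟨hU, hu⟩⟩

theorem zc_pos : 0 < zc K f e :=
  div_pos (Nat.cast_pos.2 Nat.card_pos) (Nat.cast_pos.2 Nat.card_pos)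

theorem Kc_pos {f1 e1 e : Dv} : 0 < Kc K f1 e1 e :=
  div_pos (mul_pos zc_pos (Nat.cast_pos.2 Nat.card_pos)) zc_pos

theorem coef_pos : ∀ (L : List Dv) (u : Subs K L) (e), 0 < coef L u e
  | [], _, _ => zero_lt_one
  | d1 :: L, u, e => mul_pos Kc_pos (coef_pos L u.2 _)

theorem chn_zero (b : ∀ d, TS (p := p) lam d → ℚ) : ∀ (L : List Dv) {d : Dv}
    (X : TS lam d), (∀ Y : TS lam (base L d), b _ Y = 0) → chn b L X = 0
  | [], d, X, h => h X
  | d1 :: L, d, X, h => by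
    rw [chn]
    exact sum_eq_zero fun X1 _ => by rw [chn_zero b L X1 h, mul_zero]

theorem tot_src : ∀ (L : List Dv) (d), tl L + tot d = 0 → tot (base L d) = 0
  | [], d, h => by rw [base]; omega
  | d1 :: L, d, h => by
    rw [tl_cons] at h
    exact tot_src L d1 (by omega)

theorem CYC_zero (L : List Dv) (d) (h : tl L + tot d = 0) : CYC lam L d = 0 := by
  refine sum_eq_zero fun X _ => chn_zero _ L X fun Y => ?_
  haveI := subsingleton_V (K := K) (tot_src L d h)
  rw [cyc0, cast_eq_zero, card_eq_zero]
  exact Or.inl ⟨fun s => s.2.1.2 (Subsingleton.elim _ _)⟩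

theorem TS_zero (h : tot d = 0) : Nonempty (Unique (TS lam d)) := by
  haveI := subsingleton_V (K := K) h
  haveI : Subsingleton (Fin N → End K (V K d)) :=
    ⟨fun X Y => funext fun i => lext fun x => Subsingleton.elim _ _⟩
  haveI : Subsingleton (TS lam d) := inferInstanceAs (Subsingleton {X // _})
  refine ⟨@Unique.mk' _ ⟨⟨0, ?_, ?_, ?_⟩⟩ _⟩
  all_goals haveI : Subsingleton (Mo (0 : Fin N → End K (V K d))) := inferInstanceAs (Subsingleton (V K d))
  · exact ⟨fun _ _ _ => Subsingleton.elim _ _, fun _ => Subsingleton.elim _ _, fun _ _ _ _ _ => Subsingleton.elim _ _⟩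
  · exact fun _ _ => Subsingleton.elim _ _
  · exact TF.of_subsingleton

theorem cnt_zero : ∀ (L : List Dv) {d} (h : tl L + tot d = 0) (X : TS lam d), cnt L X = 1
  | [], d, h, X => rfl
  | d1 :: L, d, h, X => by
    rw [tl_cons] at h
    obtain ⟨hu⟩ := TS_zero (lam := lam) (by omega : tot d1 = 0)
    have hs := subsingleton_V (K := K) (by omega : tot d = 0)
    rw [cnt, chn, Fintype.sum_eq_single hu.default (fun X1 h => absurd (hu.uniq X1) h)]
    have := cnt_zero L (by omega : tl L + tot d1 = 0) hu.default
    rw [cnt] at this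
    rw [this, mul_one, nCE]
    haveI : Subsingleton (Mo X.1) := hs
    haveI : Unique {f : Mo (hu.default : TS lam d1).1 →ₗ[Λ] Mo X.1 // CE f} :=
      { default := ⟨0, CE.of_surj fun x => ⟨0, Subsingleton.elim _ _⟩⟩
        uniq := fun t => sext (lext fun x => Subsingleton.elim _ _) }
    rw [Nat.card_unique, Nat.cast_one]

theorem CH_zero (L : List Dv) {d} (h : tl L + tot d = 0) : CH lam L d = 1 := by
  obtain ⟨hu⟩ := TS_zero (lam := lam) (by omega : tot d = 0)
  rw [CH, Fintype.sum_eq_single hu.default (fun X1 h => absurd (hu.uniq X1) h), cnt_zero L h]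

/-- Once all smaller numbers are matched, the counting identity relates the two remaining differences. -/
theorem diff_id (hp : ∀ i, 2 ≤ p i) (hl : Good lam) (hl' : Good lam') (L : List Dv) (d)
    (ih : ∀ (L' : List Dv) d', tl L' + tot d' < tl L + tot d →
      CH lam L' d' = CH lam' L' d' ∧ CYC lam L' d' = CYC lam' L' d') :
    ∃ E : ℚ, 0 < E ∧ bet K (base L d) * (CH lam L d - CH lam' L d) = E * (CYC lam L d - CYC lam' L d) := by
  classical
  refine ⟨∑ U : GS K d, ∑ u : Subs K L, if tl (quoL L u) + tot U.df = 0 then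
    coef L u U.de * zc K U.df U.de else 0, ?_, ?_⟩
  · have h0 : ∀ (U : GS K d) (u : Subs K L), 0 ≤ if tl (quoL L u) + tot U.df = 0 then
        coef L u U.de * zc K U.df U.de else 0 := fun U u => by
      split_ifs
      · exact (mul_pos (coef_pos _ _ _) zc_pos).le
      · exact le_rfl
    obtain ⟨U, hU⟩ := exists_full (K := K) d
    obtain ⟨u, hu⟩ := exists_full_subs (K := K) L
    refine Finset.sum_pos' (fun U _ => Finset.sum_nonneg fun u _ => h0 U u)
      ⟨U, mem_univ _, Finset.sum_pos' (fun u _ => h0 U u) ⟨u, mem_univ _, ?_⟩⟩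
    rw [if_pos (by omega)]
    exact mul_pos (coef_pos _ _ _) zc_pos
  · rw [mul_sub, main_id hp hl, main_id hp hl', ← sum_sub_distrib, sum_mul]
    refine sum_congr rfl fun U _ => ?_
    rw [← sum_sub_distrib, sum_mul]
    refine sum_congr rfl fun u _ => ?_
    have h1 := tl_sub L u
    have h2 := U.S.tot
    split_ifs with h
    · rw [CH_zero _ h, CH_zero _ h, subL_eq L u (by omega)]
      have h3 := de_eq (U := U) (by omega)
      rw [congrArg (CYC lam L) h3, congrArg (CYC lam' L) h3]
      ring
    · rw [zero_mul]
      by_cases h0 : tl (subL L u) + tot U.de = 0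
      · rw [CYC_zero _ _ h0, CYC_zero _ _ h0]; ring
      · rw [(ih (subL L u) U.de (by omega)).2, (ih (quoL L u) U.df (by omega)).1, sub_self]

end

section

variable {N : ℕ} {p : Fin N → ℕ} {K : Type} [Field K] [Finite K] [Fact (2 ≤ N)]
variable {d e f : Dv} {lam lam' : Fin (N - 2) → K}

/-! ### Chains ending at a balanced dimension vector -/

theorem nd_Mo' (X : Fin N → End K (V K d)) (v : CanVertex N p) :
    nd (N := N) (p := p) K (Mo X) v = d v := by
  have h : (comp (N := N) (p := p) K (Mo X) v : Submodule K (V K d)) = range (pr K d v) := by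
    apply le_antisymm
    · rintro _ ⟨x, rfl⟩
      exact ⟨x, (Mo.ge_eq X v x).symm⟩
    · rintro _ ⟨x, rfl⟩
      exact ⟨x, Mo.ge_eq X v x⟩
  exact (congrArg (fun W : Submodule K (V K d) => finrank K W) h).trans (finrank_pr d v)

theorem nd_Mo (X : TS lam d) (v : CanVertex N p) : nd (N := N) (p := p) K (Mo X.1) v = d v := nd_Mo' X.1 v

theorem nd_equiv {M M' : Type} [AddCommGroup M] [Module K M] [Module Λ M] [IsScalarTower K Λ M]
    [AddCommGroup M'] [Module K M'] [Module Λ M'] [IsScalarTower K Λ M']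
    (E : M ≃ₗ[Λ] M') (v : CanVertex N p) :
    nd (N := N) (p := p) K M v = nd (N := N) (p := p) K M' v := by
  let E' : M ≃ₗ[K] M' := { E with
    map_smul' := fun c x => map_smul_K E.toLinearMap c x }
  have h : (comp (N := N) (p := p) K M v).map (E' : M →ₗ[K] M') = comp (N := N) (p := p) K M' v := by
    apply le_antisymm
    · rintro _ ⟨_, ⟨x, rfl⟩, rfl⟩
      exact ⟨E x, (E.map_smul (ge v : Λ) x).symm⟩
    · rintro _ ⟨y, rfl⟩
      refine ⟨_, ⟨E.symm y, rfl⟩, ?_⟩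
      change E ((ge v : Λ) • E.symm y) = _
      rw [E.map_smul, E.apply_symm_apply]; rfl
  rw [nd, nd, ← h]
  exact (LinearEquiv.finrank_map_eq E' _).symm

theorem TS.le (X : TS lam d) : d src ≤ d snk := by
  have := X.2.tf.nd_le X.2.gr
  rwa [nd_Mo, nd_Mo] at this

/-- Homomorphisms from a balanced representation with vanishing torsion free cokernel are surjective. -/
theorem CE_surj_of_bal (hp : ∀ i, 2 ≤ p i) {X1 : TS lam e} {X : TS lam d}
    (hb : e src = e snk) {g : Mo X1.1 →ₗ[Λ] Mo X.1} (hg : CE g) :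
    Surjective g ∧ d src = d snk := by
  have hgr : IsGr N p K (range g) := IsGr.of_inj X.2.gr (f := (range g).subtype)
    (subtype_injective _)
  have hgk : IsGr N p K (ker g) := IsGr.of_inj X1.2.gr (f := (ker g).subtype)
    (subtype_injective _)
  have h1 := (X.2.tf.sub (range g)).nd_le hgr
  have h2 := (X1.2.tf.sub (ker g)).nd_le hgk
  have h3 := nd_add X1.2.gr (ker g) src
  have h4 := nd_add X1.2.gr (ker g) snk
  rw [nd_Mo, nd_equiv g.quotKerEquivRange] at h3 h4
  have h5 := nd_add X.2.gr (range g) src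
  have h6 := nd_add X.2.gr (range g) snk
  rw [nd_Mo] at h5 h6
  have h7 := X.le
  have hs : Subsingleton (Mo X.1 ⧸ range g) := by
    refine (XX.nd_lt hp (lam := lam) _ _ rfl (X.2.gr.of_surj (mkQ_surjective _))
      (X.2.rel.of_surj (mkQ_surjective _)) (CE.quot g hg)).resolve_right ?_
    omega
  have hr : range g = ⊤ := Submodule.Quotient.subsingleton_iff.1 hs
  refine ⟨range_eq_top.1 hr, ?_⟩
  have h8 : ∀ v, nd (N := N) (p := p) K (Mo X.1 ⧸ range g) v = 0 := fun v => by
    rw [nd]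
    haveI : Subsingleton (CanAlg.comp (N := N) (p := p) K (Mo X.1 ⧸ range g) v) := inferInstance
    exact finrank_zero_of_subsingleton
  rw [h8] at h5 h6
  omega

variable (K) in
/-- Graded surjections. -/
def GSur (d1 d : Dv) : Type := {g : V K d1 →ₗ[K] V K d // IsGd K g ∧ Surjective g}

instance (d1 d : Dv) : Finite (GSur K d1 d) :=
  inferInstanceAs (Finite {g : V K d1 →ₗ[K] V K d // IsGd K g ∧ Surjective g})

noncomputable instance (d1 d : Dv) : Fintype (GSur K d1 d) := Fintype.ofFinite _

/-- The dimension vector of the kernel of a graded surjection. -/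
noncomputable def GSur.ke {d1 d : Dv} (g : GSur K d1 d) : Dv :=
  (exists_split_surj g.1 g.2.1 g.2.2).choose

theorem card_lift (hp : ∀ i, 2 ≤ p i) (hl : Good lam) {d1 : Dv} (g : GSur K d1 d) (X : TS lam d) :
    (card {X1 : TS lam d1 // ∀ i x, g.1 (X1.1 i x) = X.1 i (g.1 x)} : ℚ) =
      card (TS lam g.ke) * zc K d g.ke := by
  obtain ⟨S, hS⟩ := (exists_split_surj g.1 g.2.1 g.2.2).choose_spec
  change Split K g.ke d1 d at S
  change S.q = g.1 at hS
  rw [← hS]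
  have hm : ∀ t : (Σ A : TS lam g.ke, Zt lam X.1 A.1), ∀ i x, S.q ((S.gl t.1 X t.2).1 i x) = X.1 i (S.q x) :=
    fun t i x => S.q_glue (A := t.1.1) (B := X.1) (ζ := t.2.1) i x
  have h1 : card {X1 : TS lam d1 // ∀ i x, S.q (X1.1 i x) = X.1 i (S.q x)} =
      card (Σ A : TS lam g.ke, Zt lam X.1 A.1) := by
    refine (card_congr (ofBijective (fun t => ⟨_, hm t⟩) ⟨?_, ?_⟩)).symm
    · rintro ⟨A, ζ⟩ ⟨A', ζ'⟩ h
      have h2 : S.gl A X ζ = S.gl A' X ζ' := congrArg val h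
      have h3 := (S.gl_bij lam).1 (a₁ := ⟨A, X, ζ⟩) (a₂ := ⟨A', X, ζ'⟩) (sext h2)
      injection h3 with h4 h5
      subst h4
      have h6 := eq_of_heq h5
      injection h6 with _ h7
      rw [h7]
    · rintro ⟨X1, h⟩
      have hB : S.sB X1.1 = X.1 := by
        funext i
        refine lext fun x => ?_
        change S.q (X1.1 i (S.s x)) = _
        rw [h, S.qs]
      have hc : S.Closed X1.1 := by
        refine ⟨fun i x => by rw [h, S.qj, map_zero], ?_⟩
        rw [hB]; exact X.2.tf
      obtain ⟨⟨A, B, ζ⟩, ht⟩ := (S.gl_bij lam).2 ⟨X1, hc⟩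
      have ht : S.gl A B ζ = X1 := congrArg val ht
      have hBX : B = X := by
        apply sext
        rw [← hB, ← ht]
        exact (S.sB_glue A.1 B.1 ζ.1).symm
      subst hBX
      exact ⟨⟨A, ζ⟩, sext ht⟩
  rw [h1, card_sigma, cast_sum, sum_congr rfl (fun A _ => card_Zt hp hl A X)]
  rw [sum_const, nsmul_eq_mul, Finset.card_univ, card_eq_fintype_card]

theorem sum_nCE_bal (hp : ∀ i, 2 ≤ p i) (hl : Good lam) {d1 : Dv}
    (hb : d1 src = d1 snk) (X : TS lam d) :
    ∑ X1 : TS lam d1, nCE X1 X = ∑ g : GSur K d1 d, (card (TS lam g.ke) : ℚ) * zc K d g.ke := by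
  rw [← sum_congr rfl (fun g _ => card_lift hp hl g X)]
  simp only [nCE]
  rw [← cast_sum, ← cast_sum, ← card_sigma, ← card_sigma, Nat.cast_inj]
  refine card_congr
    { toFun := fun t => ⟨⟨Mo.un t.2.1, Mo.un_gd _, (CE_surj_of_bal hp hb t.2.2).1⟩, ⟨t.1, Mo.un_x _⟩⟩
      invFun := fun t => ⟨t.2.1, ⟨Mo.hom t.1.1 t.1.2.1 t.2.2, CE.of_surj t.1.2.2⟩⟩
      left_inv := fun t => rfl
      right_inv := fun t => rfl }

theorem cnt_bal (hp : ∀ i, 2 ≤ p i) (hl : Good lam) (hl' : Good lam') : ∀ (L : List Dv) (d)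
    (hb : base L d src = base L d snk),
    ∃ c : ℚ, (∀ X : TS lam d, cnt L X = c) ∧ (∀ X : TS lam' d, cnt L X = c) ∧
      (d src ≠ d snk → c = 0)
  | [], d, hb => ⟨1, fun _ => rfl, fun _ => rfl, fun h => absurd hb h⟩
  | d1 :: L, d, hb => by
    obtain ⟨c, h1, h2, h3⟩ := cnt_bal hp hl hl' L d1 hb
    have h4 : ∀ X : TS lam d, cnt (d1 :: L) X = (∑ X1 : TS lam d1, nCE X1 X) * c := fun X => by
      rw [cnt, chn, sum_mul]
      exact sum_congr rfl fun X1 _ => by rw [← h1 X1]; rfl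
    have h5 : ∀ X : TS lam' d, cnt (d1 :: L) X = (∑ X1 : TS lam' d1, nCE X1 X) * c := fun X => by
      rw [cnt, chn, sum_mul]
      exact sum_congr rfl fun X1 _ => by rw [← h2 X1]; rfl
    by_cases h1b : d1 src = d1 snk
    · by_cases hd : d src = d snk
      · refine ⟨(∑ g : GSur K d1 d, (card (TS lam g.ke) : ℚ) * zc K d g.ke) * c, fun X => ?_, fun X => ?_,
          fun h => absurd hd h⟩
        · rw [h4, sum_nCE_bal hp hl h1b]
        · rw [h5, sum_nCE_bal hp hl' h1b]
          congr 1
          exact sum_congr rfl fun g _ => by rw [card_TS hp hl hl']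
      · refine ⟨0, fun X => ?_, fun X => ?_, fun _ => rfl⟩
        · rw [h4, sum_eq_zero, zero_mul]
          intro X1 _
          rw [nCE, cast_eq_zero, card_eq_zero]
          exact Or.inl ⟨fun t => hd (CE_surj_of_bal hp h1b t.2).2⟩
        · rw [h5, sum_eq_zero, zero_mul]
          intro X1 _
          rw [nCE, cast_eq_zero, card_eq_zero]
          exact Or.inl ⟨fun t => hd (CE_surj_of_bal hp h1b t.2).2⟩
    · have hc := h3 h1b
      exact ⟨0, fun X => by rw [h4, hc, mul_zero], fun X => by rw [h5, hc, mul_zero], fun _ => rfl⟩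

end

section

variable {N : ℕ} {p : Fin N → ℕ} {K : Type} [Field K] [Finite K] [Fact (2 ≤ N)]
variable {d e f : Dv} {lam lam' : Fin (N - 2) → K}

/-! ### Chains ending at an unbalanced dimension vector -/

variable (N p) in
/-- The dimension vector of the simple representation at the sink. -/
def dS : Dv := fun v => if v = snk then 1 else 0

theorem gx_snk (X : TS lam d) {s : V K d} (hs : pr K d snk s = s) (i : Fin N) : X.1 i s = 0 := by
  have h := isGr_Mo.1 X.2.gr i snk
  rw [← pr_sum d (X.1 i s), ← hs]
  refine sum_eq_zero fun w _ => h w (fun h => ?_) s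
  simp [CanArrow] at h

theorem dS_snk : dS N p snk = 1 := if_pos rfl

/-- The coordinate of the one dimensional space at the sink. -/
def e1 : CanIdx N p (dS N p) := ⟨snk, ⟨0, by rw [dS_snk]; exact one_pos⟩⟩

theorem eq_e1 (a : CanIdx N p (dS N p)) : a = e1 := by
  obtain ⟨v, k⟩ := a
  by_cases h : v = snk
  · subst h
    have : (k : ℕ) < 1 := k.2.trans_eq dS_snk
    exact congrArg (Sigma.mk _) (Fin.ext (by change (k : ℕ) = 0; omega))
  · have h1 : dS N p v = 0 := if_neg h
    exact absurd k.2 (by omega)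

theorem pr_dS (x : V K (dS N p)) : pr K (dS N p) snk x = x := by
  funext a
  rw [eq_e1 a, pr_apply]
  exact if_pos rfl

/-- The homomorphism from a simple representation at the sink given by a vector at the sink. -/
noncomputable def sH (X1 : Fin N → End K (V K (dS N p))) (h1 : ∀ i x, X1 i x = 0) (X : TS lam d) {s : V K d}
    (hs : pr K d snk s = s) : Mo X1 →ₗ[Λ] Mo X.1 :=
  Mo.hom ((proj e1).smulRight s) (by
    intro v x
    change (pr K (dS N p) v x e1) • s = pr K d v (x e1 • s)
    rw [map_smul, ← hs, pr_orth, pr_apply]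
    by_cases h : v = snk
    · subst h
      rw [if_pos rfl]
      congr 1
    · rw [if_neg h, smul_zero, if_neg (fun h' => h (h'.symm)), zero_smul]) (by
    intro i x
    rw [h1, map_zero]
    change _ = X.1 i (x e1 • s)
    rw [map_smul, gx_snk X hs, smul_zero])

theorem sH_apply (X1 : Fin N → End K (V K (dS N p))) (h1 : ∀ i x, X1 i x = 0) (X : TS lam d) {s : V K d}
    (hs : pr K d snk s = s) (x : V K (dS N p)) : sH X1 h1 X hs (Mo.of X1 x) = x e1 • Mo.of X.1 s := rfl

/-- The generator of a simple representation at the sink. -/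
def ee : V K (dS N p) := fun _ => 1

theorem range_eq (X1 : Fin N → End K (V K (dS N p))) (X : TS lam d)
    (g : Mo X1 →ₗ[Λ] Mo X.1) :
    range g = span Λ {g (Mo.of X1 ee)} := by
  apply le_antisymm
  · rintro _ ⟨x, rfl⟩
    have : x = (x : V K (dS N p)) e1 • Mo.of X1 ee := by
      funext a
      rw [eq_e1 a]
      exact (mul_one _).symm
    rw [this, map_smul_K]
    exact Submodule.smul_of_tower_mem _ _ (Submodule.subset_span rfl)
  · exact (Submodule.span_singleton_le_iff_mem _ _).2 ⟨_, rfl⟩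

theorem range_sH (X1 : Fin N → End K (V K (dS N p))) (h1 : ∀ i x, X1 i x = 0) (X : TS lam d) {s : V K d}
    (hs : pr K d snk s = s) :
    range (sH X1 h1 X hs) = span Λ {Mo.of X.1 s} := by
  rw [range_eq, sH_apply]
  congr 2
  exact one_smul K _

theorem cyc0_zero (hp : ∀ i, 2 ≤ p i) (X : TS lam d) (h : d src < d snk) (hd : d ≠ dS N p) :
    cyc0 X = 0 := by
  rw [cyc0, cast_eq_zero, card_eq_zero]
  refine Or.inl ⟨?_⟩
  rintro ⟨s, ⟨h1, h2⟩, h3⟩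
  set U := span Λ {Mo.of X.1 s} with hU
  have hx : XX N p K (Mo X.1 ⧸ U) := by
    have h4 : CE U.subtype := by rw [CE, Submodule.range_subtype]; exact h3
    have h5 := CE.quot _ h4
    rwa [Submodule.range_subtype] at h5
  have hU : ∀ v, nd (N := N) (p := p) K U v = dS N p v := by
    intro v
    have hr := range_sH (0 : Fin N → End K (V K (dS N p))) (fun _ _ => rfl) X h1
    have hi : Function.Injective (sH (0 : Fin N → End K (V K (dS N p))) (fun _ _ => rfl) X h1) := by
      intro x y hxy
      have h4 : ((x : V K (dS N p)) e1) • s = ((y : V K (dS N p)) e1) • s := hxy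
      funext a
      rw [eq_e1 a]
      exact smul_left_injective K h2 h4
    rw [hU, ← hr, ← nd_equiv (LinearEquiv.ofInjective _ hi)]
    exact nd_Mo' _ v
  have h5 := nd_add X.2.gr U src
  have h6 := nd_add X.2.gr U snk
  rw [nd_Mo, hU] at h5 h6
  have h7 : dS N p src = 0 := if_neg (by simp)
  have h8 : dS N p snk = 1 := if_pos rfl
  have hs : Subsingleton (Mo X.1 ⧸ U) := by
    refine (XX.nd_lt hp (lam := lam) _ _ rfl (X.2.gr.of_surj (mkQ_surjective _))
      (X.2.rel.of_surj (mkQ_surjective _)) hx).resolve_right ?_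
    omega
  refine hd (funext fun v => ?_)
  have h9 := nd_add X.2.gr U v
  rw [nd_Mo, hU] at h9
  rw [h9, Nat.add_eq_left, nd]
  haveI : Subsingleton (CanAlg.comp (N := N) (p := p) K (Mo X.1 ⧸ U) v) := inferInstance
  exact finrank_zero_of_subsingleton

/-- Homomorphisms from the simple representation at the sink. -/
theorem nCE_dS (X1 : TS lam (dS N p)) (X : TS lam d) : nCE X1 X = cyc0 X + if tot d = 0 then 1 else 0 := by
  have h0 : ∀ i x, X1.1 i x = 0 := fun i x => gx_snk X1 (pr_dS x) i
  by_cases hd : tot d = 0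
  · have hs := subsingleton_V (K := K) hd
    have h1 : cyc0 X = 0 := by
      rw [cyc0, cast_eq_zero, card_eq_zero]
      exact Or.inl ⟨fun s => s.2.1.2 (Subsingleton.elim _ _)⟩
    rw [h1, if_pos hd, zero_add, nCE]
    haveI : Subsingleton (Mo X.1) := hs
    haveI : Unique {f : Mo X1.1 →ₗ[Λ] Mo X.1 // CE f} :=
      { default := ⟨0, CE.of_surj fun x => ⟨0, Subsingleton.elim _ _⟩⟩
        uniq := fun t => sext (lext fun x => Subsingleton.elim _ _) }
    rw [Nat.card_unique, Nat.cast_one]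
  · rw [if_neg hd, add_zero, nCE, cyc0, Nat.cast_inj]
    have hp : ∀ t : {f : Mo X1.1 →ₗ[Λ] Mo X.1 // CE f},
        (pr K d snk (Mo.un t.1 ee) = Mo.un t.1 ee ∧ Mo.un t.1 ee ≠ 0) ∧
        cl (span Λ {Mo.of X.1 (Mo.un t.1 ee)}) = ⊤ := by
      intro t
      have h3 : cl (span Λ {Mo.of X.1 (Mo.un t.1 ee)}) = ⊤ :=
        (congrArg cl (range_eq X1.1 X t.1)).symm.trans t.2
      refine ⟨⟨?_, fun h => hd ?_⟩, h3⟩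
      · exact (Mo.un_gd t.1 _ _).symm.trans (congrArg (Mo.un t.1) (pr_dS ee))
      · rw [h] at h3
        have h4 : span Λ {Mo.of X.1 (0 : V K d)} = ⊥ := Submodule.span_zero_singleton _
        rw [h4, cl_bot X.2.tf] at h3
        exact tot_of_subsingleton_Mo (A := X.1) (subsingleton_of_forall_eq 0 fun x => by
          have : x ∈ (⊤ : Submodule Λ (Mo X.1)) := trivial
          rwa [← h3] at this)
    refine card_congr (ofBijective (fun t => ⟨_, hp t⟩) ⟨?_, ?_⟩)
    · intro t t' h
      have h1 : Mo.un t.1 ee = Mo.un t'.1 ee := congrArg val h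
      apply sext
      refine lext fun x => ?_
      have : x = (x : V K (dS N p)) e1 • Mo.of X1.1 ee := by
        funext a
        rw [eq_e1 a]
        exact (mul_one _).symm
      rw [this, map_smul_K, map_smul_K]
      exact congrArg (fun z : V K d => (x : V K (dS N p)) e1 • z) h1
    · rintro ⟨s, ⟨h1, h2⟩, h3⟩
      refine ⟨⟨sH X1.1 h0 X h1, (congrArg cl (range_sH X1.1 h0 X h1)).trans h3⟩, sext ?_⟩
      exact one_smul K s

theorem src_append (L : List Dv) (d e) : base (L ++ [e]) d = e := by
  induction L generalizing d with
  | nil => rfl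
  | cons d1 L ih => exact ih d1

theorem cnt_append_dS : ∀ (L : List Dv) {d} (X : TS lam d), cnt (L ++ [dS N p]) X =
    card (TS (p := p) lam (dS N p)) * (cyc L X + if tot (base L d) = 0 then cnt L X else 0)
  | [], d, X => by
    change (∑ X1 : TS lam (dS N p), nCE X1 X * 1) = _
    simp_rw [mul_one, nCE_dS]
    rw [sum_const, nsmul_eq_mul, Finset.card_univ, card_eq_fintype_card]
    rfl
  | d1 :: L, d, X => by
    change (∑ X1 : TS lam d1, nCE X1 X * cnt (L ++ [dS N p]) X1) = _ * ((∑ X1 : TS lam d1, nCE X1 X * cyc L X1) +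
      if tot (base L d1) = 0 then (∑ X1 : TS lam d1, nCE X1 X * cnt L X1) else 0)
    simp_rw [cnt_append_dS L]
    split_ifs
    · rw [← Finset.sum_add_distrib, mul_sum]
      exact sum_congr rfl fun X1 _ => by ring
    · rw [add_zero, mul_sum]
      exact sum_congr rfl fun X1 _ => by ring

theorem CH_append_dS (L : List Dv) (d) : CH lam (L ++ [dS N p]) d =
    card (TS (p := p) lam (dS N p)) * (CYC lam L d + if tot (base L d) = 0 then CH lam L d else 0) := by
  rw [CH, sum_congr rfl (fun X _ => cnt_append_dS L X), ← mul_sum, Finset.sum_add_distrib]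
  congr 2
  split_ifs
  · rfl
  · exact Finset.sum_const_zero

theorem CH_nil (d : Dv) : CH lam [] d = card (TS lam d) := by
  change (∑ X : TS lam d, (1 : ℚ)) = _
  rw [sum_const, nsmul_eq_mul, mul_one, Finset.card_univ, card_eq_fintype_card]

theorem bet_pos (h : d snk ≠ 0) : 0 < bet K d := by
  haveI : Nonempty {s : V K d // pr K d snk s = s ∧ s ≠ 0} := by
    by_contra hc
    rw [not_nonempty_iff] at hc
    have := finrank_pr (K := K) d snk
    apply h
    rw [← this]
    have h0 : range (pr K d snk) = ⊥ := by
      rw [eq_bot_iff]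
      intro x hx
      rw [pr_mem] at hx
      by_contra h1
      exact hc.elim ⟨x, hx, h1⟩
    rw [h0, finrank_bot]
  exact Nat.cast_pos.2 Nat.card_pos

theorem tot_dS : 0 < tot (dS N p) := by
  refine Nat.pos_of_ne_zero fun h => ?_
  have := congrFun (tot_eq_zero.1 h) snk
  simp [dS] at this

/-- The numbers of chains do not depend on the parameters. -/
theorem CH_CYC (hp : ∀ i, 2 ≤ p i) (hl : Good lam) (hl' : Good lam') (n : ℕ) :
    ∀ (L : List Dv) d, tl L + tot d = n →
      CH lam L d = CH lam' L d ∧ CYC lam L d = CYC lam' L d := by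
  induction n using Nat.strong_induction_on with
  | _ n ih =>
    intro L d hn
    obtain ⟨E, hE, h⟩ := diff_id hp hl hl' L d (fun L' d' h => ih _ (hn ▸ h) L' d' rfl)
    have key : CH lam L d = CH lam' L d → CH lam L d = CH lam' L d ∧ CYC lam L d = CYC lam' L d := by
      intro h1
      rw [h1, sub_self, mul_zero] at h
      exact ⟨h1, sub_eq_zero.1 ((mul_eq_zero.1 h.symm).resolve_left hE.ne')⟩
    rcases lt_trichotomy (base L d src) (base L d snk) with hlt | heq | hgt
    · by_cases hs : base L d = dS N p
      · rcases L.eq_nil_or_concat with rfl | ⟨L', e, rfl⟩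
        · exact key (by rw [CH_nil, CH_nil, card_TS hp hl hl'])
        · apply key
          rw [List.concat_eq_append] at hs hn ⊢
          rw [src_append] at hs
          subst hs
          rw [CH_append_dS, CH_append_dS, card_TS hp hl hl']
          rw [tl_append] at hn
          have h0 := tot_dS (N := N) (p := p)
          obtain ⟨h1, h2⟩ := ih (tl L' + tot d) (by omega) L' d rfl
          rw [h1, h2]
      · have h0 : ∀ (l : Fin (N - 2) → K), CYC l L d = 0 := fun l =>
          sum_eq_zero fun X _ => chn_zero _ L X fun Y => cyc0_zero hp Y hlt hs
        rw [h0, h0, sub_self, mul_zero] at h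
        have hb : bet K (base L d) ≠ 0 := (bet_pos (by omega)).ne'
        refine ⟨sub_eq_zero.1 ((mul_eq_zero.1 h).resolve_left hb), by rw [h0, h0]⟩
    · apply key
      obtain ⟨c, h1, h2, -⟩ := cnt_bal hp hl hl' L d heq
      rw [CH, CH, sum_congr rfl (fun X _ => h1 X), sum_congr rfl (fun X _ => h2 X),
        sum_const, sum_const, Finset.card_univ, Finset.card_univ, ← card_eq_fintype_card,
        ← card_eq_fintype_card, card_TS hp hl hl']
    · apply key
      have h0 : ∀ (l : Fin (N - 2) → K), CH l L d = 0 := fun l =>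
          sum_eq_zero fun X _ => chn_zero _ L X fun Y => absurd Y.le (by omega)
      rw [h0, h0]

/-- The number of nilpotent endomorphisms of torsion free representations does not depend on the
parameters. -/
theorem NIL_indep (hp : ∀ i, 2 ≤ p i) (hl : Good lam) (hl' : Good lam') (d : Dv) :
    NIL lam d = NIL lam' d :=
  NIL_match hp hl hl' (fun L d => (CH_CYC hp hl hl' _ L d rfl).1) d

end

section

/-! ### Finite rings without nontrivial idempotents -/

/-- Some positive power of an element of a finite monoid is idempotent. -/
theorem exists_pow_idem {E : Type} [Monoid E] [Finite E] (x : E) :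
    ∃ n, 0 < n ∧ x ^ n * x ^ n = x ^ n := by
  obtain ⟨a, b, hab, h⟩ := Finite.exists_ne_map_eq_of_infinite (fun n : ℕ => x ^ n)
  wlog hlt : a < b generalizing a b
  · exact this b a hab.symm h.symm (by omega)
  have h1 : ∀ k, ∀ m, a ≤ m → x ^ (m + k * (b - a)) = x ^ m := by
    intro k
    induction k with
    | zero => intro m _; simp
    | succ k ih =>
      intro m hm
      have h2 : m + (k + 1) * (b - a) = b + (m - a) + k * (b - a) := by
        have : b - a + a = b := by omega
        have : m - a + a = m := by omega
        ring_nf; ring_nf at *; omega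
      rw [h2, ih _ (by omega), pow_add, ← h, ← pow_add]
      congr 1; omega
  refine ⟨(a + 1) * (b - a), Nat.mul_pos (by omega) (by omega), ?_⟩
  rw [← pow_add]
  refine h1 (a + 1) ((a + 1) * (b - a)) ?_
  have : (a + 1) * 1 ≤ (a + 1) * (b - a) := Nat.mul_le_mul_left _ (by omega)
  omega

/-- Nonzero rings without nontrivial idempotents. -/
structure Loc (E : Type) [Ring E] : Prop where
  ne : (1 : E) ≠ 0
  idem : ∀ e : E, e * e = e → e = 0 ∨ e = 1

section loc

variable {E : Type} [Ring E] [Finite E]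

theorem Loc.nil_or (h : Loc E) (x : E) : IsNilpotent x ∨ IsUnit x := by
  obtain ⟨n, hn, hx⟩ := exists_pow_idem x
  rcases h.idem _ hx with h0 | h1
  · exact Or.inl ⟨n, h0⟩
  · exact Or.inr (isUnit_pow_iff hn.ne' |>.1 (h1 ▸ isUnit_one))

theorem Loc.not_unit (h : Loc E) {x : E} (hx : IsNilpotent x) : ¬ IsUnit x := fun hu => by
  obtain ⟨n, hn⟩ := hx
  have := (hu.pow n)
  rw [hn, isUnit_zero_iff] at this
  exact h.ne this.symm

theorem Loc.nil_iff (h : Loc E) (x : E) : IsNilpotent x ↔ ¬ IsUnit x :=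
  ⟨h.not_unit, fun hx => (h.nil_or x).resolve_right hx⟩

theorem Loc.left_inv (h : Loc E) {x z : E} (hz : z * x = 1) : IsUnit x := by
  refine (h.nil_or x).resolve_left fun ⟨n, hn⟩ => h.ne ?_
  have : ∀ n : ℕ, z ^ n * x ^ n = 1 := by
    intro n
    induction n with
    | zero => simp
    | succ n ih => rw [pow_succ, pow_succ', mul_assoc, ← mul_assoc z x, hz, one_mul, ih]
  rw [← this n, hn, mul_zero]

theorem Loc.right_inv (h : Loc E) {x z : E} (hz : x * z = 1) : IsUnit x := by
  obtain ⟨u, rfl⟩ := h.left_inv hz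
  have : x = ↑u⁻¹ := by
    rw [← mul_one x, ← Units.mul_inv u, ← mul_assoc, hz, one_mul]
  rw [this]; exact Units.isUnit _

theorem Loc.mul_left (h : Loc E) (y : E) {x : E} (hx : IsNilpotent x) : IsNilpotent (y * x) := by
  rw [h.nil_iff] at *
  rintro ⟨u, hu⟩
  exact hx (h.left_inv (z := ↑u⁻¹ * y) (by rw [mul_assoc, ← hu, Units.inv_mul]))

theorem Loc.mul_right (h : Loc E) (y : E) {x : E} (hx : IsNilpotent x) : IsNilpotent (x * y) := by
  rw [h.nil_iff] at *
  rintro ⟨u, hu⟩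
  exact hx (h.right_inv (z := y * ↑u⁻¹) (by rw [← mul_assoc, ← hu, Units.mul_inv]))

theorem Loc.add (h : Loc E) {x y : E} (hx : IsNilpotent x) (hy : IsNilpotent y) :
    IsNilpotent (x + y) := by
  rw [h.nil_iff]
  rintro ⟨u, hu⟩
  have h1 : (↑u⁻¹ * y : E) = 1 - ↑u⁻¹ * x := by
    rw [eq_sub_iff_add_eq, ← mul_add, add_comm y, ← hu, Units.inv_mul]
  refine h.not_unit (h.mul_left (↑u⁻¹) hy) ?_
  rw [h1]
  exact (h.mul_left (↑u⁻¹) hx).isUnit_one_sub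

/-- A finite algebra without nontrivial idempotents has a residue field, with nil kernel. -/
theorem Loc.residue {K : Type} [Field K] [Algebra K E] (h : Loc E) :
    ∃ (D : Type) (_ : Field D) (_ : Algebra K D) (_ : Finite D) (π : E →ₐ[K] D),
      Surjective π ∧ ∀ x, π x = 0 ↔ IsNilpotent x := by
  let I : Ideal E :=
    { carrier := {x | IsNilpotent x}
      add_mem' := fun hx hy => h.add hx hy
      zero_mem' := IsNilpotent.zero
      smul_mem' := fun y _ hx => h.mul_left y hx }
  haveI : I.IsTwoSided := ⟨fun b hx => h.mul_right b hx⟩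
  have hmk : ∀ x, Ideal.Quotient.mk I x = 0 ↔ IsNilpotent x := fun x => Ideal.Quotient.eq_zero_iff_mem
  haveI : Nontrivial (E ⧸ I) := ⟨1, 0, fun h1 => by
    rw [← map_one (Ideal.Quotient.mk I), hmk] at h1
    exact h.not_unit h1 isUnit_one⟩
  have hu : ∀ a : E ⧸ I, a ≠ 0 → IsUnit a := by
    intro a ha
    obtain ⟨x, rfl⟩ := Ideal.Quotient.mk_surjective a
    refine IsUnit.map (Ideal.Quotient.mk I) ?_
    by_contra hx
    exact ha ((hmk x).2 ((h.nil_iff x).2 hx))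
  haveI : Finite (E ⧸ I) := Finite.of_surjective _ Ideal.Quotient.mk_surjective
  letI : DivisionRing (E ⧸ I) := DivisionRing.ofIsUnitOrEqZero fun a => by
    by_cases ha : a = 0
    · exact Or.inr ha
    · exact Or.inl (hu a ha)
  letI : Field (E ⧸ I) := littleWedderburn (E ⧸ I)
  exact ⟨E ⧸ I, inferInstance, inferInstanceAs (Algebra K (E ⧸ I)), inferInstance,
    Ideal.Quotient.mkₐ K I, Ideal.Quotient.mk_surjective, hmk⟩

end loc

end

section

/-! ### Weights of finite algebras -/

variable {K : Type} [Field K] (P : Polynomial K)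

/-- The number of elements of an algebra at which a polynomial becomes nilpotent. -/
noncomputable def nP (E : Type) [Ring E] [Algebra K E] : ℕ :=
  card {x : E // IsNilpotent (aeval x P)}

/-- The proportion of elements at which a polynomial becomes nilpotent, relative to the units. -/
noncomputable def wt (E : Type) [Ring E] [Algebra K E] : ℚ := nP P E / card Eˣ

variable {E E' : Type} [Ring E] [Algebra K E] [Ring E'] [Algebra K E']

theorem card_preimage {E E' : Type} [AddGroup E] [AddGroup E'] [Finite E] (π : E →+ E') (hs : Surjective π)
    (q : E' → Prop) : card {x : E // q (π x)} = card {x : E // π x = 0} * card {y : E' // q y} := by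
  haveI : Finite E' := Finite.of_surjective _ hs
  haveI : Fintype {y : E' // q y} := Fintype.ofFinite _
  have e : {x : E // q (π x)} ≃ Σ y : {y : E' // q y}, {x : E // π x = y} :=
    { toFun := fun x => ⟨⟨π x, x.2⟩, ⟨x, rfl⟩⟩
      invFun := fun y => ⟨y.2.1, by rw [y.2.2]; exact y.1.2⟩
      left_inv := fun x => rfl
      right_inv := by
        rintro ⟨⟨y, hy⟩, ⟨x, h⟩⟩
        have h : π x = y := h
        subst h; rfl }
  rw [card_congr e, card_sigma, sum_congr rfl (g := fun _ => card {x : E // π x = 0})]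
  · rw [sum_const, Finset.card_univ, smul_eq_mul, mul_comm, card_eq_fintype_card (α := {y : E' // q y})]
  · rintro ⟨y, hy⟩ -
    obtain ⟨x0, rfl⟩ := hs y
    refine card_congr ((Equiv.addRight (-x0)).subtypeEquiv fun x => ?_)
    change π x = π x0 ↔ π (x + -x0) = 0
    rw [map_add, map_neg, ← sub_eq_add_neg, sub_eq_zero]

theorem card_units (E : Type) [Monoid E] : card Eˣ = card {x : E // IsUnit x} :=
  card_congr (ofBijective (fun u : Eˣ => (⟨u, u.isUnit⟩ : {x : E // IsUnit x}))
    ⟨fun u v h => Units.ext (congrArg val h), fun ⟨x, u, hu⟩ => ⟨u, sext hu⟩⟩)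

theorem wt_surj [Finite E] (π : E →ₐ[K] E') (hs : Surjective π)
    (hn : ∀ x, π x = 0 → IsNilpotent x) : wt P E = wt P E' := by
  haveI : Finite E' := Finite.of_surjective _ hs
  have hu : ∀ x, IsUnit x ↔ IsUnit (π x) := by
    intro x
    refine ⟨fun h => h.map π, fun h => ?_⟩
    obtain ⟨y', h1, h2⟩ := isUnit_iff_exists.1 h
    obtain ⟨y, rfl⟩ := hs y'
    have k1 : IsUnit (x * y) := by
      have : IsNilpotent (1 - x * y) := hn _ (by rw [map_sub, map_mul, h1, map_one, sub_self])
      simpa using this.isUnit_one_sub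
    have k2 : IsUnit (y * x) := by
      have : IsNilpotent (1 - y * x) := hn _ (by rw [map_sub, map_mul, h2, map_one, sub_self])
      simpa using this.isUnit_one_sub
    obtain ⟨u, hu⟩ := k1
    obtain ⟨v, hv⟩ := k2
    refine isUnit_iff_exists_and_exists.2 ⟨⟨y * ↑u⁻¹, ?_⟩, ⟨↑v⁻¹ * y, ?_⟩⟩
    · rw [← mul_assoc, ← hu, Units.mul_inv]
    · rw [mul_assoc, ← hv, Units.inv_mul]
  have hp : ∀ x, IsNilpotent (aeval x P) ↔ IsNilpotent (aeval (π x) P) := by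
    intro x
    rw [aeval_algHom_apply]
    refine ⟨fun h => h.map π, fun ⟨n, h⟩ => ?_⟩
    rw [← map_pow] at h
    obtain ⟨k, hk⟩ := hn _ h
    exact ⟨n * k, by rw [pow_mul, hk]⟩
  have h1 := card_preimage π.toRingHom.toAddMonoidHom hs (fun y => IsNilpotent (aeval y P))
  have h2 := card_preimage π.toRingHom.toAddMonoidHom hs (fun y => IsUnit y)
  have h1' : nP P E = _ := (card_congr (Equiv.subtypeEquivRight hp)).trans h1
  have h2' := (card_congr (Equiv.subtypeEquivRight hu)).trans h2
  have h0 : (card {x : E // π.toRingHom.toAddMonoidHom x = 0} : ℚ) ≠ 0 := by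
    haveI : Nonempty {x : E // π.toRingHom.toAddMonoidHom x = 0} := ⟨⟨0, map_zero _⟩⟩
    exact_mod_cast Nat.card_pos.ne'
  rw [wt, wt, h1', card_units, h2', card_units, Nat.cast_mul, Nat.cast_mul]
  exact mul_div_mul_left _ _ h0

theorem wt_equiv [Finite E] (π : E ≃ₐ[K] E') : wt P E = wt P E' :=
  wt_surj P π.toAlgHom π.surjective fun x hx => by
    have : x = 0 := π.injective (hx.trans (map_zero π).symm)
    rw [this]; exact IsNilpotent.zero

end

section

/-! ### Indecomposable summands of finite modules -/

section mods
variable {A : Type} [Ring A]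

instance {S T : Type} [AddCommGroup S] [AddCommGroup T] [Module A S] [Module A T] [Finite S] [Finite T] :
    Finite (S →ₗ[A] T) :=
  Finite.of_injective (fun f => (f : S → T)) DFunLike.coe_injective

instance {S : Type} [AddCommGroup S] [Module A S] [Finite S] : Finite (End A S) :=
  inferInstanceAs (Finite (S →ₗ[A] S))

variable {S T : Type} [AddCommGroup S] [Module A S] [AddCommGroup T] [Module A T]

/-- A map between indecomposables through which an automorphism factors is invertible. -/
theorem iso_of_unit (h1 : (1 : End A S) ≠ 0) (hT : Loc (End A T)) (f : S →ₗ[A] T) (g : T →ₗ[A] S)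
    (hu : IsUnit (g ∘ₗ f : End A S)) : Nonempty (S ≃ₗ[A] T) := by
  obtain ⟨u, hu⟩ := hu
  have hl : ∀ x, (↑u⁻¹ : End A S) (g (f x)) = x := fun x => by
    have := lcongr_fun (Units.inv_mul u) x
    rw [hu] at this; exact this
  have hr : ∀ x, g (f ((↑u⁻¹ : End A S) x)) = x := fun x => by
    have := lcongr_fun (Units.mul_inv u) x
    rw [hu] at this; exact this
  have he := hT.idem (f ∘ₗ (↑u⁻¹ : End A S) ∘ₗ g) (lext fun x => by
    change f ((↑u⁻¹ : End A S) (g (f ((↑u⁻¹ : End A S) (g x))))) = _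
    rw [hr]; rfl)
  rcases he with he | he
  · refine absurd (lext fun x => ?_) h1
    have := congrArg g (lcongr_fun he (f x))
    change g (f ((↑u⁻¹ : End A S) (g (f x)))) = g 0 at this
    rw [hr, map_zero] at this
    have h2 := hl x
    rw [this, map_zero] at h2
    exact h2.symm
  · exact ⟨LinearEquiv.ofLinearMap f ((↑u⁻¹ : End A S) ∘ₗ g) he (lext hl)⟩

/-- A nonzero finite module has an indecomposable direct summand. -/
theorem exists_summand (n : ℕ) : ∀ (W : Type) [AddCommGroup W] [Module A W] [Finite W] [Nontrivial W],
    card W = n → ∃ (T : Submodule A W) (r : W →ₗ[A] T), (∀ t : T, r t = t) ∧ Loc (End A T) := by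
  induction n using Nat.strong_induction_on with
  | _ n ih =>
  intro W _ _ _ _ hn
  have h1 : (1 : End A W) ≠ 0 := fun h => by
    obtain ⟨x, hx⟩ := exists_ne (0 : W)
    exact hx (lcongr_fun h x)
  by_cases hW : ∀ e : End A W, e * e = e → e = 0 ∨ e = 1
  · have hL : Loc (End A W) := ⟨h1, hW⟩
    have E : W ≃ₗ[A] (⊤ : Submodule A W) := Submodule.topEquiv.symm
    refine ⟨⊤, LinearMap.id.codRestrict ⊤ (fun _ => trivial), fun t => sext rfl, ?_, ?_⟩
    · intro h
      obtain ⟨x, hx⟩ := exists_ne (0 : W)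
      exact hx (congrArg val (lcongr_fun h ⟨x, trivial⟩))
    · intro e he
      let e' : End A W := (Submodule.subtype ⊤) ∘ₗ e ∘ₗ LinearMap.id.codRestrict ⊤ (fun _ => trivial)
      have he' : ∀ x : (⊤ : Submodule A W), e' x = e x := fun x => rfl
      have := hW e' (lext fun x => congrArg val (lcongr_fun he ⟨x, trivial⟩))
      rcases this with h | h
      · exact Or.inl (lext fun x => sext ((he' x).symm.trans (lcongr_fun h x)))
      · exact Or.inr (lext fun x => sext ((he' x).symm.trans (lcongr_fun h x)))
  · push Not at hW
    obtain ⟨e, he, h0, h1⟩ := hW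
    have hee : ∀ x, e (e x) = e x := fun x => lcongr_fun he x
    have hlt : card (range e) < n := by
      rw [← hn]
      refine lt_of_le_of_ne (Nat.card_le_card_of_injective _ (range e).injective_subtype) fun h => h1 ?_
      have hs := ((Nat.bijective_iff_injective_and_card (range e).subtype).2
        ⟨(range e).injective_subtype, h⟩).2
      refine lext fun x => ?_
      obtain ⟨⟨_, y, rfl⟩, hy⟩ := hs x
      have hy : e y = x := hy
      rw [← hy]; exact hee y
    haveI : Nontrivial (range e) := by
      rw [Submodule.nontrivial_iff_ne_bot]
      exact fun h => h0 (LinearMap.range_eq_bot.1 h)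
    obtain ⟨T, r, hr, hT⟩ := ih _ hlt (range e) rfl
    let T' := T.map (range e).subtype
    let E : T ≃ₗ[A] T' := Submodule.equivMapOfInjective _ (range e).injective_subtype T
    refine ⟨T', E.toLinearMap ∘ₗ r ∘ₗ e.rangeRestrict, ?_, ?_⟩
    · rintro ⟨_, ⟨⟨_, y, rfl⟩, ht, rfl⟩⟩
      have h2 : e.rangeRestrict (e y) = ⟨e y, ⟨y, rfl⟩⟩ := sext (hee y)
      change E (r (e.rangeRestrict (e y))) = _
      rw [h2, hr ⟨_, ht⟩]
      rfl
    · refine ⟨fun h => hT.ne ?_, fun f hf => ?_⟩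
      · refine lext fun x => E.injective ?_
        have := lcongr_fun h (E x)
        simpa using this
      · have := hT.idem (E.symm.toLinearMap ∘ₗ f ∘ₗ E.toLinearMap) (lext fun x => by
          have := lcongr_fun hf (E x)
          change f (f (E x)) = f (E x) at this
          simp [this])
        rcases this with h | h
        · refine Or.inl (lext fun x => E.symm.injective ?_)
          have := lcongr_fun h (E.symm x)
          simpa using this
        · refine Or.inr (lext fun x => E.symm.injective ?_)
          have := lcongr_fun h (E.symm x)
          simpa using this

theorem Loc.of_equiv {R R' : Type} [Ring R] [Ring R'] (E : R ≃+* R') (h : Loc R) : Loc R' :=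
  ⟨fun h1 => h.ne (E.injective (by rw [map_one, map_zero, h1])), fun e he =>
    (h.idem (E.symm e) (by rw [← map_mul, he])).imp (fun h => by simpa using h) (fun h => by simpa using h)⟩

theorem Loc.of_iso (E : S ≃ₗ[A] T) (h : Loc (End A S)) : Loc (End A T) :=
  h.of_equiv E.conjRingEquiv

end mods

end

section

/-! ### Direct sums of indecomposables -/

/-- A family of pairwise non-isomorphic finite modules without nontrivial idempotent
endomorphisms, together with their residue fields. -/
structure Fam (K A : Type) [Field K] [Ring A] [Algebra K A] where
  I : Type
  S : I → Type
  ac : ∀ c, AddCommGroup (S c)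
  ma : ∀ c, Module A (S c)
  mo : ∀ c, Module K (S c)
  st : ∀ c, IsScalarTower K A (S c)
  fi : ∀ c, Finite (S c)
  loc : ∀ c, Loc (End A (S c))
  dist : ∀ c c', Nonempty (S c ≃ₗ[A] S c') → c = c'
  D : I → Type
  fD : ∀ c, Field (D c)
  aD : ∀ c, Algebra K (D c)
  fiD : ∀ c, Finite (D c)
  π : ∀ c, End A (S c) →ₐ[K] D c
  sur : ∀ c, Surjective (π c)
  ker : ∀ c x, π c x = 0 ↔ IsNilpotent x

attribute [instance] Fam.ac Fam.ma Fam.mo Fam.st Fam.fi Fam.fD Fam.aD Fam.fiD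

namespace Fam

variable {K A : Type} [Field K] [Ring A] [Algebra K A] (Φ : Fam K A)

/-- The index set of the summands with prescribed multiplicities. -/
abbrev J (m : Φ.I → ℕ) : Type := Σ c, Fin (m c)

/-- The direct sum with prescribed multiplicities. -/
abbrev M (m : Φ.I → ℕ) : Type := ∀ a : Φ.J m, Φ.S a.1

variable {Φ}

theorem nil_mul_left {c} (y : End A (Φ.S c)) {x : End A (Φ.S c)} (h : Φ.π c x = 0) : Φ.π c (y * x) = 0 := by
  rw [map_mul, h, mul_zero]

/-- Composites through a different member of the family are nilpotent. -/
theorem pi_ne {c c' : Φ.I} (h : c' ≠ c) (f : Φ.S c →ₗ[A] Φ.S c') (g : Φ.S c' →ₗ[A] Φ.S c) :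
    Φ.π c (g ∘ₗ f) = 0 := by
  rw [Φ.ker, (Φ.loc c).nil_iff]
  exact fun hu => h (Φ.dist c c' (iso_of_unit (Φ.loc c).ne (Φ.loc c') f g hu)).symm

variable (Φ) in
/-- Maps that do not split, even partially. -/
def Rad (c : Φ.I) (W : Type) [AddCommGroup W] [Module A W] : Type :=
  {f : Φ.S c →ₗ[A] W // ∀ g : W →ₗ[A] Φ.S c, Φ.π c (g ∘ₗ f) = 0}

open Classical in
/-- Inclusion of a summand. -/
noncomputable def inc {m : Φ.I → ℕ} (a : Φ.J m) : Φ.S a.1 →ₗ[A] Φ.M m := single A (fun a : Φ.J m => Φ.S a.1) a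

/-- Projection to a summand. -/
def prj {m : Φ.I → ℕ} (a : Φ.J m) : Φ.M m →ₗ[A] Φ.S a.1 := proj a

theorem prj_inc {m : Φ.I → ℕ} (a : Φ.J m) : prj a ∘ₗ inc a = LinearMap.id := by
  classical
  exact lext fun x => by simp [prj, inc]

theorem prj_inc_ne {m : Φ.I → ℕ} {a b : Φ.J m} (h : a ≠ b) : prj a ∘ₗ inc b = 0 := by
  classical
  exact lext fun x => by simp [prj, inc, h]

section
variable {m : Φ.I → ℕ} [Fintype (Φ.J m)]

theorem sum_inc (x : Φ.M m) : ∑ a, inc a (prj a x) = x := by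
  classical
  simp only [inc, prj]
  exact LinearMap.sum_single_apply _ x

/-- Modulo the radical, only the summands of the given type contribute. -/
theorem pi_sum (c : Φ.I) (f : Φ.S c →ₗ[A] Φ.M m) (g : Φ.M m →ₗ[A] Φ.S c) :
    Φ.π c (g ∘ₗ f) = ∑ k : Fin (m c), Φ.π c (g ∘ₗ inc ⟨c, k⟩) * Φ.π c (prj ⟨c, k⟩ ∘ₗ f) := by
  have h1 : (g ∘ₗ f : End A (Φ.S c)) = ∑ a : Φ.J m, (g ∘ₗ inc a) ∘ₗ (prj a ∘ₗ f) := by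
    refine lext fun x => ?_
    rw [LinearMap.sum_apply]
    conv_lhs => rw [comp_apply, ← sum_inc (f x), map_sum]
    rfl
  rw [h1, map_sum]
  refine (Fintype.sum_of_injective (fun k : Fin (m c) => (⟨c, k⟩ : Φ.J m))
    (fun k l h => by simpa using h) _ _ ?_ fun k => ?_).symm
  · rintro ⟨c', k⟩ hk
    refine pi_ne (fun h => hk ?_) _ _
    subst h; exact ⟨k, rfl⟩
  · rw [← map_mul]; rfl

theorem mem_rad {c : Φ.I} (f : Φ.S c →ₗ[A] Φ.M m) :
    (∀ g : Φ.M m →ₗ[A] Φ.S c, Φ.π c (g ∘ₗ f) = 0) ↔ ∀ k, Φ.π c (prj ⟨c, k⟩ ∘ₗ f) = 0 := by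
  refine ⟨fun h k => h _, fun h g => ?_⟩
  rw [pi_sum]
  exact sum_eq_zero fun k _ => by rw [h k, mul_zero]

theorem card_hom (c : Φ.I) :
    card (Φ.S c →ₗ[A] Φ.M m) = card (Φ.Rad c (Φ.M m)) * card (Φ.D c) ^ m c := by
  let θ : (Φ.S c →ₗ[A] Φ.M m) →+ (Fin (m c) → Φ.D c) :=
    { toFun := fun f k => Φ.π c (prj ⟨c, k⟩ ∘ₗ f)
      map_zero' := by ext k; simp
      map_add' := fun f g => by ext k; rw [LinearMap.comp_add]; exact map_add _ _ _ }
  have hs : Surjective θ := by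
    intro y
    choose x hx using fun k => Φ.sur c (y k)
    refine ⟨∑ k, inc ⟨c, k⟩ ∘ₗ (x k : Φ.S c →ₗ[A] Φ.S c), funext fun k => ?_⟩
    refine (congrArg (Φ.π c) (lext fun z => ?_)).trans (hx k)
    rw [comp_apply, LinearMap.sum_apply, map_sum, sum_eq_single k]
    · exact lcongr_fun (prj_inc (Φ := Φ) (m := m) ⟨c, k⟩) _
    · intro l _ hl
      exact lcongr_fun (prj_inc_ne (Φ := Φ) (m := m) (a := ⟨c, k⟩) (b := ⟨c, l⟩) (fun h => hl (by simpa using h.symm))) _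
    · simp
  have h := card_preimage θ hs (fun _ => True)
  have e1 : card {x : Φ.S c →ₗ[A] Φ.M m // True} = card (Φ.S c →ₗ[A] Φ.M m) :=
    card_congr (Equiv.subtypeUnivEquiv fun _ => trivial)
  have e2 : card {y : Fin (m c) → Φ.D c // True} = card (Φ.D c) ^ m c := by
    rw [card_congr (Equiv.subtypeUnivEquiv fun _ => trivial), Nat.card_fun, card_eq_fintype_card (α := Fin (m c)), Fintype.card_fin]
  rw [e1, e2] at h
  rw [h]
  congr 1
  refine card_congr (Equiv.subtypeEquivRight fun f => ?_)
  rw [mem_rad]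
  exact funext_iff

end

theorem card_rad_congr {W W' : Type} [AddCommGroup W] [Module A W] [AddCommGroup W'] [Module A W']
    (E : W ≃ₗ[A] W') (c : Φ.I) : card (Φ.Rad c W) = card (Φ.Rad c W') := by
  have k1 : ∀ {U U' : Type} [AddCommGroup U] [Module A U] [AddCommGroup U'] [Module A U'] (e : U ≃ₗ[A] U')
      (f : Φ.S c →ₗ[A] U), (∀ g : U →ₗ[A] Φ.S c, Φ.π c (g ∘ₗ f) = 0) →
      ∀ g : U' →ₗ[A] Φ.S c, Φ.π c (g ∘ₗ (e.toLinearMap ∘ₗ f)) = 0 :=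
    fun e f h g => h (g ∘ₗ e.toLinearMap)
  exact card_congr
    { toFun := fun f => ⟨_, k1 E f.1 f.2⟩
      invFun := fun f => ⟨_, k1 E.symm f.1 f.2⟩
      left_inv := fun f => sext (lext fun x => E.symm_apply_apply _)
      right_inv := fun f => sext (lext fun x => E.apply_symm_apply _) }

end Fam

end

section

namespace Fam

variable {K A : Type} [Field K] [Ring A] [Algebra K A] {Φ : Fam K A}

/-- Multiplicities of indecomposable summands are determined by the direct sum. -/
theorem uniq {m m' : Φ.I → ℕ} [Fintype (Φ.J m)] [Fintype (Φ.J m')] (E : Φ.M m ≃ₗ[A] Φ.M m') : m = m' := by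
  funext c
  have h1 := card_hom (m := m) c
  have h2 := card_hom (m := m') c
  rw [← card_rad_congr E, ← card_congr (⟨fun f => E.toLinearMap ∘ₗ f, fun f => E.symm.toLinearMap ∘ₗ f,
    fun f => lext fun x => E.symm_apply_apply _, fun f => lext fun x => E.apply_symm_apply _⟩ :
    (Φ.S c →ₗ[A] Φ.M m) ≃ (Φ.S c →ₗ[A] Φ.M m')), h1] at h2
  have h0 : 0 < card (Φ.Rad c (Φ.M m)) := by
    haveI : Nonempty (Φ.Rad c (Φ.M m)) := ⟨⟨0, fun g => by simp⟩⟩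
    haveI : Finite (Φ.Rad c (Φ.M m)) := inferInstanceAs (Finite {f : Φ.S c →ₗ[A] Φ.M m // _})
    exact Nat.card_pos
  exact Nat.pow_right_injective (Finite.one_lt_card (α := Φ.D c)) (Nat.eq_of_mul_eq_mul_left h0 h2)

/-- The semisimple quotient of the endomorphism algebra of a direct sum. -/
abbrev SS (Φ : Fam K A) (m : Φ.I → ℕ) : Type := ∀ c, Matrix (Fin (m c)) (Fin (m c)) (Φ.D c)

section
variable {m : Φ.I → ℕ} [Fintype (Φ.J m)]

/-- Reduction of endomorphisms of a direct sum to matrices over the residue fields. -/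
noncomputable def red (m : Φ.I → ℕ) [Fintype (Φ.J m)] : End A (Φ.M m) →ₐ[K] Φ.SS m :=
  { toFun := fun φ c => Matrix.of fun i j => Φ.π c (prj ⟨c, i⟩ ∘ₗ φ ∘ₗ inc ⟨c, j⟩)
    map_one' := by
      funext c; ext i j
      by_cases h : i = j
      · subst h
        simp only [Matrix.of_apply, Pi.one_apply, Matrix.one_apply_eq]
        refine Eq.trans (congrArg (Φ.π c) ?_) (map_one (Φ.π c))
        exact prj_inc _
      · simp only [Matrix.of_apply, Pi.one_apply, Matrix.one_apply_ne h]
        refine Eq.trans (congrArg (Φ.π c) ?_) (map_zero (Φ.π c))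
        exact prj_inc_ne (a := (⟨c, i⟩ : Φ.J m)) (b := ⟨c, j⟩) (fun h' => h (by simpa using h'))
    map_mul' := fun φ ψ => by
      funext c; ext i j
      simp only [Matrix.of_apply, Pi.mul_apply, Matrix.mul_apply]
      exact pi_sum c (ψ ∘ₗ inc ⟨c, j⟩) (prj ⟨c, i⟩ ∘ₗ φ)
    map_zero' := by
      funext c; ext i j
      exact (congrArg (Φ.π c) (by simp)).trans (map_zero (Φ.π c))
    map_add' := fun φ ψ => by
      funext c; ext i j
      refine Eq.trans (congrArg (Φ.π c) ?_) (map_add (Φ.π c) _ _)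
      rw [LinearMap.add_comp, LinearMap.comp_add]
    commutes' := fun r => by
      funext c; ext i j
      by_cases h : i = j
      · subst h
        simp only [Matrix.of_apply, Pi.algebraMap_apply, Matrix.algebraMap_matrix_apply, if_true]
        refine Eq.trans (congrArg (Φ.π c) (lext fun x => ?_)) ((Φ.π c).commutes r)
        exact congrArg (fun y => r • y) (lcongr_fun (prj_inc (Φ := Φ) (m := m) ⟨c, i⟩) x)
      · simp only [Matrix.of_apply, Pi.algebraMap_apply, Matrix.algebraMap_matrix_apply, if_neg h]
        refine Eq.trans (congrArg (Φ.π c) (lext fun x => ?_)) (map_zero (Φ.π c))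
        refine (congrArg (fun y => r • y) (lcongr_fun (prj_inc_ne (Φ := Φ) (m := m) (a := ⟨c, i⟩)
          (b := ⟨c, j⟩) (fun h' => h (by simpa using h'))) x)).trans (smul_zero r) }

theorem red_apply (φ : End A (Φ.M m)) (c i j) :
    red m φ c i j = Φ.π c (prj ⟨c, i⟩ ∘ₗ φ ∘ₗ inc ⟨c, j⟩) := rfl

theorem red_surj : Surjective (red (Φ := Φ) m) := by
  intro B
  choose x hx using fun c (i j : Fin (m c)) => Φ.sur c (B c i j)
  refine ⟨LinearMap.pi fun a => ∑ k : Fin (m a.1), (x a.1 a.2 k : Φ.S a.1 →ₗ[A] Φ.S a.1) ∘ₗ prj ⟨a.1, k⟩, ?_⟩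
  funext c; ext i j
  rw [red_apply]
  refine (congrArg (Φ.π c) (lext fun z => ?_)).trans (hx c i j)
  change (∑ k : Fin (m c), (x c i k : Φ.S c →ₗ[A] Φ.S c) ∘ₗ prj ⟨c, k⟩ : Φ.M m →ₗ[A] Φ.S c) (inc ⟨c, j⟩ z) = _
  rw [LinearMap.sum_apply, sum_eq_single j]
  · exact congrArg (x c i j) (lcongr_fun (prj_inc (Φ := Φ) (m := m) ⟨c, j⟩) _)
  · intro l _ hl
    exact (congrArg (x c i l) (lcongr_fun (prj_inc_ne (Φ := Φ) (m := m) (a := ⟨c, l⟩) (b := ⟨c, j⟩)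
      (fun h => hl (by simpa using h))) _)).trans (map_zero _)
  · simp

/-- If the family contains all indecomposable summands, the reduction has nil kernel. -/
theorem red_nil (hcov : ∀ (T : Submodule A (Φ.M m)), Loc (End A T) → ∃ c, Nonempty (Φ.S c ≃ₗ[A] T))
    (φ : End A (Φ.M m)) (hφ : red m φ = 0) : IsNilpotent φ := by
  obtain ⟨n, hn, he⟩ := exists_pow_idem φ
  refine ⟨n, ?_⟩
  set e := φ ^ n with hedef
  have h0 : red m e = 0 := by rw [hedef, map_pow, hφ, zero_pow hn.ne']
  by_contra hne
  have hee : ∀ x, e (e x) = e x := fun x => lcongr_fun he x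
  haveI : Nontrivial (range e) := by
    rw [Submodule.nontrivial_iff_ne_bot]
    exact fun h => hne (LinearMap.range_eq_bot.1 h)
  obtain ⟨T, r, hr, hT⟩ := exists_summand (A := A) _ (range e) rfl
  let T' := T.map (range e).subtype
  let E : T ≃ₗ[A] T' := Submodule.equivMapOfInjective _ (range e).injective_subtype T
  obtain ⟨c, ⟨α⟩⟩ := hcov T' (Loc.of_iso (S := T) (T := T') E hT)
  let β := α.trans E.symm
  let f : Φ.S c →ₗ[A] Φ.M m := (range e).subtype ∘ₗ T.subtype ∘ₗ β.toLinearMap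
  have hef : ∀ x, e (f x) = f x := by
    intro x
    obtain ⟨y, hy⟩ := (T.subtype (β x)).2
    change e (T.subtype (β x)).1 = (T.subtype (β x)).1
    rw [← hy, hee]
  have hmem := (mem_rad f).2 fun k => by
    have h1 : prj ⟨c, k⟩ ∘ₗ f = (prj ⟨c, k⟩ ∘ₗ e) ∘ₗ f := lext fun x => congrArg (prj (⟨c, k⟩ : Φ.J m)) (hef x).symm
    rw [h1, pi_sum]
    refine sum_eq_zero fun l _ => ?_
    have h2 := congrFun (congrFun (congrFun h0 c) k) l
    have h3 : Φ.π c ((prj ⟨c, k⟩ ∘ₗ e) ∘ₗ inc ⟨c, l⟩) = 0 := h2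
    rw [h3, zero_mul]
  have := hmem (β.symm.toLinearMap ∘ₗ r ∘ₗ e.rangeRestrict)
  refine one_ne_zero ((map_one (Φ.π c)).symm.trans ((congrArg (Φ.π c) (lext fun x => ?_)).trans this))
  change x = β.symm (r (e.rangeRestrict (f x)))
  have h4 : e.rangeRestrict (f x) = T.subtype (β x) := sext (hef x)
  rw [h4]
  exact ((congrArg β.symm (hr (β x))).trans (β.symm_apply_apply x)).symm

theorem wt_red (P : Polynomial K)
    (hcov : ∀ (T : Submodule A (Φ.M m)), Loc (End A T) → ∃ c, Nonempty (Φ.S c ≃ₗ[A] T)) :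
    wt P (End A (Φ.M m)) = wt P (Φ.SS m) :=
  wt_surj P (red m) red_surj (red_nil hcov)

end

end Fam

end

section

namespace Fam

variable {K A : Type} [Field K] [Ring A] [Algebra K A] {Φ : Fam K A}

/-- Finite modules are direct sums of indecomposables. -/
theorem exists_sum (n : ℕ) : ∀ (W : Type) [AddCommGroup W] [Module A W] [Finite W], card W = n →
    (∀ T : Submodule A W, Loc (End A T) → ∃ c, Nonempty (Φ.S c ≃ₗ[A] T)) →
    ∃ (ι : Type) (_ : Finite ι) (a : ι → Φ.I), Nonempty (W ≃ₗ[A] ∀ x, Φ.S (a x)) := by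
  induction n using Nat.strong_induction_on with
  | _ n ih =>
  intro W _ _ _ hn hcov
  rcases subsingleton_or_nontrivial W with hW | hW
  · refine ⟨Empty, inferInstance, Empty.elim, ⟨LinearEquiv.ofBijective 0 ⟨fun x y _ => Subsingleton.elim _ _, fun y => ⟨0, ?_⟩⟩⟩⟩
    exact funext fun x => x.elim
  obtain ⟨T, r, hr, hT⟩ := exists_summand (A := A) _ W rfl
  have hlt : card (LinearMap.ker r) < n := by
    rw [← hn]
    refine lt_of_le_of_ne (Nat.card_le_card_of_injective _ (LinearMap.ker r).injective_subtype) fun h => hT.ne ?_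
    have hs := ((Nat.bijective_iff_injective_and_card (LinearMap.ker r).subtype).2
      ⟨(LinearMap.ker r).injective_subtype, h⟩).2
    refine lext fun x => ?_
    obtain ⟨y, hy⟩ := hs x
    have h1 : r x = 0 := by rw [← hy]; exact y.2
    exact (hr x).symm.trans h1
  obtain ⟨ι, _, a, ⟨E⟩⟩ := ih _ hlt (LinearMap.ker r) rfl fun T' hT' => by
    let E' : T' ≃ₗ[A] T'.map (LinearMap.ker r).subtype :=
      Submodule.equivMapOfInjective _ (LinearMap.ker r).injective_subtype T'
    obtain ⟨c, ⟨α⟩⟩ := hcov _ (Loc.of_iso (S := T') E' hT')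
    exact ⟨c, ⟨α.trans E'.symm⟩⟩
  obtain ⟨c, ⟨α⟩⟩ := hcov T hT
  have E1 : W ≃ₗ[A] T × LinearMap.ker r :=
    (Submodule.prodEquivOfIsCompl T (LinearMap.ker r) (LinearMap.isCompl_of_proj hr)).symm
  have E2 : (T × LinearMap.ker r) ≃ₗ[A] Φ.S c × ∀ x, Φ.S (a x) := LinearEquiv.prodCongr (R := A) α.symm E
  exact ⟨Option ι, inferInstance, fun o => o.elim c a, ⟨(E1.trans E2).trans
    (LinearEquiv.piOptionEquivProd (M := fun o : Option ι => Φ.S (o.elim c a)) A).symm⟩⟩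

theorem exists_mult (W : Type) [AddCommGroup W] [Module A W] [Finite W]
    (hcov : ∀ T : Submodule A W, Loc (End A T) → ∃ c, Nonempty (Φ.S c ≃ₗ[A] T)) :
    ∃ (m : Φ.I → ℕ) (_ : Finite (Φ.J m)), Nonempty (W ≃ₗ[A] Φ.M m) := by
  obtain ⟨ι, _, a, ⟨E⟩⟩ := exists_sum (Φ := Φ) _ W rfl hcov
  let m : Φ.I → ℕ := fun c => card {x // a x = c}
  let e : ι ≃ Φ.J m := (Equiv.sigmaFiberEquiv a).symm.trans
    (Equiv.sigmaCongrRight fun c => Finite.equivFin {x // a x = c})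
  exact ⟨m, Finite.of_equiv _ e, ⟨E.trans (LinearEquiv.piCongrLeft A (fun z : Φ.J m => Φ.S z.1) e)⟩⟩

end Fam

variable {N : ℕ} {p : Fin N → ℕ} {K : Type} [Field K] [Fact (2 ≤ N)]
variable {d e f : Dv} {lam lam' : Fin (N - 2) → K}

/-! ### The family of indecomposable torsion free representations -/

/-- Torsion free modules. -/
structure IsT (p : Fin N → ℕ) (lam : Fin (N - 2) → K) (M : Type) [AddCommGroup M] [Module K M]
    [Module Λ M] [IsScalarTower K Λ M] : Prop where
  gr : IsGr N p K M
  rel : IsRel p lam M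
  tf : TF N p K M

section
variable {M M' : Type} [AddCommGroup M] [Module K M] [Module Λ M] [IsScalarTower K Λ M]
  [AddCommGroup M'] [Module K M'] [Module Λ M'] [IsScalarTower K Λ M']

theorem IsT.of_inj (h : IsT p lam M') (f : M →ₗ[Λ] M') (hf : Function.Injective f) : IsT p lam M :=
  ⟨IsGr.of_inj h.gr hf, IsRel.of_inj h.rel hf, h.tf.of_inj f hf⟩

/-- A linear map out of the underlying space. -/
def Mo.out (X : Fin N → End K (V K d)) (f : V K d →ₗ[K] M) : Mo X →ₗ[K] M := f

theorem exists_Mo (h : IsGr N p K M) [FiniteDimensional K M] : ∃ (d : Dv) (X : Fin N → End K (V K d)),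
    Nonempty (Mo X ≃ₗ[Λ] M) := by
  obtain ⟨φ, hφ⟩ := exists_std (fun v => (act (ge v : Λ) : M →ₗ[K] M)) (fun v w x => h.orth v w x) h.sum
  let X : Fin N → End K (V K fun v => finrank K (range (act (ge v : Λ) : M →ₗ[K] M))) :=
    fun i => φ.symm.toLinearMap ∘ₗ act (gx i : Λ) ∘ₗ φ.toLinearMap
  refine ⟨_, X, ⟨?_⟩⟩
  refine LinearEquiv.ofBijective (mkHom (Mo.out X φ.toLinearMap) ?_ ?_) φ.bijective
  · intro v m
    rw [Mo.ge_smul]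
    exact hφ v m
  · intro i m
    rw [Mo.gx_smul]
    exact φ.apply_symm_apply _

theorem TS.isT (X : TS lam d) : IsT p lam (Mo X.1) := ⟨X.2.gr, X.2.rel, X.2.tf⟩

theorem IsT.exists_TS (h : IsT p lam M) [FiniteDimensional K M] : ∃ (d : Dv) (X : TS lam d),
    Nonempty (Mo X.1 ≃ₗ[Λ] M) := by
  obtain ⟨d, X, ⟨E⟩⟩ := exists_Mo h.gr
  have := h.of_inj E.toLinearMap E.injective
  exact ⟨d, ⟨X, this.gr, this.rel, this.tf⟩, ⟨E⟩⟩
end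

/-- Isomorphism of torsion free representations. -/
def isoS (lam : Fin (N - 2) → K) (d : Dv) : Setoid (TS lam d) where
  r X Y := Nonempty (Mo X.1 ≃ₗ[Λ] Mo Y.1)
  iseqv := ⟨fun X => ⟨LinearEquiv.refl _ _⟩, fun ⟨E⟩ => ⟨E.symm⟩, fun ⟨E⟩ ⟨E'⟩ => ⟨E.trans E'⟩⟩

/-- Isomorphism classes of torsion free representations. -/
def Cl (lam : Fin (N - 2) → K) (d : Dv) : Type := Quotient (isoS lam d)

instance [Finite K] : Finite (Cl lam d) := Quotient.finite _

/-- The class of a torsion free representation. -/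
def cls (X : TS lam d) : Cl lam d := Quotient.mk (isoS lam d) X

/-- A representative of a class. -/
noncomputable def rep (c : Cl lam d) : TS lam d := Quotient.out c

theorem cls_rep (c : Cl lam d) : cls (rep c) = c := Quotient.out_eq c

theorem cls_eq {X Y : TS lam d} : cls X = cls Y ↔ Nonempty (Mo X.1 ≃ₗ[Λ] Mo Y.1) :=
  Quotient.eq (r := isoS lam d)

/-- Indecomposable classes of a given dimension vector. -/
def Ind (lam : Fin (N - 2) → K) (d : Dv) : Type :=
  {c : Cl lam d // Loc (End Λ (Mo (rep c).1))}

instance [Finite K] : Finite (Ind lam d) := inferInstanceAs (Finite {c : Cl lam d // _})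

section
variable [Finite K]

theorem dim_eq_of_iso {X : Fin N → End K (V K d)} {Y : Fin N → End K (V K e)}
    (E : Mo X ≃ₗ[Λ] Mo Y) : d = e := by
  funext v
  rw [← nd_Mo' X v, nd_equiv E, nd_Mo']

/-- A choice of residue field. -/
theorem Ind.res (c : Σ d, Ind (p := p) lam d) :
    ∃ (D : Type) (_ : Field D) (_ : Algebra K D) (_ : Finite D) (π : End Λ (Mo (rep c.2.1).1) →ₐ[K] D),
      Surjective π ∧ ∀ x, π x = 0 ↔ IsNilpotent x := Loc.residue c.2.2

/-- The family of all indecomposable torsion free representations. -/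
noncomputable def fam (p : Fin N → ℕ) (lam : Fin (N - 2) → K) : Fam K Λ where
  I := Σ d, Ind (p := p) lam d
  S c := Mo (rep c.2.1).1
  ac c := inferInstance
  ma c := inferInstance
  mo c := inferInstance
  st c := inferInstance
  fi c := inferInstance
  loc c := c.2.2
  dist := by
    rintro ⟨d, c⟩ ⟨d', c'⟩ ⟨E⟩
    obtain rfl := dim_eq_of_iso E
    congr 1
    exact sext ((cls_rep c.1).symm.trans ((cls_eq.2 ⟨E⟩).trans (cls_rep c'.1)))
  D c := (Ind.res c).choose
  fD c := (Ind.res c).choose_spec.choose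
  aD c := (Ind.res c).choose_spec.choose_spec.choose
  fiD c := (Ind.res c).choose_spec.choose_spec.choose_spec.choose
  π c := (Ind.res c).choose_spec.choose_spec.choose_spec.choose_spec.choose
  sur c := (Ind.res c).choose_spec.choose_spec.choose_spec.choose_spec.choose_spec.1
  ker c := (Ind.res c).choose_spec.choose_spec.choose_spec.choose_spec.choose_spec.2

theorem fam_cov {M : Type} [AddCommGroup M] [Module K M] [Module Λ M] [IsScalarTower K Λ M]
    [Finite M] (h : IsT p lam M) (hL : Loc (End Λ M)) : ∃ c, Nonempty ((fam p lam).S c ≃ₗ[Λ] M) := by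
  obtain ⟨d, X, ⟨E⟩⟩ := h.exists_TS
  have h1 : Nonempty (Mo (rep (cls X)).1 ≃ₗ[Λ] Mo X.1) := cls_eq.1 (cls_rep _)
  obtain ⟨E'⟩ := h1
  exact ⟨⟨d, cls X, hL.of_iso (E'.trans E).symm⟩, ⟨E'.trans E⟩⟩

end

end

section

namespace Fam
variable {K A : Type} [Field K] [Ring A] [Algebra K A]

/-- A subfamily. -/
def sub (Φ : Fam K A) (s : Φ.I → Prop) : Fam K A where
  I := {c // s c}
  S c := Φ.S c.1
  ac c := Φ.ac c.1
  ma c := Φ.ma c.1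
  mo c := Φ.mo c.1
  st c := Φ.st c.1
  fi c := Φ.fi c.1
  loc c := Φ.loc c.1
  dist c c' h := sext (Φ.dist c.1 c'.1 h)
  D c := Φ.D c.1
  fD c := Φ.fD c.1
  aD c := Φ.aD c.1
  fiD c := Φ.fiD c.1
  π c := Φ.π c.1
  sur c := Φ.sur c.1
  ker c := Φ.ker c.1

/-- Finite extensions of the same cardinality are isomorphic. -/
theorem exists_algEquiv [Finite K] {D D' : Type} [Field D] [Field D'] [Algebra K D] [Algebra K D'] [Finite D] [Finite D']
    (h : card D = card D') : Nonempty (D ≃ₐ[K] D') := by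
  haveI := Fintype.ofFinite D
  haveI := Fintype.ofFinite D'
  have h2 : card D = card K ^ finrank K D := Module.natCard_eq_pow_finrank
  have h3 : card D' = card K ^ finrank K D := h.symm.trans h2
  haveI : Polynomial.IsSplittingField K D (X ^ card K ^ finrank K D - X) := by
    rw [← h2, card_eq_fintype_card]
    exact FiniteField.isSplittingField_sub D K
  haveI : Polynomial.IsSplittingField K D' (X ^ card K ^ finrank K D - X) := by
    rw [← h3, card_eq_fintype_card]
    exact FiniteField.isSplittingField_sub D' K
  exact ⟨(Polynomial.IsSplittingField.algEquiv _ (X ^ card K ^ finrank K D - X)).trans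
    (Polynomial.IsSplittingField.algEquiv _ _).symm⟩

/-- The semisimple quotient only depends on the multiplicities and residue fields. -/
theorem wt_SS [Finite K] (P : Polynomial K) {Φ Φ' : Fam K A} (σ : Φ.I ≃ Φ'.I)
    (hσ : ∀ c, card (Φ.D c) = card (Φ'.D (σ c))) (m : Φ'.I → ℕ) [Finite (Φ.SS fun c => m (σ c))] :
    wt P (Φ.SS fun c => m (σ c)) = wt P (Φ'.SS m) := by
  let e := fun c => (exists_algEquiv (K := K) (hσ c)).some
  exact wt_equiv P ((AlgEquiv.piCongrRight fun c => (e c).mapMatrix).trans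
    (AlgEquiv.piCongrLeft K (fun c => Matrix (Fin (m c)) (Fin (m c)) (Φ'.D c)) σ))

end Fam

variable {N : ℕ} {p : Fin N → ℕ} {K : Type} [Field K] [Fact (2 ≤ N)]
variable {d e f : Dv} {lam lam' : Fin (N - 2) → K}

section
variable {J : Type} {M : J → Type} [∀ a, AddCommGroup (M a)] [∀ a, Module K (M a)]
  [∀ a, Module Λ (M a)] [∀ a, IsScalarTower K Λ (M a)]

theorem IsT.pi (h : ∀ a, IsT p lam (M a)) : IsT p lam (∀ a, M a) := by
  refine ⟨⟨fun v w m => ?_, fun m => ?_, fun i v w hvw m => ?_⟩, fun j m => ?_, fun v h1 ⟨n, h2⟩ h3 h4 m => ?_⟩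
  · funext a
    refine ((h a).gr.orth v w (m a)).trans ?_
    split_ifs <;> rfl
  · funext a
    rw [Finset.sum_apply]
    exact (h a).gr.sum (m a)
  · exact funext fun a => (h a).gr.supp i v w hvw (m a)
  · exact funext fun a => (h a).rel j (m a)
  · funext a
    exact (h a).tf (fun k => v k a) (fun k => congrFun (h1 k) a) ⟨n, fun k hk => congrFun (h2 k hk) a⟩
      (congrFun h3 a) (fun k => congrFun (h4 k) a) m

theorem nd_pi [Finite K] [∀ a, Finite (M a)] [Fintype J] (h : ∀ a, IsGr N p K (M a)) (v : CanVertex N p) :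
    nd (N := N) (p := p) K (∀ a, M a) v = ∑ a, nd (N := N) (p := p) K (M a) v := by
  have key : ∀ {W : Type} [AddCommGroup W] [Module K W] [Module Λ W] [IsScalarTower K Λ W]
      [Finite W], (∀ m : W, (ge v : Λ) • (ge v : Λ) • m = (ge v : Λ) • m) →
      card {x : W // (ge v : Λ) • x = x} = card K ^ nd (N := N) (p := p) K W v := by
    intro W _ _ _ _ _ hW
    rw [nd, ← Module.natCard_eq_pow_finrank (K := K)]
    refine card_congr (Equiv.subtypeEquivRight fun x => ⟨fun hx => ⟨x, hx⟩, ?_⟩)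
    rintro ⟨y, rfl⟩
    exact hW y
  have h1 := key (W := ∀ a, M a) (fun m => funext fun a => (h a).ge_self v (m a))
  have h2 : card {x : ∀ a, M a // (ge v : Λ) • x = x} = ∏ a, card {x : M a // (ge v : Λ) • x = x} := by
    rw [← Nat.card_pi]
    exact card_congr ⟨fun x a => ⟨x.1 a, congrFun x.2 a⟩, fun x => ⟨fun a => x a, funext fun a => (x a).2⟩,
      fun x => rfl, fun x => rfl⟩
  rw [h1, Finset.prod_congr rfl fun a _ => key (W := M a) ((h a).ge_self v), Finset.prod_pow_eq_pow_sum] at h2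
  exact Nat.pow_right_injective (Finite.one_lt_card (α := K)) h2

end

end

section

variable {N : ℕ} {p : Fin N → ℕ} {K : Type} [Field K] [Fact (2 ≤ N)]
variable {d e f : Dv} {lam lam' : Fin (N - 2) → K}

theorem finrank_V (d : Dv) : finrank K (V K d) = tot d := by
  rw [finrank_fintype_fun_eq_card, tot]
  exact (Fintype.card_sigma).trans (sum_congr rfl fun v _ => Fintype.card_fin _)

section
variable [Finite K]

/-- The indecomposables of total dimension smaller than that of `d`. -/
noncomputable def small (lam : Fin (N - 2) → K) (d : Dv) : Fam K Λ :=
  (fam p lam).sub fun c => tot c.1 < tot d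

/-- The dimension vector of a small indecomposable. -/
def sdim (c : (small lam d).I) : Dv := c.1.1

theorem small_isT (c : (small lam d).I) : IsT p lam ((small lam d).S c) := TS.isT (rep c.1.2.1)

theorem small_finrank (c : (small lam d).I) : finrank K ((small lam d).S c) = tot (sdim c) := finrank_V c.1.1

theorem small_nd (c : (small lam d).I) (v : CanVertex N p) :
    nd (N := N) (p := p) K ((small lam d).S c) v = sdim c v := nd_Mo (rep c.1.2.1) v

/-- Multiplicity vectors of total dimension vector `d`. -/
def Mul (lam : Fin (N - 2) → K) (d : Dv) : Type :=
  {m : (small lam d).I → ℕ // ∃ _ : Fintype ((small lam d).J m), ∀ v, ∑ a : (small lam d).J m, sdim a.1 v = d v}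

section
variable {M : Type} [AddCommGroup M] [Module K M] [Module Λ M] [IsScalarTower K Λ M]
    [Finite M]

/-- In a decomposable module, only small indecomposables occur as summands. -/
theorem small_cov (h : IsT p lam M) (hf : finrank K M = tot d) (hn : ¬ Loc (End Λ M))
    (T : Submodule Λ M) (hT : Loc (End Λ T)) :
    ∃ c, Nonempty ((small lam d).S c ≃ₗ[Λ] T) := by
  obtain ⟨c, ⟨E⟩⟩ := fam_cov (h.of_inj T.subtype T.injective_subtype) hT
  refine ⟨⟨c, ?_⟩, ⟨E⟩⟩
  have h1 : finrank K ((fam p lam).S c) = tot c.1 := finrank_V c.1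
  have h2 : finrank K ((fam p lam).S c) = finrank K T := (E.restrictScalars K).finrank_eq
  have h3 : T.restrictScalars K < ⊤ := by
    refine lt_top_iff_ne_top.2 fun h4 => hn ?_
    have h5 : T = ⊤ := Submodule.restrictScalars_injective K _ _ h4
    subst h5
    exact hT.of_iso Submodule.topEquiv
  haveI : Module.Finite K M := Module.Finite.of_finite
  exact lt_of_eq_of_lt (h1.symm.trans h2) (lt_of_lt_of_eq (Submodule.finrank_lt h3.ne) hf)
end

theorem Mul.finrank (m : (small lam d).I → ℕ) [Fintype ((small lam d).J m)]
    (hm : ∀ v, ∑ a : (small lam d).J m, sdim a.1 v = d v) : finrank K ((small lam d).M m) = tot d := by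
  haveI : ∀ c, Module.Finite K ((small lam d).S c) := fun c => Module.Finite.of_finite
  rw [Module.finrank_pi_fintype, tot, ← sum_congr rfl fun v _ => hm v, sum_comm]
  exact sum_congr rfl fun a _ => small_finrank a.1

theorem Mul.isT (m : (small lam d).I → ℕ) : IsT p lam ((small lam d).M m) := IsT.pi fun a => small_isT a.1

theorem Mul.not_loc (m : (small lam d).I → ℕ) [Fintype ((small lam d).J m)]
    (hm : ∀ v, ∑ a : (small lam d).J m, sdim a.1 v = d v) : ¬ Loc (End Λ ((small lam d).M m)) := by
  intro h
  by_cases hJ : Nonempty ((small lam d).J m)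
  · obtain ⟨a⟩ := hJ
    have hu : IsUnit (Fam.prj a ∘ₗ Fam.inc a : End Λ ((small lam d).S a.1)) := by
      rw [Fam.prj_inc]
      exact isUnit_one
    obtain ⟨E⟩ := iso_of_unit ((small lam d).loc a.1).ne h (Fam.inc a) (Fam.prj a) hu
    have h1 := (E.restrictScalars K).finrank_eq
    rw [Mul.finrank m hm, small_finrank] at h1
    exact a.1.2.ne h1
  · rw [not_nonempty_iff] at hJ
    exact h.ne (lext fun x => funext fun a => hJ.elim a)

theorem Mul.exists_cls (m : (small lam d).I → ℕ) [Fintype ((small lam d).J m)]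
    (hm : ∀ v, ∑ a : (small lam d).J m, sdim a.1 v = d v) :
    ∃ q : Cl lam d, Nonempty (Mo (rep q).1 ≃ₗ[Λ] (small lam d).M m) := by
  obtain ⟨e, X, ⟨E⟩⟩ := (Mul.isT m).exists_TS
  obtain rfl : e = d := by
    funext v
    rw [← hm v, ← nd_Mo X v, nd_equiv E v, nd_pi fun a => (small_isT a.1).gr]
    exact sum_congr rfl fun a _ => small_nd a.1 v
  obtain ⟨E'⟩ := cls_eq.1 (cls_rep (cls X))
  exact ⟨cls X, ⟨E'.trans E⟩⟩

theorem exists_mul (q : Cl lam d) (hq : ¬ Loc (End Λ (Mo (rep q).1))) :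
    ∃ m : Mul lam d, Nonempty (Mo (rep q).1 ≃ₗ[Λ] (small lam d).M m.1) := by
  obtain ⟨m, hJ, ⟨E⟩⟩ := Fam.exists_mult (Φ := small lam d) (Mo (rep q).1) (small_cov (rep q).isT (finrank_V d) hq)
  haveI := Fintype.ofFinite ((small lam d).J m)
  refine ⟨⟨m, inferInstance, fun v => ?_⟩, ⟨E⟩⟩
  rw [← nd_Mo (rep q) v, nd_equiv E v, nd_pi fun a => (small_isT a.1).gr]
  exact sum_congr rfl fun a _ => (small_nd a.1 v).symm

/-- Decomposable classes. -/
abbrev Dec (lam : Fin (N - 2) → K) (d : Dv) : Type :=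
  {q : Cl lam d // ¬ Loc (End Λ (Mo (rep q).1))}

noncomputable def toMul (q : Dec lam d) : Mul lam d := (exists_mul q.1 q.2).choose

theorem toMul_iso (q : Dec lam d) : Nonempty (Mo (rep q.1).1 ≃ₗ[Λ] (small lam d).M (toMul q).1) :=
  (exists_mul q.1 q.2).choose_spec

theorem toMul_bij : Bijective (toMul : Dec lam d → Mul lam d) := by
  refine ⟨fun q q' h => ?_, fun m => ?_⟩
  · obtain ⟨E⟩ := toMul_iso q
    obtain ⟨E'⟩ := toMul_iso q'
    rw [h] at E
    exact sext ((cls_rep q.1).symm.trans ((cls_eq.2 ⟨E.trans E'.symm⟩).trans (cls_rep q'.1)))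
  · obtain ⟨m, hJ, hm⟩ := m
    obtain ⟨q, ⟨E⟩⟩ := Mul.exists_cls m hm
    refine ⟨⟨q, fun h => Mul.not_loc m hm (h.of_iso E)⟩, ?_⟩
    obtain ⟨E'⟩ := toMul_iso ⟨q, fun h => Mul.not_loc m hm (h.of_iso E)⟩
    refine sext ?_
    obtain ⟨hJ', -⟩ := (toMul ⟨q, fun h => Mul.not_loc m hm (h.of_iso E)⟩).2
    exact Fam.uniq (E'.symm.trans E)

theorem wt_toMul (P : Polynomial K) (q : Dec lam d) :
    wt P (End Λ (Mo (rep q.1).1)) = wt P ((small lam d).SS (toMul q).1) := by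
  obtain ⟨E⟩ := toMul_iso q
  obtain ⟨hJ, hm⟩ := (toMul q).2
  rw [← Fam.wt_red P (small_cov (Mul.isT _) (Mul.finrank _ hm) (Mul.not_loc _ hm))]
  refine wt_equiv P (AlgEquiv.ofRingEquiv (f := E.conjRingEquiv) fun k => lext fun x => ?_)
  exact ((E.restrictScalars K).map_smul k _).trans (congrArg (k • ·) (E.apply_symm_apply x))

/-- The decomposable classes have the same weights for two parameters, as soon as the smaller
indecomposables match. -/
theorem dec_sum (P : Polynomial K) (σ : (small lam d).I ≃ (small lam' d).I) (h1 : ∀ c, sdim (σ c) = sdim c)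
    (h2 : ∀ c, card ((small lam d).D c) = card ((small lam' d).D (σ c))) :
    ∑ᶠ q : Dec lam d, wt P (End Λ (Mo (rep q.1).1)) =
      ∑ᶠ q : Dec lam' d, wt P (End Λ (Mo (rep q.1).1)) := by
  let τ : Mul lam' d → Mul lam d := fun m => ⟨fun c => m.1 (σ c), by
    obtain ⟨m, hJ, hm⟩ := m
    let ε : (small lam d).J (fun c => m (σ c)) ≃ (small lam' d).J m := Equiv.sigmaCongrLeft (β := fun c => Fin (m c)) σ
    refine ⟨Fintype.ofEquiv _ ε.symm, fun v => ?_⟩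
    letI := Fintype.ofEquiv _ ε.symm
    rw [← hm v]
    exact Fintype.sum_equiv ε _ _ fun a => congrFun (h1 a.1).symm v⟩
  have hτ : Bijective τ := by
    refine ⟨fun m m' h => sext (funext fun c => ?_), fun m => ?_⟩
    · have := congrFun (congrArg val h) (σ.symm c)
      simpa [τ] using this
    · obtain ⟨m, hJ, hm⟩ := m
      let ε : (small lam' d).J (fun c => m (σ.symm c)) ≃ (small lam d).J m :=
        Equiv.sigmaCongrLeft (β := fun c => Fin (m c)) σ.symm
      refine ⟨⟨fun c => m (σ.symm c), Fintype.ofEquiv _ ε.symm, fun v => ?_⟩, ?_⟩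
      · letI := Fintype.ofEquiv _ ε.symm
        rw [← hm v]
        refine Fintype.sum_equiv ε _ _ fun a => ?_
        have := h1 (σ.symm a.1)
        rw [Equiv.apply_symm_apply] at this
        exact congrFun this v
      · exact sext (funext fun c => congrArg m (σ.symm_apply_apply c))
  rw [finsum_congr fun q : Dec lam d => wt_toMul P q, finsum_congr fun q : Dec lam' d => wt_toMul P q,
    finsum_eq_of_bijective (g := fun m : Mul lam d => wt P ((small lam d).SS m.1)) toMul toMul_bij fun _ => rfl,
    finsum_eq_of_bijective (g := fun m : Mul lam' d => wt P ((small lam' d).SS m.1)) toMul toMul_bij fun _ => rfl]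
  refine (finsum_eq_of_bijective τ hτ fun m => ?_).symm
  obtain ⟨hJ, hm⟩ := (τ m).2
  haveI : Finite ((small lam d).SS fun c => m.1 (σ c)) := Finite.of_surjective _ (Fam.red_surj (m := (τ m).1))
  exact (Fam.wt_SS P σ h2 m.1).symm

end

end

section

variable {N : ℕ} {p : Fin N → ℕ} {K : Type} [Field K] [Fact (2 ≤ N)] [Finite K]
variable {d e f : Dv} {lam lam' : Fin (N - 2) → K}

variable (K) in
/-- Graded automorphisms of the standard graded space. -/
def GA (d : Dv) : Type := {g : V K d ≃ₗ[K] V K d // IsGd K g.toLinearMap}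

instance : Finite (V K d ≃ₗ[K] V K d) :=
  Finite.of_injective (fun g => (g : V K d → V K d)) DFunLike.coe_injective

instance : Finite (GA K d) := inferInstanceAs (Finite {g : V K d ≃ₗ[K] V K d // _})

instance : Nonempty (GA K d) := ⟨⟨LinearEquiv.refl _ _, fun _ _ => rfl⟩⟩

/-- The underlying graded automorphism of an isomorphism. -/
noncomputable def Mo.ga {X Y : Fin N → End K (V K d)} (E : Mo X ≃ₗ[Λ] Mo Y) : GA K d :=
  ⟨LinearEquiv.ofBijective (Mo.un E.toLinearMap) E.bijective, Mo.un_gd E.toLinearMap⟩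

theorem finite_iso {S T A : Type} [Ring A] [AddCommGroup S] [AddCommGroup T] [Module A S] [Module A T] [Finite S] [Finite T] :
    Finite (S ≃ₗ[A] T) := Finite.of_injective (fun f => (f : S → T)) DFunLike.coe_injective

/-- The orbit counting formula. -/
theorem card_orbit (q : Cl lam d) : card {X : TS lam d // cls X = q} *
    card (End Λ (Mo (rep q).1))ˣ = card (GA K d) := by
  have h1 : card (Σ X : {X : TS lam d // cls X = q}, Mo (rep q).1 ≃ₗ[Λ] Mo X.1.1) = card (GA K d) := by
    refine card_congr (ofBijective (fun z => Mo.ga z.2) ⟨?_, fun g => ?_⟩)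
    · rintro ⟨⟨X, hX⟩, E⟩ ⟨⟨X', hX'⟩, E'⟩ h
      have h0 : ∀ x, (E x : V K d) = E' x := fun x => LinearEquiv.congr_fun (congrArg val h) x
      obtain rfl : X = X' := by
        refine sext (funext fun i => lext fun y => ?_)
        obtain ⟨x, hx⟩ := E.surjective (Mo.of X.1 y)
        have h2 := Mo.un_x E.toLinearMap i x
        have h3 := Mo.un_x E'.toLinearMap i x
        have h4 : Mo.un E.toLinearMap x = y := hx
        have h5 : Mo.un E'.toLinearMap x = y := (h0 x).symm.trans hx
        rw [h4] at h2
        rw [h5] at h3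
        exact h2.symm.trans ((h0 _).trans h3)
      obtain rfl : E = E' := LinearEquiv.ext h0
      rfl
    · obtain ⟨g, hg⟩ := g
      let Y : Fin N → End K (V K d) := fun i => g.toLinearMap ∘ₗ (rep q).1 i ∘ₗ g.symm.toLinearMap
      let E : Mo (rep q).1 ≃ₗ[Λ] Mo Y := LinearEquiv.ofBijective (Mo.hom g.toLinearMap hg fun i x => by
        exact congrArg (fun z => g ((rep q).1 i z)) (g.symm_apply_apply x).symm) g.bijective
      have h := (rep q).isT.of_inj E.symm.toLinearMap E.symm.injective
      exact ⟨⟨⟨⟨Y, h.gr, h.rel, h.tf⟩, (cls_eq.2 ⟨E.symm⟩).trans (cls_rep q)⟩, E⟩, sext (LinearEquiv.ext fun x => rfl)⟩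
  haveI : Finite {X : TS lam d // cls X = q} := inferInstance
  haveI := Fintype.ofFinite {X : TS lam d // cls X = q}
  haveI : ∀ X : {X : TS lam d // cls X = q}, Finite (Mo (rep q).1 ≃ₗ[Λ] Mo X.1.1) := fun X => finite_iso
  rw [← h1, card_sigma, sum_congr rfl fun X _ => ?_, sum_const, Finset.card_univ, smul_eq_mul,
    card_eq_fintype_card]
  obtain ⟨X, hX⟩ := X
  obtain ⟨E⟩ := cls_eq.1 ((cls_rep q).trans hX.symm)
  refine card_congr (Equiv.trans ?_ (LinearMap.GeneralLinearGroup.generalLinearEquiv Λ (Mo (rep q).1)).toEquiv.symm)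
  exact ⟨fun F => F.trans E.symm, fun F => F.trans E, fun F => LinearEquiv.ext fun x => E.apply_symm_apply _,
    fun F => LinearEquiv.ext fun x => E.symm_apply_apply _⟩

theorem nP_congr (P : Polynomial K) {E E' : Type} [Ring E] [Algebra K E] [Ring E'] [Algebra K E'] (e : E ≃ₐ[K] E') :
    nP P E = nP P E' := by
  refine card_congr (e.toEquiv.subtypeEquiv fun x => ?_)
  change _ ↔ IsNilpotent (aeval (e x) P)
  rw [aeval_algHom_apply e x P]
  exact (IsNilpotent.map_iff e.injective).symm

/-- Isomorphic modules have isomorphic endomorphism algebras. -/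
def conjAlg {S T A : Type} [Ring A] [Algebra K A] [AddCommGroup S] [AddCommGroup T] [Module A S] [Module A T]
    [Module K S] [Module K T] [IsScalarTower K A S] [IsScalarTower K A T] (E : S ≃ₗ[A] T) :
    End A S ≃ₐ[K] End A T :=
  AlgEquiv.ofRingEquiv (f := E.conjRingEquiv) fun k => lext fun x =>
    ((E.restrictScalars K).map_smul k _).trans (congrArg (k • ·) (E.apply_symm_apply x))

variable (P : Polynomial K)

/-- Pairs of a torsion free structure and an endomorphism at which `P` is nilpotent. -/
noncomputable def NP (lam : Fin (N - 2) → K) (d : Dv) : ℕ :=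
  card (Σ X : TS lam d, {x : End Λ (Mo X.1) // IsNilpotent (aeval x P)})

theorem NP_eq : (NP P lam d : ℚ) = card (GA K d) * ∑ᶠ q : Cl lam d, wt P (End Λ (Mo (rep q).1)) := by
  classical
  haveI := Fintype.ofFinite (TS lam d)
  haveI := Fintype.ofFinite (Cl lam d)
  haveI : ∀ q : Cl lam d, Finite {X : TS lam d // cls X = q} := fun q => inferInstance
  haveI : ∀ q : Cl lam d, Fintype {X : TS lam d // cls X = q} := fun q => Fintype.ofFinite _
  rw [NP, card_sigma, finsum_eq_sum_of_fintype, mul_sum, cast_sum,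
    ← (Equiv.sigmaFiberEquiv (cls : TS lam d → Cl lam d)).sum_comp, Fintype.sum_sigma]
  refine sum_congr rfl fun q _ => ?_
  have h1 : ∀ X : {X : TS lam d // cls X = q}, (card {x : End Λ (Mo X.1.1) //
      IsNilpotent (aeval x P)} : ℚ) = nP P (End Λ (Mo (rep q).1)) := by
    rintro ⟨X, hX⟩
    obtain ⟨E⟩ := cls_eq.1 ((cls_rep q).trans hX.symm)
    exact congrArg Nat.cast (nP_congr P (conjAlg E)).symm
  refine (sum_congr rfl fun X _ => h1 X).trans ?_
  rw [sum_const, Finset.card_univ, nsmul_eq_mul, ← card_orbit q, wt, card_eq_fintype_card]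
  have h2 : (card (End Λ (Mo (rep q).1))ˣ : ℚ) ≠ 0 := Nat.cast_ne_zero.2 Nat.card_pos.ne'
  push_cast
  field_simp

end

section

theorem exists_fiber_equiv {A B : Type} [Finite A] [Finite B] (f : A → ℕ) (g : B → ℕ)
    (h : ∀ k, card {a // f a = k} = card {b // g b = k}) : ∃ ε : A ≃ B, ∀ a, g (ε a) = f a := by
  let e : ∀ k, {a // f a = k} ≃ {b // g b = k} := fun k =>
    ((Finite.card_eq (α := {a // f a = k}) (β := {b // g b = k})).1 (h k)).some
  refine ⟨(Equiv.sigmaFiberEquiv f).symm.trans ((Equiv.sigmaCongrRight e).trans (Equiv.sigmaFiberEquiv g)), fun a => ?_⟩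
  exact (e (f a) ⟨a, rfl⟩).2

/-- Triangularity: enough weighted counts determine the sizes of all fibres. -/
theorem fibers_eq {A B : Type} [Fintype A] [Fintype B] (f : A → ℕ) (g : B → ℕ)
    (h : ∀ k, ((∃ a, f a = k) ∨ ∃ b, g b = k) → ∃ F : ℕ → ℚ, F k ≠ 0 ∧ (∀ a, f a < k → F (f a) = 0) ∧
      (∀ b, g b < k → F (g b) = 0) ∧ ∑ a, F (f a) = ∑ b, F (g b)) (k : ℕ) :
    card {a // f a = k} = card {b // g b = k} := by
  classical
  let T : Finset ℕ := Finset.univ.image f ∪ Finset.univ.image g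
  by_contra hk
  have hbad : ∀ k, card {a // f a = k} ≠ card {b // g b = k} → k ∈ T ∧ ((∃ a, f a = k) ∨ ∃ b, g b = k) := by
    intro k hk
    have : (∃ a, f a = k) ∨ ∃ b, g b = k := by
      by_contra hc
      push Not at hc
      apply hk
      haveI : IsEmpty {a // f a = k} := ⟨fun a => hc.1 a.1 a.2⟩
      haveI : IsEmpty {b // g b = k} := ⟨fun a => hc.2 a.1 a.2⟩
      simp
    refine ⟨?_, this⟩
    rcases this with ⟨a, rfl⟩ | ⟨b, rfl⟩ <;> simp [T]
  let S := T.filter fun k => card {a // f a = k} ≠ card {b // g b = k}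
  obtain ⟨m, hm, hmax⟩ := S.exists_max_image id ⟨k, Finset.mem_filter.2 ⟨(hbad k hk).1, hk⟩⟩
  obtain ⟨hmT, hmb⟩ := Finset.mem_filter.1 hm
  obtain ⟨F, hF, hf, hg, hs⟩ := h m (hbad m hmb).2
  have e1 : ∑ a, F (f a) = ∑ k ∈ T, (card {a // f a = k} : ℚ) * F k := by
    rw [← Finset.sum_fiberwise_of_maps_to (s := Finset.univ) (t := T) (g := f) fun a _ => by simp [T]]
    refine sum_congr rfl fun k _ => ?_
    rw [sum_congr rfl (g := fun _ => F k) fun a ha => by rw [(Finset.mem_filter.1 ha).2], sum_const,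
      nsmul_eq_mul, card_eq_fintype_card, Fintype.card_subtype]
  have e2 : ∑ b, F (g b) = ∑ k ∈ T, (card {b // g b = k} : ℚ) * F k := by
    rw [← Finset.sum_fiberwise_of_maps_to (s := Finset.univ) (t := T) (g := g) fun a _ => by simp [T]]
    refine sum_congr rfl fun k _ => ?_
    rw [sum_congr rfl (g := fun _ => F k) fun a ha => by rw [(Finset.mem_filter.1 ha).2], sum_const,
      nsmul_eq_mul, card_eq_fintype_card, Fintype.card_subtype]
  rw [e1, e2, ← sub_eq_zero, ← sum_sub_distrib, Finset.sum_eq_single_of_mem m hmT, ← sub_mul] at hs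
  · refine hmb ?_
    exact_mod_cast sub_eq_zero.1 ((mul_eq_zero.1 hs).resolve_right hF)
  · intro k hkT hkm
    rcases lt_or_gt_of_ne hkm with hlt | hgt
    · have : F k = 0 := by
        rcases Finset.mem_union.1 hkT with hh | hh
        · obtain ⟨a, -, rfl⟩ := Finset.mem_image.1 hh
          exact hf a hlt
        · obtain ⟨a, -, rfl⟩ := Finset.mem_image.1 hh
          exact hg a hlt
      rw [this]; ring
    · have : card {a // f a = k} = card {b // g b = k} := by
        by_contra hc
        exact absurd (hmax k (Finset.mem_filter.2 ⟨hkT, hc⟩)) (not_le.2 hgt)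
      rw [this]; ring

/-- The weight of a finite field extension depends only on its cardinality. -/
theorem exists_wt_fun {K : Type} [Field K] [Finite K] (P : Polynomial K) : ∃ F : ℕ → ℚ, ∀ (D : Type) [Field D] [Algebra K D]
    [Finite D], wt P D = F (card D) := by
  classical
  let Q : ℕ → ℚ → Prop := fun k x => ∃ (D : Type) (_ : Field D) (_ : Algebra K D) (_ : Finite D), card D = k ∧ wt P D = x
  refine ⟨fun k => if h : ∃ x, Q k x then h.choose else 0, fun D _ _ _ => ?_⟩
  have h : ∃ x, Q (card D) x := ⟨wt P D, D, inferInstance, inferInstance, inferInstance, rfl, rfl⟩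
  refine Eq.trans ?_ (dif_pos h).symm
  obtain ⟨D', _, _, _, h1, h2⟩ := h.choose_spec
  rw [← h2]
  obtain ⟨e⟩ := Fam.exists_algEquiv (K := K) h1
  exact (wt_equiv P e).symm

theorem nil_field {D : Type} [Field D] (x : D) : IsNilpotent x ↔ x = 0 := isNilpotent_iff_eq_zero

/-- A polynomial detecting extensions of a given size. -/
theorem exists_detect {K : Type} [Field K] [Finite K] (D : Type) [Field D] [Algebra K D] [Finite D] :
    ∃ P : Polynomial K, Irreducible P ∧ P.Monic ∧ wt P D ≠ 0 ∧ ∀ (D' : Type) [Field D'] [Algebra K D'] [Finite D'],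
      card D' < card D → wt P D' = 0 := by
  obtain ⟨α, hα⟩ := Field.exists_primitive_element K D
  have hi : IsIntegral K α := IsIntegral.of_finite K α
  refine ⟨minpoly K α, minpoly.irreducible hi, minpoly.monic hi, ?_, ?_⟩
  · haveI : Nonempty {x : D // IsNilpotent (aeval x (minpoly K α))} :=
      ⟨α, by rw [minpoly.aeval]; exact IsNilpotent.zero⟩
    rw [wt, nP]
    exact div_ne_zero (Nat.cast_ne_zero.2 Nat.card_pos.ne') (Nat.cast_ne_zero.2 Nat.card_pos.ne')
  · intro D' _ _ _ hlt
    have : IsEmpty {x : D' // IsNilpotent (aeval x (minpoly K α))} := by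
      refine ⟨fun ⟨x, hx⟩ => ?_⟩
      rw [nil_field] at hx
      have h1 := minpoly.eq_of_irreducible_of_monic (minpoly.irreducible hi) hx (minpoly.monic hi)
      have h2 : (minpoly K α).natDegree = finrank K D := (Field.primitive_element_iff_minpoly_natDegree_eq K α).1 hα
      have h3 := minpoly.natDegree_le (A := K) x
      rw [← h1, h2] at h3
      rw [Module.natCard_eq_pow_finrank (K := K) (V := D'), Module.natCard_eq_pow_finrank (K := K) (V := D)] at hlt
      exact absurd (Nat.pow_le_pow_right Nat.card_pos h3) (not_le.2 hlt)
    rw [wt, nP, Nat.card_of_isEmpty]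
    simp

variable {N : ℕ} {p : Fin N → ℕ} {K : Type} [Field K] [Fact (2 ≤ N)] [Finite K]
variable {d e f : Dv} {lam lam' : Fin (N - 2) → K}

/-- The residue field of an indecomposable class. -/
def Ind.D (c : Ind lam d) : Type := (fam p lam).D ⟨d, c⟩

noncomputable instance (c : Ind lam d) : Field c.D := (fam p lam).fD ⟨d, c⟩
noncomputable instance (c : Ind lam d) : Algebra K c.D := (fam p lam).aD ⟨d, c⟩
instance (c : Ind lam d) : Finite c.D := (fam p lam).fiD ⟨d, c⟩

theorem wt_ind (P : Polynomial K) (c : Ind lam d) : wt P (End Λ (Mo (rep c.1).1)) = wt P c.D :=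
  wt_surj (E := End Λ (Mo (rep c.1).1)) (E' := c.D) P ((fam p lam).π ⟨d, c⟩) ((fam p lam).sur ⟨d, c⟩)
    fun x hx => ((fam p lam).ker ⟨d, c⟩ x).1 hx

theorem sum_split (P : Polynomial K) : ∑ᶠ q : Cl lam d, wt P (End Λ (Mo (rep q).1)) =
    ∑ᶠ c : Ind lam d, wt P c.D + ∑ᶠ q : Dec lam d, wt P (End Λ (Mo (rep q.1).1)) := by
  classical
  haveI := Fintype.ofFinite (Cl lam d)
  letI : Fintype (Ind lam d) := (Subtype.fintype fun c : Cl lam d => Loc (End Λ (Mo (rep c).1)))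
  rw [finsum_eq_sum_of_fintype, finsum_eq_sum_of_fintype, finsum_eq_sum_of_fintype,
    ← Fintype.sum_subtype_add_sum_subtype (fun c : Cl lam d => Loc (End Λ (Mo (rep c).1)))]
  congr 1
  exact sum_congr rfl fun c _ => wt_ind P c

/-- If all the counts of pairs agree, the indecomposables and their residue fields match. -/
theorem exists_match (hNP : ∀ P : Polynomial K, Irreducible P → P.Monic → ∀ d, NP P (p := p) lam d = NP P lam' d) (n : ℕ) :
    ∀ d : Dv, tot d = n → ∃ ε : Ind lam d ≃ Ind lam' d, ∀ c, card (ε c).D = card c.D := by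
  induction n using Nat.strong_induction_on with
  | _ n ih =>
  rintro d rfl
  have hε : ∀ c : (d' : Dv) × (PLift (tot d' < tot d)), ∃ ε : Ind lam c.1 ≃ Ind lam' c.1, ∀ x, card (ε x).D = card x.D :=
    fun c => ih _ c.2.down c.1 rfl
  choose ε hε using hε
  let σ : (small lam d).I ≃ (small lam' d).I :=
    { toFun := fun c => ⟨⟨c.1.1, ε ⟨c.1.1, ⟨c.2⟩⟩ c.1.2⟩, c.2⟩
      invFun := fun c => ⟨⟨c.1.1, (ε ⟨c.1.1, ⟨c.2⟩⟩).symm c.1.2⟩, c.2⟩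
      left_inv := fun ⟨⟨d', c⟩, h⟩ => sext (congrArg (Sigma.mk d') ((ε ⟨d', ⟨h⟩⟩).symm_apply_apply c))
      right_inv := fun ⟨⟨d', c⟩, h⟩ => sext (congrArg (Sigma.mk d') ((ε ⟨d', ⟨h⟩⟩).apply_symm_apply c)) }
  have hsum : ∀ P : Polynomial K, Irreducible P → P.Monic → ∑ᶠ c : Ind lam d, wt P c.D = ∑ᶠ c : Ind lam' d, wt P c.D := by
    intro P hP hPm
    have h1 := NP_eq (lam := lam) (d := d) P
    have h2 := NP_eq (lam := lam') (d := d) P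
    rw [hNP P hP hPm d] at h1
    have h3 := mul_left_cancel₀ (Nat.cast_ne_zero.2 Nat.card_pos.ne') (h1.symm.trans h2)
    rw [sum_split, sum_split, dec_sum P σ (fun _ => rfl) (fun c => (hε ⟨c.1.1, ⟨c.2⟩⟩ c.1.2).symm)] at h3
    exact add_right_cancel h3
  haveI := Fintype.ofFinite (Ind lam d)
  haveI := Fintype.ofFinite (Ind lam' d)
  refine exists_fiber_equiv (fun c : Ind lam d => card c.D) (fun c : Ind lam' d => card c.D) (fibers_eq _ _ fun k hk => ?_)
  obtain ⟨D, _, _, _, rfl⟩ : ∃ (D : Type) (_ : Field D) (_ : Algebra K D) (_ : Finite D), card D = k := by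
    rcases hk with ⟨c, h⟩ | ⟨c, h⟩ <;> exact ⟨c.D, inferInstance, inferInstance, inferInstance, h⟩
  obtain ⟨P, hP, hPm, h1, h2⟩ := exists_detect (K := K) D
  obtain ⟨F, hF⟩ := exists_wt_fun P
  refine ⟨F, (hF D) ▸ h1, fun a ha => ?_, fun a ha => ?_, ?_⟩
  · rw [← hF a.D]; exact h2 a.D ha
  · rw [← hF a.D]; exact h2 a.D ha
  · have := hsum P hP hPm
    rw [finsum_eq_sum_of_fintype, finsum_eq_sum_of_fintype] at this
    exact (sum_congr rfl fun c _ => (hF c.D).symm).trans (this.trans (sum_congr rfl fun c _ => hF c.D))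

end

section

variable {K E : Type} [Field K] [Ring E] [Algebra K E]

open scoped IsMulCommutative in
theorem exists_comm {x y : E} (h : Commute x y) : ∃ (S : Type) (_ : CommRing S) (_ : Algebra K S) (f : S →ₐ[K] E) (x' y' : S),
    Function.Injective f ∧ f x' = x ∧ f y' = y := by
  have hc : ∀ a ∈ ({x, y} : Set E), ∀ b ∈ ({x, y} : Set E), a * b = b * a := by
    rintro a (rfl | rfl) b (rfl | rfl)
    · rfl
    · exact h
    · exact h.symm
    · rfl
  haveI := Algebra.isMulCommutative_adjoin K hc
  exact ⟨adjoin K ({x, y} : Set E), inferInstance, inferInstance, (adjoin K ({x, y} : Set E)).val,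
    ⟨x, Algebra.subset_adjoin (by simp)⟩, ⟨y, Algebra.subset_adjoin (by simp)⟩, Subtype.val_injective, rfl, rfl⟩

variable {P : Polynomial K}

theorem unit_deriv {S : Type} [CommRing S] [Algebra K S] (hP : P.Separable) {x : S} (h : IsNilpotent (aeval x P)) :
    IsUnit (aeval x (Polynomial.derivative P)) := by
  obtain ⟨a, b, hab⟩ := hP
  have h1 := congrArg (aeval x) hab
  rw [map_add, map_mul, map_mul, map_one] at h1
  have h2 : IsUnit (aeval x b * aeval x (Polynomial.derivative P)) := by
    rw [eq_sub_of_add_eq' h1]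
    exact IsNilpotent.isUnit_one_sub ((Commute.all _ _).isNilpotent_mul_left h)
  exact isUnit_of_mul_isUnit_right h2

/-- Decompositions of an element into commuting parts, a root of `P` and a nilpotent element. -/
abbrev JD (P : Polynomial K) (E : Type) [Ring E] [Algebra K E] : Type :=
  {z : E × E // aeval z.1 P = 0 ∧ IsNilpotent z.2 ∧ Commute z.1 z.2}

theorem jd_nil {ρ θ : E} (h1 : aeval ρ P = 0) (h2 : IsNilpotent θ) (h : Commute ρ θ) :
    IsNilpotent (aeval (ρ + θ) P) := by
  obtain ⟨S, _, _, f, ρ', θ', hf, rfl, rfl⟩ := exists_comm (K := K) h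
  rw [← map_add, aeval_algHom_apply, IsNilpotent.map_iff hf]
  rw [aeval_algHom_apply, map_eq_zero_iff f hf] at h1
  rw [IsNilpotent.map_iff hf] at h2
  have h3 := Polynomial.isNilpotent_aeval_sub_of_isNilpotent_sub P (a := ρ' + θ') (b := ρ') (by simpa using h2)
  rwa [h1, sub_zero] at h3

open scoped IsMulCommutative in
theorem jd_exists (hP : P.Separable) {x : E} (h : IsNilpotent (aeval x P)) :
    ∃ ρ : E, aeval ρ P = 0 ∧ IsNilpotent (x - ρ) ∧ ∀ y, Commute x y → Commute ρ y := by
  haveI := Algebra.isMulCommutative_adjoin K (s := ({x} : Set E)) (by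
    rintro a rfl b rfl
    rfl)
  let x' : adjoin K ({x} : Set E) := ⟨x, Algebra.subset_adjoin (by simp)⟩
  let f := (adjoin K ({x} : Set E)).val
  have hf : Function.Injective f := Subtype.val_injective
  have h' : IsNilpotent (aeval x' P) := by
    rw [← IsNilpotent.map_iff hf, ← aeval_algHom_apply]
    exact h
  obtain ⟨r, ⟨h1, h2⟩, -⟩ := Polynomial.existsUnique_nilpotent_sub_and_aeval_eq_zero h' (unit_deriv hP h')
  refine ⟨f r, ?_, ?_, fun y hy => ?_⟩
  · rw [aeval_algHom_apply, h2, map_zero]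
  · have := h1.map f
    rwa [map_sub] at this
  · have : adjoin K ({x} : Set E) ≤ Subalgebra.centralizer K {y} := by
      refine Algebra.adjoin_le ?_
      rintro z rfl
      refine (Subalgebra.mem_centralizer_iff K).2 ?_
      rintro w rfl
      exact hy.symm
    exact ((Subalgebra.mem_centralizer_iff K).1 (this r.2) y rfl).symm

theorem jd_unique (hP : P.Separable) {ρ θ ρ' θ' : E} (h1 : aeval ρ P = 0) (h2 : IsNilpotent θ) (h : Commute ρ θ)
    (h1' : aeval ρ' P = 0) (h2' : IsNilpotent θ') (h' : Commute ρ' θ') (he : ρ + θ = ρ' + θ')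
    (hc : Commute ρ ρ') : ρ = ρ' := by
  have h3 : IsNilpotent (ρ - ρ') := by
    have h4 : ρ - ρ' = θ' - θ := by rw [sub_eq_sub_iff_add_eq_add, he, add_comm]
    rw [h4]
    refine Commute.isNilpotent_sub ?_ h2' h2
    have h5 : θ' = ρ + θ - ρ' := by rw [he]; abel
    have h6 : Commute ρ' θ := by
      have : θ = ρ' + θ' - ρ := by rw [← he]; abel
      rw [this]
      exact ((Commute.refl ρ').add_right h').sub_right hc.symm
    rw [h5]
    exact (h.add_left (Commute.refl θ)).sub_left h6
  obtain ⟨S, _, _, f, r, r', hf, rfl, rfl⟩ := exists_comm (K := K) hc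
  rw [aeval_algHom_apply, map_eq_zero_iff f hf] at h1 h1'
  rw [← map_sub, IsNilpotent.map_iff hf] at h3
  have h0 : IsNilpotent (aeval r P) := by rw [h1]; exact IsNilpotent.zero
  rw [(Polynomial.existsUnique_nilpotent_sub_and_aeval_eq_zero h0 (unit_deriv hP h0)).unique
    (y₁ := r) (y₂ := r') ⟨by rw [sub_self]; exact IsNilpotent.zero, h1⟩ ⟨h3, h1'⟩]

theorem nP_eq_jd (hP : P.Separable) : nP P E = card (JD P E) := by
  refine (card_congr (ofBijective (fun z : JD P E => (⟨z.1.1 + z.1.2, jd_nil z.2.1 z.2.2.1 z.2.2.2⟩ :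
    {x : E // IsNilpotent (aeval x P)})) ⟨?_, fun ⟨x, hx⟩ => ?_⟩)).symm
  · rintro ⟨⟨ρ, θ⟩, h1, h2, h3⟩ ⟨⟨ρ', θ'⟩, h1', h2', h3'⟩ h
    have he : ρ + θ = ρ' + θ' := congrArg val h
    have hx : IsNilpotent (aeval (ρ + θ) P) := jd_nil h1 h2 h3
    obtain ⟨r, hr1, hr2, hr3⟩ := jd_exists hP hx
    have c1 : Commute (ρ + θ) ρ := (Commute.refl ρ).add_left h3.symm
    have c2 : Commute (ρ + θ) ρ' := by rw [he]; exact (Commute.refl ρ').add_left h3'.symm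
    have c3 : Commute r (ρ + θ - r) := (hr3 _ (Commute.refl _)).sub_right (Commute.refl r)
    have e1 : r = ρ := jd_unique hP hr1 hr2 c3 h1 h2 h3 (by abel) (hr3 _ c1)
    have e2 : r = ρ' := jd_unique hP hr1 hr2 c3 h1' h2' h3' (by rw [← he]; abel) (hr3 _ c2)
    obtain rfl : ρ = ρ' := e1.symm.trans e2
    obtain rfl : θ = θ' := add_left_cancel he
    rfl
  · obtain ⟨r, hr1, hr2, hr3⟩ := jd_exists hP hx
    exact ⟨⟨(r, x - r), hr1, hr2, (hr3 _ (Commute.refl x)).sub_right (Commute.refl r)⟩, sext (add_sub_cancel r x)⟩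

end

section

variable {N : ℕ} {p : Fin N → ℕ} {K L : Type} [Field K] [Field L] [Algebra K L] [Fact (2 ≤ N)]
variable {d e : Dv} {lam : Fin (N - 2) → K}

section
variable {M M' : Type} [AddCommGroup M] [Module K M] [Module Λ M]
  [AddCommGroup M'] [Module L M'] [Module (Al N p L) M'] (φ : M ≃+ M')
  (h1 : ∀ (v : CanVertex N p) (m : M), φ ((ge v : Λ) • m) = (ge v : Al N p L) • φ m)
  (h2 : ∀ (i : Fin N) (m : M), φ ((gx i : Λ) • m) = (gx i : Al N p L) • φ m)
  (h3 : ∀ (k : K) (m : M), φ (k • m) = algebraMap K L k • φ m)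

include h1 h2

theorem tr_cc (i : Fin N) (m : M) : φ ((cc i : Λ) • m) = (cc i : Al N p L) • φ m := by
  have hpow : ∀ (n : ℕ) (m : M), φ ((gx i : Λ) ^ n • m) = (gx i : Al N p L) ^ n • φ m := by
    intro n
    induction n with
    | zero => intro m; rw [pow_zero, pow_zero, one_smul, one_smul]
    | succ n ih => intro m; rw [pow_succ, pow_succ, mul_smul, mul_smul, ih, h2]
  rw [cc, cc, mul_smul, mul_smul, mul_smul, mul_smul, h1, hpow, h1]

theorem tr_gr : IsGr N p K M ↔ IsGr N p L M' := by
  constructor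
  · intro h
    refine ⟨fun v w m => ?_, fun m => ?_, fun i v w hvw m => ?_⟩ <;> obtain ⟨m, rfl⟩ := φ.surjective m
    · have := congrArg φ (h.orth v w m)
      rw [h1, h1] at this
      rw [this]
      split_ifs
      · rw [h1]
      · rw [map_zero]
    · have := congrArg φ (h.sum m)
      rw [map_sum, sum_congr rfl fun v _ => h1 v m] at this
      exact this
    · rw [← h1, ← h2, ← h1, h.supp i v w hvw, map_zero]
  · intro h
    refine ⟨fun v w m => ?_, fun m => ?_, fun i v w hvw m => ?_⟩ <;> apply φ.injective
    · rw [h1, h1, h.orth]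
      split_ifs
      · rw [h1]
      · rw [map_zero]
    · rw [map_sum, sum_congr rfl fun v _ => h1 v m]
      exact h.sum _
    · rw [h1, h2, h1, h.supp i v w hvw, map_zero]

theorem tr_tf : TF N p K M ↔ TF N p L M' := by
  have hc := tr_cc φ h1 h2
  constructor
  · intro h v a1 ⟨n, a2⟩ a3 a4 m
    have := h (fun k => φ.symm (v k)) (fun k => φ.injective ?_) ⟨n, fun k hk => ?_⟩ (φ.injective ?_) (fun k => φ.injective ?_) m
    · exact (map_eq_zero_iff φ.symm φ.symm.injective).1 this
    · rw [h1, φ.apply_symm_apply]; exact a1 k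
    · rw [a2 k hk, map_zero]
    · rw [hc, φ.apply_symm_apply, map_zero]; exact a3
    · rw [hc, hc, φ.apply_symm_apply, φ.apply_symm_apply]; exact a4 k
  · intro h v a1 ⟨n, a2⟩ a3 a4 m
    have := h (fun k => φ (v k)) (fun k => ?_) ⟨n, fun k hk => ?_⟩ ?_ (fun k => ?_) m
    · exact (map_eq_zero_iff φ φ.injective).1 this
    · rw [← h1, a1 k]
    · rw [a2 k hk, map_zero]
    · rw [← hc, a3, map_zero]
    · rw [← hc, ← hc, a4 k]

include h3

theorem tr_rel : IsRel p lam M ↔ IsRel p (fun j => algebraMap K L (lam j)) M' := by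
  have hc := tr_cc φ h1 h2
  constructor
  · intro h j m
    obtain ⟨m, rfl⟩ := φ.surjective m
    rw [← hc, ← hc, ← hc, ← h3, ← map_sub, h j m]
  · intro h j m
    apply φ.injective
    rw [map_sub, h3, hc, hc, hc]
    exact h j _

variable [IsScalarTower K Λ M] [IsScalarTower L (Al N p L) M'] in
theorem tr_T : IsT p lam M ↔ IsT p (fun j => algebraMap K L (lam j)) M' :=
  ⟨fun h => ⟨(tr_gr φ h1 h2).1 h.gr, (tr_rel φ h1 h2 h3).1 h.rel, (tr_tf φ h1 h2).1 h.tf⟩,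
   fun h => ⟨(tr_gr φ h1 h2).2 h.gr, (tr_rel φ h1 h2 h3).2 h.rel, (tr_tf φ h1 h2).2 h.tf⟩⟩
end

theorem isTS_iff {X : Fin N → End K (V K d)} : IsTS lam X ↔ IsT p lam (Mo X) :=
  ⟨fun h => ⟨h.gr, h.rel, h.tf⟩, fun h => ⟨h.gr, h.rel, h.tf⟩⟩

theorem Good.map (h : Good lam) : Good (fun j => algebraMap K L (lam j)) :=
  ⟨(algebraMap K L).injective.comp h.1, fun j => (_root_.map_ne_zero _).2 (h.2 j)⟩

/-- Raw data of a nilpotent endomorphism of a torsion free representation. -/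
abbrev NilSet (lam : Fin (N - 2) → K) (d : Dv) : Type :=
  {z : (Fin N → End K (V K d)) × End K (V K d) //
    IsTS lam z.1 ∧ IsGd K z.2 ∧ (∀ i, Commute z.2 (z.1 i)) ∧ IsNilpotent z.2}

/-- Raw data of a nilpotent endomorphism of a torsion free representation, commuting with
another endomorphism. -/
abbrev NilSet' (lam : Fin (N - 2) → K) (ρ : End K (V K d)) : Type :=
  {z : (Fin N → End K (V K d)) × End K (V K d) //
    (IsTS lam z.1 ∧ IsGd K z.2 ∧ (∀ i, Commute z.2 (z.1 i)) ∧ IsNilpotent z.2) ∧ (∀ i, Commute ρ (z.1 i)) ∧ Commute ρ z.2}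

/-- Endomorphisms as raw data. -/
noncomputable def unAlg (X : Fin N → End K (V K d)) : End Λ (Mo X) →ₐ[K] End K (V K d) :=
  AlgHom.ofLinearMap
    { toFun := fun f => Mo.un f, map_add' := fun _ _ => rfl, map_smul' := fun _ _ => rfl } rfl (fun _ _ => rfl)

theorem unAlg_inj (X : Fin N → End K (V K d)) : Function.Injective (unAlg X) := fun _ _ h => Mo.un_inj h

theorem unAlg_mem {X : Fin N → End K (V K d)} {f : End K (V K d)} :
    (∃ t, unAlg X t = f) ↔ IsGd K f ∧ ∀ i, Commute f (X i) := by
  constructor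
  · rintro ⟨t, rfl⟩
    exact ⟨Mo.un_gd t, fun i => lext fun x => Mo.un_x t i x⟩
  · rintro ⟨h1, h2⟩
    exact ⟨Mo.hom f h1 fun i x => lcongr_fun (h2 i).eq x, rfl⟩

theorem NIL_eq_raw [Finite K] : NIL lam d = card (NilSet lam d) := by
  haveI : Finite (TS lam d) := inferInstance
  rw [NIL, ← cast_sum, Nat.cast_inj, ← card_sigma]
  let F : (Σ X : TS lam d, {t : End Λ (Mo X.1) // IsNilpotent t}) → NilSet lam d := fun z =>
    ⟨(z.1.1, unAlg z.1.1 z.2.1), z.1.2, ((unAlg_mem (X := z.1.1)).1 ⟨_, rfl⟩).1,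
    ((unAlg_mem (X := z.1.1)).1 ⟨_, rfl⟩).2, z.2.2.map (unAlg z.1.1)⟩
  refine card_congr (ofBijective F ⟨?_, ?_⟩)
  · rintro ⟨⟨X, hX⟩, t, ht⟩ ⟨⟨X', hX'⟩, t', ht'⟩ h
    have h := Prod.ext_iff.1 (Subtype.ext_iff.1 h)
    obtain rfl : X = X' := h.1
    obtain rfl : t = t' := unAlg_inj X h.2
    rfl
  · rintro ⟨⟨X, f⟩, h1, h2, h3, h4⟩
    have h : ∃ t, unAlg X t = f := unAlg_mem.2 ⟨h2, h3⟩
    replace h4 : IsNilpotent f := h4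
    refine (?_ : ∃ a, (F a).1 = (X, f)).imp fun a h => sext h
    clear h2 h3
    obtain ⟨t, rfl⟩ := h
    exact ⟨⟨⟨X, h1⟩, t, (IsNilpotent.map_iff (unAlg_inj X)).1 h4⟩, rfl⟩

/-- The graded roots of a polynomial. -/
abbrev Roots (P : Polynomial K) (d : Dv) : Type :=
  {ρ : End K (V K d) // IsGd K ρ ∧ aeval ρ P = 0}

theorem NP_eq_raw [Finite K] (P : Polynomial K) (hP : P.Separable) : NP P lam d = card (Σ ρ : Roots P d, NilSet' lam ρ.1) := by
  have h1 : NP P lam d = card (Σ X : TS lam d, JD P (End Λ (Mo X.1))) := by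
    haveI := Fintype.ofFinite (TS lam d)
    rw [NP, card_sigma, card_sigma]
    exact sum_congr rfl fun X _ => nP_eq_jd hP
  rw [h1]
  let T : Type := {z : (Fin N → End K (V K d)) × (End K (V K d) × End K (V K d)) //
    (IsGd K z.2.1 ∧ aeval z.2.1 P = 0) ∧
    (IsTS lam z.1 ∧ IsGd K z.2.2 ∧ (∀ i, Commute z.2.2 (z.1 i)) ∧ IsNilpotent z.2.2) ∧
      (∀ i, Commute z.2.1 (z.1 i)) ∧ Commute z.2.1 z.2.2}
  let G : T ≃ Σ ρ : Roots P d, NilSet' lam ρ.1 :=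
    ⟨fun z => ⟨⟨z.1.2.1, z.2.1⟩, ⟨(z.1.1, z.1.2.2), z.2.2⟩⟩, fun w => ⟨(w.2.1.1, (w.1.1, w.2.1.2)), w.1.2, w.2.2⟩,
      fun _ => rfl, fun _ => rfl⟩
  let F : (Σ X : TS lam d, JD P (End Λ (Mo X.1))) → T := fun z =>
    ⟨(z.1.1, (unAlg z.1.1 z.2.1.1, unAlg z.1.1 z.2.1.2)), ⟨((unAlg_mem (X := z.1.1)).1 ⟨_, rfl⟩).1,
      (aeval_algHom_apply (unAlg z.1.1) z.2.1.1 P).trans ((congrArg (unAlg z.1.1) z.2.2.1).trans (map_zero _))⟩,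
      ⟨z.1.2, ((unAlg_mem (X := z.1.1)).1 ⟨_, rfl⟩).1, ((unAlg_mem (X := z.1.1)).1 ⟨_, rfl⟩).2, z.2.2.2.1.map (unAlg z.1.1)⟩,
      ((unAlg_mem (X := z.1.1)).1 ⟨_, rfl⟩).2, z.2.2.2.2.map (unAlg z.1.1)⟩
  refine (card_congr (ofBijective F ⟨?_, ?_⟩)).trans (card_congr G)
  · rintro ⟨⟨X, hX⟩, ⟨r, t⟩, ht⟩ ⟨⟨X', hX'⟩, ⟨r', t'⟩, ht'⟩ h
    have h := Prod.ext_iff.1 (Subtype.ext_iff.1 h)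
    obtain rfl : X = X' := h.1
    have h := Prod.ext_iff.1 h.2
    obtain rfl : r = r' := unAlg_inj X h.1
    obtain rfl : t = t' := unAlg_inj X h.2
    rfl
  · rintro ⟨⟨X, ρ, f⟩, ⟨g1, g2⟩, ⟨h1, h2, h3, h4⟩, h5, h6⟩
    have h : ∃ t, unAlg X t = f := unAlg_mem.2 ⟨h2, h3⟩
    have h' : ∃ t, unAlg X t = ρ := unAlg_mem.2 ⟨g1, h5⟩
    replace h4 : IsNilpotent f := h4
    replace h6 : ρ * f = f * ρ := h6
    replace g2 : aeval ρ P = 0 := g2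
    refine (?_ : ∃ a, (F a).1 = (X, ρ, f)).imp fun a h => sext h
    clear h2 h3 g1 h5
    obtain ⟨t, rfl⟩ := h
    obtain ⟨r, rfl⟩ := h'
    refine ⟨⟨⟨X, h1⟩, (r, t), unAlg_inj X ?_, (IsNilpotent.map_iff (unAlg_inj X)).1 h4, unAlg_inj X ?_⟩, rfl⟩
    · exact (aeval_algHom_apply (unAlg X) r P).symm.trans (g2.trans (map_zero _).symm)
    · exact (map_mul (unAlg X) r t).trans (h6.trans (map_mul (unAlg X) t r).symm)

end

section

variable {N : ℕ} {p : Fin N → ℕ} {K L : Type} [Field K] [Field L] [Algebra K L] [Fact (2 ≤ N)]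
variable {d e : Dv} {lam lam' : Fin (N - 2) → K}

section
variable (σ : L →ₐ[K] End K (V K d)) (Φ : V L e ≃+ V K d) (hΦ : ∀ l x, Φ (l • x) = σ l (Φ x))
  (hpr : ∀ v x, Φ (pr L e v x) = pr K d v (Φ x))

include hΦ in
theorem symm_σ (l : L) (x) : Φ.symm (σ l x) = l • Φ.symm x :=
  Φ.injective (by rw [hΦ, Φ.apply_symm_apply, Φ.apply_symm_apply])

include hΦ in
theorem symm_K (k : K) (x) : Φ.symm (k • x) = algebraMap K L k • Φ.symm x := by
  rw [← symm_σ σ Φ hΦ, AlgHom.commutes]; rfl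

/-- Restriction of scalars of endomorphisms along an identification of an `L`-space with a
`K`-space on which `L` acts. -/
def resE : End L (V L e) →+* End K (V K d) where
  toFun a := { toFun := fun x => Φ (a (Φ.symm x)), map_add' := fun x y => by rw [map_add, map_add, map_add]
               map_smul' := fun k x => by
                rw [symm_K σ Φ hΦ, map_smul, hΦ, AlgHom.commutes]; rfl }
  map_one' := lext fun x => Φ.apply_symm_apply x
  map_zero' := lext fun x => map_zero Φ
  map_mul' a b := lext fun x => congrArg Φ (congrArg a (Φ.symm_apply_apply _).symm)
  map_add' a b := lext fun x => map_add Φ _ _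

theorem resE_apply (a x) : resE σ Φ hΦ a x = Φ (a (Φ.symm x)) := rfl

theorem resE_inj : Function.Injective (resE σ Φ hΦ) := fun a b h => lext fun x => by
  have := lcongr_fun h (Φ x)
  rw [resE_apply, resE_apply, Φ.symm_apply_apply] at this
  exact Φ.injective this

theorem resE_mem {f : End K (V K d)} : (∃ a, resE σ Φ hΦ a = f) ↔ ∀ l, Commute (σ l) f := by
  constructor
  · rintro ⟨a, rfl⟩ l
    refine lext fun x => ?_
    change σ l (Φ (a (Φ.symm x))) = Φ (a (Φ.symm (σ l x)))
    rw [symm_σ σ Φ hΦ, map_smul, hΦ]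
  · intro h
    refine ⟨{ toFun := fun x => Φ.symm (f (Φ x)), map_add' := fun x y => by rw [map_add, map_add, map_add],
              map_smul' := fun l x => ?_ }, lext fun x => ?_⟩
    · exact (congrArg (fun y => Φ.symm (f y)) (hΦ l x)).trans ((congrArg Φ.symm
        (lcongr_fun (h l).eq (Φ x)).symm).trans (symm_σ σ Φ hΦ l _))
    · rw [resE_apply]
      change Φ (Φ.symm (f (Φ (Φ.symm x)))) = f x
      rw [Φ.apply_symm_apply, Φ.apply_symm_apply]

include hpr

theorem symm_pr (v x) : Φ.symm (pr K d v x) = pr L e v (Φ.symm x) :=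
  Φ.injective (by rw [hpr, Φ.apply_symm_apply, Φ.apply_symm_apply])

theorem resE_gd {a} : IsGd K (resE σ Φ hΦ a) ↔ IsGd L a := by
  constructor
  · intro h v x
    have := h v (Φ x)
    rw [resE_apply, resE_apply, symm_pr Φ hpr, Φ.symm_apply_apply, ← hpr] at this
    exact Φ.injective this
  · intro h v x
    rw [resE_apply, resE_apply, symm_pr Φ hpr, h, hpr]

theorem resE_ts {X : Fin N → End L (V L e)} :
    IsTS lam (fun i => resE σ Φ hΦ (X i)) ↔ IsTS (fun j => algebraMap K L (lam j)) X := by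
  rw [isTS_iff, isTS_iff]
  let Y : Fin N → End K (V K d) := fun i => resE σ Φ hΦ (X i)
  let φ : Mo Y ≃+ Mo X := Φ.symm
  refine tr_T φ (fun v m => ?_) (fun i m => ?_) fun k m => ?_
  · exact (congrArg Φ.symm (Mo.ge_smul Y v m)).trans ((symm_pr Φ hpr v _).trans (Mo.ge_smul X v _).symm)
  · exact (congrArg Φ.symm (Mo.gx_smul Y i m)).trans ((Φ.symm_apply_apply _).trans (Mo.gx_smul X i _).symm)
  · exact symm_K σ Φ hΦ k _

include hΦ in
theorem card_res {ρ : End K (V K d)} (hρ : ∀ f, Commute ρ f ↔ ∀ l, Commute (σ l) f) :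
    card (NilSet (p := p) (fun j => algebraMap K L (lam j)) e) = card (NilSet' lam ρ) := by
  let F : NilSet (p := p) (fun j => algebraMap K L (lam j)) e → NilSet' lam ρ := fun z =>
    ⟨(fun i => resE σ Φ hΦ (z.1.1 i), resE σ Φ hΦ z.1.2), ⟨(resE_ts σ Φ hΦ hpr).2 z.2.1,
      (resE_gd σ Φ hΦ hpr).2 z.2.2.1, fun i => (z.2.2.2.1 i).map _, z.2.2.2.2.map _⟩,
      fun i => (hρ _).2 ((resE_mem σ Φ hΦ).1 ⟨_, rfl⟩), (hρ _).2 ((resE_mem σ Φ hΦ).1 ⟨_, rfl⟩)⟩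
  refine card_congr (ofBijective F ⟨fun z z' h => ?_, ?_⟩)
  · have h := Prod.ext_iff.1 (Subtype.ext_iff.1 h)
    exact sext (Prod.ext (funext fun i => resE_inj σ Φ hΦ (congrFun h.1 i)) (resE_inj σ Φ hΦ h.2))
  · rintro ⟨⟨X, f⟩, ⟨h1, h2, h3, h4⟩, h5, h6⟩
    refine (?_ : ∃ a, (F a).1 = (X, f)).imp fun a h => sext h
    choose Y hY using fun i => (resE_mem σ Φ hΦ).2 ((hρ _).1 (h5 i))
    obtain ⟨g, hg⟩ := (resE_mem σ Φ hΦ).2 ((hρ _).1 h6)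
    obtain rfl : (fun i => resE σ Φ hΦ (Y i)) = X := funext hY
    replace hg : resE σ Φ hΦ g = f := hg
    replace h4 : IsNilpotent f := h4
    replace h2 : IsGd K f := h2
    replace h3 : ∀ i, Commute f (resE σ Φ hΦ (Y i)) := h3
    clear h6
    subst hg
    exact ⟨⟨(Y, g), (resE_ts σ Φ hΦ hpr).1 h1, (resE_gd σ Φ hΦ hpr).1 h2, fun i => resE_inj σ Φ hΦ
      (by rw [map_mul, map_mul]; exact h3 i), (IsNilpotent.map_iff (resE_inj σ Φ hΦ)).1 h4⟩, rfl⟩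
end

/-- The space `V K d` with the structure of an `L`-space given by a representation of `L`. -/
def VL (σ : L →ₐ[K] End K (V K d)) : Type := V K d

section
variable (σ : L →ₐ[K] End K (V K d))
instance : AddCommGroup (VL σ) := inferInstanceAs (AddCommGroup (V K d))
noncomputable instance : Module L (VL σ) :=
  Module.compHom (R := End K (V K d)) (V K d) (σ : L →+* End K (V K d))
instance [Finite K] : Finite (VL σ) := inferInstanceAs (Finite (V K d))

theorem exists_res [Finite K] (hσ : ∀ l, IsGd K (σ l)) : ∃ (e : Dv) (Φ : V L e ≃+ V K d),
    (∀ l x, Φ (l • x) = σ l (Φ x)) ∧ ∀ v x, Φ (pr L e v x) = pr K d v (Φ x) := by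
  haveI : FiniteDimensional L (VL σ) := Module.Finite.of_finite
  let P : CanVertex N p → End L (VL σ) := fun v =>
    { toFun := fun x => pr K d v x, map_add' := fun x y => map_add (pr K d v) x y
      map_smul' := fun l x => (hσ l v x).symm }
  obtain ⟨φ, hφ⟩ := exists_std P (pr_orth d) (pr_sum d)
  exact ⟨_, φ.toAddEquiv, fun l x => φ.map_smul l x, hφ⟩
end

variable [Finite K]

theorem commute_aeval {E : Type} [Ring E] [Algebra K E] {f ρ : E} (h : Commute f ρ) (Q : Polynomial K) :
    Commute f (aeval ρ Q) := by
  induction Q using Polynomial.induction_on' with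
  | add a b ha hb => rw [map_add]; exact ha.add_right hb
  | monomial n a => rw [Polynomial.aeval_monomial]; exact (show Commute f (algebraMap K E a) from (Algebra.commutes a f).symm).mul_right (h.pow_right n)

theorem NP_indep (hp : ∀ i, 2 ≤ p i) (hl : Good lam) (hl' : Good lam') (P : Polynomial K)
    (hP : Irreducible P) (d : Dv) : NP P lam d = NP P lam' d := by
  have hs : P.Separable := PerfectField.separable_of_irreducible hP
  rw [NP_eq_raw P hs, NP_eq_raw P hs]
  haveI := Fintype.ofFinite (End K (V K d))
  haveI : Finite (Roots P d) := inferInstance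
  haveI := Fintype.ofFinite (Roots P d)
  rw [card_sigma, card_sigma]
  refine sum_congr rfl fun ρ _ => ?_
  haveI : Fact (Irreducible P) := ⟨hP⟩
  let σ : AdjoinRoot P →ₐ[K] End K (V K d) :=
    Ideal.Quotient.liftₐ (Ideal.span {P}) (aeval ρ.1) (by
      intro a ha
      obtain ⟨b, rfl⟩ := Ideal.mem_span_singleton.1 ha
      rw [map_mul, ρ.2.2, zero_mul])
  haveI : FiniteDimensional K (AdjoinRoot P) := (AdjoinRoot.powerBasis hP.ne_zero).finite
  haveI : Finite (AdjoinRoot P) := Module.finite_of_finite K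
  have hσ : ∀ Q : Polynomial K, σ (AdjoinRoot.mk P Q) = aeval ρ.1 Q := fun Q => rfl
  have hgd : ∀ l, IsGd K (σ l) := fun l v x => by
    obtain ⟨Q, rfl⟩ := AdjoinRoot.mk_surjective l
    have h : Commute (pr K d v) ρ.1 := lext fun x => (ρ.2.1 v x).symm
    exact lcongr_fun (commute_aeval h Q).eq.symm x
  obtain ⟨e, Φ, h1, h2⟩ := exists_res σ hgd
  have hρ : ∀ f, Commute ρ.1 f ↔ ∀ l, Commute (σ l) f := fun f => by
    constructor
    · intro h l
      obtain ⟨Q, rfl⟩ := AdjoinRoot.mk_surjective l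
      exact (commute_aeval h.symm Q).symm
    · intro h
      have := h (AdjoinRoot.mk P X)
      rwa [hσ, Polynomial.aeval_X] at this
  rw [← card_res σ Φ h1 h2 hρ, ← card_res σ Φ h1 h2 hρ]
  have h := NIL_indep hp (hl.map (L := AdjoinRoot P)) (hl'.map (L := AdjoinRoot P)) e
  rw [NIL_eq_raw, NIL_eq_raw] at h
  exact_mod_cast h

/-- The number of classes of absolutely indecomposable torsion free representations. -/
theorem card_ai (hp : ∀ i, 2 ≤ p i) (hl : Good lam) (hl' : Good lam') (d : Dv) :
    card {c : Ind lam d // card c.D = card K} =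
    card {c : Ind lam' d // card c.D = card K} := by
  obtain ⟨ε, hε⟩ := exists_match (fun P hP _ d => NP_indep hp hl hl' P hP d) _ d rfl
  exact card_congr (ε.subtypeEquiv fun c => by rw [hε])

end

section

variable {N : ℕ} {p : Fin N → ℕ} {K : Type} [Field K] [Fact (2 ≤ N)]
  {lam : Fin (N - 2) → K}
variable {M : Type} [AddCommGroup M] [Module K M] [Module Λ M]
  [IsScalarTower K Λ M] [FiniteDimensional K M]

/-- The smallest submodule `T` of `M` with `TF` quotient is a direct summand, as `T` lies in `XX`
and `Ext¹(M / T, T) = 0`; it is not all of `M` as the dimensions of modules in `XX` drop. -/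
theorem TF_of_loc (hp : ∀ i, 2 ≤ p i) (hl : Good lam) (h : IsGr N p K M) (hR : IsRel p lam M)
    (hE : Loc (End Λ M))
    (hd : nd (N := N) (p := p) K M src ≤ nd (N := N) (p := p) K M snk) :
    TF N p K M := by
  obtain ⟨T, hT⟩ : ∃ T : Submodule Λ M, T = cl ⊥ := ⟨_, rfl⟩
  have hQT : TF N p K (M ⧸ T) := hT ▸ TF_cl ⊥
  have hX : XX N p K T := by
    intro U hU
    have h2 := cl_map_subtype T hQT ⊥
    rw [Submodule.map_bot, ← hT] at h2
    rw [eq_top_iff]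
    rintro ⟨x, hx⟩ -
    obtain ⟨y, hy, hyx⟩ := h2.symm ▸ hx
    exact cl_le bot_le hU ((sext hyx : y = ⟨x, hx⟩) ▸ hy)
  have hgT : IsGr N p K T := IsGr.of_inj h (f := T.subtype) T.injective_subtype
  have hRT : IsRel p lam T := hR.of_inj (f := T.subtype) T.injective_subtype
  have hgQ : IsGr N p K (M ⧸ T) := h.of_surj T.mkQ_surjective
  have hRQ : IsRel p lam (M ⧸ T) := hR.of_surj T.mkQ_surjective
  obtain ⟨s, hs0, hs⟩ := lift_C0 (φ := LinearMap.id) hgQ h hgQ T.mkQ (fun v m => rfl)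
    (fun m => T.mkQ_surjective m)
  have hm : ∀ i m, dl p s i m ∈ T := fun i m => by
    refine (Submodule.Quotient.mk_eq_zero T).1 ?_
    change T.mkQ _ = 0
    rw [dl_apply, map_sub, map_smul, hs, hs]
    exact sub_self _
  let ζ : Fin N → (M ⧸ T) →ₗ[K] T := fun i =>
    { toFun := fun m => ⟨dl p s i m, hm i m⟩
      map_add' := fun a b => sext ((dl p s i).map_add a b)
      map_smul' := fun a b => sext ((dl p s i).map_smul a b) }
  have hZ : IsZ p lam ζ := by
    have h0 : IsZ p lam (fun i => (T.subtype.restrictScalars K) ∘ₗ ζ i) :=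
      dl_isZ hgQ h hRQ hR hs0
    refine ⟨fun i v w hvw m => sext (h0.1 i v w hvw m), fun j => ?_⟩
    ext m
    have h1 := lcongr_fun (h0.2 j) m
    rw [LL_apply, dcc_comp T.subtype _ _ _ (fun _ => rfl), dcc_comp T.subtype _ _ _ (fun _ => rfl),
      dcc_comp T.subtype _ _ _ (fun _ => rfl)] at h1
    exact h1
  have : FiniteDimensional K T := FiniteDimensional.of_injective (T.subtype.restrictScalars K) T.injective_subtype
  obtain ⟨φ, hφ0, hφ⟩ := HV_of_XX hp hl hgQ hRQ hQT _ T rfl hgT hRT hX ζ hZ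
  let σ : (M ⧸ T) →ₗ[Λ] M := mkHom (s - (T.subtype.restrictScalars K) ∘ₗ φ)
    (fun v m => by
      change s _ - (φ _ : M) = _ • (s m - (φ m : M))
      rw [hs0, hφ0, smul_sub]; rfl)
    (fun i m => by
      change s _ - (φ _ : M) = _ • (s m - (φ m : M))
      have h1 : dl p s i m = (dl p φ i m : M) := by rw [hφ]; rfl
      rw [dl_apply, dl_apply] at h1
      rw [smul_sub, sub_eq_sub_iff_sub_eq_sub, ← neg_inj, neg_sub, h1, neg_sub]
      rfl)
  have hσ : ∀ m, T.mkQ (σ m) = m := fun m => by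
    change T.mkQ (s m - (φ m : M)) = m
    rw [map_sub, hs, LinearMap.id_apply, sub_eq_self]
    exact (Submodule.Quotient.mk_eq_zero T).2 (φ m).2
  rcases hE.idem (σ ∘ₗ T.mkQ) (by ext m; simp only [End.mul_apply, comp_apply, hσ]) with h0 | h1
  · have htop : T = ⊤ := by
      rw [eq_top_iff]
      rintro m -
      rw [← ker_mkQ T, mem_ker, ← hσ (T.mkQ m)]
      exact (congrArg T.mkQ (lcongr_fun h0 m)).trans (map_zero _)
    have hXM : XX N p K M := hX.of_surj T.subtype fun m => ⟨⟨m, htop ▸ trivial⟩, rfl⟩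
    rcases XX.nd_lt hp (lam := lam) _ M rfl h hR hXM with hs | hlt
    · exact (hE.ne (Subsingleton.elim _ _)).elim
    · exact (hlt.not_ge hd).elim
  · refine hQT.of_inj T.mkQ fun a b hab => ?_
    rw [← End.one_apply (M := M) (R := Λ) a, ← h1, ← End.one_apply (M := M) (R := Λ) b, ← h1]
    exact congrArg σ hab

end

/-! ### Representations as matrices and their direct sum decompositions -/

section

variable {N : ℕ} {p : Fin N → ℕ} {K : Type} [Field K] {d e f : Dv}

/-- The matrix of the projection to the vertex `v`. -/
def mP (K : Type) [Field K] (d : Dv) (v : CanVertex N p) :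
    Matrix (CanIdx N p d) (CanIdx N p d) K :=
  Matrix.diagonal fun a => if a.1 = v then 1 else 0

/-- Block diagonal matrices. -/
def BD (f : Matrix (CanIdx N p d) (CanIdx N p e) K) : Prop := ∀ v, mP K d v * f = f * mP K e v

theorem mP_mul_apply (f : Matrix (CanIdx N p d) (CanIdx N p e) K) (v b a) :
    (mP K d v * f) b a = if b.1 = v then f b a else 0 := by
  rw [mP, Matrix.diagonal_mul, ite_mul, one_mul, zero_mul]

theorem mul_mP_apply (f : Matrix (CanIdx N p d) (CanIdx N p e) K) (v b a) :
    (f * mP K e v) b a = if a.1 = v then f b a else 0 := by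
  rw [mP, Matrix.mul_diagonal, mul_ite, mul_one, mul_zero]

theorem BD_iff (f : Matrix (CanIdx N p d) (CanIdx N p e) K) :
    (∀ b a, b.1 ≠ a.1 → f b a = 0) ↔ BD f := by
  constructor
  · intro h v
    ext b a
    rw [mP_mul_apply, mul_mP_apply]
    by_cases hab : b.1 = a.1
    · rw [hab]
    · rw [h b a hab, ite_self, ite_self]
  · intro h b a hab
    have := congrFun (congrFun (h b.1) b) a
    rwa [mP_mul_apply, mul_mP_apply, if_pos rfl, if_neg (Ne.symm hab)] at this

theorem BD.mul {f' : Dv} {g : Matrix (CanIdx N p d) (CanIdx N p e) K}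
    {h : Matrix (CanIdx N p e) (CanIdx N p f') K} (hg : BD g) (hh : BD h) : BD (g * h) := fun v => by
  rw [← Matrix.mul_assoc, hg, Matrix.mul_assoc, hh, Matrix.mul_assoc]

theorem BD.inv {g : Matrix (CanIdx N p d) (CanIdx N p e) K}
    {h : Matrix (CanIdx N p e) (CanIdx N p d) K} (hg : BD g) (h1 : g * h = 1) (h2 : h * g = 1) :
    BD h := fun v => by
  have h3 : h * g * mP K e v * h = h * (mP K d v * g) * h := by rw [hg, ← Matrix.mul_assoc]
  rwa [h2, Matrix.one_mul, Matrix.mul_assoc, Matrix.mul_assoc, h1, Matrix.mul_one] at h3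

/-- The composite along the arm `i`. -/
def mC (X : Fin N → Matrix (CanIdx N p d) (CanIdx N p d) K) (i : Fin N) :
    Matrix (CanIdx N p d) (CanIdx N p d) K :=
  mP K d snk * X i ^ p i * mP K d src

/-- The representations of the canonical algebra. -/
def Rp [Fact (2 ≤ N)] (lam : Fin (N - 2) → K)
    (X : Fin N → Matrix (CanIdx N p d) (CanIdx N p d) K) : Prop :=
  (∀ i v w, ¬ CanArrow N p i v w → mP K d w * X i * mP K d v = 0) ∧
    ∀ j, mC X (ij j) = mC X (i0 N) - lam j • mC X (i1 N)

theorem isCanRep_iff (hN : 2 ≤ N) [Fact (2 ≤ N)] {lam : Fin (N - 2) → K}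
    {X : Fin N → Matrix (CanIdx N p d) (CanIdx N p d) K} :
    IsCanRep N p K d hN lam X ↔ Rp lam X := by
  refine and_congr ⟨fun h i v w hvw => ?_, fun h i a b hab => ?_⟩ ⟨fun h j => ?_, fun h i hi a b => ?_⟩
  · ext b a
    rw [mul_mP_apply, mP_mul_apply]
    split_ifs with h1 h2
    · exact h i a b (by rwa [h1, h2])
    · rfl
    · rfl
  · have := congrFun (congrFun (h i a.1 b.1 hab) b) a
    rwa [mul_mP_apply, mP_mul_apply, if_pos rfl, if_pos rfl] at this
  · ext ⟨b, l⟩ ⟨a, k⟩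
    rw [Matrix.sub_apply, Matrix.smul_apply]
    simp only [mC, mul_mP_apply, mP_mul_apply]
    split_ifs with h1 h2
    · subst h1; subst h2
      exact h (ij j) (Nat.le_add_left _ _) k l
    all_goals simp
  · have := congrFun (congrFun (h ⟨i - 2, by omega⟩) ⟨_, b⟩) ⟨_, a⟩
    rw [Matrix.sub_apply, Matrix.smul_apply] at this
    simp only [mC, mul_mP_apply, mP_mul_apply, if_true] at this
    have h2 : ij (N := N) ⟨i - 2, by omega⟩ = i := Fin.ext (by simp only [ij]; omega)
    rw [h2] at this
    exact this

/-- The endomorphisms of a representation. -/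
def Cm (X : Fin N → Matrix (CanIdx N p d) (CanIdx N p d) K)
    (f : Matrix (CanIdx N p d) (CanIdx N p d) K) : Prop :=
  BD f ∧ ∀ i, f * X i = X i * f

/-- The representation has exactly two idempotent endomorphisms. -/
def Ixm (X : Fin N → Matrix (CanIdx N p d) (CanIdx N p d) K) : Prop :=
  CanNonzero N p d ∧ ∀ e, Cm X e → e * e = e → e = 0 ∨ e = 1

/-- The indices of a direct sum. -/
def dsE (d e : Dv) :
    CanIdx N p d ⊕ CanIdx N p e ≃ CanIdx N p (fun v => d v + e v) :=
  (Equiv.sigmaSumDistrib _ _).symm.trans (Equiv.sigmaCongrRight fun v => finSumFinEquiv)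

theorem canDSum_eq (M : Matrix (CanIdx N p d) (CanIdx N p d) K)
    (M' : Matrix (CanIdx N p e) (CanIdx N p e) K) :
    canDSum N p K d e M M' =
      (Matrix.fromBlocks M 0 0 M').submatrix (dsE d e).symm (dsE d e).symm := by
  ext b a
  obtain ⟨b, rfl⟩ := (dsE d e).surjective b
  obtain ⟨a, rfl⟩ := (dsE d e).surjective a
  rw [Matrix.submatrix_apply, Equiv.symm_apply_apply, Equiv.symm_apply_apply]
  have hl : ∀ b, dsE d e (inl b) = ⟨b.1, Fin.castAdd _ b.2⟩ := fun _ => rfl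
  have hr : ∀ b, dsE d e (inr b) = ⟨b.1, Fin.natAdd _ b.2⟩ := fun _ => rfl
  rcases b with b | b <;> rcases a with a | a
  · rw [hl, hl]; simp [canDSum]
  · rw [hl, hr]; simp [canDSum]
  · rw [hr, hl]; simp [canDSum]
  · rw [hr, hr]; simp [canDSum]

/-- A decomposition of the identity: `X` is the direct sum of `X'` and `X''`. -/
theorem isCanIso_canDSum {X : Fin N → Matrix (CanIdx N p f) (CanIdx N p f) K}
    {X' : Fin N → Matrix (CanIdx N p d) (CanIdx N p d) K}
    {X'' : Fin N → Matrix (CanIdx N p e) (CanIdx N p e) K}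
    {j : Matrix (CanIdx N p f) (CanIdx N p d) K} {r : Matrix (CanIdx N p d) (CanIdx N p f) K}
    {s : Matrix (CanIdx N p f) (CanIdx N p e) K} {q : Matrix (CanIdx N p e) (CanIdx N p f) K}
    (hr : BD r) (hq : BD q) (rj : r * j = 1) (qs : q * s = 1) (rs : r * s = 0) (qj : q * j = 0)
    (jr : j * r + s * q = 1) (h1 : ∀ i, r * X i = X' i * r) (h2 : ∀ i, q * X i = X'' i * q) :
    IsCanIso N p K f (fun v => d v + e v) X (fun i => canDSum N p K d e (X' i) (X'' i)) := by
  refine ⟨(Matrix.fromRows r q).submatrix (dsE d e).symm id,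
    (Matrix.fromCols j s).submatrix id (dsE d e).symm, ?_, ?_, ?_, ?_⟩
  · intro b a
    obtain ⟨b, rfl⟩ := (dsE d e).surjective b
    rw [Matrix.submatrix_apply, Equiv.symm_apply_apply]
    rcases b with b | b
    · exact (BD_iff r).2 hr b a
    · exact (BD_iff q).2 hq b a
  · change (Matrix.fromRows r q * Matrix.fromCols j s).submatrix _ _ = 1
    rw [Matrix.fromRows_mul_fromCols, rj, qs, rs, qj,
      Matrix.fromBlocks_one, Matrix.submatrix_one_equiv]
  · rw [Matrix.submatrix_mul_equiv, Matrix.fromCols_mul_fromRows, jr, Matrix.submatrix_id_id]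
  · intro i
    change (Matrix.fromRows r q * X i).submatrix _ id = canDSum N p K d e (X' i) (X'' i) * _
    rw [canDSum_eq, Matrix.submatrix_mul_equiv, Matrix.fromBlocks_mul_fromRows,
      Matrix.fromRows_mul, h1, h2, Matrix.zero_mul, Matrix.zero_mul, add_zero, zero_add]

end

section

variable {N : ℕ} {p : Fin N → ℕ} {K : Type} [Field K] {d e f : Dv}

theorem nz_iff : CanNonzero N p d ↔ Nonempty (CanIdx N p d) :=
  ⟨fun ⟨v, hv⟩ => ⟨⟨v, ⟨0, Nat.pos_of_ne_zero hv⟩⟩⟩, fun ⟨⟨v, k⟩⟩ => ⟨v, (Fin.pos k).ne'⟩⟩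

theorem toLin'_mP (v : CanVertex N p) : toLin' (mP K d v) = pr K d v := by
  ext x a
  simp [mP, Matrix.mulVec_diagonal, pr_apply]

theorem IsGd.bd {g : V K e →ₗ[K] V K d} (hg : IsGd K g) : BD (toMatrix' g) := fun v => by
  apply toLin'.injective
  rw [toLin'_mul, toLin'_mul, toLin'_toMatrix', toLin'_mP, toLin'_mP]
  exact lext fun x => (hg v x).symm

theorem BD.gd {g : Matrix (CanIdx N p d) (CanIdx N p e) K} (hg : BD g) :
    IsGd K (toLin' g) := fun v x => by
  have := congrArg toLin' (hg v)
  rw [toLin'_mul, toLin'_mul, toLin'_mP, toLin'_mP] at this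
  exact (lcongr_fun this x).symm

/-- A direct summand of a representation is a representation. -/
theorem Rp.summand [Fact (2 ≤ N)] {lam : Fin (N - 2) → K}
    {X : Fin N → Matrix (CanIdx N p d) (CanIdx N p d) K}
    {X' : Fin N → Matrix (CanIdx N p e) (CanIdx N p e) K}
    {r : Matrix (CanIdx N p e) (CanIdx N p d) K} {j : Matrix (CanIdx N p d) (CanIdx N p e) K}
    (hX : Rp lam X) (hr : BD r) (hj : BD j) (rj : r * j = 1) (h : ∀ i, r * X i = X' i * r) :
    Rp lam X' := by
  have hn : ∀ i n, X' i ^ n = r * X i ^ n * j := fun i n => by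
    have : r * X i ^ n = X' i ^ n * r := by
      induction n with
      | zero => rw [pow_zero, pow_zero, Matrix.mul_one, Matrix.one_mul]
      | succ n ih => rw [pow_succ, ← Matrix.mul_assoc, ih, Matrix.mul_assoc, h, pow_succ,
          Matrix.mul_assoc]
    rw [this, Matrix.mul_assoc, rj, Matrix.mul_one]
  have hP : ∀ i n v w, mP K e w * X' i ^ n * mP K e v = r * (mP K d w * X i ^ n * mP K d v) * j :=
    fun i n v w => by
      simp only [hn, Matrix.mul_assoc, hj v]
      simp only [← Matrix.mul_assoc, hr w]
  refine ⟨fun i v w hvw => ?_, fun k => ?_⟩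
  · have := hP i 1 v w
    rw [pow_one, pow_one, hX.1 i v w hvw, Matrix.mul_zero, Matrix.zero_mul] at this
    exact this
  · simp only [mC, hP]
    have := hX.2 k
    simp only [mC] at this
    rw [this, Matrix.mul_sub, Matrix.sub_mul, Matrix.mul_smul, Matrix.smul_mul]

/-- Indecomposability means that there are no nontrivial idempotent endomorphisms. -/
theorem canIndec_iff (hN : 2 ≤ N) [Fact (2 ≤ N)] {lam : Fin (N - 2) → K}
    {X : Fin N → Matrix (CanIdx N p d) (CanIdx N p d) K} (hX : Rp lam X) :
    CanIndec N p K d hN lam X ↔ Ixm X := by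
  refine and_congr_right fun h0 => ⟨fun h E hE hEE => ?_, fun h d' d'' X' X'' h1 h2 h3 h4 => ?_⟩
  · by_contra! hne
    obtain ⟨d', d'', S, hS⟩ := exists_split (K := K) (d := d) ⟨range (toLin' E), by
      rintro v _ ⟨x, rfl⟩
      exact ⟨pr K d v x, hE.1.gd v x⟩⟩
    have hS' : ∀ x, x ∈ range S.j ↔ x ∈ range (toLin' E) :=
      fun x => by rw [hS]
    set j := toMatrix' S.j
    set r := toMatrix' S.r
    set q := toMatrix' S.q
    set s := toMatrix' S.s
    have rj : r * j = 1 := by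
      rw [← toMatrix'_comp, ← toMatrix'_id]
      exact congrArg _ (lext S.rj)
    have qs : q * s = 1 := by
      rw [← toMatrix'_comp, ← toMatrix'_id]
      exact congrArg _ (lext S.qs)
    have qj : q * j = 0 := by
      rw [← toMatrix'_comp, ← map_zero toMatrix']
      exact congrArg _ (lext S.qj)
    have jr : j * r + s * q = 1 := by
      rw [← toMatrix'_comp, ← toMatrix'_comp, ← map_add, ← toMatrix'_id]
      exact congrArg _ (lext S.jr)
    have Ej : E * j = j := by
      apply toLin'.injective
      rw [toLin'_mul, toLin'_toMatrix']
      refine lext fun x => ?_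
      obtain ⟨y, hy⟩ := (hS' _).1 ⟨x, rfl⟩
      rw [comp_apply, ← hy, ← comp_apply, ← toLin'_mul, hEE]
    have qE : q * E = 0 := by
      apply toLin'.injective
      rw [toLin'_mul, toLin'_toMatrix', map_zero]
      exact lext fun x => (S.mem_range _).1 ((hS' _).2 ⟨x, rfl⟩)
    have jrE : j * r * E = E := by
      rw [eq_sub_of_add_eq jr, Matrix.sub_mul, Matrix.mul_assoc, qE, Matrix.mul_zero, sub_zero,
        Matrix.one_mul]
    have sq : (1 - E) * s * q = 1 - E := by
      rw [Matrix.mul_assoc, eq_sub_of_add_eq' jr, Matrix.mul_sub, Matrix.mul_one,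
        ← Matrix.mul_assoc, Matrix.sub_mul, Ej, Matrix.one_mul, sub_self, Matrix.zero_mul, sub_zero]
    have br : BD (r * E) := S.gr.bd.mul hE.1
    have b1 : BD (1 - E) := fun v => by
      rw [Matrix.mul_sub, hE.1, Matrix.sub_mul, Matrix.mul_one, Matrix.one_mul]
    have bs : BD ((1 - E) * s) := b1.mul S.gs.bd
    have rj' : r * E * j = 1 := by rw [Matrix.mul_assoc, Ej, rj]
    have qs' : q * ((1 - E) * s) = 1 := by
      rw [← Matrix.mul_assoc, Matrix.mul_sub, qE, Matrix.mul_one, sub_zero, qs]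
    have hr : ∀ i, r * E * X i = r * E * X i * j * (r * E) := fun i => by
      rw [Matrix.mul_assoc _ j, ← Matrix.mul_assoc j, jrE, Matrix.mul_assoc, Matrix.mul_assoc,
        Matrix.mul_assoc, hE.2, ← hE.2, ← Matrix.mul_assoc E, hEE]
    have hq : ∀ i, q * X i = q * X i * ((1 - E) * s) * q := fun i => by
      rw [Matrix.mul_assoc _ _ q, sq, Matrix.mul_sub, Matrix.mul_one, Matrix.mul_assoc q _ E, ← hE.2,
        ← Matrix.mul_assoc, qE, Matrix.zero_mul, sub_zero]
    refine h d' d'' _ _ ((isCanRep_iff hN).2 (hX.summand br S.gj.bd rj' hr))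
      ((isCanRep_iff hN).2 (hX.summand S.gq.bd bs qs' hq)) ?_ ?_
      (isCanIso_canDSum br S.gq.bd rj' qs' ?_ qj ?_ hr hq)
    · rw [nz_iff]
      by_contra hem
      rw [not_nonempty_iff] at hem
      apply hne.1
      rw [← jrE, Subsingleton.elim j 0, Matrix.zero_mul, Matrix.zero_mul]
    · rw [nz_iff]
      by_contra hem
      rw [not_nonempty_iff] at hem
      apply hne.2
      rw [← sub_eq_zero, ← neg_eq_zero, neg_sub, ← sq, Subsingleton.elim q 0, Matrix.mul_zero]
    · rw [Matrix.mul_assoc, ← Matrix.mul_assoc E, Matrix.mul_sub, hEE, Matrix.mul_one, sub_self,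
        Matrix.zero_mul, Matrix.mul_zero]
    · rw [← Matrix.mul_assoc, jrE, sq, add_sub_cancel]
  · rintro ⟨f, g, hf, fg, gf, hx⟩
    rw [BD_iff] at hf
    let B : Matrix (CanIdx N p fun v => d' v + d'' v) (CanIdx N p fun v => d' v + d'' v) K :=
      (Matrix.fromBlocks 1 0 0 0).submatrix (dsE d' d'').symm (dsE d' d'').symm
    have hB : BD B := by
      rw [← BD_iff]
      intro b a hab
      obtain ⟨b, rfl⟩ := (dsE d' d'').surjective b
      obtain ⟨a, rfl⟩ := (dsE d' d'').surjective a
      simp only [B, Matrix.submatrix_apply, Equiv.symm_apply_apply]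
      rcases b with b | b <;> rcases a with a | a
      · exact Matrix.one_apply_ne fun h => hab (by rw [h])
      all_goals rfl
    have hBB : B * B = B := by
      simp only [B, Matrix.submatrix_mul_equiv, Matrix.fromBlocks_multiply]; simp
    have hBX : ∀ i, B * canDSum N p K d' d'' (X' i) (X'' i) =
        canDSum N p K d' d'' (X' i) (X'' i) * B := fun i => by
      simp only [B, canDSum_eq, Matrix.submatrix_mul_equiv, Matrix.fromBlocks_multiply]; simp
    have hgx : ∀ i, X i * g = g * canDSum N p K d' d'' (X' i) (X'' i) := fun i => by
      have := congrArg (fun m => g * m * g) (hx i)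
      simp only [Matrix.mul_assoc, fg, Matrix.mul_one] at this
      rwa [← Matrix.mul_assoc, gf, Matrix.one_mul] at this
    have hfe : f * (g * B * f) * g = B := by
      rw [Matrix.mul_assoc, Matrix.mul_assoc _ f, fg, Matrix.mul_one, ← Matrix.mul_assoc, fg,
        Matrix.one_mul]
    have hc : Cm X (g * B * f) := ⟨((hf.inv fg gf).mul hB).mul hf, fun i => by
      rw [Matrix.mul_assoc, hx, ← Matrix.mul_assoc, Matrix.mul_assoc g, hBX, ← Matrix.mul_assoc,
        ← Matrix.mul_assoc, ← hgx, Matrix.mul_assoc (X i), Matrix.mul_assoc (X i)]⟩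
    have hi : (g * B * f) * (g * B * f) = g * B * f := by
      rw [Matrix.mul_assoc _ f, ← Matrix.mul_assoc f, ← Matrix.mul_assoc f, fg, Matrix.one_mul,
        ← Matrix.mul_assoc, Matrix.mul_assoc g, hBB]
    rcases h (g * B * f) hc hi with h5 | h5
    · obtain ⟨a⟩ := nz_iff.1 h3
      rw [h5, Matrix.mul_zero, Matrix.zero_mul] at hfe
      have := congrFun (congrFun hfe (dsE d' d'' (inl a))) (dsE d' d'' (inl a))
      simp [B] at this
    · obtain ⟨a⟩ := nz_iff.1 h4
      rw [h5, Matrix.mul_one, fg] at hfe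
      have := congrFun (congrFun hfe (dsE d' d'' (inr a))) (dsE d' d'' (inr a))
      simp [B] at this

end

/-! ### Absolutely indecomposable representations -/

section

/-- Idempotents of the shape scalar plus nilpotent are trivial. -/
theorem idem_of_nil {k A : Type} [Field k] [Ring A] [Algebra k A] {e : A} (he : e * e = e) {c : k}
    (h : IsNilpotent (e - algebraMap k A c)) : e = 0 ∨ e = 1 := by
  obtain ⟨m, hm⟩ := h
  have h1 : ∀ r : ℕ, (e - algebraMap k A c) ^ r * e = (1 - c) ^ r • e := by
    intro r
    induction r with
    | zero => rw [pow_zero, pow_zero, one_mul, one_smul]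
    | succ r ih =>
      rw [pow_succ, mul_assoc, sub_mul, he, ← smul_def, show e - c • e = (1 - c) • e by rw [sub_smul, one_smul],
        mul_smul_comm, ih, smul_smul, pow_succ']
  have h2 := h1 m
  rw [hm, zero_mul] at h2
  rcases smul_eq_zero.1 h2.symm with h3 | h3
  · refine Or.inr (sub_eq_zero.1 ?_)
    have h4 : c = 1 := (sub_eq_zero.1 (pow_eq_zero_iff (M₀ := k) (fun h0 => by simp [h0] at h3) |>.1 h3)).symm
    rw [h4, map_one] at hm
    have h5 : (e - 1) ^ (m + 1) = 0 := by rw [pow_succ, hm, zero_mul]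
    have h6 := (IsIdempotentElem.one_sub (show IsIdempotentElem e from he)).pow_succ_eq m
    rw [← neg_sub e 1, neg_pow, h5, mul_zero] at h6
    exact neg_eq_zero.1 h6.symm
  · exact Or.inl h3

/-- Every element is the sum of a scalar and a nilpotent element. -/
def SNa (k E : Type) [Field k] [Ring E] [Algebra k E] : Prop :=
  ∀ x : E, ∃ c : k, IsNilpotent (x - algebraMap k E c)

theorem SNa.loc {k E : Type} [Field k] [Ring E] [Algebra k E] (h : SNa k E) (h1 : (1 : E) ≠ 0) :
    Loc E :=
  ⟨h1, fun e he => idem_of_nil he (h e).choose_spec⟩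

theorem Loc.jac {E : Type} [Ring E] [Finite E] (h : Loc E) {x : E} (hx : IsNilpotent x) :
    x ∈ Ring.jacobson E := by
  rw [← Ideal.jacobson_bot, Ideal.mem_jacobson_iff]
  intro y
  obtain ⟨z, hz⟩ := (h.mul_left y hx).isUnit_one_add.exists_left_inv
  refine ⟨z, ?_⟩
  rw [Ideal.mem_bot, mul_assoc, ← hz, mul_add, mul_one]
  abel

variable {k L n : Type} [Field k] [Finite k] [Field L] [Algebra k L] [Fintype n] [DecidableEq n]

theorem sna_ext {E : Subalgebra k (Matrix n n k)} (hE : SNa k E) [Nonempty n] {e : Matrix n n L}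
    (hi : e * e = e) (he : ∀ g : L →ₗ[k] k, e.map g ∈ E) : e = 0 ∨ e = 1 := by
  have h1 : Loc E := hE.loc one_ne_zero
  let ρ : E →ₐ[k] Matrix n n L := (Algebra.ofId k L).mapMatrix.comp E.val
  let J := Ring.jacobson E
  let T : ℕ → Submodule L (Matrix n n L) := fun m => span L (ρ '' (J ^ m : Ideal E))
  obtain ⟨m, hm⟩ : IsNilpotent J := IsSemiprimaryRing.isNilpotent
  let B := Basis.ofVectorSpace k L
  have hT : ∀ y ∈ T 1, ∀ r : ℕ, y ^ (r + 1) ∈ T (r + 1) := by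
    intro y hy r
    induction r with
    | zero => rwa [zero_add, pow_one]
    | succ r ih =>
      rw [pow_succ]
      have := Submodule.mul_mem_mul ih hy
      rw [Submodule.span_mul_span] at this
      refine Submodule.span_mono ?_ this
      rintro _ ⟨_, ⟨a, ha, rfl⟩, _, ⟨b, hb, rfl⟩, rfl⟩
      refine ⟨a * b, ?_, map_mul ρ a b⟩
      rw [SetLike.mem_coe, Submodule.pow_one] at hb
      rw [SetLike.mem_coe, Submodule.pow_succ]
      exact Ideal.mul_mem_mul ha hb
  obtain ⟨c, hc⟩ : ∃ c : L, e - algebraMap L _ c ∈ T 1 := by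
    choose c hc using fun i => hE ⟨e.map (B.coord i), he _⟩
    classical
    let s := Finset.univ.biUnion fun a : n × n => (B.repr (e a.1 a.2)).support
    have h2 : e = ∑ i ∈ s, B i • ρ ⟨e.map (B.coord i), he _⟩ := by
      ext a b
      have h3 := (B.linearCombination_repr (e a b)).symm
      have h4 := Finsupp.sum_of_support_subset (B.repr (e a b)) (s := s)
        (fun x hx => Finset.mem_biUnion.2 ⟨(a, b), mem_univ _, hx⟩) (fun i c => c • B i)
        (fun _ _ => zero_smul _ _)
      refine h3.trans (h4.trans ?_)
      rw [Matrix.sum_apply]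
      refine sum_congr rfl fun i _ => ?_
      rw [smul_def, mul_comm]
      rfl
    refine ⟨∑ i ∈ s, B i * algebraMap k L (c i), ?_⟩
    rw [h2, map_sum, ← sum_sub_distrib]
    refine Submodule.sum_mem _ fun i _ => ?_
    have h4 : B i • ρ ⟨e.map (B.coord i), he _⟩ - algebraMap L _ (B i * algebraMap k L (c i)) =
        B i • ρ (⟨e.map (B.coord i), he _⟩ - algebraMap k E (c i)) := by
      rw [map_sub, smul_sub, map_mul, ← smul_def, AlgHom.commutes,
        IsScalarTower.algebraMap_apply k L (Matrix n n L)]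
    rw [h4]
    refine Submodule.smul_mem _ _ (Submodule.subset_span ⟨_, ?_, rfl⟩)
    rw [SetLike.mem_coe, Submodule.pow_one]
    exact h1.jac (hc i)
  refine idem_of_nil hi (c := c) ⟨m + 1, ?_⟩
  have := hT _ hc m
  have h0 : J ^ (m + 1) = ⊥ := by rw [Submodule.pow_succ, hm]; exact Submodule.bot_mul _
  simpa [T, h0] using this

theorem sna_of {E : Subalgebra k (Matrix n n k)} (S : Set (Matrix n n k)) (hE : ∀ x, x ∈ E ↔ ∀ s ∈ S, x * s = s * x)
    [IsAlgClosed L] [Algebra.IsAlgebraic k L] [Nonempty n]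
    (h : ∀ e : Matrix n n L, (∀ s ∈ S, e * s.map (algebraMap k L) = s.map (algebraMap k L) * e) →
      e * e = e → e = 0 ∨ e = 1) : SNa k E := by
  obtain ⟨ℓ, hℓ⟩ := CharP.exists k
  haveI : Fact ℓ.Prime := ⟨CharP.char_is_prime k ℓ⟩
  haveI : CharP L ℓ := charP_of_injective_algebraMap (algebraMap k L).injective ℓ
  have hinj : Function.Injective fun x : Matrix n n k => x.map (algebraMap k L) :=
    Matrix.map_injective (algebraMap k L).injective
  let ρ : Matrix n n k →ₐ[k] Matrix n n L := (Algebra.ofId k L).mapMatrix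
  intro ⟨φ, hφ⟩
  obtain ⟨μ, hμ⟩ := spectrum.nonempty_of_isAlgClosed_of_finiteDimensional L (ρ φ)
  rw [spectrum.mem_iff] at hμ
  let F := IntermediateField.adjoin k {μ}
  haveI : FiniteDimensional k F :=
    IntermediateField.adjoin.finiteDimensional (Algebra.IsIntegral.isIntegral μ)
  haveI : Finite F := Module.finite_of_finite k
  haveI : Finite (Matrix n n F) := inferInstanceAs (Finite (n → n → F))
  let ψ : Matrix n n F := algebraMap F _ ⟨μ, IntermediateField.mem_adjoin_simple_self k μ⟩ - φ.map (algebraMap k F)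
  have hψ : F.val.mapMatrix ψ = algebraMap L _ μ - ρ φ := by
    rw [map_sub]
    refine congrArg₂ _ ?_ rfl
    ext a b
    rw [AlgHom.mapMatrix_apply, Matrix.map_apply, Matrix.algebraMap_matrix_apply,
      Matrix.algebraMap_matrix_apply, apply_ite F.val, map_zero]
    rfl
  obtain ⟨r, hr, hψr⟩ := exists_pow_idem ψ
  have h1 : (algebraMap L _ μ - ρ φ) ^ r = 0 := by
    refine (h ((algebraMap L _ μ - ρ φ) ^ r) (fun s hs => ?_) ?_).resolve_right fun h2 => hμ ?_
    · refine Commute.pow_left (Commute.sub_left (Algebra.commute_algebraMap_left _ _) ?_) r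
      exact (map_mul ρ _ _).symm.trans ((congrArg ρ ((hE φ).1 hφ s hs)).trans (map_mul ρ _ _))
    · rw [← hψ, ← map_pow, ← map_mul, hψr]
    · exact (isUnit_pow_iff hr.ne').1 (h2 ▸ isUnit_one)
  have h2 : algebraMap L _ (μ ^ ℓ ^ r) = ρ (φ ^ ℓ ^ r) := by
    rw [map_pow, map_pow, ← sub_eq_zero, ← sub_pow_char_pow_of_commute _ _ (Algebra.commute_algebraMap_left _ _)]
    exact pow_eq_zero_of_le (Nat.lt_pow_self (Fact.out : ℓ.Prime).one_lt).le h1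
  obtain ⟨a⟩ := ‹Nonempty n›
  obtain ⟨c, hc⟩ := Finite.injective_iff_surjective.1 (iterateFrobenius_inj k ℓ r) ((φ ^ ℓ ^ r) a a)
  rw [iterateFrobenius_def] at hc
  have h3 := congrFun (congrFun h2 a) a
  rw [Matrix.algebraMap_matrix_apply, if_pos rfl] at h3
  have h4 : algebraMap L (Matrix n n L) (μ ^ ℓ ^ r) = ρ (algebraMap k _ (c ^ ℓ ^ r)) := by
    rw [AlgHom.commutes, IsScalarTower.algebraMap_apply k L (Matrix n n L), hc]
    exact congrArg _ h3
  refine ⟨c, ℓ ^ r, sext ?_⟩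
  change (φ - algebraMap k _ c) ^ ℓ ^ r = 0
  rw [sub_pow_char_pow_of_commute _ _ (Algebra.commute_algebraMap_right _ _), ← map_pow, sub_eq_zero]
  exact hinj (h2.symm.trans h4)

end

section

variable {N : ℕ} {p : Fin N → ℕ} {K : Type} [Field K] {d : Dv}

/-- The endomorphism algebra of a representation. -/
def Ec (X : Fin N → Matrix (CanIdx N p d) (CanIdx N p d) K) :
    Subalgebra K (Matrix (CanIdx N p d) (CanIdx N p d) K) :=
  Subalgebra.centralizer K (Set.range (mP K d) ∪ Set.range X)

theorem mem_Ec' {X : Fin N → Matrix (CanIdx N p d) (CanIdx N p d) K}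
    {f : Matrix (CanIdx N p d) (CanIdx N p d) K} :
    f ∈ Ec X ↔ ∀ s ∈ Set.range (mP K d) ∪ Set.range X, f * s = s * f :=
  (Subalgebra.mem_centralizer_iff K).trans (forall₂_congr fun s _ => eq_comm)

theorem mem_Ec {X : Fin N → Matrix (CanIdx N p d) (CanIdx N p d) K}
    {f : Matrix (CanIdx N p d) (CanIdx N p d) K} : f ∈ Ec X ↔ Cm X f := by
  rw [mem_Ec']
  refine ⟨fun h => ⟨fun v => (h _ (Or.inl ⟨v, rfl⟩)).symm, fun i => h _ (Or.inr ⟨i, rfl⟩)⟩, ?_⟩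
  rintro ⟨h1, h2⟩ _ (⟨v, rfl⟩ | ⟨i, rfl⟩)
  exacts [(h1 v).symm, h2 i]

theorem map_mP {L : Type} [Field L] (g : K →+* L) (v) : (mP K d v).map g = mP L d v := by
  rw [mP, Matrix.diagonal_map (map_zero g)]
  refine congrArg _ (funext fun a => ?_)
  rw [apply_ite g, map_one, map_zero]

theorem Rp.map [Fact (2 ≤ N)] {lam : Fin (N - 2) → K}
    {X : Fin N → Matrix (CanIdx N p d) (CanIdx N p d) K} (h : Rp lam X)
    {L : Type} [Field L] (g : K →+* L) : Rp (fun j => g (lam j)) fun i => (X i).map g := by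
  have hm : ∀ i, mC (fun i => (X i).map g) i = g.mapMatrix (mC X i) := fun i => by
    rw [mC, mC, map_mul, map_mul, map_pow]
    simp only [RingHom.mapMatrix_apply, map_mP]
  refine ⟨fun i v w hvw => ?_, fun j => ?_⟩
  · rw [← map_mP g, ← map_mP g, ← Matrix.map_mul, ← Matrix.map_mul, h.1 i v w hvw,
      Matrix.map_zero _ (map_zero g)]
  · rw [hm, hm, hm, h.2, map_sub]
    refine congrArg _ ?_
    ext a b
    simp

theorem canAbsIndec_iff [Finite K] (hN : 2 ≤ N) [Fact (2 ≤ N)] {lam : Fin (N - 2) → K}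
    {X : Fin N → Matrix (CanIdx N p d) (CanIdx N p d) K} (hX : Rp lam X) :
    CanAbsIndec N p K d hN lam X ↔ CanNonzero N p d ∧ SNa K (Ec X) := by
  refine (canIndec_iff hN (hX.map _)).trans (and_congr_right fun h0 => ?_)
  haveI := nz_iff.1 h0
  refine ⟨fun h => sna_of _ (fun x => mem_Ec') fun e he => h e ⟨fun v => ?_, fun i => ?_⟩,
    fun h e he hi => sna_ext h hi fun g => mem_Ec.2 ⟨fun v => ?_, fun i => ?_⟩⟩
  · rw [← map_mP (algebraMap K (AlgebraicClosure K))]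
    exact (he _ (Or.inl ⟨v, rfl⟩)).symm
  · exact he _ (Or.inr ⟨i, rfl⟩)
  · have := congrArg (fun m => m.map g) (he.1 v)
    ext a b
    have := congrFun (congrFun this a) b
    simp only [Matrix.map_apply, mP_mul_apply, mul_mP_apply, apply_ite g, map_zero] at this ⊢
    exact this
  · ext a b
    have := congrArg g (congrFun (congrFun (he.2 i) a) b)
    have h1 : ∀ (x : AlgebraicClosure K) (y : K), g (x * algebraMap K _ y) = g x * y := fun x y => by
      rw [mul_comm, ← smul_def, map_smul, smul_eq_mul, mul_comm]
    have h2 : ∀ (x : AlgebraicClosure K) (y : K), g (algebraMap K _ y * x) = y * g x := fun x y => by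
      rw [← smul_def, map_smul, smul_eq_mul]
    simpa only [Matrix.mul_apply, Matrix.map_apply, map_sum, h1, h2] using this

end

/-! ### Duality -/

section

variable {N : ℕ} {p : Fin N → ℕ} {K : Type} [Field K] {d : Dv}

/-- The reflection of the canonical quiver, which exchanges source and sink. -/
def rf : CanVertex N p ≃ CanVertex N p where
  toFun := Sum.map not fun a => ⟨a.1, a.2.rev⟩
  invFun := Sum.map not fun a => ⟨a.1, a.2.rev⟩
  left_inv := by rintro (b | ⟨i, j⟩) <;> simp
  right_inv := by rintro (b | ⟨i, j⟩) <;> simp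

theorem rf_rf (v : CanVertex N p) : rf (rf v) = v := rf.left_inv v

theorem arrow_rf {i : Fin N} {v w : CanVertex N p} (h : CanArrow N p i v w) :
    CanArrow N p i (rf w) (rf v) := by
  have h1 : ∀ (j k : Fin (p i - 1)), j.rev = k → rf (inr ⟨i, j⟩) = (inr ⟨i, k⟩ : CanVertex N p) :=
    fun j k h => h ▸ rfl
  rcases h with ⟨h, rfl, rfl⟩ | ⟨j, hj, rfl, rfl⟩ | ⟨h, rfl, rfl⟩
  · refine Or.inr (Or.inr ⟨h, h1 _ _ (Fin.ext ?_), rfl⟩)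
    simp only [Fin.val_rev]; omega
  · refine Or.inr (Or.inl ⟨p i - 1 - (j + 2), by omega, h1 _ _ (Fin.ext ?_), h1 _ _ (Fin.ext ?_)⟩)
    all_goals (refine (Fin.val_rev _).trans ?_; grind)
  · refine Or.inl ⟨h, rfl, h1 _ _ (Fin.ext ?_)⟩
    simp only [Fin.val_rev]; omega

theorem arrow_rf_iff {i : Fin N} {v w : CanVertex N p} :
    CanArrow N p i (rf w) (rf v) ↔ CanArrow N p i v w :=
  ⟨fun h => by simpa only [rf_rf] using arrow_rf h, arrow_rf⟩

/-- Transposition of matrices, from the dual of one total space to the other. -/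
def Du : Matrix (CanIdx N p d) (CanIdx N p d) K ≃ₐ[K]
    (Matrix (CanIdx N p (fun v => d (rf v))) (CanIdx N p (fun v => d (rf v))) K)ᵐᵒᵖ :=
  (Matrix.reindexAlgEquiv K K (Equiv.sigmaCongrLeft (β := fun v => Fin (d v)) rf).symm).trans
    (Matrix.transposeAlgEquiv _ K K)

theorem Du_mP (v : CanVertex N p) : Du (mP K d v) = op (mP K _ (rf v)) := by
  refine congrArg op ?_
  change ((mP K d v).submatrix (Equiv.sigmaCongrLeft (β := fun v => Fin (d v)) rf)
    (Equiv.sigmaCongrLeft (β := fun v => Fin (d v)) rf)).transpose = _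
  rw [mP, Matrix.submatrix_diagonal_equiv, Matrix.diagonal_transpose]
  refine congrArg _ (funext fun a => if_congr ?_ rfl rfl)
  exact ⟨fun h => h ▸ (rf_rf a.1).symm, fun h => by rw [← rf_rf v, ← h]; rfl⟩

/-- The dual of a tuple of matrices. -/
def DuX : (Fin N → Matrix (CanIdx N p d) (CanIdx N p d) K) ≃
    (Fin N → Matrix (CanIdx N p (fun v => d (rf v))) (CanIdx N p (fun v => d (rf v))) K) :=
  Equiv.piCongrRight fun _ => Du.toEquiv.trans MulOpposite.opEquiv.symm

theorem op_DuX (X : Fin N → Matrix (CanIdx N p d) (CanIdx N p d) K) (i) :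
    op (DuX X i) = Du (X i) := rfl

theorem rp_Du [Fact (2 ≤ N)] {lam : Fin (N - 2) → K}
    {X : Fin N → Matrix (CanIdx N p d) (CanIdx N p d) K} : Rp lam (DuX X) ↔ Rp lam X := by
  have hm : ∀ i, op (mC (DuX X) i) = Du (mC X i) := fun i => by
    rw [mC, mC, map_mul, map_mul, Du_mP, Du_mP, map_pow, op_mul, op_mul,
      mul_assoc]
    rfl
  refine and_congr (forall_congr' fun i => ?_) (forall_congr' fun j => ?_)
  · have h1 : ∀ v w, mP K _ (rf w) * DuX X i * mP K _ (rf v) = 0 ↔ mP K d v * X i * mP K d w = 0 := fun v w => by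
      rw [← op_inj, ← Du.injective.eq_iff, map_mul, map_mul, map_zero, Du_mP, Du_mP,
        op_mul, op_mul, mul_assoc]
      rfl
    refine ⟨fun h v w hvw => ?_, fun h v w hvw => ?_⟩
    · exact (h1 _ _).1 (h _ _ (mt arrow_rf_iff.1 hvw))
    · obtain ⟨v, rfl⟩ := rf.surjective v
      obtain ⟨w, rfl⟩ := rf.surjective w
      exact (h1 _ _).2 (h _ _ (mt arrow_rf_iff.2 hvw))
  · rw [← op_inj, MulOpposite.op_sub, MulOpposite.op_smul, hm, hm, hm, ← map_smul,
      ← map_sub, Du.injective.eq_iff]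

theorem bd_Du {f : Matrix (CanIdx N p d) (CanIdx N p d) K} :
    BD (Du f).unop ↔ BD f := by
  refine rf.symm.forall_congr fun {v} => ?_
  rw [← op_inj, ← Du.injective.eq_iff, map_mul, map_mul, Du_mP, op_mul, op_mul, Equiv.apply_symm_apply]
  exact eq_comm

theorem cm_Du {X : Fin N → Matrix (CanIdx N p d) (CanIdx N p d) K}
    {f : Matrix (CanIdx N p d) (CanIdx N p d) K} : Cm (DuX X) (Du f).unop ↔ Cm X f := by
  refine and_congr bd_Du (forall_congr' fun i => ?_)
  rw [← op_inj, ← Du.injective.eq_iff, map_mul, map_mul, op_mul, op_mul]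
  exact eq_comm

theorem sna_iff {X : Fin N → Matrix (CanIdx N p d) (CanIdx N p d) K} :
    SNa K (Ec X) ↔ ∀ f, Cm X f → ∃ c : K, IsNilpotent (f - algebraMap K _ c) := by
  refine Subtype.forall.trans (forall_congr' fun f => ⟨fun h hf => (h (mem_Ec.2 hf)).imp fun c => ?_,
    fun h hf => (h (mem_Ec.1 hf)).imp fun c => ?_⟩)
  · exact (IsNilpotent.map_iff (f := (Ec X).val) Subtype.val_injective).2
  · exact (IsNilpotent.map_iff (f := (Ec X).val) Subtype.val_injective
      (r := ⟨f, hf⟩ - algebraMap K (Ec X) c)).1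

theorem sna_Du {X : Fin N → Matrix (CanIdx N p d) (CanIdx N p d) K} :
    SNa K (Ec (DuX X)) ↔ SNa K (Ec X) := by
  rw [sna_iff, sna_iff]
  refine (Equiv.forall_congr (Du.toEquiv.trans MulOpposite.opEquiv.symm) fun {f} => ?_).symm
  refine imp_congr cm_Du.symm (exists_congr fun c => exists_congr fun n => ?_)
  refine (Du.injective.eq_iff.symm.trans (Eq.congr ?_ (map_zero _))).trans (op_inj (y := 0))
  rw [map_pow, map_sub, AlgEquiv.commutes]
  rfl

theorem isCanIso_iff {d e : Dv} {X : Fin N → Matrix (CanIdx N p d) (CanIdx N p d) K}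
    {Y : Fin N → Matrix (CanIdx N p e) (CanIdx N p e) K} : IsCanIso N p K d e X Y ↔
      ∃ (f : Matrix (CanIdx N p e) (CanIdx N p d) K) (g : Matrix (CanIdx N p d) (CanIdx N p e) K),
        BD f ∧ BD g ∧ f * g = 1 ∧ g * f = 1 ∧ ∀ i, f * X i = Y i * f :=
  exists_congr fun f => exists_congr fun g =>
    ⟨fun ⟨h1, h2, h3, h4⟩ => ⟨(BD_iff f).1 h1, ((BD_iff f).1 h1).inv h2 h3, h2, h3, h4⟩,
     fun ⟨h1, _, h2⟩ => ⟨(BD_iff f).2 h1, h2⟩⟩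

theorem iso_Du {X Y : Fin N → Matrix (CanIdx N p d) (CanIdx N p d) K} :
    IsCanIso N p K _ _ (DuX X) (DuX Y) ↔ IsCanIso N p K d d X Y := by
  rw [isCanIso_iff, isCanIso_iff, _root_.exists_comm]
  refine (Equiv.exists_congr (Du.toEquiv.trans MulOpposite.opEquiv.symm) fun {f} =>
    Equiv.exists_congr (Du.toEquiv.trans MulOpposite.opEquiv.symm) fun {g} => ?_).symm
  have h1 : f * g = 1 ↔ (Du g).unop * (Du f).unop = 1 := by
    rw [← Du.injective.eq_iff, map_mul, map_one, ← MulOpposite.unop_inj]; rfl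
  have h2 : g * f = 1 ↔ (Du f).unop * (Du g).unop = 1 := by
    rw [← Du.injective.eq_iff, map_mul, map_one, ← MulOpposite.unop_inj]; rfl
  have h3 : ∀ i, g * Y i = X i * g ↔ (Du g).unop * DuX X i = DuX Y i * (Du g).unop := fun i => by
    rw [← Du.injective.eq_iff, map_mul, map_mul, ← MulOpposite.unop_inj]; exact eq_comm
  have h4 : f * g = 1 → g * f = 1 → ∀ i, f * X i = Y i * f ↔ g * Y i = X i * g := fun h h' i => by
    refine ⟨fun h5 => ?_, fun h5 => ?_⟩
    · calc g * Y i = g * (Y i * f) * g := by rw [mul_assoc, mul_assoc, h, mul_one]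
        _ = X i * g := by rw [← h5, ← mul_assoc, h', one_mul]
    · calc f * X i = f * (X i * g) * f := by rw [mul_assoc, mul_assoc, h', mul_one]
        _ = Y i * f := by rw [← h5, ← mul_assoc, h, one_mul]
  change _ ↔ BD (Du g).unop ∧ BD (Du f).unop ∧ (Du g).unop * (Du f).unop = 1 ∧
    (Du f).unop * (Du g).unop = 1 ∧ ∀ i, (Du g).unop * DuX X i = DuX Y i * (Du g).unop
  rw [bd_Du, bd_Du, ← h1, ← h2]
  simp only [← h3]
  constructor
  · rintro ⟨a, b, c, e, h⟩
    exact ⟨b, a, c, e, fun i => (h4 c e i).1 (h i)⟩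
  · rintro ⟨a, b, c, e, h⟩
    exact ⟨b, a, c, e, fun i => (h4 c e i).2 (h i)⟩

theorem count_Du [Fintype K] (hN : 2 ≤ N) (lam : Fin (N - 2) → K) :
    canCount N p K (fun v => d (rf v)) hN lam = canCount N p K d hN lam := by
  haveI : Fact (2 ≤ N) := ⟨hN⟩
  refine (card_congr (Quot.congr (Equiv.subtypeEquiv DuX fun X => ?_) fun X Y => iso_Du.symm)).symm
  rw [isCanRep_iff, isCanRep_iff, ← rp_Du]
  refine and_congr_right fun h => ?_
  rw [canAbsIndec_iff hN h, canAbsIndec_iff hN (rp_Du.1 h), sna_Du]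
  exact and_congr_left fun _ => (Equiv.exists_congr rf fun {v} => by simp only [rf_rf])

end

/-! ### From matrices to modules -/

section

variable {N : ℕ} {p : Fin N → ℕ} {K : Type} [Field K] {d : Dv}

theorem SNa.of_equiv {E E' : Type} [Ring E] [Ring E'] [Algebra K E] [Algebra K E'] (φ : E ≃ₐ[K] E')
    (h : SNa K E) : SNa K E' := fun x => (h (φ.symm x)).imp fun c hc => by
  have := hc.map φ
  rwa [map_sub, AlgEquiv.commutes, AlgEquiv.apply_symm_apply] at this

/-- The linear maps of a tuple of matrices. -/
noncomputable def lx (X : Fin N → Matrix (CanIdx N p d) (CanIdx N p d) K) : Fin N → End K (V K d) :=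
  fun i => toLin' (X i)

theorem lx_cc (X : Fin N → Matrix (CanIdx N p d) (CanIdx N p d) K) (i : Fin N) (m : Mo (lx X)) :
    (cc i : Λ) • m = toLin' (mC X i) (m : V K d) := by
  have hpow : ∀ (n : ℕ) (m : Mo (lx X)), (gx i : Λ) ^ n • m = (toLin' (X i ^ n) (m : V K d) : V K d) := by
    intro n
    induction n with
    | zero => intro m; rw [pow_zero, pow_zero, one_smul, Matrix.toLin'_one]; rfl
    | succ n ih =>
      intro m
      rw [pow_succ, pow_succ, mul_smul, toLin'_mul, ih]
      exact congrArg _ (Mo.gx_smul _ i m)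
  rw [mC, toLin'_mul, toLin'_mul, toLin'_mP, toLin'_mP]
  refine (mul_smul _ _ _).trans ((mul_smul _ _ _).trans (Eq.trans ?_ (Mo.ge_smul (lx X) _ _)))
  exact congrArg (fun y : Mo (lx X) => (ge snk : Λ) • y)
    ((hpow _ _).trans (congrArg (toLin' (X i ^ p i)) (Mo.ge_smul (lx X) _ _)))

theorem rp_lx [Fact (2 ≤ N)] {lam : Fin (N - 2) → K}
    {X : Fin N → Matrix (CanIdx N p d) (CanIdx N p d) K} :
    Rp lam X ↔ IsGr N p K (Mo (lx X)) ∧ IsRel p lam (Mo (lx X)) := by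
  refine and_congr (Iff.trans ?_ isGr_Mo.symm) (forall_congr' fun j => ?_)
  · refine forall_congr' fun i => forall_congr' fun v => forall_congr' fun w => forall_congr' fun h => ?_
    rw [← toLin'.injective.eq_iff, toLin'_mul, toLin'_mul, toLin'_mP, toLin'_mP, map_zero]
    exact LinearMap.ext_iff
  · rw [← toLin'.injective.eq_iff, map_sub, map_smul]
    refine LinearMap.ext_iff.trans (forall_congr' fun m => ?_)
    exact Eq.congr (lx_cc X _ m).symm (congrArg₂ (fun a b : Mo (lx X) => a - b) (lx_cc X _ m).symm
      (congrArg (fun a : Mo (lx X) => lam j • a) (lx_cc X _ m).symm))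

variable [Fact (2 ≤ N)]

/-- The two descriptions of the endomorphism algebra agree. -/
noncomputable def endEquiv (X : Fin N → Matrix (CanIdx N p d) (CanIdx N p d) K) :
    End Λ (Mo (lx X)) ≃ₐ[K] Ec X := by
  refine AlgEquiv.ofBijective
    (((LinearMap.toMatrixAlgEquiv' : ((CanIdx N p d → K) →ₗ[K] _) ≃ₐ[K] _).toAlgHom.comp (unAlg (lx X))).codRestrict (Ec X) ?_) ⟨?_, ?_⟩
  · intro t
    refine mem_Ec.2 ⟨(Mo.un_gd t).bd, fun i => toLin'.injective ?_⟩
    change toLin' (toMatrix' (Mo.un t) * X i) = toLin' (X i * toMatrix' (Mo.un t))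
    rw [toLin'_mul, toLin'_mul, toLin'_toMatrix']
    exact lext fun x => Mo.un_x t i x
  · intro t t' h
    exact unAlg_inj (lx X) (toMatrix'.injective (Subtype.ext_iff.1 h))
  · rintro ⟨f, hf⟩
    have hf := mem_Ec.1 hf
    obtain ⟨t, ht⟩ := unAlg_mem.2 (⟨hf.1.gd, fun i => (toLin'_mul _ _).symm.trans
      ((congrArg _ (hf.2 i)).trans (toLin'_mul _ _))⟩ :
      IsGd K (toLin' f) ∧ ∀ i, Commute (toLin' f) (lx X i))
    exact ⟨t, sext ((congrArg toMatrix' ht).trans (LinearMap.toMatrix'_toLin' f))⟩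

theorem iso_lx {X Y : Fin N → Matrix (CanIdx N p d) (CanIdx N p d) K} :
    IsCanIso N p K d d X Y ↔ Nonempty (Mo (lx X) ≃ₗ[Λ] Mo (lx Y)) := by
  rw [isCanIso_iff]
  constructor
  · rintro ⟨f, g, hf, hg, h1, h2, h3⟩
    have h4 : ∀ i, g * Y i = X i * g := fun i =>
      calc g * Y i = g * (Y i * f) * g := by rw [mul_assoc, mul_assoc, h1, mul_one]
        _ = X i * g := by rw [← h3, ← mul_assoc, h2, one_mul]
    refine ⟨LinearEquiv.ofLinearMap (Mo.hom (toLin' f) hf.gd fun i => ?_)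
      (Mo.hom (toLin' g) hg.gd fun i => ?_) (Mo.un_inj ?_) (Mo.un_inj ?_)⟩
    · exact lcongr_fun ((toLin'_mul _ _).symm.trans ((congrArg _ (h3 i)).trans (toLin'_mul _ _)))
    · exact lcongr_fun ((toLin'_mul _ _).symm.trans ((congrArg _ (h4 i)).trans (toLin'_mul _ _)))
    · exact (toLin'_mul _ _).symm.trans ((congrArg _ h1).trans Matrix.toLin'_one)
    · exact (toLin'_mul _ _).symm.trans ((congrArg _ h2).trans Matrix.toLin'_one)
  · rintro ⟨e⟩
    refine ⟨toMatrix' (Mo.un e.toLinearMap), toMatrix' (Mo.un e.symm.toLinearMap),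
      (Mo.un_gd _).bd, (Mo.un_gd _).bd, ?_, ?_, fun i => ?_⟩
    · rw [← toMatrix'_comp, ← toMatrix'_id]
      exact congrArg _ (lext fun x => e.apply_symm_apply x)
    · rw [← toMatrix'_comp, ← toMatrix'_id]
      exact congrArg _ (lext fun x => e.symm_apply_apply x)
    · apply toLin'.injective
      rw [toLin'_mul, toLin'_mul, toLin'_toMatrix']
      exact lext fun x => Mo.un_x e.toLinearMap i x

variable [Finite K] {lam : Fin (N - 2) → K}

theorem absIndec_lx (hN : 2 ≤ N) {X : Fin N → Matrix (CanIdx N p d) (CanIdx N p d) K} (hX : Rp lam X) :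
    CanAbsIndec N p K d hN lam X ↔ Loc (End Λ (Mo (lx X))) ∧
      SNa K (End Λ (Mo (lx X))) := by
  refine (canAbsIndec_iff hN hX).trans ⟨fun ⟨h1, h2⟩ => ?_, fun ⟨h1, h2⟩ => ⟨?_, h2.of_equiv (endEquiv X)⟩⟩
  · haveI := nz_iff.1 h1
    have h3 := h2.of_equiv (endEquiv X).symm
    exact ⟨(h2.loc one_ne_zero).of_equiv (endEquiv X).symm.toRingEquiv, h3⟩
  · refine nz_iff.2 (not_isEmpty_iff.1 fun h => h1.ne (Mo.un_inj (lext fun x => ?_)))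
    exact Subsingleton.elim (α := CanIdx N p d → K) _ _

theorem card_D (c : Ind lam d) :
    card c.D = card K ↔ SNa K (End Λ (Mo (rep c.1).1)) := by
  have hD : card c.D = card K ↔ Surjective (algebraMap K c.D) := by
    constructor
    · intro h
      exact ((Nat.bijective_iff_injective_and_card _).2 ⟨(algebraMap K c.D).injective, h.symm⟩).2
    · intro h
      exact (Nat.card_eq_of_bijective _ ⟨(algebraMap K c.D).injective, h⟩).symm
  rw [hD]
  have hk : ∀ (x : End Λ (Mo (rep c.1).1)) (k : K),
      algebraMap K c.D k = (fam p lam).π ⟨d, c⟩ x ↔ IsNilpotent (x - algebraMap K _ k) := fun x k => by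
    refine Iff.trans ?_ ((fam p lam).ker ⟨d, c⟩ _)
    let π' : End Λ (Mo (rep c.1).1) →ₐ[K] c.D := (fam p lam).π ⟨d, c⟩
    change algebraMap K c.D k = π' x ↔ π' _ = 0
    rw [map_sub, AlgHom.commutes, sub_eq_zero, eq_comm]
  constructor
  · intro h x
    exact (h ((fam p lam).π ⟨d, c⟩ x)).imp fun k => (hk x k).1
  · intro h y
    obtain ⟨x, rfl⟩ := (fam p lam).sur ⟨d, c⟩ y
    exact (h x).imp fun k => (hk x k).2

end

/-! ### The count -/

section

variable {N : ℕ} {p : Fin N → ℕ} {K : Type} [Field K] {d : Dv}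

/-- If the dimension at the source is at most the dimension at the sink, then absolutely
indecomposable representations are torsion free and are counted by `card_ai`. -/
theorem count_eq [Fintype K] [Fact (2 ≤ N)] {lam : Fin (N - 2) → K} (hN : 2 ≤ N) (hp : ∀ i, 2 ≤ p i) (hl : Good lam)
    (hd : d src ≤ d snk) :
    canCount N p K d hN lam = card {c : Ind lam d // card c.D = card K} := by
  let Z : Type := {X : Fin N → Matrix (CanIdx N p d) (CanIdx N p d) K //
      IsCanRep N p K d hN lam X ∧ CanAbsIndec N p K d hN lam X}
  have hR (X : Z) : Rp lam X.1 := (isCanRep_iff hN).1 X.2.1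
  have hA (X : Z) := (absIndec_lx hN (hR X)).1 X.2.2
  have hT (X : Z) : IsTS lam (lx X.1) := by
    have h := rp_lx.1 (hR X)
    exact ⟨h.1, h.2, TF_of_loc hp hl h.1 h.2 (hA X).1 (by rwa [nd_Mo', nd_Mo'])⟩
  let T (X : Z) : TS lam d := ⟨lx X.1, hT X⟩
  have hE (X : Z) : Nonempty (Mo (T X).1 ≃ₗ[Λ] Mo (rep (cls (T X))).1) :=
    cls_eq.1 (cls_rep (cls (T X))).symm
  let G0 (X : Z) : Ind lam d := ⟨cls (T X), (hE X).elim fun E => Loc.of_iso E (hA X).1⟩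
  have hG (X : Z) : card (G0 X).D = card K :=
    (card_D (G0 X)).2 ((hE X).elim fun E => (hA X).2.of_equiv (conjAlg E))
  let G (X : Z) : {c : Ind lam d // card c.D = card K} := ⟨G0 X, hG X⟩
  have hiso (X Y : Z) : G X = G Y ↔ IsCanIso N p K d d X.1 Y.1 :=
    (Subtype.ext_iff.trans Subtype.ext_iff).trans (cls_eq.trans iso_lx.symm)
  refine card_congr (ofBijective (Quot.lift G fun X Y h => (hiso X Y).2 h) ⟨?_, ?_⟩)
  · rintro ⟨X⟩ ⟨Y⟩ h
    exact Quot.sound ((hiso X Y).1 h)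
  · rintro ⟨c, hc⟩
    obtain ⟨X, hX⟩ : ∃ X : Fin N → Matrix (CanIdx N p d) (CanIdx N p d) K, lx X = (rep c.1).1 :=
      ⟨fun i => toMatrix' ((rep c.1).1 i), funext fun i => toLin'_toMatrix' _⟩
    have h1 : Rp lam X := rp_lx.2 (hX ▸ ⟨(rep c.1).2.gr, (rep c.1).2.rel⟩)
    have h2 : Loc (End Λ (Mo (lx X))) ∧ SNa K (End Λ (Mo (lx X))) :=
      hX ▸ ⟨c.2, (card_D c).1 hc⟩
    have h3 : CanAbsIndec N p K d hN lam X := (absIndec_lx hN h1).2 h2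
    refine ⟨Quot.mk _ ⟨X, (isCanRep_iff hN).2 h1, h3⟩, sext (sext ?_)⟩
    exact (congrArg cls (sext hX)).trans (cls_rep c.1)

end

end CanAlg

theorem canonical_algebra_count_independent_of_parameters
    (N : ℕ) (hN : 2 ≤ N) (p : Fin N → ℕ) (hp : ∀ i, 2 ≤ p i)
    (F : Type) [Field F] [Fintype F]
    (lam lam' : Fin (N - 2) → F)
    (hinj : Function.Injective lam) (hne : ∀ j, lam j ≠ 0)
    (hinj' : Function.Injective lam') (hne' : ∀ j, lam' j ≠ 0)
    (d : CanVertex N p → ℕ) :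
    canCount N p F d hN lam = canCount N p F d hN lam' := by
  haveI : Fact (2 ≤ N) := ⟨hN⟩
  have key : ∀ d : CanVertex N p → ℕ, d (Sum.inl false) ≤ d (Sum.inl true) →
      canCount N p F d hN lam = canCount N p F d hN lam' := fun d hd => by
    rw [CanAlg.count_eq hN hp ⟨hinj, hne⟩ hd, CanAlg.count_eq hN hp ⟨hinj', hne'⟩ hd,
      CanAlg.card_ai hp ⟨hinj, hne⟩ ⟨hinj', hne'⟩]
  rcases le_total (d (Sum.inl false)) (d (Sum.inl true)) with hd | hd
  · exact key d hd
  · rw [← CanAlg.count_Du hN lam, ← CanAlg.count_Du hN lam']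
    exact key _ hd
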